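/- Let Ω ⊂ ℝ² be a bounded open strictly convex C^{2,α} domain and |H| < H_max. Then the derivative u̇(x;H) = ∂u/∂H(x;H) exists, belongs to C²(closure Ω), and is the unique solution of the linear divergence-form problem Σ_{i,j} D_i( A_ij(Du(·;H)) D_j u̇ ) = 2 in Ω with u̇ = 0 on ∂Ω, where A_ij(p) = ∂/∂p_j (p_i/√(1+|p|²)). Moreover u̇ < 0 everywhere in Ω. -/

import Mathlib

/-!
Pick `H₀ > |H|` for which the problem has a `C²(closure Ω)` solution `u₀`. The plane is identified
with `ℂ`, and functions are carried along with their first and second derivatives as jets.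

*Reduction to the disc.* The definition of a domain does not include connectedness. The components
are convex, have disjoint closures, and are mapped onto the unit disc by
`x ↦ (x - a) / √(‖x - a‖² - g x)`, where `g` is a convex defining function (`chart_exists`,
`Dom.components`). In these charts the equation is quasilinear elliptic with Hölder coefficients.

*Linear theory.* The global Schauder estimate (`schauder_apriori`) is proved by blow-up: a sequence
violating it converges, after rescaling, to a solution of a constant coefficient equation in the
plane or a half-plane whose Hessian is `O(‖z‖ ^ γ)` with `γ < 1` and therefore vanishes
(`liouville_plane`, `liouville_half`). The Poisson equation is solved explicitly for polynomials,
then for Hölder data by approximation, then all other equations by the method of continuity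
(`solves_of_coefOK`).

*Nonlinear theory.* Newton iteration (`newton_step`) solves the problem for parameters near one
where it is solvable, with a first order expansion whose linear term solves the linearised problem;
all constants depend only on the `C^{2,γ}` norm. For `|h| ≤ H₀`, comparison with `±u₀` and with
translates bounds solutions and gradients by those of `u₀` (`grad_bound`). A gradient bound implies a
`C^{2,γ}` bound (`grad_to_c2`): otherwise a rescaling of Hessians would produce a non-affine minimal
graph over a plane or half-plane with bounded gradient, contrary to `bernstein`. Hence the
problem is solvable for all `|h| ≤ H₀` (`component_main`), and by uniqueness `u(·; h)` is the Newton
solution for `h` near `H`, which gives differentiability and the regularity of the velocity.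

*Sign and uniqueness* follow from the maximum principle for the linearised operator (`linear_max`,
`linear_neg`).
-/

noncomputable section
open Set
open scoped RealInnerProductSpace

/-- The plane ℝ². -/
abbrev E2 : Type := EuclideanSpace ℝ (Fin 2)

/-- Standard basis vectors of ℝ². -/
def e2 (i : Fin 2) : E2 := EuclideanSpace.single i 1

/-- The mean curvature operator `M u = div (Du / √(1+|Du|²))`. -/
def mcDiv (u : E2 → ℝ) (x : E2) : ℝ :=
  ∑ i : Fin 2,
    fderiv ℝ (fun y => (Real.sqrt (1 + ‖gradient u y‖ ^ 2))⁻¹ • gradient u y) x (e2 i) i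

/-- `u` is a solution of problem (*) on `Ω` with mean curvature `H`:
`u ∈ C²(Ω) ∩ C⁰(closure Ω)`, `div(Du/√(1+|Du|²)) = 2H` in `Ω`, `u = 0` on `∂Ω`. -/
def SolvesStar (Ω : Set E2) (H : ℝ) (u : E2 → ℝ) : Prop :=
  ContDiffOn ℝ 2 u Ω ∧ ContinuousOn u (closure Ω) ∧
    (∀ x ∈ Ω, mcDiv u x = 2 * H) ∧ (∀ x ∈ frontier Ω, u x = 0)

/-- `u` is a `C²(closure Ω)` solution of problem (*). -/
def SolvesStarC2 (Ω : Set E2) (H : ℝ) (u : E2 → ℝ) : Prop :=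
  ContDiffOn ℝ 2 u (closure Ω) ∧ (∀ x ∈ Ω, mcDiv u x = 2 * H) ∧ ∀ x ∈ frontier Ω, u x = 0

/-- `H_max = sup {H ≥ 0 : (*) has a unique solution in C²(closure Ω)}`. -/
def Hmax (Ω : Set E2) : ℝ :=
  sSup {H : ℝ | 0 ≤ H ∧ (∃ u, SolvesStarC2 Ω H u) ∧
    ∀ u v, SolvesStarC2 Ω H u → SolvesStarC2 Ω H v → EqOn u v (closure Ω)}

/-- The Hessian bilinear form of `u` at `x` evaluated at `(w₁, w₂)`. -/
def hess2 (u : E2 → ℝ) (x : E2) (w₁ w₂ : E2) : ℝ :=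
  fderiv ℝ (fun y => fderiv ℝ u y w₂) x w₁

/-- `G_v = v_xx v_yy − v_xy²`, the determinant of the Hessian. -/
def Gdet (v : E2 → ℝ) (x : E2) : ℝ :=
  hess2 v x (e2 0) (e2 0) * hess2 v x (e2 1) (e2 1) - hess2 v x (e2 0) (e2 1) ^ 2

/-- `L_v = v_y² v_xx − 2 v_x v_y v_xy + v_x² v_yy`. -/
def Lcurv (v : E2 → ℝ) (x : E2) : ℝ :=
  (fderiv ℝ v x (e2 1)) ^ 2 * hess2 v x (e2 0) (e2 0)
    - 2 * fderiv ℝ v x (e2 0) * fderiv ℝ v x (e2 1) * hess2 v x (e2 0) (e2 1)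
    + (fderiv ℝ v x (e2 0)) ^ 2 * hess2 v x (e2 1) (e2 1)

/-- `Ω` is a bounded strictly convex domain with `C^{2,α}` boundary: it has a `C²` defining
function `f` with `α`-Hölder second derivative, nonvanishing boundary gradient, and the
second fundamental form of the boundary (tangential Hessian of `f`) is positive, i.e. the
curvature of `∂Ω` is everywhere positive. -/
def StrictlyConvexDomain (α : ℝ) (Ω : Set E2) : Prop :=
  IsOpen Ω ∧ Bornology.IsBounded Ω ∧ Ω.Nonempty ∧
    ∃ f : E2 → ℝ, ContDiff ℝ 2 f ∧ Ω = {x | f x < 0} ∧ frontier Ω = {x | f x = 0} ∧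
      (∃ C : ℝ, ∀ x y : E2,
        ‖iteratedFDeriv ℝ 2 f x - iteratedFDeriv ℝ 2 f y‖ ≤ C * ‖x - y‖ ^ α) ∧
      (∀ x ∈ frontier Ω, gradient f x ≠ 0) ∧
      (∀ x ∈ frontier Ω, ∀ w : E2, w ≠ 0 → ⟪w, gradient f x⟫ = (0:ℝ) →
        0 < hess2 f x w w)

/-- The unit direction `e_θ = (cos θ, sin θ)`. -/
def dirVec (θ : ℝ) : E2 := Real.cos θ • e2 0 + Real.sin θ • e2 1

/-- The coefficients `A_ij(p) = ∂/∂p_j (p_i/√(1+|p|²))`. -/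
def Aij (p : E2) (i j : Fin 2) : ℝ :=
  fderiv ℝ (fun q : E2 => (Real.sqrt (1 + ‖q‖ ^ 2))⁻¹ • q) p (e2 j) i

/-- The linearized divergence-form operator `L w = Σ_{i,j} D_i (A_ij(Du) D_j w)`. -/
def Ldiv (u w : E2 → ℝ) (x : E2) : ℝ :=
  ∑ i : Fin 2,
    fderiv ℝ (fun y => ∑ j : Fin 2, Aij (gradient u y) i j * fderiv ℝ w y (e2 j)) x (e2 i)

section
set_option maxSynthPendingDepth 3
open Filter Topology
open scoped ComplexConjugate
namespace CMC

/-! ### Liouville theorems for constant coefficient operators on the plane and the half-plane -/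

/-- An entire function whose derivative grows slower than linearly, and vanishes at the origin to
Hölder order, has vanishing derivative (Cauchy estimate on large circles). -/
lemma deriv_eq_zero_of_growth {g : ℂ → ℂ} {γ C : ℝ} (hγ0 : 0 < γ) (hγ : γ < 1)
    (hg : Differentiable ℂ g) (hb : ∀ z, ‖deriv g z‖ ≤ C * ‖z‖ ^ γ) (z : ℂ) : deriv g z = 0 := by
  have hd : Differentiable ℂ (deriv g) := fun z =>
    (hg.analyticAt z).deriv.differentiableAt
  have h0 : deriv g 0 = 0 := by
    have := hb 0
    rw [norm_zero, Real.zero_rpow hγ0.ne', mul_zero] at this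
    exact norm_le_zero_iff.1 this
  have hC : 0 ≤ C := by
    have := (norm_nonneg _).trans (hb 1)
    simpa using this
  have key : ∀ c, deriv (deriv g) c = 0 := by
    intro c
    have hlim : Tendsto (fun R : ℝ => C * (2 ^ γ * R ^ (γ - 1))) atTop (𝓝 0) := by
      have : Tendsto (fun R : ℝ => R ^ (γ - 1)) atTop (𝓝 0) := by
        have := tendsto_rpow_neg_atTop (y := 1 - γ) (by linarith)
        simpa using this
      simpa using (this.const_mul (2 ^ γ)).const_mul C
    have hle : ∀ᶠ R : ℝ in atTop, ‖deriv (deriv g) c‖ ≤ C * (2 ^ γ * R ^ (γ - 1)) := by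
      filter_upwards [eventually_ge_atTop (max ‖c‖ 1)] with R hR
      have hR1 : 1 ≤ R := (le_max_right _ _).trans hR
      have hRc : ‖c‖ ≤ R := (le_max_left _ _).trans hR
      have hR0 : 0 < R := by linarith
      have := Complex.norm_deriv_le_of_forall_mem_sphere_norm_le (c := c) (R := R)
        (C := C * (2 * R) ^ γ) hR0 hd.diffContOnCl (fun w hw => by
          refine (hb w).trans ?_
          have hw' : ‖w‖ ≤ 2 * R := by
            have : ‖w - c‖ = R := by simpa [dist_eq_norm] using hw
            calc ‖w‖ = ‖(w - c) + c‖ := by ring_nf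
              _ ≤ ‖w - c‖ + ‖c‖ := norm_add_le _ _
              _ ≤ 2 * R := by linarith
          gcongr)
      refine this.trans (le_of_eq ?_)
      rw [Real.mul_rpow (by norm_num) hR0.le, Real.rpow_sub_one hR0.ne']
      ring
    have := ge_of_tendsto hlim hle
    exact norm_le_zero_iff.1 this
  rw [is_const_of_deriv_eq_zero hd key z 0, h0]

/-- The real-linear map sending `1, I` to `v₁, v₂`. -/
def Tlin (v₁ v₂ : ℂ) : ℂ →L[ℝ] ℂ :=
  Complex.reCLM.smulRight v₁ + Complex.imCLM.smulRight v₂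

lemma Tlin_apply (v₁ v₂ z : ℂ) : Tlin v₁ v₂ z = z.re • v₁ + z.im • v₂ := by
  simp [Tlin]

/-- In coordinates adapted to a constant coefficient operator, the complex gradient of a solution
is holomorphic. -/
lemma hasDerivWithinAt_cgrad {A B : Set ℂ} {P : ℂ → ℂ →L[ℝ] ℝ} {S : ℂ →L[ℝ] ℂ →L[ℝ] ℝ}
    {v₁ v₂ z : ℂ} (hAB : ∀ z ∈ B, Tlin v₁ v₂ z ∈ A)
    (hP : HasFDerivWithinAt P S A (Tlin v₁ v₂ z))
    (hsym : S v₁ v₂ = S v₂ v₁) (htr : S v₁ v₁ + S v₂ v₂ = 0) :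
    HasDerivWithinAt (fun z => (P (Tlin v₁ v₂ z) v₁ : ℂ) - Complex.I * P (Tlin v₁ v₂ z) v₂)
      ((S v₁ v₁ : ℂ) - Complex.I * S v₁ v₂) B z := by
  have h1 : HasFDerivWithinAt (fun z => P (Tlin v₁ v₂ z)) (S.comp (Tlin v₁ v₂)) B z :=
    hP.comp z (Tlin v₁ v₂).hasFDerivWithinAt hAB
  have e : ∀ v : ℂ, HasFDerivWithinAt (fun z => (P (Tlin v₁ v₂ z) v : ℂ))
      (Complex.ofRealCLM.comp ((ContinuousLinearMap.apply ℝ ℝ v).comp (S.comp (Tlin v₁ v₂)))) B z := by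
    intro v
    have h2 : HasFDerivWithinAt (fun z => P (Tlin v₁ v₂ z) v)
      ((ContinuousLinearMap.apply ℝ ℝ v).comp (S.comp (Tlin v₁ v₂))) B z :=
      (ContinuousLinearMap.apply ℝ ℝ v).hasFDerivAt.comp_hasFDerivWithinAt z h1
    exact Complex.ofRealCLM.hasFDerivAt.comp_hasFDerivWithinAt z h2
  have h3 := (e v₁).sub ((e v₂).const_mul Complex.I)
  rw [hasDerivWithinAt_iff_hasFDerivWithinAt]
  refine HasFDerivWithinAt.of_restrictScalars ℝ h3 ?_
  ext h
  have h22 : S v₂ v₂ = - S v₁ v₁ := by linarith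
  have hT : ∀ v, S (Tlin v₁ v₂ h) v = h.re * S v₁ v + h.im * S v₂ v := by
    intro v
    rw [Tlin_apply]
    simp only [map_add, map_smul, add_apply, smul_apply, smul_eq_mul]
  apply Complex.ext <;> simp [hT, h22, ← hsym]
  ring

/-- Simultaneous diagonalisation: the identity `q(x) a = (ax)(ax)ᵀ + det a (Jx)(Jx)ᵀ` for a
symmetric `2 × 2` matrix `a` provides vectors `v₁` (tangent to `x₀^⊥`) and `v₂` in which the
operator `a : D²` is the Laplacian. -/
lemma exists_adapted_basis {lam a11 a12 a22 : ℝ} (hlam : 0 < lam)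
    (hell : ∀ s t : ℝ, lam * (s ^ 2 + t ^ 2) ≤ a11 * s ^ 2 + 2 * a12 * s * t + a22 * t ^ 2)
    {x0 : ℂ} (hx0 : x0 ≠ 0) :
    ∃ v₁ v₂ : ℂ, x0.re * v₁.re + x0.im * v₁.im = 0 ∧ x0.re * v₂.re + x0.im * v₂.im < 0 ∧
      v₁ ≠ 0 ∧
      ∀ S : ℂ →L[ℝ] ℂ →L[ℝ] ℝ, S 1 Complex.I = S Complex.I 1 →
        S v₁ v₁ + S v₂ v₂ = a11 * S 1 1 + 2 * a12 * S 1 Complex.I + a22 * S Complex.I Complex.I := by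
  set x := x0.re
  set y := x0.im
  have hxy : 0 < x ^ 2 + y ^ 2 := by
    have := Complex.normSq_pos.2 hx0
    rw [Complex.normSq_apply] at this
    nlinarith
  set q := a11 * x ^ 2 + 2 * a12 * x * y + a22 * y ^ 2 with hq
  have hqpos : 0 < q := by
    have := hell x y
    have : 0 < lam * (x ^ 2 + y ^ 2) := by positivity
    linarith
  have hdet : 0 < a11 * a22 - a12 ^ 2 := by
    have h1 := hell 1 0
    have h2 := hell a12 (-a11)
    have ha : 0 < a11 := by nlinarith
    have h3 : 0 < lam * (a12 ^ 2 + (-a11) ^ 2) := by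
      have : 0 < (-a11) ^ 2 := by nlinarith
      positivity
    nlinarith
  set c := Real.sqrt ((a11 * a22 - a12 ^ 2) / q) with hc
  set d := (Real.sqrt q)⁻¹ with hd
  have hc2 : c ^ 2 = (a11 * a22 - a12 ^ 2) / q := Real.sq_sqrt (by positivity)
  have hd2 : d ^ 2 = 1 / q := by rw [hd, inv_pow, Real.sq_sqrt hqpos.le, one_div]
  have hcpos : 0 < c := Real.sqrt_pos.2 (by positivity)
  have hdpos : 0 < d := by positivity
  refine ⟨⟨-c * y, c * x⟩, ⟨-d * (a11 * x + a12 * y), -d * (a12 * x + a22 * y)⟩, ?_, ?_, ?_, ?_⟩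
  · simp; ring
  · simp only
    have : 0 < d * q := by positivity
    rw [hq] at this
    nlinarith
  · intro h
    rw [Complex.ext_iff] at h
    simp at h
    rcases h with ⟨h1 | h1, h2 | h2⟩ <;> first | linarith | (rw [h1, h2] at hxy; simp at hxy)
  · intro S hS
    have ex : ∀ a b : ℝ, (⟨a, b⟩ : ℂ) = a • (1 : ℂ) + b • Complex.I := by
      intro a b; apply Complex.ext <;> simp
    rw [ex, ex]
    simp only [map_add, map_smul, add_apply, smul_apply, smul_eq_mul, ← hS]
    have e1 : c ^ 2 * q = a11 * a22 - a12 ^ 2 := by rw [hc2]; field_simp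
    have e2 : d ^ 2 * q = 1 := by rw [hd2]; field_simp
    have i1 : c ^ 2 * y ^ 2 + d ^ 2 * (a11 * x + a12 * y) ^ 2 = a11 := by
      rw [hc2, hd2]; field_simp; rw [hq]; ring
    have i2 : - c ^ 2 * x * y + d ^ 2 * (a11 * x + a12 * y) * (a12 * x + a22 * y) = a12 := by
      rw [hc2, hd2]; field_simp; rw [hq]; ring
    have i3 : c ^ 2 * x ^ 2 + d ^ 2 * (a12 * x + a22 * y) ^ 2 = a22 := by
      rw [hc2, hd2]; field_simp; rw [hq]; ring
    linear_combination (S 1 1) * i1 + 2 * (S 1 Complex.I) * i2 + (S Complex.I Complex.I) * i3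


lemma Tlin_surj {x0 v₁ v₂ : ℂ} (h1 : x0.re * v₁.re + x0.im * v₁.im = 0)
    (h2 : x0.re * v₂.re + x0.im * v₂.im < 0) (h3 : v₁ ≠ 0) (z : ℂ) :
    ∃ w, Tlin v₁ v₂ w = z := by
  have hdet : v₁.re * v₂.im - v₁.im * v₂.re ≠ 0 := by
    intro h
    by_cases h4 : v₁.re = 0
    · have h5 : v₁.im ≠ 0 := fun h5 => h3 (Complex.ext h4 h5)
      have h6 : x0.im = 0 := by
        rw [h4] at h1; simpa [h5] using h1
      have h7 : v₂.re = 0 := by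
        rw [h4] at h; simpa [h5] using h
      rw [h6, h7] at h2; simp at h2
    · have : v₁.re * (x0.re * v₂.re + x0.im * v₂.im) = 0 := by
        linear_combination v₂.re * h1 + x0.im * h
      rcases mul_eq_zero.1 this with h | h
      · exact h4 h
      · linarith
  obtain ⟨s, hs⟩ : ∃ s : ℝ, s * (v₁.re * v₂.im - v₁.im * v₂.re) = z.re * v₂.im - z.im * v₂.re :=
    ⟨_, div_mul_cancel₀ _ hdet⟩
  obtain ⟨t, ht⟩ : ∃ t : ℝ, t * (v₁.re * v₂.im - v₁.im * v₂.re) = v₁.re * z.im - v₁.im * z.re :=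
    ⟨_, div_mul_cancel₀ _ hdet⟩
  refine ⟨⟨s, t⟩, ?_⟩
  rw [Tlin_apply]
  refine Complex.ext ?_ ?_
  · simp only [Complex.add_re, Complex.real_smul, Complex.re_ofReal_mul]
    exact mul_right_cancel₀ hdet (by linear_combination v₁.re * hs + v₂.re * ht)
  · simp only [Complex.add_im, Complex.real_smul, Complex.im_ofReal_mul]
    exact mul_right_cancel₀ hdet (by linear_combination v₁.im * hs + v₂.im * ht)

lemma bilin_zero {x0 v₁ v₂ : ℂ} (h1 : x0.re * v₁.re + x0.im * v₁.im = 0)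
    (h2 : x0.re * v₂.re + x0.im * v₂.im < 0) (h3 : v₁ ≠ 0) {S : ℂ →L[ℝ] ℂ →L[ℝ] ℝ}
    (hsym : S v₁ v₂ = S v₂ v₁) (htr : S v₁ v₁ + S v₂ v₂ = 0)
    (h0 : (S v₁ v₁ : ℂ) - Complex.I * S v₁ v₂ = 0) : S = 0 := by
  have e1 : S v₁ v₁ = 0 := by simpa using congrArg Complex.re h0
  have e2 : S v₁ v₂ = 0 := by simpa using congrArg Complex.im h0
  have e3 : S v₂ v₂ = 0 := by linarith
  refine ContinuousLinearMap.ext fun h => ContinuousLinearMap.ext fun k => ?_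
  obtain ⟨h, rfl⟩ := Tlin_surj h1 h2 h3 h
  obtain ⟨k, rfl⟩ := Tlin_surj h1 h2 h3 k
  simp only [Tlin_apply, map_add, map_smul, add_apply, smul_apply, e1, e2, e3, ← hsym]
  simp

lemma norm_cgrad_deriv_le {S : ℂ →L[ℝ] ℂ →L[ℝ] ℝ} {T : ℂ →L[ℝ] ℂ} {C γ : ℝ} {z v₁ v₂ : ℂ}
    (hγ0 : 0 ≤ γ) (hC : 0 ≤ C) (hS : ‖S‖ ≤ C * ‖T z‖ ^ γ) :
    ‖(S v₁ v₁ : ℂ) - Complex.I * S v₁ v₂‖ ≤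
      (C * ‖T‖ ^ γ * (‖v₁‖ * ‖v₁‖ + ‖v₁‖ * ‖v₂‖)) * ‖z‖ ^ γ := by
  have hSz : ‖S‖ ≤ C * ‖T‖ ^ γ * ‖z‖ ^ γ := by
    refine (hS).trans ?_
    rw [mul_assoc, ← Real.mul_rpow (by positivity) (by positivity)]
    gcongr
    exact T.le_opNorm z
  have e : ∀ h k, ‖((S h k : ℝ) : ℂ)‖ ≤ (C * ‖T‖ ^ γ * ‖z‖ ^ γ) * (‖h‖ * ‖k‖) := by
    intro h k
    rw [Complex.norm_real]
    refine (S.le_opNorm₂ h k).trans ?_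
    rw [mul_assoc]
    gcongr
  refine (norm_sub_le _ _).trans ?_
  rw [norm_mul, Complex.norm_I, one_mul]
  refine (add_le_add (e _ _) (e _ _)).trans (le_of_eq ?_)
  ring

/-- **Liouville theorem in the plane**: a solution of a constant coefficient elliptic equation whose
Hessian is `O(‖z‖ ^ γ)` with `γ < 1` has zero Hessian. -/
lemma liouville_plane {lam a11 a12 a22 γ C : ℝ} (hlam : 0 < lam)
    (hell : ∀ s t : ℝ, lam * (s ^ 2 + t ^ 2) ≤ a11 * s ^ 2 + 2 * a12 * s * t + a22 * t ^ 2)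
    (hγ0 : 0 < γ) (hγ : γ < 1)
    {P : ℂ → ℂ →L[ℝ] ℝ} {S : ℂ → ℂ →L[ℝ] ℂ →L[ℝ] ℝ}
    (hP : ∀ z, HasFDerivAt P (S z) z) (hsym : ∀ z h k, S z h k = S z k h)
    (htr : ∀ z, a11 * S z 1 1 + 2 * a12 * S z 1 Complex.I + a22 * S z Complex.I Complex.I = 0)
    (hS : ∀ z, ‖S z‖ ≤ C * ‖z‖ ^ γ) (z : ℂ) : S z = 0 := by
  obtain ⟨v₁, v₂, h1, h2, h3, h4⟩ := exists_adapted_basis hlam hell (x0 := 1) one_ne_zero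
  set T := Tlin v₁ v₂
  have hC : 0 ≤ C := by
    have := (norm_nonneg (S 1)).trans (hS 1)
    simpa using this
  set g : ℂ → ℂ := fun z => (P (T z) v₁ : ℂ) - Complex.I * P (T z) v₂
  have hg : ∀ z, HasDerivAt g ((S (T z) v₁ v₁ : ℂ) - Complex.I * S (T z) v₁ v₂) z := by
    intro z
    rw [← hasDerivWithinAt_univ]
    exact hasDerivWithinAt_cgrad (A := univ) (fun _ _ => mem_univ _) (hP _).hasFDerivWithinAt
      (hsym _ _ _) (by rw [h4 _ (hsym _ _ _), htr])
  have hgb : ∀ z, ‖deriv g z‖ ≤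
      (C * ‖T‖ ^ γ * (‖v₁‖ * ‖v₁‖ + ‖v₁‖ * ‖v₂‖)) * ‖z‖ ^ γ := by
    intro z
    rw [(hg z).deriv]
    exact norm_cgrad_deriv_le hγ0.le hC (hS _)
  have hz := fun z => deriv_eq_zero_of_growth hγ0 hγ (fun z => (hg z).differentiableAt) hgb z
  obtain ⟨w, rfl⟩ := Tlin_surj h1 h2 h3 z
  refine bilin_zero h1 h2 h3 (hsym _ _ _) (by rw [h4 _ (hsym _ _ _), htr]) ?_
  rw [← (hg w).deriv]
  exact hz w

/-- **Liouville theorem in a half-plane**, for solutions vanishing on the boundary line: the complex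
gradient in adapted coordinates extends to an entire function by Schwarz reflection. -/
lemma liouville_half {lam a11 a12 a22 γ C : ℝ} (hlam : 0 < lam)
    (hell : ∀ s t : ℝ, lam * (s ^ 2 + t ^ 2) ≤ a11 * s ^ 2 + 2 * a12 * s * t + a22 * t ^ 2)
    (hγ0 : 0 < γ) (hγ : γ < 1) {x0 : ℂ} (hx0 : x0 ≠ 0) {A : Set ℂ}
    (hA : A = {z | x0.re * z.re + x0.im * z.im ≤ 0})
    {W : ℂ → ℝ} {P : ℂ → ℂ →L[ℝ] ℝ} {S : ℂ → ℂ →L[ℝ] ℂ →L[ℝ] ℝ}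
    (hW : ∀ z ∈ A, HasFDerivWithinAt W (P z) A z)
    (hP : ∀ z ∈ A, HasFDerivWithinAt P (S z) A z) (hsym : ∀ z ∈ A, ∀ h k, S z h k = S z k h)
    (htr : ∀ z ∈ A,
      a11 * S z 1 1 + 2 * a12 * S z 1 Complex.I + a22 * S z Complex.I Complex.I = 0)
    (hS : ∀ z ∈ A, ‖S z‖ ≤ C * ‖z‖ ^ γ)
    (hbd : ∀ z, x0.re * z.re + x0.im * z.im = 0 → W z = 0) : ∀ z ∈ A, S z = 0 := by
  obtain ⟨v₁, v₂, h1, h2, h3, h4⟩ := exists_adapted_basis hlam hell hx0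
  set T := Tlin v₁ v₂ with hT
  set N := x0.re * v₂.re + x0.im * v₂.im with hN
  have hTx : ∀ z, x0.re * (T z).re + x0.im * (T z).im = N * z.im := by
    intro z
    rw [hT, Tlin_apply]
    simp
    linear_combination z.re * h1
  set B : Set ℂ := {z | 0 ≤ z.im} with hB
  set B' : Set ℂ := {z | z.im ≤ 0} with hB'
  have hTB : ∀ z, T z ∈ A ↔ z ∈ B := by
    intro z
    rw [hA, hB, mem_ofPred_eq, mem_ofPred_eq, hTx]
    constructor
    · intro h; by_contra h'; push Not at h'; nlinarith
    · intro h; exact mul_nonpos_of_nonpos_of_nonneg h2.le h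
  have hC : 0 ≤ C := by
    have hm : T Complex.I ∈ A := (hTB _).2 (by simp [hB])
    have hne : T Complex.I ≠ 0 := by
      intro h
      have := hTx Complex.I
      rw [h] at this; simp at this; linarith
    have := (norm_nonneg (S (T Complex.I))).trans (hS _ hm)
    exact nonneg_of_mul_nonneg_left this (by positivity)
  set g : ℂ → ℂ := fun z => (P (T z) v₁ : ℂ) - Complex.I * P (T z) v₂ with hgdef
  set g' : ℂ → ℂ := fun z => (S (T z) v₁ v₁ : ℂ) - Complex.I * S (T z) v₁ v₂ with hg'def
  have hg : ∀ z ∈ B, HasDerivWithinAt g (g' z) B z := by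
    intro z hz
    have hz' := (hTB z).2 hz
    exact hasDerivWithinAt_cgrad (A := A) (fun z hz => (hTB z).2 hz) (hP _ hz')
      (hsym _ hz' _ _) (by rw [h4 _ (hsym _ hz' _ _), htr _ hz'])
  -- along the boundary line the tangential first and second derivatives vanish
  have hline : ∀ x : ℝ, HasDerivAt (fun t : ℝ => T (t : ℂ)) v₁ x := by
    intro x
    have : (fun t : ℝ => T (t : ℂ)) = fun t : ℝ => t • v₁ := by
      funext t; simp [hT, Tlin_apply]
    rw [this]
    simpa using (hasDerivAt_id x).smul_const v₁
  have hmem : ∀ t : ℝ, T (t : ℂ) ∈ A := fun t => (hTB _).2 (by simp [hB])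
  have hPv : ∀ x : ℝ, P (T x) v₁ = 0 := by
    intro x
    have h5 : HasDerivAt (fun t : ℝ => W (T t)) (P (T x) v₁) x := by
      rw [← hasDerivWithinAt_univ]
      exact (hW _ (hmem x)).comp_hasDerivWithinAt x (hline x).hasDerivWithinAt
        (fun t _ => hmem t)
    have h6 : (fun t : ℝ => W (T t)) = fun _ => 0 := by
      funext t
      exact hbd _ (by rw [hTx]; simp)
    rw [h6] at h5
    exact h5.unique (hasDerivAt_const x 0)
  have hSv : ∀ x : ℝ, S (T x) v₁ v₁ = 0 := by
    intro x
    have h5 : HasDerivAt (fun t : ℝ => P (T t)) (S (T x) v₁) x := by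
      rw [← hasDerivWithinAt_univ]
      exact (hP _ (hmem x)).comp_hasDerivWithinAt x (hline x).hasDerivWithinAt
        (fun t _ => hmem t)
    have h7 : HasDerivAt (fun t : ℝ => P (T t) v₁) (S (T x) v₁ v₁) x :=
      ((ContinuousLinearMap.apply ℝ ℝ v₁).hasFDerivAt.comp_hasDerivAt x h5)
    have h6 : (fun t : ℝ => P (T t) v₁) = fun _ => 0 := by
      funext t
      exact hPv t
    rw [h6] at h7
    exact h7.unique (hasDerivAt_const x 0)
  have conjB : ∀ z, z ∈ B' → (starRingEnd ℂ) z ∈ B := by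
    intro z hz; simp only [hB, hB', mem_ofPred_eq, Complex.conj_im] at *; linarith
  set k : ℂ → ℂ := fun z => -(starRingEnd ℂ) (g ((starRingEnd ℂ) z)) with hk
  have hkd : ∀ z ∈ B', HasDerivWithinAt k (-(starRingEnd ℂ) (g' ((starRingEnd ℂ) z))) B' z := by
    intro z hz
    have h5 := hg _ (conjB z hz)
    rw [hasDerivWithinAt_iff_tendsto] at h5 ⊢
    have h6 : Tendsto (fun w => (starRingEnd ℂ) w) (𝓝[B'] z) (𝓝[B] ((starRingEnd ℂ) z)) := by
      refine tendsto_nhdsWithin_iff.2 ⟨?_, ?_⟩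
      · exact (Complex.continuous_conj.tendsto z).mono_left nhdsWithin_le_nhds
      · filter_upwards [self_mem_nhdsWithin] with w hw using conjB w hw
    refine (h5.comp h6).congr fun w => ?_
    simp only [Function.comp, hk, smul_eq_mul]
    rw [← map_sub, Complex.norm_conj]
    congr 1
    rw [← Complex.norm_conj]
    simp only [map_sub, map_mul, Complex.conj_conj]
    rw [← norm_neg]
    congr 1
    ring
  set G : ℂ → ℂ := fun z => if 0 ≤ z.im then g z else k z with hG
  set G' : ℂ → ℂ := fun z => if 0 ≤ z.im then g' z else -(starRingEnd ℂ) (g' ((starRingEnd ℂ) z))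
    with hG'
  have real_eq : ∀ z : ℂ, z.im = 0 → z = (z.re : ℂ) := fun z hz => Complex.ext (by simp) (by simp [hz])
  have hgk : ∀ z : ℂ, z.im = 0 → k z = g z := by
    intro z hz
    rw [real_eq z hz]
    simp only [hk, hgdef, Complex.conj_ofReal, hPv]
    simp
  have hgk' : ∀ z : ℂ, z.im = 0 → -(starRingEnd ℂ) (g' ((starRingEnd ℂ) z)) = g' z := by
    intro z hz
    rw [real_eq z hz]
    simp only [hg'def, Complex.conj_ofReal, hSv]
    simp
  have hGd : ∀ z, HasDerivAt G (G' z) z := by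
    intro z
    have eB : ∀ z ∈ B, G z = g z := fun z hz => if_pos hz
    have eB' : ∀ z ∈ B', G z = k z := by
      intro z hz
      by_cases h : 0 ≤ z.im
      · rw [hgk z (le_antisymm hz h), hG]; simp [h]
      · simp [hG, h]
    rcases lt_trichotomy z.im 0 with h | h | h
    · have h5 : HasDerivWithinAt G (G' z) B' z := by
        have h6 : G' z = -(starRingEnd ℂ) (g' ((starRingEnd ℂ) z)) := if_neg (not_le.2 h)
        rw [h6]
        exact (hkd z h.le).congr (fun w hw => eB' w hw) (eB' z h.le)
      exact h5.hasDerivAt (mem_of_superset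
        ((isOpen_lt Complex.continuous_im continuous_const).mem_nhds h) fun w (hw : w.im < 0) => show w.im ≤ 0 from hw.le)
    · have h6 : G' z = g' z := if_pos h.ge
      have h7 : HasDerivWithinAt G (G' z) B z := by
        rw [h6]
        exact (hg z h.ge).congr (fun w hw => eB w hw) (eB z h.ge)
      have h8 : HasDerivWithinAt G (G' z) B' z := by
        rw [h6, ← hgk' z h]
        exact (hkd z h.le).congr (fun w hw => eB' w hw) (eB' z h.le)
      have h9 := h7.union h8
      have : B ∪ B' = univ := by
        ext w; simp [hB, hB', le_total]
      rwa [this, hasDerivWithinAt_univ] at h9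
    · have h5 : HasDerivWithinAt G (G' z) B z := by
        have h6 : G' z = g' z := if_pos h.le
        rw [h6]
        exact (hg z h.le).congr (fun w hw => eB w hw) (eB z h.le)
      exact h5.hasDerivAt (mem_of_superset
        ((isOpen_lt continuous_const Complex.continuous_im).mem_nhds h) fun w (hw : 0 < w.im) => show 0 ≤ w.im from hw.le)
  have hg'b : ∀ z ∈ B, ‖g' z‖ ≤ (C * ‖T‖ ^ γ * (‖v₁‖ * ‖v₁‖ + ‖v₁‖ * ‖v₂‖)) * ‖z‖ ^ γ := by
    intro z hz
    exact norm_cgrad_deriv_le hγ0.le hC (hS _ ((hTB z).2 hz))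
  have hGb : ∀ z, ‖deriv G z‖ ≤ (C * ‖T‖ ^ γ * (‖v₁‖ * ‖v₁‖ + ‖v₁‖ * ‖v₂‖)) * ‖z‖ ^ γ := by
    intro z
    rw [(hGd z).deriv]
    by_cases h : 0 ≤ z.im
    · simp only [hG', h, if_true]
      exact hg'b z h
    · simp only [hG', h, if_false]
      rw [norm_neg, Complex.norm_conj, ← Complex.norm_conj z]
      exact hg'b _ (conjB z (not_le.1 h).le)
  have hz := fun z => deriv_eq_zero_of_growth hγ0 hγ (fun z => (hGd z).differentiableAt) hGb z
  intro z hzA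
  obtain ⟨w, rfl⟩ := Tlin_surj h1 h2 h3 z
  have hw : w ∈ B := (hTB w).1 hzA
  refine bilin_zero h1 h2 h3 (hsym _ hzA _ _) (by rw [h4 _ (hsym _ hzA _ _), htr _ hzA]) ?_
  have := hz w
  rw [(hGd w).deriv] at this
  simpa only [hG', show (0 ≤ w.im) from hw, if_true] using this

section

/-! ### Second order jets and their Hölder spaces -/

/-- A field of second order jets on the plane: candidate value, gradient and Hessian. -/
structure Jet where
  /-- the function -/
  w : ℂ → ℝ
  /-- its gradient -/
  p : ℂ → ℂ →L[ℝ] ℝ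
  /-- its Hessian -/
  S : ℂ → ℂ →L[ℝ] ℂ →L[ℝ] ℝ

/-- The jet field is of class `C^{2,γ}` on `A` in the sense of Whitney, with constant `M`. -/
structure TaylorOn (A : Set ℂ) (γ M : ℝ) (J : Jet) : Prop where
  t0 : ∀ x ∈ A, ∀ y ∈ A,
    |J.w y - J.w x - J.p x (y - x) - 1 / 2 * J.S x (y - x) (y - x)| ≤ M * ‖y - x‖ ^ (2 + γ)
  t1 : ∀ x ∈ A, ∀ y ∈ A, ‖J.p y - J.p x - J.S x (y - x)‖ ≤ M * ‖y - x‖ ^ (1 + γ)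
  t2 : ∀ x ∈ A, ∀ y ∈ A, ‖J.S y - J.S x‖ ≤ M * ‖y - x‖ ^ γ
  sym : ∀ x ∈ A, ∀ h k, J.S x h k = J.S x k h

/-- The jet field has `C^{2,γ}` norm at most `M` on `A`. -/
structure BdOn (A : Set ℂ) (γ M : ℝ) (J : Jet) : Prop extends TaylorOn A γ M J where
  b0 : ∀ x ∈ A, |J.w x| ≤ M
  b1 : ∀ x ∈ A, ‖J.p x‖ ≤ M
  b2 : ∀ x ∈ A, ‖J.S x‖ ≤ M

lemma isLittleO_rpow_of_bound {F : Type*} [NormedAddCommGroup F] {A : Set ℂ} {x : ℂ}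
    {f : ℂ → F} {M s : ℝ} (hs : 1 < s) (h : ∀ y ∈ A, ‖f y‖ ≤ M * ‖y - x‖ ^ s) :
    f =o[𝓝[A] x] fun y => y - x := by
  have h1 : f =O[𝓝[A] x] fun y => ‖y - x‖ ^ s := by
    refine Asymptotics.IsBigO.of_bound M ?_
    filter_upwards [self_mem_nhdsWithin] with y hy
    rw [Real.norm_of_nonneg (by positivity)]
    exact h y hy
  refine h1.trans_isLittleO ?_
  have h2 : (fun y : ℂ => ‖y - x‖ ^ s) = fun y : ℂ => ‖y - x‖ ^ (s - 1) * ‖y - x‖ := by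
    funext y
    rcases eq_or_ne (‖y - x‖) 0 with h0 | h0
    · rw [h0, Real.zero_rpow (by linarith)]; simp
    · rw [Real.rpow_sub_one h0]; field_simp
  rw [h2]
  have h3 : (fun y : ℂ => ‖y - x‖ ^ (s - 1)) =o[𝓝[A] x] fun _ => (1 : ℝ) := by
    rw [Asymptotics.isLittleO_one_iff]
    have : Tendsto (fun y : ℂ => ‖y - x‖ ^ (s - 1)) (𝓝 x) (𝓝 (‖x - x‖ ^ (s - 1))) :=
      (((continuous_id.sub continuous_const).norm).rpow_const
        (fun _ => Or.inr (by linarith))).tendsto x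
    rw [sub_self, norm_zero, Real.zero_rpow (by linarith)] at this
    exact this.mono_left nhdsWithin_le_nhds
  have h4 := h3.mul_isBigO (Asymptotics.isBigO_refl (fun y : ℂ => ‖y - x‖) (𝓝[A] x))
  simp only [one_mul] at h4
  exact h4.of_norm_right

namespace TaylorOn
variable {A B : Set ℂ} {γ M M' : ℝ} {J J' : Jet}

lemma mono (h : TaylorOn A γ M J) (hM : M ≤ M') : TaylorOn A γ M' J where
  t0 x hx y hy := (h.t0 x hx y hy).trans (by gcongr)
  t1 x hx y hy := (h.t1 x hx y hy).trans (by gcongr)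
  t2 x hx y hy := (h.t2 x hx y hy).trans (by gcongr)
  sym := h.sym

lemma hasFDeriv_p (h : TaylorOn A γ M J) (hγ : 0 < γ) {x : ℂ} (hx : x ∈ A) :
    HasFDerivWithinAt J.p (J.S x) A x :=
  .of_isLittleO (isLittleO_rpow_of_bound (by linarith) fun y hy => h.t1 x hx y hy)

lemma hasFDeriv_w (h : TaylorOn A γ M J) (hγ : 0 < γ) {x : ℂ} (hx : x ∈ A) :
    HasFDerivWithinAt J.w (J.p x) A x := by
  refine .of_isLittleO ?_
  have h1 : (fun y => J.w y - J.w x - J.p x (y - x) - 1 / 2 * J.S x (y - x) (y - x))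
      =o[𝓝[A] x] fun y => y - x :=
    isLittleO_rpow_of_bound (s := 2 + γ) (by linarith)
      fun y hy => by rw [Real.norm_eq_abs]; exact h.t0 x hx y hy
  have h2 : (fun y => 1 / 2 * J.S x (y - x) (y - x)) =o[𝓝[A] x] fun y => y - x := by
    refine isLittleO_rpow_of_bound (s := 2) (M := 1 / 2 * ‖J.S x‖) one_lt_two fun y _ => ?_
    have := (J.S x).le_opNorm₂ (y - x) (y - x)
    rw [norm_mul, Real.norm_of_nonneg (by norm_num : (0 : ℝ) ≤ 1 / 2), Real.rpow_two]
    nlinarith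
  simpa using h1.add h2

/-- On convex sets the Whitney conditions follow from Hölder continuity of the Hessian. -/
lemma of_hasFDeriv (hA : Convex ℝ A) (hγ : 0 < γ) (hM : 0 ≤ M)
    (hw : ∀ x ∈ A, HasFDerivWithinAt J.w (J.p x) A x)
    (hp : ∀ x ∈ A, HasFDerivWithinAt J.p (J.S x) A x)
    (hS : ∀ x ∈ A, ∀ y ∈ A, ‖J.S y - J.S x‖ ≤ M * ‖y - x‖ ^ γ)
    (hsym : ∀ x ∈ A, ∀ h k, J.S x h k = J.S x k h) : TaylorOn A γ M J := by
  have key : ∀ x ∈ A, ∀ y ∈ A, segment ℝ x y ⊆ A := fun x hx y hy => hA.segment_subset hx hy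
  have hle : ∀ x y z : ℂ, z ∈ segment ℝ x y → ‖z - x‖ ≤ ‖y - x‖ := fun x y z hz =>
    norm_sub_le_of_mem_segment hz
  have hrp : ∀ (t s : ℝ), 0 ≤ t → 0 < s → t ^ s * t = t ^ (1 + s) := by
    intro t s ht hs
    rcases ht.eq_or_lt with rfl | ht
    · rw [Real.zero_rpow hs.ne', Real.zero_rpow (by linarith)]; ring
    · rw [Real.rpow_add ht, Real.rpow_one]; ring
  have t1 : ∀ x ∈ A, ∀ y ∈ A, ‖J.p y - J.p x - J.S x (y - x)‖ ≤ M * ‖y - x‖ ^ (1 + γ) := by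
    intro x hx y hy
    have hf : ∀ z ∈ segment ℝ x y, HasFDerivWithinAt (fun z => J.p z - J.S x z) (J.S z - J.S x)
        (segment ℝ x y) z := fun z hz =>
      ((hp z (key x hx y hy hz)).mono (key x hx y hy)).sub (J.S x).hasFDerivWithinAt
    have := (convex_segment x y).norm_image_sub_le_of_norm_hasFDerivWithin_le
      (C := M * ‖y - x‖ ^ γ) hf (fun z hz => (hS x hx z (key x hx y hy hz)).trans (by
        gcongr; exact hle x y z hz)) (left_mem_segment ℝ x y) (right_mem_segment ℝ x y)
    rw [mul_assoc, hrp _ _ (norm_nonneg _) hγ] at this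
    refine le_trans (le_of_eq ?_) this
    congr 1
    rw [map_sub]; abel
  refine ⟨fun x hx y hy => ?_, t1, hS, hsym⟩
  set f : ℂ → ℝ := fun z => J.w z - J.p x z - 1 / 2 * J.S x (z - x) (z - x) with hfd
  have hf : ∀ z ∈ segment ℝ x y, HasFDerivWithinAt f (J.p z - J.p x - J.S x (z - x))
      (segment ℝ x y) z := by
    intro z hz
    have h1 := ((hw z (key x hx y hy hz)).mono (key x hx y hy)).sub (J.p x).hasFDerivWithinAt
    have h2 : HasFDerivAt (fun z => z - x) (ContinuousLinearMap.id ℝ ℂ) z :=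
      (hasFDerivAt_id z).sub_const x
    have h3 := ((J.S x).isBoundedBilinearMap.hasFDerivAt (z - x, z - x)).comp z (h2.prodMk h2)
    have h4 := h1.sub ((h3.const_mul (1 / 2)).hasFDerivWithinAt (s := segment ℝ x y))
    refine h4.congr_fderiv ?_
    ext k
    simp [IsBoundedBilinearMap.deriv, hsym x hx k (z - x)]
    ring
  have := (convex_segment x y).norm_image_sub_le_of_norm_hasFDerivWithin_le
      (C := M * ‖y - x‖ ^ (1 + γ)) hf (fun z hz => (t1 x hx z (key x hx y hy hz)).trans (by
        gcongr; exact hle x y z hz)) (left_mem_segment ℝ x y) (right_mem_segment ℝ x y)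
  rw [mul_assoc, hrp _ _ (norm_nonneg _) (by linarith), ← add_assoc, one_add_one_eq_two] at this
  refine le_trans (le_of_eq ?_) this
  rw [Real.norm_eq_abs]
  congr 1
  simp [hfd]
  ring

lemma comb (h : TaylorOn A γ M J) (h' : TaylorOn A γ M' J') (s t : ℝ) :
    TaylorOn A γ (|s| * M + |t| * M')
      ⟨fun x => s * J.w x + t * J'.w x, fun x => s • J.p x + t • J'.p x,
        fun x => s • J.S x + t • J'.S x⟩ where
  t0 x hx y hy := by
    have e : s * J.w y + t * J'.w y - (s * J.w x + t * J'.w x) -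
        (s • J.p x + t • J'.p x) (y - x) - 1 / 2 * (s • J.S x + t • J'.S x) (y - x) (y - x) =
        s * (J.w y - J.w x - J.p x (y - x) - 1 / 2 * J.S x (y - x) (y - x)) +
        t * (J'.w y - J'.w x - J'.p x (y - x) - 1 / 2 * J'.S x (y - x) (y - x)) := by
      simp only [add_apply, smul_apply, smul_eq_mul]; ring
    simp only [e]
    refine (abs_add_le _ _).trans ?_
    rw [abs_mul, abs_mul, add_mul, mul_assoc, mul_assoc]
    gcongr
    exacts [h.t0 x hx y hy, h'.t0 x hx y hy]
  t1 x hx y hy := by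
    have e : s • J.p y + t • J'.p y - (s • J.p x + t • J'.p x) -
        (s • J.S x + t • J'.S x) (y - x) = s • (J.p y - J.p x - J.S x (y - x)) +
        t • (J'.p y - J'.p x - J'.S x (y - x)) := by
      simp only [add_apply, smul_apply]; module
    simp only [e]
    refine (norm_add_le _ _).trans ?_
    rw [norm_smul, norm_smul, Real.norm_eq_abs, Real.norm_eq_abs, add_mul, mul_assoc, mul_assoc]
    gcongr
    exacts [h.t1 x hx y hy, h'.t1 x hx y hy]
  t2 x hx y hy := by
    have e : s • J.S y + t • J'.S y - (s • J.S x + t • J'.S x) = s • (J.S y - J.S x) +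
        t • (J'.S y - J'.S x) := by module
    simp only [e]
    refine (norm_add_le (s • (J.S y - J.S x)) (t • (J'.S y - J'.S x))).trans ?_
    rw [norm_smul, norm_smul, Real.norm_eq_abs, Real.norm_eq_abs, add_mul, mul_assoc, mul_assoc]
    gcongr
    exacts [h.t2 x hx y hy, h'.t2 x hx y hy]
  sym x hx a b := by
    simp only [add_apply, smul_apply]
    rw [h.sym x hx, h'.sym x hx]

end TaylorOn

/-- Linear combination of jets. -/
def Jet.comb (s t : ℝ) (J J' : Jet) : Jet :=
  ⟨fun x => s * J.w x + t * J'.w x, fun x => s • J.p x + t • J'.p x,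
        fun x => s • J.S x + t • J'.S x⟩

namespace BdOn
variable {A B : Set ℂ} {γ M M' : ℝ} {J J' : Jet}

lemma mono (h : BdOn A γ M J) (hM : M ≤ M') : BdOn A γ M' J :=
  ⟨h.toTaylorOn.mono hM, fun x hx => (h.b0 x hx).trans hM, fun x hx => (h.b1 x hx).trans hM,
    fun x hx => (h.b2 x hx).trans hM⟩

lemma comb (h : BdOn A γ M J) (h' : BdOn A γ M' J') (s t : ℝ) :
    BdOn A γ (|s| * M + |t| * M') (Jet.comb s t J J') := by
  refine ⟨h.toTaylorOn.comb h'.toTaylorOn s t, fun x hx => ?_, fun x hx => ?_, fun x hx => ?_⟩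
  · refine (abs_add_le _ _).trans ?_
    rw [abs_mul, abs_mul]
    gcongr
    exacts [h.b0 x hx, h'.b0 x hx]
  · refine (norm_add_le _ _).trans ?_
    rw [norm_smul, norm_smul, Real.norm_eq_abs, Real.norm_eq_abs]
    gcongr
    exacts [h.b1 x hx, h'.b1 x hx]
  · refine (norm_add_le (s • J.S x) (t • J'.S x)).trans ?_
    rw [norm_smul, norm_smul, Real.norm_eq_abs, Real.norm_eq_abs]
    gcongr
    exacts [h.b2 x hx, h'.b2 x hx]

/-- The set of admissible constants is closed from the right. -/
lemma of_forall_gt (h : ∀ M' > M, BdOn A γ M' J) : BdOn A γ M J := by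
  have key : ∀ {a b : ℝ}, 0 ≤ b → (∀ M' > M, a ≤ M' * b) → a ≤ M * b := by
    intro a b hb hab
    have hl : Tendsto (fun M' => M' * b) (𝓝[>] M) (𝓝 (M * b)) :=
      ((continuous_id.mul continuous_const).tendsto M).mono_left nhdsWithin_le_nhds
    exact ge_of_tendsto hl (by filter_upwards [self_mem_nhdsWithin] with M' hM' using hab M' hM')
  have key1 : ∀ {a : ℝ}, (∀ M' > M, a ≤ M') → a ≤ M := fun h => le_of_forall_gt_imp_ge_of_dense h
  exact ⟨⟨fun x hx y hy => key (by positivity) fun M' hM' => (h M' hM').t0 x hx y hy,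
    fun x hx y hy => key (by positivity) fun M' hM' => (h M' hM').t1 x hx y hy,
    fun x hx y hy => key (by positivity) fun M' hM' => (h M' hM').t2 x hx y hy,
    (h (M + 1) (by simp)).sym⟩,
    fun x hx => key1 fun M' hM' => (h M' hM').b0 x hx,
    fun x hx => key1 fun M' hM' => (h M' hM').b1 x hx,
    fun x hx => key1 fun M' hM' => (h M' hM').b2 x hx⟩

end BdOn

/-! ### Limits of jets along an ultrafilter -/

lemma ultra_lim {E : Type*} [NormedAddCommGroup E] [ProperSpace E] (F : Ultrafilter ℕ)
    {f : ℕ → E} {B : ℝ} (h : ∀ᶠ n in (F : Filter ℕ), ‖f n‖ ≤ B) :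
    ∃ l, Tendsto f F (𝓝 l) := by
  obtain ⟨l, -, hl⟩ := (isCompact_closedBall (0 : E) B).ultrafilter_le_nhds (F.map f) (by
    rw [Ultrafilter.coe_map, le_principal_iff, mem_map]
    filter_upwards [h] with n hn
    simpa using hn)
  exact ⟨l, hl⟩

/-- `C^{2,γ}` jets with uniform constants on sets `An n` have a limit jet along an ultrafilter,
on every set whose points are limits of points of `An n`; the convergence is locally uniform in the
sense that it holds along moving base points. -/
lemma jet_limit (F : Ultrafilter ℕ) {An : ℕ → Set ℂ} {K : ℕ → Jet} {A : Set ℂ} {γ M : ℝ}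
    (hγ : 0 < γ) (hT : ∀ᶠ n in (F : Filter ℕ), TaylorOn (An n) γ M (K n)) (π : ℕ → ℂ → ℂ)
    (hπ : ∀ z ∈ A, (∀ᶠ n in (F : Filter ℕ), π n z ∈ An n) ∧ Tendsto (fun n => π n z) F (𝓝 z))
    (hb : ∀ z ∈ A, ∃ B, ∀ᶠ n in (F : Filter ℕ),
      |(K n).w (π n z)| ≤ B ∧ ‖(K n).p (π n z)‖ ≤ B ∧ ‖(K n).S (π n z)‖ ≤ B) :
    ∃ J : Jet, TaylorOn A γ M J ∧ ∀ z ∈ A, ∀ ζ : ℕ → ℂ, (∀ᶠ n in (F : Filter ℕ), ζ n ∈ An n) →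
      Tendsto ζ F (𝓝 z) → Tendsto (fun n => (K n).w (ζ n)) F (𝓝 (J.w z)) ∧
        Tendsto (fun n => (K n).p (ζ n)) F (𝓝 (J.p z)) ∧
        Tendsto (fun n => (K n).S (ζ n)) F (𝓝 (J.S z)) := by
  classical
  have : ProperSpace (ℂ →L[ℝ] ℝ) := FiniteDimensional.proper ℝ _
  have : ProperSpace (ℂ →L[ℝ] ℂ →L[ℝ] ℝ) := FiniteDimensional.proper ℝ (ℂ →L[ℝ] ℂ →L[ℝ] ℝ)
  have ex : ∀ z : ℂ, ∃ l : ℝ × (ℂ →L[ℝ] ℝ) × (ℂ →L[ℝ] ℂ →L[ℝ] ℝ), z ∈ A →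
      Tendsto (fun n => (K n).w (π n z)) F (𝓝 l.1) ∧
        Tendsto (fun n => (K n).p (π n z)) F (𝓝 l.2.1) ∧
        Tendsto (fun n => (K n).S (π n z)) F (𝓝 l.2.2) := by
    intro z
    by_cases hz : z ∈ A
    · obtain ⟨B, hB⟩ := hb z hz
      obtain ⟨l1, h1⟩ := ultra_lim F (f := fun n => (K n).w (π n z)) (hB.mono fun n h => h.1)
      obtain ⟨l2, h2⟩ := ultra_lim F (hB.mono fun n h => h.2.1)
      obtain ⟨l3, h3⟩ := ultra_lim F (hB.mono fun n h => h.2.2)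
      exact ⟨(l1, l2, l3), fun _ => ⟨h1, h2, h3⟩⟩
    · exact ⟨0, fun h => absurd h hz⟩
  choose l hl using ex
  have hrp : ∀ (s : ℝ), 0 < s → ∀ {g : ℕ → ℂ} {z : ℂ}, Tendsto g F (𝓝 z) →
      Tendsto (fun n => M * ‖g n‖ ^ s) F (𝓝 (M * ‖z‖ ^ s)) := fun s hs g z hg =>
    (hg.norm.rpow_const (Or.inr hs.le)).const_mul M
  have hap : ∀ {L : ℕ → ℂ →L[ℝ] ℝ} {L0 : ℂ →L[ℝ] ℝ} {g : ℕ → ℂ} {z : ℂ}, Tendsto L F (𝓝 L0) →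
      Tendsto g F (𝓝 z) → Tendsto (fun n => L n (g n)) F (𝓝 (L0 z)) := fun hL hg =>
    (isBoundedBilinearMap_apply.continuous.tendsto (_, _)).comp (hL.prodMk_nhds hg)
  have hap2 : ∀ {L : ℕ → ℂ →L[ℝ] ℂ →L[ℝ] ℝ} {L0 : ℂ →L[ℝ] ℂ →L[ℝ] ℝ} {g : ℕ → ℂ} {z : ℂ},
      Tendsto L F (𝓝 L0) →
      Tendsto g F (𝓝 z) → Tendsto (fun n => L n (g n)) F (𝓝 (L0 z)) := fun hL hg =>
    (isBoundedBilinearMap_apply.continuous.tendsto (_, _)).comp (hL.prodMk_nhds hg)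
  refine ⟨⟨fun z => (l z).1, fun z => (l z).2.1, fun z => (l z).2.2⟩, ⟨?_, ?_, ?_, ?_⟩, ?_⟩
  · intro x hx y hy
    obtain ⟨x1, x2, x3⟩ := hl x hx
    obtain ⟨y1, y2, y3⟩ := hl y hy
    have hd := (hπ y hy).2.sub (hπ x hx).2
    have h1 := (((y1.sub x1).sub (hap x2 hd)).sub ((hap (hap2 x3 hd) hd).const_mul (1 / 2))).abs
    refine le_of_tendsto_of_tendsto h1 (hrp _ (by linarith) hd) ?_
    filter_upwards [hT, (hπ x hx).1, (hπ y hy).1] with n hn hxn hyn using hn.t0 _ hxn _ hyn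
  · intro x hx y hy
    obtain ⟨x1, x2, x3⟩ := hl x hx
    obtain ⟨y1, y2, y3⟩ := hl y hy
    have hd := (hπ y hy).2.sub (hπ x hx).2
    have h1 := ((y2.sub x2).sub (hap2 x3 hd)).norm
    refine le_of_tendsto_of_tendsto h1 (hrp _ (by linarith) hd) ?_
    filter_upwards [hT, (hπ x hx).1, (hπ y hy).1] with n hn hxn hyn using hn.t1 _ hxn _ hyn
  · intro x hx y hy
    obtain ⟨x1, x2, x3⟩ := hl x hx
    obtain ⟨y1, y2, y3⟩ := hl y hy
    have hd := (hπ y hy).2.sub (hπ x hx).2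
    have h1 := (y3.sub x3).norm
    refine le_of_tendsto_of_tendsto h1 (hrp _ (by linarith) hd) ?_
    filter_upwards [hT, (hπ x hx).1, (hπ y hy).1] with n hn hxn hyn using hn.t2 _ hxn _ hyn
  · intro x hx h k
    obtain ⟨x1, x2, x3⟩ := hl x hx
    refine tendsto_nhds_unique (hap (hap2 x3 tendsto_const_nhds) tendsto_const_nhds)
      ((hap (hap2 x3 (tendsto_const_nhds (x := k))) (tendsto_const_nhds (x := h))).congr' ?_)
    filter_upwards [hT, (hπ x hx).1] with n hn hxn using hn.sym _ hxn _ _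
  · intro z hz ζ hζ hζz
    obtain ⟨z1, z2, z3⟩ := hl z hz
    have hd := hζz.sub (hπ z hz).2
    have hd0 : Tendsto (fun n => ζ n - π n z) F (𝓝 0) := by simpa using hd
    have hr : ∀ s : ℝ, 0 < s → Tendsto (fun n => M * ‖ζ n - π n z‖ ^ s) F (𝓝 0) := by
      intro s hs
      have := hrp s hs hd0
      rwa [norm_zero, Real.zero_rpow hs.ne', mul_zero] at this
    have e3 : Tendsto (fun n => (K n).S (ζ n) - (K n).S (π n z)) F (𝓝 0) := by
      refine squeeze_zero_norm' ?_ (hr γ hγ)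
      filter_upwards [hT, (hπ z hz).1, hζ] with n hn hxn hyn using hn.t2 _ hxn _ hyn
    have e2 : Tendsto (fun n => (K n).p (ζ n) - (K n).p (π n z) - (K n).S (π n z) (ζ n - π n z))
        F (𝓝 0) := by
      refine squeeze_zero_norm' ?_ (hr (1 + γ) (by linarith))
      filter_upwards [hT, (hπ z hz).1, hζ] with n hn hxn hyn using hn.t1 _ hxn _ hyn
    have e1 : Tendsto (fun n => (K n).w (ζ n) - (K n).w (π n z) - (K n).p (π n z) (ζ n - π n z)
        - 1 / 2 * (K n).S (π n z) (ζ n - π n z) (ζ n - π n z)) F (𝓝 0) := by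
      refine squeeze_zero_norm' ?_ (hr (2 + γ) (by linarith))
      filter_upwards [hT, (hπ z hz).1, hζ] with n hn hxn hyn
      rw [Real.norm_eq_abs]
      exact hn.t0 _ hxn _ hyn
    refine ⟨?_, ?_, ?_⟩
    · have := ((e1.add z1).add (hap z2 hd0)).add ((hap (hap2 z3 hd0) hd0).const_mul (1 / 2))
      simp only [map_zero, mul_zero, add_zero, zero_add] at this
      exact this.congr fun n => by ring
    · have := (e2.add z2).add (hap2 z3 hd0)
      simp only [map_zero, add_zero, zero_add] at this
      exact this.congr fun n => by abel
    · have := e3.add z3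
      simp only [zero_add] at this
      exact this.congr fun n => by abel

end

/-! ### The maximum principle -/

lemma second_deriv_nonpos {φ φ' : ℝ → ℝ} {c : ℝ} (hloc : IsLocalMax φ 0)
    (h1 : ∀ᶠ t in 𝓝 (0 : ℝ), HasDerivAt φ (φ' t) t) (h2 : HasDerivAt φ' c 0) : c ≤ 0 := by
  by_contra hc
  push Not at hc
  have e1 : deriv φ =ᶠ[𝓝 0] φ' := h1.mono fun t ht => ht.deriv
  have e2 : deriv (deriv φ) 0 = c := by rw [e1.deriv_eq, h2.deriv]
  have hmin : IsLocalMin φ 0 := isLocalMin_of_deriv_deriv_pos (by rw [e2]; exact hc)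
    hloc.deriv_eq_zero h1.self_of_nhds.continuousAt
  have hconst : φ =ᶠ[𝓝 0] fun _ => φ 0 := by
    filter_upwards [hloc, hmin] with t h3 h4 using le_antisymm h3 h4
  have e3 : deriv φ =ᶠ[𝓝 0] fun _ => 0 := by
    filter_upwards [hconst.eventuallyEq_nhds] with t ht
    rw [ht.deriv_eq]; simp
  have e4 : deriv (deriv φ) 0 = 0 := by rw [e3.deriv_eq]; simp
  linarith

/-- If `w` is positive somewhere in `G` but not on the boundary, then `w + δ e^{k l}` has interior
maxima, located in a compact subset of `G` independent of `k` and `δ`. -/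
lemma touching {E : Type*} [NormedAddCommGroup E] [NormedSpace ℝ E] [ProperSpace E]
    {G : Set E} (hG : IsOpen G) (hGb : Bornology.IsBounded G) {w : E → ℝ} {p : E → E →L[ℝ] ℝ}
    {S : E → E →L[ℝ] E →L[ℝ] ℝ} (hc : ContinuousOn w (closure G))
    (hw : ∀ x ∈ G, HasFDerivAt w (p x) x) (hp : ∀ x ∈ G, HasFDerivAt p (S x) x)
    (hbd : ∀ x ∈ frontier G, w x ≤ 0) (l : E →L[ℝ] ℝ) {x1 : E} (hx1 : x1 ∈ G) (hpos : 0 < w x1) :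
    ∃ K ⊆ G, IsCompact K ∧ ∀ k η : ℝ, 0 < η → ∃ x ∈ K, ∃ δ, 0 < δ ∧ δ < η ∧
      p x = -(δ * k) • l ∧ ∀ h, S x h h ≤ -(δ * k ^ 2 * (l h) ^ 2) := by
  have hcomp : IsCompact (closure G) := hGb.isCompact_closure
  set ε := w x1 / 2 with hε
  have hKc : IsCompact {x ∈ closure G | ε ≤ w x} := by
    have : {x ∈ closure G | ε ≤ w x} = closure G ∩ w ⁻¹' (Ici ε) := rfl
    rw [this]
    exact hcomp.of_isClosed_subset (hc.preimage_isClosed_of_isClosed isClosed_closure isClosed_Ici)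
      inter_subset_left
  refine ⟨{x ∈ closure G | ε ≤ w x}, ?_, hKc, ?_⟩
  · rintro x ⟨hx, hx'⟩
    by_contra hxG
    have : x ∈ frontier G := ⟨hx, by rwa [hG.interior_eq]⟩
    have := hbd x this
    linarith
  intro k η hη
  have hgc : Continuous fun x => Real.exp (k * l x) :=
    Real.continuous_exp.comp (continuous_const.mul l.continuous)
  obtain ⟨B, hB⟩ := hcomp.exists_bound_of_continuousOn hgc.continuousOn
  have hBpos : 0 < B := by
    have := hB x1 (subset_closure hx1)
    rw [Real.norm_of_nonneg (Real.exp_pos _).le] at this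
    exact (Real.exp_pos _).trans_le this
  set δ := min ε η / (2 * B) with hδ
  have hm : 0 < min ε η := lt_min (by linarith) hη
  have hδpos : 0 < δ := by positivity
  have hδB : ∀ x ∈ closure G, δ * Real.exp (k * l x) ≤ min ε η / 2 := by
    intro x hx
    have := hB x hx
    rw [Real.norm_of_nonneg (Real.exp_pos _).le] at this
    calc δ * Real.exp (k * l x) ≤ δ * B := by gcongr
      _ = min ε η / 2 := by rw [hδ]; field_simp
  obtain ⟨z, hz, hzmax⟩ := hcomp.exists_isMaxOn ⟨x1, subset_closure hx1⟩
    (hc.add (hgc.continuousOn.const_smul δ))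
  have hzK : ε ≤ w z := by
    have h1 : w x1 + δ * Real.exp (k * l x1) ≤ w z + δ * Real.exp (k * l z) :=
      hzmax (subset_closure hx1)
    have h2 := hδB z hz
    have h3 : 0 < δ * Real.exp (k * l x1) := mul_pos hδpos (Real.exp_pos _)
    have h4 := min_le_left ε η
    linarith
  have hzG : z ∈ G := by
    by_contra hxG
    have : z ∈ frontier G := ⟨hz, by rwa [hG.interior_eq]⟩
    have := hbd z this
    linarith
  have hloc : IsLocalMax (fun x => w x + δ * Real.exp (k * l x)) z := by
    filter_upwards [hG.mem_nhds hzG] with y hy using hzmax (subset_closure hy)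
  set g : E → ℝ := fun x => δ * Real.exp (k * l x) with hg
  have hgd : ∀ x, HasFDerivAt g ((g x * k) • l) x := by
    intro x
    have h1 : HasFDerivAt (fun x => k * l x) (k • l) x := (l.hasFDerivAt).const_mul k
    refine (h1.exp.const_mul δ).congr_fderiv ?_
    rw [hg, smul_smul, smul_smul]
  refine ⟨z, ⟨hz, hzK⟩, g z, mul_pos hδpos (Real.exp_pos _), ?_, ?_, ?_⟩
  · have := hδB z hz
    have h4 := min_le_right ε η
    have : g z ≤ min ε η / 2 := this
    linarith
  · have h1 := hloc.hasFDerivAt_eq_zero ((hw z hzG).add (hgd z))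
    rw [neg_smul]
    exact eq_neg_of_add_eq_zero_left h1
  · intro h
    have hline : ∀ t : ℝ, HasDerivAt (fun t : ℝ => z + t • h) h t := fun t => by
      simpa using ((hasDerivAt_id t).smul_const h).const_add z
    have hev : ∀ᶠ t : ℝ in 𝓝 0, z + t • h ∈ G := by
      have : Tendsto (fun t : ℝ => z + t • h) (𝓝 0) (𝓝 (z + (0 : ℝ) • h)) :=
        (hline 0).continuousAt
      rw [zero_smul, add_zero] at this
      exact this (hG.mem_nhds hzG)
    have h1 : ∀ᶠ t : ℝ in 𝓝 0, HasDerivAt (fun t : ℝ => w (z + t • h) + g (z + t • h))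
        (p (z + t • h) h + (g (z + t • h) * k) * l h) t := by
      filter_upwards [hev] with t ht
      have := ((hw _ ht).comp_hasDerivAt t (hline t)).add ((hgd _).comp_hasDerivAt t (hline t))
      exact this
    have hz0 : z + (0 : ℝ) • h = z := by simp
    have h2 : HasDerivAt (fun t : ℝ => p (z + t • h) h + (g (z + t • h) * k) * l h)
        (S z h h + ((g z * k) * l h * k) * l h) 0 := by
      have h3 : HasDerivAt (fun t : ℝ => p (z + t • h)) (S z h) 0 :=
        HasFDerivAt.comp_hasDerivAt (0 : ℝ) (by rw [hz0]; exact hp z hzG) (hline 0)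
      have h4 : HasDerivAt (fun t : ℝ => p (z + t • h) h) (S z h h) 0 := by
        simpa using h3.clm_apply (hasDerivAt_const (0 : ℝ) h)
      have h5 : HasDerivAt (fun t : ℝ => g (z + t • h)) ((g z * k) * l h) 0 := by
        have : HasFDerivAt g ((g z * k) • l) (z + (0 : ℝ) • h) := by rw [hz0]; exact hgd z
        exact this.comp_hasDerivAt (0 : ℝ) (hline 0)
      exact h4.add ((h5.mul_const k).mul_const (l h))
    have hlm : IsLocalMax (fun t : ℝ => w (z + t • h) + g (z + t • h)) 0 := by
      have : Tendsto (fun t : ℝ => z + t • h) (𝓝 0) (𝓝 (z + (0 : ℝ) • h)) :=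
        (hline 0).continuousAt
      rw [hz0] at this
      have h6 := this.eventually hloc
      filter_upwards [h6] with t ht
      rw [hz0]; exact ht
    have := second_deriv_nonpos hlm h1 h2
    nlinarith

/-- The trace of the product of a positive definite and a negative semidefinite matrix. -/
lemma trace_nonpos {lam a11 a12 a22 b11 b12 b22 : ℝ} (hlam : 0 < lam)
    (hell : ∀ s t : ℝ, lam * (s ^ 2 + t ^ 2) ≤ a11 * s ^ 2 + 2 * a12 * s * t + a22 * t ^ 2)
    (hB : ∀ s t : ℝ, b11 * s ^ 2 + 2 * b12 * s * t + b22 * t ^ 2 ≤ 0) :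
    a11 * b11 + 2 * a12 * b12 + a22 * b22 ≤ 0 := by
  have ha : 0 < a11 := by have := hell 1 0; nlinarith
  have hdet : 0 ≤ a11 * a22 - a12 ^ 2 := by
    have h2 := hell a12 (-a11)
    have h3 : 0 ≤ lam * (a12 ^ 2 + (-a11) ^ 2) := by positivity
    have : 0 ≤ a11 * (a11 * a22 - a12 ^ 2) := by nlinarith
    exact nonneg_of_mul_nonneg_right this ha
  have h1 := hB a11 a12
  have h2 := hB 0 1
  have h3 : b22 ≤ 0 := by linarith
  have h4 : a11 * (a11 * b11 + 2 * a12 * b12 + a22 * b22) ≤ 0 := by nlinarith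
  by_contra h
  push Not at h
  nlinarith [mul_pos ha h]

/-! ### Second order operators on the closed unit disc -/

/-- The closed unit disc. -/
def Dk : Set ℂ := Metric.closedBall 0 1

lemma mem_Dk {z : ℂ} : z ∈ Dk ↔ ‖z‖ ≤ 1 := by simp [Dk]

lemma convex_Dk : Convex ℝ Dk := convex_closedBall 0 1

lemma isCompact_Dk : IsCompact Dk := isCompact_closedBall 0 1

lemma uniqueDiffOn_Dk : UniqueDiffOn ℝ Dk :=
  uniqueDiffOn_convex convex_Dk (by
    rw [Dk, interior_closedBall _ one_ne_zero]
    exact ⟨0, by simp⟩)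

/-- `f` is bounded by `M` and `γ`-Hölder with constant `M` on `A`. -/
def HolOn {X : Type*} [NormedAddCommGroup X] (A : Set X) (γ M : ℝ) (f : X → ℝ) : Prop :=
  (∀ x ∈ A, |f x| ≤ M) ∧ ∀ x ∈ A, ∀ y ∈ A, |f y - f x| ≤ M * ‖y - x‖ ^ γ

/-- Coefficients of a second order operator without zeroth order term. -/
structure Coef where
  /-- leading coefficient -/
  a11 : ℂ → ℝ
  /-- mixed leading coefficient -/
  a12 : ℂ → ℝ
  /-- leading coefficient -/
  a22 : ℂ → ℝ
  /-- drift -/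
  b1 : ℂ → ℝ
  /-- drift -/
  b2 : ℂ → ℝ

/-- Hölder bounds and uniform ellipticity on the closed disc. -/
structure CoefOK (γ lam Lam : ℝ) (c : Coef) : Prop where
  h11 : HolOn Dk γ Lam c.a11
  h12 : HolOn Dk γ Lam c.a12
  h22 : HolOn Dk γ Lam c.a22
  h1 : HolOn Dk γ Lam c.b1
  h2 : HolOn Dk γ Lam c.b2
  ell : ∀ x ∈ Dk, ∀ s t : ℝ,
    lam * (s ^ 2 + t ^ 2) ≤ c.a11 x * s ^ 2 + 2 * c.a12 x * s * t + c.a22 x * t ^ 2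

/-- The operator `a_ij D_ij + b_i D_i` applied to a jet. -/
def Lop (c : Coef) (J : Jet) (x : ℂ) : ℝ :=
  c.a11 x * J.S x 1 1 + 2 * c.a12 x * J.S x 1 Complex.I + c.a22 x * J.S x Complex.I Complex.I
    + c.b1 x * J.p x 1 + c.b2 x * J.p x Complex.I

lemma Lop_comb (c : Coef) (s t : ℝ) (J J' : Jet) (x : ℂ) :
    Lop c (Jet.comb s t J J') x = s * Lop c J x + t * Lop c J' x := by
  simp only [Lop, Jet.comb, add_apply, smul_apply, smul_eq_mul]; ring

lemma hasFDerivAt_of_interior {A : Set ℂ} {γ M : ℝ} {J : Jet} (h : TaylorOn A γ M J) (hγ : 0 < γ)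
    {x : ℂ} (hx : x ∈ interior A) : HasFDerivAt J.w (J.p x) x ∧ HasFDerivAt J.p (J.S x) x :=
  ⟨(h.hasFDeriv_w hγ (interior_subset hx)).hasFDerivAt (mem_interior_iff_mem_nhds.1 hx),
    (h.hasFDeriv_p hγ (interior_subset hx)).hasFDerivAt (mem_interior_iff_mem_nhds.1 hx)⟩

/-- Weak maximum principle on the disc. -/
lemma disc_max {γ M lam Lam : ℝ} {J : Jet} {c : Coef} (hγ : 0 < γ) (hlam : 0 < lam)
    (hJ : TaylorOn Dk γ M J) (hb : ∀ x ∈ Dk, |c.b1 x| ≤ Lam)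
    (hell : ∀ x ∈ Dk, ∀ s t : ℝ,
      lam * (s ^ 2 + t ^ 2) ≤ c.a11 x * s ^ 2 + 2 * c.a12 x * s * t + c.a22 x * t ^ 2)
    (hL : ∀ x ∈ Dk, 0 ≤ Lop c J x) (h0 : ∀ x : ℂ, ‖x‖ = 1 → J.w x ≤ 0) : ∀ x ∈ Dk, J.w x ≤ 0 := by
  have hIn : interior Dk = Metric.ball (0 : ℂ) 1 := interior_closedBall _ one_ne_zero
  have hcl : closure (Metric.ball (0 : ℂ) 1) = Dk := closure_ball _ one_ne_zero
  intro x1 hx1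
  rcases (mem_Dk.1 hx1).lt_or_eq with hlt | heq
  swap
  · exact h0 x1 heq
  by_contra hpos
  push Not at hpos
  obtain ⟨K, hKG, hKc, hK⟩ := touching (E := ℂ) (G := Metric.ball 0 1) Metric.isOpen_ball
    Metric.isBounded_ball (w := J.w) (p := J.p) (S := J.S)
    (by rw [hcl]; exact fun x hx => (hJ.hasFDeriv_w hγ hx).continuousWithinAt)
    (fun x hx => (hasFDerivAt_of_interior hJ hγ (by rwa [hIn])).1)
    (fun x hx => (hasFDerivAt_of_interior hJ hγ (by rwa [hIn])).2)
    (by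
      rw [frontier_ball _ one_ne_zero]
      intro x hx; exact h0 x (by simpa using hx)) Complex.reCLM (x1 := x1) (by simpa using hlt) hpos
  have hLam : 0 ≤ Lam := (abs_nonneg _).trans (hb x1 hx1)
  obtain ⟨x, hx, δ, hδ, -, hp, hS⟩ := hK (Lam / lam + 1) 1 one_pos
  set k := Lam / lam + 1 with hk
  have hxD : x ∈ Dk := by rw [← hcl]; exact subset_closure (hKG hx)
  have ec : ∀ s t : ℝ, (s • (1 : ℂ) + t • Complex.I).re = s := by intro s t; simp
  have h1 := trace_nonpos (b11 := J.S x 1 1 + δ * k ^ 2) (b12 := J.S x 1 Complex.I)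
    (b22 := J.S x Complex.I Complex.I) hlam (hell x hxD) (by
      intro s t
      have := hS (s • (1 : ℂ) + t • Complex.I)
      rw [Complex.reCLM_apply, ec] at this
      simp only [map_add, map_smul, add_apply, smul_apply, smul_eq_mul,
        hJ.sym x hxD Complex.I 1] at this
      nlinarith)
  have h2 := hL x hxD
  rw [Lop, hp] at h2
  simp at h2
  have h3 := (abs_le.1 (hb x hxD)).1
  have h4 : lam ≤ c.a11 x := by simpa using hell x hxD 1 0
  have hk0 : 0 < k := by positivity
  have h5 : lam * k = Lam + lam := by rw [hk]; field_simp
  have h6 : 0 < δ * k * (lam * k - Lam) := mul_pos (by positivity) (by linarith)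
  have h7 : δ * k * (-Lam) ≤ δ * k * c.b1 x := by gcongr
  have h8 : δ * k ^ 2 * lam ≤ δ * k ^ 2 * c.a11 x := by gcongr
  nlinarith

/-! ### Boundary relations for jets vanishing on the unit circle -/

/-- First and second tangential derivatives of `w = 0` along the unit circle. -/
lemma boundary_jet {γ M : ℝ} {J : Jet} (hγ : 0 < γ) (hJ : TaylorOn Dk γ M J)
    (h0 : ∀ x : ℂ, ‖x‖ = 1 → J.w x = 0) {c : ℂ} (hc : ‖c‖ = 1) :
    J.p c (Complex.I * c) = 0 ∧ J.S c (Complex.I * c) (Complex.I * c) = J.p c c := by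
  set φ : ℝ → ℂ := fun θ => Complex.exp (θ * Complex.I) * c with hφ
  have hφn : ∀ θ, ‖φ θ‖ = 1 := fun θ => by rw [hφ]; simp [Complex.norm_exp_ofReal_mul_I, hc]
  have hφD : ∀ θ, φ θ ∈ Dk := fun θ => mem_Dk.2 (hφn θ).le
  have hφ' : ∀ θ, HasDerivAt φ (Complex.I * φ θ) θ := by
    intro θ
    have h1 : HasDerivAt (fun θ : ℝ => (θ : ℂ) * Complex.I) (1 * Complex.I) θ :=
      (Complex.ofRealCLM.hasDerivAt).mul_const Complex.I
    refine (h1.cexp.mul_const c).congr_deriv ?_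
    rw [hφ]; ring
  have hφ0 : φ 0 = c := by simp [hφ]
  have hp : ∀ θ, J.p (φ θ) (Complex.I * φ θ) = 0 := by
    intro θ
    have h1 : HasDerivAt (fun θ => J.w (φ θ)) (J.p (φ θ) (Complex.I * φ θ)) θ := by
      rw [← hasDerivWithinAt_univ]
      exact (hJ.hasFDeriv_w hγ (hφD θ)).comp_hasDerivWithinAt θ (hφ' θ).hasDerivWithinAt
        (fun t _ => hφD t)
    have h2 : (fun θ => J.w (φ θ)) = fun _ => 0 := by
      funext t; exact h0 _ (hφn t)
    rw [h2] at h1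
    exact h1.unique (hasDerivAt_const θ 0)
  have h1 : HasDerivAt (fun θ => J.p (φ θ)) (J.S (φ 0) (Complex.I * φ 0)) 0 := by
    rw [← hasDerivWithinAt_univ]
    exact (hJ.hasFDeriv_p hγ (hφD 0)).comp_hasDerivWithinAt 0 (hφ' 0).hasDerivWithinAt
      (fun t _ => hφD t)
  have h2 := h1.clm_apply ((hφ' 0).const_mul Complex.I)
  have h3 : (fun θ => J.p (φ θ) (Complex.I * φ θ)) = fun _ => 0 := by
    funext t; exact hp t
  rw [h3] at h2
  have h4 := h2.unique (hasDerivAt_const (0 : ℝ) (0 : ℝ))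
  rw [hφ0] at h4
  refine ⟨by simpa [hφ0] using hp 0, ?_⟩
  have h5 : Complex.I * (Complex.I * c) = -c := by rw [← mul_assoc, Complex.I_mul_I]; ring
  rw [h5, map_neg] at h4
  linarith

/-- The second order Taylor polynomial at a boundary point `c` of a jet vanishing on the circle
vanishes to third order along the circle. -/
lemma circle_taylor {γ M ε : ℝ} {J : Jet} (hγ : 0 < γ) (hJ : TaylorOn Dk γ M J)
    (h0 : ∀ x : ℂ, ‖x‖ = 1 → J.w x = 0) {c x : ℂ} (hc : ‖c‖ = 1) (hx : ‖x‖ = 1)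
    (hp : ‖J.p c‖ ≤ ε) (hS : ‖J.S c‖ ≤ ε) :
    |J.p c (x - c) + 1 / 2 * J.S c (x - c) (x - c)| ≤ ε * ‖x - c‖ ^ 3 := by
  obtain ⟨h1, h2⟩ := boundary_jet hγ hJ h0 hc
  have hε : 0 ≤ ε := (norm_nonneg _).trans hp
  set h := x - c with hh
  set a := (h * (starRingEnd ℂ) c).re with ha
  set b := (h * (starRingEnd ℂ) c).im with hb
  have hcc : c.re ^ 2 + c.im ^ 2 = 1 := by
    have := Complex.sq_norm c; rw [hc, Complex.normSq_apply] at this; nlinarith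
  have hdec : h = a • c + b • (Complex.I * c) := by
    apply Complex.ext
    · simp [ha, hb]; linear_combination -h.re * hcc
    · simp [ha, hb]; linear_combination -h.im * hcc
  have hab : a ^ 2 + b ^ 2 = ‖h‖ ^ 2 := by
    have : ‖h * (starRingEnd ℂ) c‖ = ‖h‖ := by rw [norm_mul, Complex.norm_conj, hc, mul_one]
    rw [← this, Complex.sq_norm, Complex.normSq_apply]; ring
  have ha2 : 2 * a = -‖h‖ ^ 2 := by
    have e1 := Complex.sq_norm x
    rw [hx, Complex.normSq_apply] at e1
    rw [Complex.sq_norm, Complex.normSq_apply]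
    have e2 : x = c + h := by rw [hh]; ring
    rw [e2] at e1
    simp [ha] at e1 ⊢
    nlinarith
  have hn2 : ‖h‖ ≤ 2 := by
    calc ‖h‖ ≤ ‖x‖ + ‖c‖ := norm_sub_le _ _
      _ = 2 := by rw [hx, hc]; norm_num
  have q1 : |J.p c c| ≤ ε := by
    have := (J.p c).le_opNorm c
    rw [hc, mul_one] at this
    exact this.trans hp
  have nI : ‖Complex.I * c‖ = 1 := by rw [norm_mul, Complex.norm_I, hc, one_mul]
  have q2 : |J.S c c c| ≤ ε := by
    have := (J.S c).le_opNorm₂ c c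
    rw [hc, mul_one, mul_one] at this
    exact this.trans hS
  have q3 : |J.S c c (Complex.I * c)| ≤ ε := by
    have := (J.S c).le_opNorm₂ c (Complex.I * c)
    rw [hc, nI, mul_one, mul_one] at this
    exact this.trans hS
  have hcD : c ∈ Dk := mem_Dk.2 hc.le
  have e : J.p c h + 1 / 2 * J.S c h h =
      1 / 2 * a ^ 2 * (J.S c c c - J.p c c) + a * b * J.S c c (Complex.I * c) := by
    rw [hdec]
    simp only [map_add, map_smul, add_apply, smul_apply, smul_eq_mul, h1, h2,
      hJ.sym c hcD (Complex.I * c) c]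
    have : b ^ 2 = -2 * a - a ^ 2 := by linarith
    linear_combination (1 / 2 * J.p c c) * this
  rw [e]
  have hn : 0 ≤ ‖h‖ := norm_nonneg h
  have a1 : |a| = ‖h‖ ^ 2 / 2 := by
    rw [show a = -(‖h‖ ^ 2 / 2) by linarith, abs_neg, abs_of_nonneg (by positivity)]
  have b1 : |b| ≤ ‖h‖ := abs_le_of_sq_le_sq (by nlinarith [sq_nonneg a]) hn
  calc |1 / 2 * a ^ 2 * (J.S c c c - J.p c c) + a * b * J.S c c (Complex.I * c)|
      ≤ |1 / 2 * a ^ 2 * (J.S c c c - J.p c c)| + |a * b * J.S c c (Complex.I * c)| :=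
        abs_add_le _ _
    _ = 1 / 2 * |a| ^ 2 * |J.S c c c - J.p c c| + |a| * |b| * |J.S c c (Complex.I * c)| := by
        rw [abs_mul, abs_mul, abs_mul, abs_mul, abs_pow]; norm_num
    _ ≤ 1 / 2 * (‖h‖ ^ 2 / 2) ^ 2 * (ε + ε) + ‖h‖ ^ 2 / 2 * ‖h‖ * ε := by
        rw [a1]
        gcongr
        exact (abs_sub _ _).trans (add_le_add q2 q1)
    _ = ε * ‖h‖ ^ 3 * (‖h‖ / 4 + 1 / 2) := by ring
    _ ≤ ε * ‖h‖ ^ 3 * 1 := by gcongr; linarith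
    _ = ε * ‖h‖ ^ 3 := mul_one _

/-! ### Blow-up of jets -/

/-- Rescaling of `J` minus its Taylor polynomial at `c`, at scale `r`. -/
def blow (γ : ℝ) (J : Jet) (c : ℂ) (r : ℝ) : Jet where
  w ζ := (r ^ 2 * r ^ γ)⁻¹ *
    (J.w (c + r • ζ) - J.w c - J.p c (r • ζ) - 1 / 2 * J.S c (r • ζ) (r • ζ))
  p ζ := (r * r ^ γ)⁻¹ • (J.p (c + r • ζ) - J.p c - J.S c (r • ζ))
  S ζ := (r ^ γ)⁻¹ • (J.S (c + r • ζ) - J.S c)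

lemma scale_sub {c : ℂ} {r : ℝ} (ζ η : ℂ) : (c + r • η) - (c + r • ζ) = r • (η - ζ) := by
  rw [add_sub_add_left_eq_sub, ← smul_sub]

lemma norm_scale_rpow {c : ℂ} {r : ℝ} (hr : 0 < r) (ζ η : ℂ) (s : ℝ) :
    ‖(c + r • η) - (c + r • ζ)‖ ^ s = r ^ s * ‖η - ζ‖ ^ s := by
  rw [scale_sub, norm_smul, Real.norm_of_nonneg hr.le, Real.mul_rpow hr.le (norm_nonneg _)]

/-- The blow-up is normalised so that the Taylor constant `M` does not change. -/
lemma blow_taylor {A : Set ℂ} {γ M : ℝ} {J : Jet} (hJ : TaylorOn A γ M J) {c : ℂ} (hc : c ∈ A)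
    {r : ℝ} (hr : 0 < r) : TaylorOn {ζ | c + r • ζ ∈ A} γ M (blow γ J c r) := by
  have hR : 0 < r ^ γ := Real.rpow_pos_of_pos hr γ
  have hn := norm_scale_rpow (c := c) hr
  have r1 : r ^ (1 + γ) = r * r ^ γ := by rw [Real.rpow_add hr, Real.rpow_one]
  have r2 : r ^ (2 + γ) = r ^ 2 * r ^ γ := by rw [Real.rpow_add hr, Real.rpow_two]
  have hd := scale_sub (c := c) (r := r)
  refine ⟨fun ζ hζ η hη => ?_, fun ζ hζ η hη => ?_, fun ζ hζ η hη => ?_, fun ζ hζ h k => ?_⟩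
  · have h1 := hJ.t0 _ hζ _ hη
    rw [hn, hd, r2] at h1
    have e : (blow γ J c r).w η - (blow γ J c r).w ζ - (blow γ J c r).p ζ (η - ζ)
        - 1 / 2 * (blow γ J c r).S ζ (η - ζ) (η - ζ) = (r ^ 2 * r ^ γ)⁻¹ *
        (J.w (c + r • η) - J.w (c + r • ζ) - J.p (c + r • ζ) (r • (η - ζ)) -
          1 / 2 * J.S (c + r • ζ) (r • (η - ζ)) (r • (η - ζ))) := by
      simp only [blow, map_smul, map_sub, smul_apply, sub_apply, smul_eq_mul,
        hJ.sym c hc η ζ]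
      field_simp
      ring
    rw [e, abs_mul, abs_of_pos (by positivity), inv_mul_le_iff₀ (by positivity)]
    refine h1.trans (le_of_eq (by ring))
  · have h1 := hJ.t1 _ hζ _ hη
    rw [hn, hd, r1] at h1
    have e : (blow γ J c r).p η - (blow γ J c r).p ζ - (blow γ J c r).S ζ (η - ζ)
        = (r * r ^ γ)⁻¹ •
        (J.p (c + r • η) - J.p (c + r • ζ) - J.S (c + r • ζ) (r • (η - ζ))) := by
      ext k
      simp only [blow, map_smul, map_sub, smul_apply, sub_apply, smul_eq_mul]
      field_simp
      ring
    rw [e, norm_smul, Real.norm_of_nonneg (by positivity), inv_mul_le_iff₀ (by positivity)]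
    refine h1.trans (le_of_eq (by ring))
  · have h1 := hJ.t2 _ hζ _ hη
    rw [hn] at h1
    have e : (blow γ J c r).S η - (blow γ J c r).S ζ
        = (r ^ γ)⁻¹ • (J.S (c + r • η) - J.S (c + r • ζ)) := by
      simp only [blow, ← smul_sub]
      congr 1
      abel
    rw [e, norm_smul, Real.norm_of_nonneg (by positivity), inv_mul_le_iff₀ (by positivity)]
    refine h1.trans (le_of_eq (by ring))
  · simp only [blow, smul_apply, sub_apply]
    rw [hJ.sym _ hζ h k, hJ.sym c hc h k]

/-- The jet of the blow-up vanishes at the origin, which bounds it everywhere. -/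
lemma blow_bounds {A : Set ℂ} {γ M : ℝ} {J : Jet} (hJ : TaylorOn A γ M J) {c : ℂ}
    (hc : c ∈ A) {r : ℝ} (hr : 0 < r) {ζ : ℂ} (hζ : c + r • ζ ∈ A) :
    |(blow γ J c r).w ζ| ≤ M * ‖ζ‖ ^ (2 + γ) ∧ ‖(blow γ J c r).p ζ‖ ≤ M * ‖ζ‖ ^ (1 + γ) ∧
      ‖(blow γ J c r).S ζ‖ ≤ M * ‖ζ‖ ^ γ := by
  have h := blow_taylor hJ hc hr
  have h0 : (0 : ℂ) ∈ {ζ | c + r • ζ ∈ A} := by simpa using hc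
  have z0 : (blow γ J c r).w 0 = 0 := by simp [blow]
  have z1 : (blow γ J c r).p 0 = 0 := by simp [blow]
  have z2 : (blow γ J c r).S 0 = 0 := by simp [blow]
  refine ⟨?_, ?_, ?_⟩
  · simpa [z0, z1, z2] using h.t0 0 h0 ζ hζ
  · simpa [z1, z2] using h.t1 0 h0 ζ hζ
  · simpa [z2] using h.t2 0 h0 ζ hζ

/-- The contraction `a : S` of a symmetric matrix with a bilinear form on `ℂ`. -/
def tr3 (a11 a12 a22 : ℝ) (S : ℂ →L[ℝ] ℂ →L[ℝ] ℝ) : ℝ :=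
  a11 * S 1 1 + 2 * a12 * S 1 Complex.I + a22 * S Complex.I Complex.I

lemma abs_apply_le (L : ℂ →L[ℝ] ℝ) {v : ℂ} (hv : ‖v‖ = 1) : |L v| ≤ ‖L‖ := by
  have := L.le_opNorm v
  rwa [hv, mul_one] at this

lemma abs_apply₂_le (L : ℂ →L[ℝ] ℂ →L[ℝ] ℝ) {v v' : ℂ} (hv : ‖v‖ = 1) (hv' : ‖v'‖ = 1) :
    |L v v'| ≤ ‖L‖ := by
  have := L.le_opNorm₂ v v'
  rwa [hv, hv', mul_one, mul_one] at this

lemma abs_tr3_le {a11 a12 a22 Lam : ℝ} (h1 : |a11| ≤ Lam) (h2 : |a12| ≤ Lam) (h3 : |a22| ≤ Lam)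
    (S : ℂ →L[ℝ] ℂ →L[ℝ] ℝ) : |tr3 a11 a12 a22 S| ≤ 4 * Lam * ‖S‖ := by
  have mulle : ∀ {s t B B' : ℝ}, |s| ≤ B → |t| ≤ B' → |s * t| ≤ B * B' := by
    intro s t B B' h1 h2
    rw [abs_mul]
    exact mul_le_mul h1 h2 (abs_nonneg _) ((abs_nonneg _).trans h1)
  have n1 : ‖(1 : ℂ)‖ = 1 := norm_one
  have nI := Complex.norm_I
  have t1 := mulle h1 (abs_apply₂_le S n1 n1)
  have t2 := mulle h2 (abs_apply₂_le S n1 nI)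
  have t3 := mulle h3 (abs_apply₂_le S nI nI)
  rw [tr3]
  rw [abs_le] at *
  constructor <;> nlinarith

/-- The rescaled equation: the leading part of the operator applied to the blow-up is small. -/
lemma blow_eq {γ Lam N ε : ℝ} {J : Jet} {a11 a12 a22 g : ℂ → ℝ}
    (h11 : ∀ x ∈ Dk, ∀ y ∈ Dk, |a11 y - a11 x| ≤ Lam * ‖y - x‖ ^ γ)
    (h12 : ∀ x ∈ Dk, ∀ y ∈ Dk, |a12 y - a12 x| ≤ Lam * ‖y - x‖ ^ γ)
    (h22 : ∀ x ∈ Dk, ∀ y ∈ Dk, |a22 y - a22 x| ≤ Lam * ‖y - x‖ ^ γ)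
    (heq : ∀ x ∈ Dk, tr3 (a11 x) (a12 x) (a22 x) (J.S x) = g x)
    (hg : ∀ x ∈ Dk, ∀ y ∈ Dk, |g y - g x| ≤ N * ‖y - x‖ ^ γ)
    {c : ℂ} (hc : c ∈ Dk) {r : ℝ} (hr : 0 < r) (hS : Lam * ‖J.S c‖ ≤ ε)
    {ζ : ℂ} (hζ : c + r • ζ ∈ Dk) :
    |tr3 (a11 (c + r • ζ)) (a12 (c + r • ζ)) (a22 (c + r • ζ)) ((blow γ J c r).S ζ)| ≤
      (N + 4 * ε) * ‖ζ‖ ^ γ := by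
  have hR : 0 < r ^ γ := Real.rpow_pos_of_pos hr γ
  set x := c + r • ζ with hx
  have hxcγ : ‖x - c‖ ^ γ = r ^ γ * ‖ζ‖ ^ γ := by
    rw [hx, add_sub_cancel_left, norm_smul, Real.norm_of_nonneg hr.le,
      Real.mul_rpow hr.le (norm_nonneg _)]
  have e : r ^ γ * tr3 (a11 x) (a12 x) (a22 x) ((blow γ J c r).S ζ) =
      (g x - g c) - tr3 (a11 x - a11 c) (a12 x - a12 c) (a22 x - a22 c) (J.S c) := by
    rw [← heq x hζ, ← heq c hc]
    simp only [blow, ← hx, tr3, smul_apply, sub_apply, smul_eq_mul]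
    field_simp
    ring
  have t0 := hg c hc x hζ
  have t1 := abs_tr3_le (h11 c hc x hζ) (h12 c hc x hζ) (h22 c hc x hζ) (J.S c)
  rw [hxcγ] at t0 t1
  have t2 : 4 * (Lam * (r ^ γ * ‖ζ‖ ^ γ)) * ‖J.S c‖ ≤ r ^ γ * (4 * ε * ‖ζ‖ ^ γ) := by
    have : Lam * ‖J.S c‖ * (4 * (r ^ γ * ‖ζ‖ ^ γ)) ≤ ε * (4 * (r ^ γ * ‖ζ‖ ^ γ)) := by gcongr
    linarith
  refine le_of_mul_le_mul_left ?_ hR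
  rw [← abs_of_pos hR, ← abs_mul, abs_of_pos hR, e]
  rw [abs_le] at *
  constructor <;> nlinarith

/-! ### Rescaled discs -/

/-- Real inner product on `ℂ`, in coordinates. -/
def dt (c z : ℂ) : ℝ := c.re * z.re + c.im * z.im

lemma norm_add_smul_sq (c z : ℂ) (r : ℝ) :
    ‖c + r • z‖ ^ 2 = ‖c‖ ^ 2 + 2 * r * dt c z + r ^ 2 * ‖z‖ ^ 2 := by
  simp only [Complex.sq_norm, Complex.normSq_apply, dt, Complex.add_re, Complex.add_im,
    Complex.real_smul, Complex.mul_re, Complex.mul_im, Complex.ofReal_re, Complex.ofReal_im]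
  ring

lemma continuous_dt : Continuous fun q : ℂ × ℂ => dt q.1 q.2 := by
  unfold dt; fun_prop

lemma tendsto_dt {F : Filter ℕ} {c ζ : ℕ → ℂ} {c0 z : ℂ} (hc : Tendsto c F (𝓝 c0))
    (hζ : Tendsto ζ F (𝓝 z)) : Tendsto (fun n => dt (c n) (ζ n)) F (𝓝 (dt c0 z)) :=
  (continuous_dt.tendsto (c0, z)).comp (hc.prodMk_nhds hζ)

/-- The discs `r⁻¹ (Dk - c)` converge along `F` to the set `A`, which is the plane or, when the
base points `c` lie on the circle, a half-plane. -/
structure BlowDom (F : Filter ℕ) (c : ℕ → ℂ) (r : ℕ → ℝ) (A : Set ℂ) : Prop where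
  cD : ∀ n, c n ∈ Dk
  app : ∀ z ∈ A, ∃ ζ : ℕ → ℂ, (∀ᶠ n in F, c n + r n • ζ n ∈ Dk) ∧ Tendsto ζ F (𝓝 z)
  cl : ∀ (ζ : ℕ → ℂ) (z : ℂ), (∀ᶠ n in F, c n + r n • ζ n ∈ Dk) → Tendsto ζ F (𝓝 z) → z ∈ A
  bd : A = univ ∨ ∃ c0 : ℂ, ‖c0‖ = 1 ∧ A = {z | dt c0 z ≤ 0} ∧ (∀ n, ‖c n‖ = 1) ∧
    ∀ z, dt c0 z = 0 → ∃ ζ : ℕ → ℂ, Tendsto ζ F (𝓝 z) ∧ ∀ᶠ n in F, ‖c n + r n • ζ n‖ = 1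

lemma tendsto_of_sub_le {F : Filter ℕ} {ζ : ℕ → ℂ} {z : ℂ} {e : ℕ → ℝ}
    (h : ∀ᶠ n in F, ‖ζ n - z‖ ≤ e n) (he : Tendsto e F (𝓝 0)) : Tendsto ζ F (𝓝 z) := by
  rw [tendsto_iff_norm_sub_tendsto_zero]
  exact squeeze_zero' (Eventually.of_forall fun _ => norm_nonneg _) h he

/-- Rescaled by `r n`, the discs seen from `x n` exhaust the plane if `r n` is negligible against the
distance of `x n` to the circle, and otherwise, after moving the base point to the circle, tend to a half-plane. -/
lemma scale_dichotomy (F : Ultrafilter ℕ) {x : ℕ → ℂ} {r : ℕ → ℝ} (hx : ∀ n, x n ∈ Dk)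
    (hr : ∀ n, 0 < r n) (hr0 : Tendsto r F (𝓝 0)) :
    ∃ c A B, BlowDom F c r A ∧ ∀ᶠ n in (F : Filter ℕ), ‖x n - c n‖ ≤ B * r n := by
  by_cases hlim : ∀ B : ℝ, ∀ᶠ n in (F : Filter ℕ), B * r n ≤ 1 - ‖x n‖
  · refine ⟨x, univ, 0, ⟨hx, fun z _ => ⟨fun _ => z, ?_, tendsto_const_nhds⟩,
      fun _ _ _ _ => mem_univ _, Or.inl rfl⟩, by simp⟩
    filter_upwards [hlim ‖z‖] with n hn
    rw [mem_Dk]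
    refine (norm_add_le _ _).trans ?_
    rw [norm_smul, Real.norm_of_nonneg (hr n).le]
    linarith
  · push Not at hlim
    obtain ⟨B, hB⟩ := hlim
    set c : ℕ → ℂ := fun n => if x n = 0 then 1 else (‖x n‖⁻¹ : ℝ) • x n with hc
    have hcn : ∀ n, ‖c n‖ = 1 := by
      intro n
      by_cases h : x n = 0
      · simp [hc, h]
      · have : ‖x n‖ ≠ 0 := norm_ne_zero_iff.2 h
        simp only [hc, h, if_false, norm_smul, norm_inv, norm_norm]
        field_simp
    have hxc : ∀ n, x n - c n = (‖x n‖ - 1) • c n := by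
      intro n
      by_cases h : x n = 0
      · simp [hc, h]
      · have : (‖x n‖ : ℝ) ≠ 0 := norm_ne_zero_iff.2 h
        simp only [hc, h, if_false]
        rw [sub_smul, one_smul, smul_smul, mul_inv_cancel₀ this, one_smul]
    obtain ⟨c0, hc0⟩ := ultra_lim F (f := c) (B := 1) (Eventually.of_forall fun n => (hcn n).le)
    have hc01 : ‖c0‖ = 1 := by
      refine tendsto_nhds_unique hc0.norm ?_
      simp [hcn]
    have hw : ∀ (z : ℂ) n, ‖c n + r n • z‖ ^ 2 = 1 + r n * (2 * dt (c n) z + r n * ‖z‖ ^ 2) := by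
      intro z n; rw [norm_add_smul_sq, hcn]; ring
    have he : ∀ z : ℂ, Tendsto (fun n => 2 * dt (c n) z + r n * ‖z‖ ^ 2) F (𝓝 (2 * dt c0 z)) := by
      intro z
      have := ((tendsto_dt hc0 (tendsto_const_nhds (x := z))).const_mul 2).add
        (hr0.mul_const (‖z‖ ^ 2))
      simpa using this
    have hsm : ∀ n (u : ℂ), c n + r n • ((r n)⁻¹ • (u - c n)) = u := by
      intro n u
      rw [smul_smul, mul_inv_cancel₀ (hr n).ne', one_smul]; abel
    -- the rescaled displacement when `c + r z` is moved radially by the factor `t`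
    have hmove : ∀ n (z : ℂ) (t : ℝ), ‖(r n)⁻¹ • (t • (c n + r n • z) - c n) - z‖ =
        (r n)⁻¹ * (|t - 1| * ‖c n + r n • z‖) := by
      intro n z t
      have : (r n)⁻¹ • (t • (c n + r n • z) - c n) - z
          = (r n)⁻¹ • ((t - 1) • (c n + r n • z)) := by
        have h1 : (r n)⁻¹ • (r n • z) = z := by
          rw [smul_smul, inv_mul_cancel₀ (hr n).ne', one_smul]
        nth_rewrite 2 [← h1]
        rw [← smul_sub]
        congr 1
        rw [sub_smul, one_smul]; abel
      rw [this, norm_smul, norm_smul, Real.norm_eq_abs, Real.norm_eq_abs,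
        abs_of_pos (inv_pos.2 (hr n))]
    refine ⟨c, {z | dt c0 z ≤ 0}, B, ⟨fun n => mem_Dk.2 (hcn n).le, ?_, ?_,
      Or.inr ⟨c0, hc01, rfl, hcn, ?_⟩⟩, ?_⟩
    · intro z hz
      have hz' : dt c0 z ≤ 0 := hz
      set m : ℕ → ℝ := fun n => max 1 ‖c n + r n • z‖ with hm
      have hm1 : ∀ n, 1 ≤ m n := fun n => le_max_left _ _
      refine ⟨fun n => (r n)⁻¹ • ((m n)⁻¹ • (c n + r n • z) - c n), ?_, ?_⟩
      · refine Eventually.of_forall fun n => ?_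
        rw [hsm, mem_Dk, norm_smul, norm_inv, Real.norm_of_nonneg (zero_le_one.trans (hm1 n)),
          inv_mul_le_iff₀ (by linarith [hm1 n]), mul_one]
        exact le_max_right _ _
      · refine tendsto_of_sub_le (e := fun n => max 0 (2 * dt (c n) z + r n * ‖z‖ ^ 2))
          (Eventually.of_forall fun n => ?_) ?_
        · rw [hmove, inv_mul_le_iff₀ (hr n)]
          have hmp : 0 < m n := by linarith [hm1 n]
          have h1 : |(m n)⁻¹ - 1| = (m n - 1) / m n := by
            rw [abs_of_nonpos (by have := inv_le_one_of_one_le₀ (hm1 n); linarith)]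
            field_simp; ring
          have h2 : (m n - 1) / m n * ‖c n + r n • z‖ ≤ m n - 1 := by
            rw [div_mul_eq_mul_div, div_le_iff₀ hmp]
            exact mul_le_mul_of_nonneg_left (le_max_right _ _) (by linarith [hm1 n])
          rw [h1]
          refine h2.trans ?_
          rcases le_total ‖c n + r n • z‖ 1 with h3 | h3
          · have : m n = 1 := max_eq_left h3
            rw [this, sub_self]
            exact mul_nonneg (hr n).le (le_max_left _ _)
          · have h4 : m n = ‖c n + r n • z‖ := max_eq_right h3
            have h5 := hw z n
            rw [← h4] at h5
            have h6 : m n - 1 ≤ r n * (2 * dt (c n) z + r n * ‖z‖ ^ 2) := by nlinarith [hm1 n]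
            exact h6.trans (mul_le_mul_of_nonneg_left (le_max_right _ _) (hr n).le)
        · have := (tendsto_const_nhds (x := (0 : ℝ)) (f := (F : Filter ℕ))).max (he z)
          rwa [max_eq_left (by linarith : 2 * dt c0 z ≤ 0)] at this
    · intro ζ z hζ hlim
      refine le_of_tendsto (tendsto_dt hc0 hlim) ?_
      filter_upwards [hζ] with n hn
      have h1 := hw (ζ n) n
      have h2 : ‖c n + r n • ζ n‖ ^ 2 ≤ 1 := by
        have := mem_Dk.1 hn
        nlinarith [norm_nonneg (c n + r n • ζ n)]
      have h3 : r n * (2 * dt (c n) (ζ n) + r n * ‖ζ n‖ ^ 2) ≤ 0 := by linarith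
      have h4 := nonpos_of_mul_nonpos_right h3 (hr n)
      have h5 : 0 ≤ r n * ‖ζ n‖ ^ 2 := mul_nonneg (hr n).le (sq_nonneg _)
      linarith
    · intro z hz
      have hne : ∀ᶠ n in (F : Filter ℕ), 0 < ‖c n + r n • z‖ := by
        have : Tendsto (fun n => ‖c n + r n • z‖) F (𝓝 1) := by
          have := (hc0.add (hr0.smul_const z)).norm
          simpa [hc01] using this
        exact this.eventually_const_lt zero_lt_one
      refine ⟨fun n => (r n)⁻¹ • (‖c n + r n • z‖⁻¹ • (c n + r n • z) - c n), ?_, ?_⟩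
      · refine tendsto_of_sub_le (e := fun n => |2 * dt (c n) z + r n * ‖z‖ ^ 2|) ?_ ?_
        · filter_upwards [hne] with n hn
          rw [hmove, inv_mul_le_iff₀ (hr n)]
          set s := ‖c n + r n • z‖ with hs
          have h1 : |s⁻¹ - 1| * s = |1 - s| := by
            rw [← abs_of_pos hn, ← abs_mul, abs_of_pos hn, sub_mul, inv_mul_cancel₀ hn.ne', one_mul]
          have h2 : r n * |2 * dt (c n) z + r n * ‖z‖ ^ 2| = |s ^ 2 - 1| := by
            rw [hs, hw, add_sub_cancel_left, abs_mul, abs_of_pos (hr n)]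
          rw [h1, h2, show s ^ 2 - 1 = (s + 1) * (s - 1) by ring, abs_mul, abs_sub_comm 1 s,
            abs_of_pos (by linarith : 0 < s + 1)]
          nlinarith [abs_nonneg (s - 1)]
        · have := (he z).abs
          simpa [hz] using this
      · filter_upwards [hne] with n hn
        rw [hsm, norm_smul, norm_inv, norm_norm, inv_mul_cancel₀ hn.ne']
    · filter_upwards [hB] with n hn
      rw [hxc, norm_smul, hcn, mul_one, Real.norm_eq_abs,
        abs_of_nonpos (by linarith [mem_Dk.1 (hx n)])]
      linarith

/-! ### The linear blow-up argument -/

lemma tendsto_zero_of_eps {F : Filter ℕ} {f g : ℕ → ℝ} {L : ℝ} (hg : Tendsto g F (𝓝 L))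
    (h : ∀ ε > 0, ∀ᶠ n in F, |f n| ≤ ε * g n) : Tendsto f F (𝓝 0) := by
  rw [Metric.tendsto_nhds]
  intro ε hε
  have hL : 0 < |L| + 1 := by positivity
  have h1 := h (ε / (2 * (|L| + 1))) (by positivity)
  have h2 : ∀ᶠ n in F, g n < |L| + 1 := hg.eventually_lt_const (by linarith [le_abs_self L])
  filter_upwards [h1, h2] with n h3 h4
  rw [Real.dist_eq, sub_zero]
  refine h3.trans_lt ?_
  calc ε / (2 * (|L| + 1)) * g n ≤ ε / (2 * (|L| + 1)) * (|L| + 1) := by gcongr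
    _ = ε / 2 := by field_simp
    _ < ε := by linarith

lemma continuous_tr3 : Continuous fun q : (ℝ × ℝ × ℝ) × (ℂ →L[ℝ] ℂ →L[ℝ] ℝ) =>
    tr3 q.1.1 q.1.2.1 q.1.2.2 q.2 := by
  unfold tr3; fun_prop

lemma tendsto_tr3 {F : Filter ℕ} {a b c : ℕ → ℝ} {S : ℕ → ℂ →L[ℝ] ℂ →L[ℝ] ℝ} {a0 b0 c0 : ℝ}
    {S0 : ℂ →L[ℝ] ℂ →L[ℝ] ℝ} (ha : Tendsto a F (𝓝 a0)) (hb : Tendsto b F (𝓝 b0))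
    (hc : Tendsto c F (𝓝 c0)) (hS : Tendsto S F (𝓝 S0)) :
    Tendsto (fun n => tr3 (a n) (b n) (c n) (S n)) F (𝓝 (tr3 a0 b0 c0 S0)) :=
  (continuous_tr3.tendsto ((a0, b0, c0), S0)).comp
    ((ha.prodMk_nhds (hb.prodMk_nhds hc)).prodMk_nhds hS)

/-- Jets whose equation degenerates to a homogeneous constant coefficient equation at the scale
`‖y n - x n‖` cannot have Hessians oscillating by the maximal amount between `x n` and `y n`. -/
lemma blow_up_small (F : Ultrafilter ℕ) {γ lam Lam : ℝ} (hγ0 : 0 < γ) (hγ1 : γ < 1)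
    (hlam : 0 < lam) {a11 a12 a22 g : ℕ → ℂ → ℝ} {J : ℕ → Jet} {Λ : ℕ → ℝ} {x y : ℕ → ℂ}
    (hbd : ∀ n, ∀ z ∈ Dk, |a11 n z| ≤ Lam ∧ |a12 n z| ≤ Lam ∧ |a22 n z| ≤ Lam)
    (hell : ∀ n, ∀ z ∈ Dk, ∀ s t : ℝ,
      lam * (s ^ 2 + t ^ 2) ≤ a11 n z * s ^ 2 + 2 * a12 n z * s * t + a22 n z * t ^ 2)
    (h11 : ∀ n, ∀ z ∈ Dk, ∀ z' ∈ Dk, |a11 n z' - a11 n z| ≤ Λ n * ‖z' - z‖ ^ γ)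
    (h12 : ∀ n, ∀ z ∈ Dk, ∀ z' ∈ Dk, |a12 n z' - a12 n z| ≤ Λ n * ‖z' - z‖ ^ γ)
    (h22 : ∀ n, ∀ z ∈ Dk, ∀ z' ∈ Dk, |a22 n z' - a22 n z| ≤ Λ n * ‖z' - z‖ ^ γ)
    (heq : ∀ n, ∀ z ∈ Dk, tr3 (a11 n z) (a12 n z) (a22 n z) ((J n).S z) = g n z)
    (hg : ∀ ε > 0, ∀ᶠ n in (F : Filter ℕ), ∀ z ∈ Dk, ∀ z' ∈ Dk,
      |g n z' - g n z| ≤ ε * ‖z' - z‖ ^ γ)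
    (hS : ∀ ε > 0, ∀ᶠ n in (F : Filter ℕ), ∀ z ∈ Dk, Λ n * ‖(J n).S z‖ ≤ ε)
    (hSp : ∀ ε > 0, ∀ᶠ n in (F : Filter ℕ), ∀ z ∈ Dk, ‖(J n).S z‖ ≤ ε ∧ ‖(J n).p z‖ ≤ ε)
    (h0 : ∀ n, ∀ z : ℂ, ‖z‖ = 1 → (J n).w z = 0) (hJ : ∀ n, TaylorOn Dk γ 1 (J n))
    (hx : ∀ n, x n ∈ Dk) (hy : ∀ n, y n ∈ Dk) (hxy : ∀ n, 0 < ‖y n - x n‖)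
    (hr0 : Tendsto (fun n => ‖y n - x n‖) F (𝓝 0))
    (hΛ : Tendsto (fun n => Λ n * ‖y n - x n‖ ^ γ) F (𝓝 0))
    (hosc : ∀ᶠ n in (F : Filter ℕ), 1 / 2 * ‖y n - x n‖ ^ γ ≤ ‖(J n).S (y n) - (J n).S (x n)‖) :
    False := by
  obtain ⟨c, A, B, dom, hB⟩ := scale_dichotomy F hx hxy hr0
  set r : ℕ → ℝ := fun n => ‖y n - x n‖ with hr
  have hrp : ∀ n, 0 < r n := hxy
  set K : ℕ → Jet := fun n => blow γ (J n) (c n) (r n) with hK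
  have hKT : ∀ n, TaylorOn {ζ | c n + r n • ζ ∈ Dk} γ 1 (K n) := fun n =>
    blow_taylor (hJ n) (dom.cD n) (hrp n)
  choose! π hπ1 hπ2 using dom.app
  obtain ⟨K0, hK0, hlim⟩ := jet_limit F (An := fun n => {ζ | c n + r n • ζ ∈ Dk}) (K := K) (A := A)
    hγ0 (Eventually.of_forall hKT) (fun n z => π z n) (fun z hz => ⟨hπ1 z hz, hπ2 z hz⟩) (by
      intro z hz
      refine ⟨(‖z‖ + 1) ^ (2 + γ), ?_⟩
      have h1 : ∀ᶠ n in (F : Filter ℕ), ‖π z n‖ < ‖z‖ + 1 :=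
        (hπ2 z hz).norm.eventually_lt_const (by linarith)
      filter_upwards [hπ1 z hz, h1] with n h2 h3
      obtain ⟨b0, b1, b2⟩ := blow_bounds (hJ n) (dom.cD n) (hrp n) h2
      have hz1 : 1 ≤ ‖z‖ + 1 := by linarith [norm_nonneg z]
      have hm : ∀ s : ℝ, 0 ≤ s → s ≤ 2 + γ → 1 * ‖π z n‖ ^ s ≤ (‖z‖ + 1) ^ (2 + γ) := by
        intro s hs0 hs
        rw [one_mul]
        exact (Real.rpow_le_rpow (norm_nonneg _) h3.le hs0).trans
          (Real.rpow_le_rpow_of_exponent_le hz1 hs)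
      exact ⟨b0.trans (hm _ (by linarith) le_rfl), b1.trans (hm _ (by linarith) (by linarith)),
        b2.trans (hm _ hγ0.le (by linarith))⟩)
  -- limits of the coefficients
  have hlimc : ∀ a : ℕ → ℂ → ℝ, (∀ n, ∀ z ∈ Dk, |a n z| ≤ Lam) →
      (∀ n, ∀ z ∈ Dk, ∀ z' ∈ Dk, |a n z' - a n z| ≤ Λ n * ‖z' - z‖ ^ γ) →
      ∃ a0, ∀ (ζ : ℕ → ℂ) (z : ℂ), (∀ᶠ n in (F : Filter ℕ), c n + r n • ζ n ∈ Dk) →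
        Tendsto ζ F (𝓝 z) → Tendsto (fun n => a n (c n + r n • ζ n)) F (𝓝 a0) := by
    intro a ha1 ha2
    obtain ⟨a0, ha0⟩ := ultra_lim F (f := fun n => a n (c n)) (B := Lam)
      (Eventually.of_forall fun n => ha1 n _ (dom.cD n))
    refine ⟨a0, fun ζ z hζ hz => ?_⟩
    have h1 : Tendsto (fun n => a n (c n + r n • ζ n) - a n (c n)) F (𝓝 0) := by
      have h2 : Tendsto (fun n => Λ n * r n ^ γ * ‖ζ n‖ ^ γ) F (𝓝 (0 * ‖z‖ ^ γ)) :=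
        hΛ.mul (hz.norm.rpow_const (Or.inr hγ0.le))
      rw [zero_mul] at h2
      refine squeeze_zero_norm' ?_ h2
      filter_upwards [hζ] with n hn
      have := ha2 n _ (dom.cD n) _ hn
      rw [add_sub_cancel_left, norm_smul, Real.norm_of_nonneg (hrp n).le,
        Real.mul_rpow (hrp n).le (norm_nonneg _), ← mul_assoc] at this
      exact this
    have := h1.add ha0
    simpa using this
  obtain ⟨b11, hb11⟩ := hlimc a11 (fun n z hz => (hbd n z hz).1) h11
  obtain ⟨b12, hb12⟩ := hlimc a12 (fun n z hz => (hbd n z hz).2.1) h12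
  obtain ⟨b22, hb22⟩ := hlimc a22 (fun n z hz => (hbd n z hz).2.2) h22
  have hz0 : ∀ᶠ n in (F : Filter ℕ), c n + r n • (0 : ℂ) ∈ Dk :=
    Eventually.of_forall fun n => by simpa using dom.cD n
  have h0A : (0 : ℂ) ∈ A := dom.cl (fun _ => 0) 0 hz0 tendsto_const_nhds
  have hellb : ∀ s t : ℝ, lam * (s ^ 2 + t ^ 2) ≤ b11 * s ^ 2 + 2 * b12 * s * t + b22 * t ^ 2 := by
    intro s t
    have t1 := hb11 (fun _ => 0) 0 hz0 tendsto_const_nhds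
    have t2 := hb12 (fun _ => 0) 0 hz0 tendsto_const_nhds
    have t3 := hb22 (fun _ => 0) 0 hz0 tendsto_const_nhds
    refine ge_of_tendsto (((t1.mul_const (s ^ 2)).add
      (((t2.const_mul 2).mul_const s).mul_const t)).add (t3.mul_const (t ^ 2))) ?_
    filter_upwards [hz0] with n hn using hell n _ hn s t
  have hS0 : K0.S 0 = 0 := by
    have := (hlim 0 h0A (fun _ => 0) hz0 tendsto_const_nhds).2.2
    refine tendsto_nhds_unique this ?_
    simp [hK, blow]
  have hgrow : ∀ z ∈ A, ‖K0.S z‖ ≤ 1 * ‖z‖ ^ γ := by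
    intro z hz
    simpa [hS0] using hK0.t2 0 h0A z hz
  have htr : ∀ z ∈ A, tr3 b11 b12 b22 (K0.S z) = 0 := by
    intro z hz
    have e1 := tendsto_tr3 (hb11 _ z (hπ1 z hz) (hπ2 z hz)) (hb12 _ z (hπ1 z hz) (hπ2 z hz))
      (hb22 _ z (hπ1 z hz) (hπ2 z hz)) (hlim z hz (π z) (hπ1 z hz) (hπ2 z hz)).2.2
    refine tendsto_nhds_unique e1 (tendsto_zero_of_eps (g := fun n => 5 * ‖π z n‖ ^ γ)
      (((hπ2 z hz).norm.rpow_const (Or.inr hγ0.le)).const_mul 5) fun ε hε => ?_)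
    filter_upwards [hg ε hε, hS ε hε, hπ1 z hz] with n g1 g2 g3
    refine (blow_eq (h11 n) (h12 n) (h22 n) (heq n) g1 (dom.cD n) (hrp n) (g2 _ (dom.cD n))
      g3).trans (le_of_eq (by ring))
  have hzero : ∀ z ∈ A, K0.S z = 0 := by
    rcases dom.bd with hA | ⟨c0, hc0, hA, hcn, hbd0⟩
    · intro z _
      have hu : ∀ z, z ∈ A := fun z => by rw [hA]; exact mem_univ z
      refine liouville_plane hlam hellb hγ0 hγ1 (P := K0.p) (fun z => ?_)
        (fun z => hK0.sym z (hu z)) (fun z => htr z (hu z)) (fun z => hgrow z (hu z)) z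
      have := hK0.hasFDeriv_p hγ0 (hu z)
      rwa [hA, hasFDerivWithinAt_univ] at this
    · refine liouville_half hlam hellb hγ0 hγ1 (x0 := c0)
        (by intro h; rw [h, norm_zero] at hc0; exact zero_ne_one hc0) hA (W := K0.w) (P := K0.p)
        (fun z hz => hK0.hasFDeriv_w hγ0 hz) (fun z hz => hK0.hasFDeriv_p hγ0 hz) hK0.sym htr
        hgrow (fun z hz => ?_)
      obtain ⟨ζ, hζ, hζ1⟩ := hbd0 z hz
      have hzA : z ∈ A := by rw [hA]; exact hz.le
      have hζD : ∀ᶠ n in (F : Filter ℕ), c n + r n • ζ n ∈ Dk := by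
        filter_upwards [hζ1] with n hn using mem_Dk.2 hn.le
      refine tendsto_nhds_unique (hlim z hzA ζ hζD hζ).1
        (tendsto_zero_of_eps (g := fun n => ‖ζ n‖ ^ 3) (hζ.norm.pow 3) fun ε hε => ?_)
      have hr1 : ∀ᶠ n in (F : Filter ℕ), r n < 1 := hr0.eventually_lt_const zero_lt_one
      filter_upwards [hζ1, hSp ε hε, hr1] with n h1 h2 h3
      obtain ⟨h4, h5⟩ := h2 _ (dom.cD n)
      have h6 := circle_taylor hγ0 (hJ n) (h0 n) (hcn n) h1 h5 h4
      rw [add_sub_cancel_left, norm_smul, Real.norm_of_nonneg (hrp n).le] at h6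
      have hR := Real.rpow_pos_of_pos (hrp n) γ
      have h7 : r n ≤ r n ^ γ := by
        conv_lhs => rw [← Real.rpow_one (r n)]
        exact Real.rpow_le_rpow_of_exponent_ge (hrp n) h3.le hγ1.le
      simp only [hK, blow, h0 n _ h1, h0 n _ (hcn n)]
      rw [abs_mul, abs_of_pos (by have := hrp n; positivity),
        inv_mul_le_iff₀ (by have := hrp n; positivity)]
      rw [show (0 : ℝ) - 0 - (J n).p (c n) (r n • ζ n) -
        1 / 2 * (J n).S (c n) (r n • ζ n) (r n • ζ n) = -((J n).p (c n) (r n • ζ n) +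
        1 / 2 * (J n).S (c n) (r n • ζ n) (r n • ζ n)) by ring, abs_neg]
      refine h6.trans ?_
      calc ε * (r n * ‖ζ n‖) ^ 3 = r n ^ 2 * r n * (ε * ‖ζ n‖ ^ 3) := by ring
        _ ≤ r n ^ 2 * r n ^ γ * (ε * ‖ζ n‖ ^ 3) := by gcongr
  -- the oscillation survives in the limit
  have hsm : ∀ n (u : ℂ), c n + r n • ((r n)⁻¹ • (u - c n)) = u := by
    intro n u
    rw [smul_smul, mul_inv_cancel₀ (hrp n).ne', one_smul]; abel
  have hconv : ∀ u : ℕ → ℂ, (∀ n, u n ∈ Dk) → (∀ᶠ n in (F : Filter ℕ), ‖u n - c n‖ ≤ (B + 1) * r n) →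
      Tendsto (fun n => (r n ^ γ)⁻¹ • ((J n).S (u n) - (J n).S (c n))) F (𝓝 0) := by
    intro u hu hub
    obtain ⟨z, hz⟩ := ultra_lim F (f := fun n => (r n)⁻¹ • (u n - c n)) (B := B + 1) (by
      filter_upwards [hub] with n hn
      rw [norm_smul, norm_inv, Real.norm_of_nonneg (hrp n).le, inv_mul_le_iff₀ (hrp n)]
      linarith)
    have hD : ∀ᶠ n in (F : Filter ℕ), c n + r n • ((r n)⁻¹ • (u n - c n)) ∈ Dk :=
      Eventually.of_forall fun n => by rw [hsm]; exact hu n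
    have hzA := dom.cl _ z hD hz
    have h1 := (hlim z hzA _ hD hz).2.2
    rw [hzero z hzA] at h1
    simpa only [hK, blow, hsm] using h1
  have h1 := hconv x hx (by filter_upwards [hB] with n hn; linarith [hrp n])
  have h2 := hconv y hy (by
    filter_upwards [hB] with n hn
    have : y n - c n = (y n - x n) + (x n - c n) := by abel
    rw [this]
    refine (norm_add_le _ _).trans ?_
    have : ‖y n - x n‖ = r n := rfl
    linarith)
  have h3 := (h2.sub h1).norm
  rw [sub_zero, norm_zero] at h3
  have h4 : (1 / 2 : ℝ) ≤ 0 := by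
    refine ge_of_tendsto h3 ?_
    filter_upwards [hosc] with n hn
    have hR := Real.rpow_pos_of_pos (hrp n) γ
    rw [← smul_sub, sub_sub_sub_cancel_right, norm_smul, norm_inv, Real.norm_of_nonneg hR.le,
      le_inv_mul_iff₀ hR, mul_comm]
    exact hn
  linarith

/-! ### The Schauder estimate on the disc -/

lemma norm_sub_le_rpow {γ : ℝ} (hγ0 : 0 < γ) (hγ1 : γ < 1) {z z' : ℂ} (hz : z ∈ Dk) (hz' : z' ∈ Dk) :
    ‖z' - z‖ ≤ 2 * ‖z' - z‖ ^ γ := by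
  have h2 : ‖z' - z‖ ≤ 2 := (norm_sub_le _ _).trans (by linarith [mem_Dk.1 hz, mem_Dk.1 hz'])
  rcases (norm_nonneg (z' - z)).eq_or_lt with h | h
  · rw [← h, Real.zero_rpow hγ0.ne', mul_zero]
  · calc ‖z' - z‖ = ‖z' - z‖ ^ (1 - γ) * ‖z' - z‖ ^ γ := by
          rw [← Real.rpow_add h]; simp
      _ ≤ (2 : ℝ) ^ (1 - γ) * ‖z' - z‖ ^ γ := by gcongr
      _ ≤ (2 : ℝ) ^ (1 : ℝ) * ‖z' - z‖ ^ γ := by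
          gcongr
          · norm_num
          · linarith
      _ = _ := by rw [Real.rpow_one]

lemma p_lipschitz {γ M ε : ℝ} {J : Jet} (hγ : 0 < γ) (hJ : TaylorOn Dk γ M J)
    (hS : ∀ z ∈ Dk, ‖J.S z‖ ≤ ε) {z z' : ℂ} (hz : z ∈ Dk) (hz' : z' ∈ Dk) :
    ‖J.p z' - J.p z‖ ≤ ε * ‖z' - z‖ :=
  convex_Dk.norm_image_sub_le_of_norm_hasFDerivWithin_le (fun _ hx => hJ.hasFDeriv_p hγ hx) hS
    hz hz'

lemma jet_zero_of_w {γ M : ℝ} {J : Jet} (hγ : 0 < γ) (hJ : TaylorOn Dk γ M J)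
    (hw : ∀ z ∈ Dk, J.w z = 0) : ∀ z ∈ Dk, J.p z = 0 ∧ J.S z = 0 := by
  have hp : ∀ z ∈ Dk, J.p z = 0 := fun z hz =>
    (uniqueDiffOn_Dk z hz).eq (hJ.hasFDeriv_w hγ hz)
      ((hasFDerivWithinAt_const (0 : ℝ) z Dk).congr hw (hw z hz))
  exact fun z hz => ⟨hp z hz, (uniqueDiffOn_Dk z hz).eq (hJ.hasFDeriv_p hγ hz)
      ((hasFDerivWithinAt_const (0 : ℂ →L[ℝ] ℝ) z Dk).congr hp (hp z hz))⟩

/-- Pointwise convergence to zero of jets with uniform constants is uniform. -/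
lemma jets_small (F : Ultrafilter ℕ) {J : ℕ → Jet} {J0 : Jet}
    (hlim : ∀ z ∈ Dk, ∀ ζ : ℕ → ℂ, (∀ᶠ n in (F : Filter ℕ), ζ n ∈ Dk) →
      Tendsto ζ F (𝓝 z) → Tendsto (fun n => (J n).w (ζ n)) F (𝓝 (J0.w z)) ∧
        Tendsto (fun n => (J n).p (ζ n)) F (𝓝 (J0.p z)) ∧
        Tendsto (fun n => (J n).S (ζ n)) F (𝓝 (J0.S z)))
    (h0 : ∀ z ∈ Dk, J0.w z = 0 ∧ J0.p z = 0 ∧ J0.S z = 0) {ε : ℝ} (hε : 0 < ε) :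
    ∀ᶠ n in (F : Filter ℕ), ∀ z ∈ Dk, |(J n).w z| ≤ ε ∧ ‖(J n).p z‖ ≤ ε ∧ ‖(J n).S z‖ ≤ ε := by
  by_contra hcon
  rw [← Ultrafilter.eventually_not] at hcon
  have : ∀ n, ∃ z ∈ Dk, (¬ ∀ z ∈ Dk, |(J n).w z| ≤ ε ∧ ‖(J n).p z‖ ≤ ε ∧ ‖(J n).S z‖ ≤ ε) →
      ¬ (|(J n).w z| ≤ ε ∧ ‖(J n).p z‖ ≤ ε ∧ ‖(J n).S z‖ ≤ ε) := by
    intro n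
    by_cases h : ∀ z ∈ Dk, |(J n).w z| ≤ ε ∧ ‖(J n).p z‖ ≤ ε ∧ ‖(J n).S z‖ ≤ ε
    · exact ⟨0, by simp [Dk], fun h' => absurd h h'⟩
    · have h' := h
      push Not at h'
      obtain ⟨z, hz, h1⟩ := h'
      refine ⟨z, hz, fun _ h2 => ?_⟩
      exact absurd h2.2.2 (not_le.2 (h1 h2.1 h2.2.1))
  choose ζ hζ hζ' using this
  obtain ⟨z, hz⟩ := ultra_lim F (f := ζ) (B := 1) (Eventually.of_forall fun n => mem_Dk.1 (hζ n))
  have hzD : z ∈ Dk := isCompact_Dk.isClosed.mem_of_tendsto hz (Eventually.of_forall hζ)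
  obtain ⟨l0, l1, l2⟩ := hlim z hzD ζ (Eventually.of_forall hζ) hz
  obtain ⟨e0, e1, e2⟩ := h0 z hzD
  have l0' := l0.norm
  have l1' := l1.norm
  have l2' := l2.norm
  rw [e0, norm_zero] at l0'
  rw [e1, norm_zero] at l1'
  rw [e2, norm_zero] at l2'
  have hF : ∀ᶠ n in (F : Filter ℕ), False := by
    filter_upwards [hcon, l0'.eventually_lt_const hε, l1'.eventually_lt_const hε,
      l2'.eventually_lt_const hε] with n h1 h2 h3 h4
    exact hζ' n h1 ⟨h2.le, h3.le, h4.le⟩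
  exact (hF.exists).elim fun _ h => h

lemma BdOn.nonneg {γ M : ℝ} {J : Jet} (h : BdOn Dk γ M J) : 0 ≤ M :=
  (abs_nonneg _).trans (h.b0 0 (by simp [Dk]))

lemma BdOn.normalise {γ M K : ℝ} {J : Jet} (h : BdOn Dk γ M J) (hK0 : 0 ≤ K)
    (hK : ¬ BdOn Dk γ K J) :
    ∃ m > K, BdOn Dk γ 1 (Jet.comb m⁻¹ 0 J J) ∧ ¬ BdOn Dk γ (1 / 2) (Jet.comb m⁻¹ 0 J J) := by
  set T : Set ℝ := {M | BdOn Dk γ M J} with hT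
  have hTb : BddBelow T := ⟨0, fun M hM => BdOn.nonneg hM⟩
  have hTn : T.Nonempty := ⟨M, h⟩
  have hm : BdOn Dk γ (sInf T) J := BdOn.of_forall_gt fun M' hM' => by
    obtain ⟨t, ht, htM⟩ := exists_lt_of_csInf_lt hTn hM'
    exact BdOn.mono ht htM.le
  set m := sInf T
  have hmK : K < m := by
    by_contra hle
    exact hK (hm.mono (not_lt.1 hle))
  have hm0 : 0 < m := hK0.trans_lt hmK
  refine ⟨m, hmK, ?_, fun hhalf => ?_⟩
  · have := hm.comb hm m⁻¹ 0
    rwa [abs_zero, zero_mul, add_zero, abs_of_pos (inv_pos.2 hm0), inv_mul_cancel₀ hm0.ne'] at this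
  · have h2 := hhalf.comb hhalf m 0
    have e : Jet.comb m 0 (Jet.comb m⁻¹ 0 J J) (Jet.comb m⁻¹ 0 J J) = J := by
      cases J
      simp [Jet.comb, hm0.ne', smul_smul]
    rw [e, abs_zero, zero_mul, add_zero, abs_of_pos hm0] at h2
    have : m ≤ m * (1 / 2) := csInf_le hTb h2
    linarith

/-- Hölder oscillation of the lower order terms. -/
lemma drift_hol {γ M Lam ε : ℝ} {J : Jet} (hγ0 : 0 < γ) (hγ1 : γ < 1) {b : ℂ → ℝ} {v : ℂ}
    (hv : ‖v‖ = 1) (hb : HolOn Dk γ Lam b) (hJ : TaylorOn Dk γ M J)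
    (hS : ∀ z ∈ Dk, ‖J.S z‖ ≤ ε) (hp : ∀ z ∈ Dk, ‖J.p z‖ ≤ ε) {z z' : ℂ} (hz : z ∈ Dk)
    (hz' : z' ∈ Dk) : |b z' * J.p z' v - b z * J.p z v| ≤ 3 * Lam * ε * ‖z' - z‖ ^ γ := by
  have hε : 0 ≤ ε := (norm_nonneg _).trans (hS z hz)
  have hL : 0 ≤ Lam := (abs_nonneg _).trans (hb.1 z hz)
  have e : b z' * J.p z' v - b z * J.p z v = b z' * (J.p z' - J.p z) v + (b z' - b z) * J.p z v := by
    rw [sub_apply]; ring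
  rw [e]
  refine (abs_add_le _ _).trans ?_
  rw [abs_mul, abs_mul]
  have h1 := abs_apply_le (J.p z' - J.p z) hv
  have h2 := abs_apply_le (J.p z) hv
  have h3 := p_lipschitz hγ0 hJ hS hz hz'
  have h4 := norm_sub_le_rpow hγ0 hγ1 hz hz'
  have h5 : |(J.p z' - J.p z) v| ≤ ε * (2 * ‖z' - z‖ ^ γ) :=
    h1.trans (h3.trans (by gcongr))
  calc _ ≤ Lam * (ε * (2 * ‖z' - z‖ ^ γ)) + Lam * ‖z' - z‖ ^ γ * ε := by
        gcongr
        · exact hb.1 z' hz'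
        · exact hb.2 z hz z' hz'
        · exact h2.trans (hp z hz)
    _ = _ := by ring

/-- The global Schauder estimate, by compactness and blow-up. -/
theorem schauder_apriori {γ lam Lam : ℝ} (hγ0 : 0 < γ) (hγ1 : γ < 1) (hlam : 0 < lam) :
    ∃ C > 0, ∀ c, CoefOK γ lam Lam c → ∀ J, (∃ M, BdOn Dk γ M J) →
      (∀ x : ℂ, ‖x‖ = 1 → J.w x = 0) → ∀ N, HolOn Dk γ N (Lop c J) → BdOn Dk γ (C * N) J := by
  by_contra hcon
  push Not at hcon
  have hseq : ∀ n : ℕ, ∃ c J, CoefOK γ lam Lam c ∧ BdOn Dk γ 1 J ∧ ¬ BdOn Dk γ (1 / 2) J ∧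
      (∀ x : ℂ, ‖x‖ = 1 → J.w x = 0) ∧ HolOn Dk γ (1 / ((n : ℝ) + 1)) (Lop c J) := by
    intro n
    have hn : (0 : ℝ) < n + 1 := by positivity
    obtain ⟨c, hc, J, ⟨M, hM⟩, h0, N, hN, hnot⟩ := hcon (n + 1) hn
    have hN0 : 0 ≤ N := (abs_nonneg _).trans (hN.1 0 (by simp [Dk]))
    obtain ⟨m, hmK, h1, h2⟩ := hM.normalise (by positivity) hnot
    have hm0 : 0 < m := lt_of_le_of_lt (by positivity) hmK
    have hle : m⁻¹ * N ≤ 1 / ((n : ℝ) + 1) := by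
      rw [inv_mul_le_iff₀ hm0, mul_one_div, le_div_iff₀ hn]
      linarith
    refine ⟨c, _, hc, h1, h2, fun x hx => by simp [Jet.comb, h0 x hx], fun x hx => ?_,
      fun x hx y hy => ?_⟩
    · rw [Lop_comb, zero_mul, add_zero, abs_mul, abs_of_pos (inv_pos.2 hm0)]
      refine le_trans ?_ hle
      gcongr
      exact hN.1 x hx
    · rw [Lop_comb, Lop_comb, zero_mul, add_zero, zero_mul, add_zero, ← mul_sub, abs_mul,
        abs_of_pos (inv_pos.2 hm0)]
      calc m⁻¹ * |Lop c J y - Lop c J x| ≤ m⁻¹ * (N * ‖y - x‖ ^ γ) := by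
            gcongr; exact hN.2 x hx y hy
        _ = m⁻¹ * N * ‖y - x‖ ^ γ := by ring
        _ ≤ _ := by gcongr
  choose c J hc hJ1 hJ2 h0 hN using hseq
  set F : Ultrafilter ℕ := hyperfilter ℕ with hF
  have hFle : (F : Filter ℕ) ≤ atTop := Nat.hyperfilter_le_atTop
  have hinv : Tendsto (fun n : ℕ => 1 / ((n : ℝ) + 1)) F (𝓝 0) :=
    tendsto_one_div_add_atTop_nhds_zero_nat.mono_left hFle
  have hLam : 0 ≤ Lam := (abs_nonneg _).trans ((hc 0).h1.1 0 (by simp [Dk]))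
  have hid : ∀ z ∈ Dk, (∀ᶠ _n in (F : Filter ℕ), z ∈ Dk) ∧ Tendsto (fun _ : ℕ => z) F (𝓝 z) :=
    fun z hz => ⟨Eventually.of_forall fun _ => hz, tendsto_const_nhds⟩
  obtain ⟨J0, hJ0, hlim⟩ := jet_limit F (An := fun _ => Dk) (K := J) (A := Dk) hγ0
    (Eventually.of_forall fun n => (hJ1 n).toTaylorOn) (fun _ z => z) hid
    (fun z hz => ⟨1, Eventually.of_forall fun n => ⟨(hJ1 n).b0 z hz, (hJ1 n).b1 z hz,
      (hJ1 n).b2 z hz⟩⟩)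
  -- the limit coefficients
  have hcl : ∀ a : ℕ → ℂ → ℝ, (∀ n, HolOn Dk γ Lam (a n)) → ∃ a0 : ℂ → ℝ, ∀ z ∈ Dk,
      Tendsto (fun n => a n z) F (𝓝 (a0 z)) := by
    intro a ha
    have : ∀ z, ∃ l, z ∈ Dk → Tendsto (fun n => a n z) F (𝓝 l) := by
      intro z
      by_cases hz : z ∈ Dk
      · obtain ⟨l, hl⟩ := ultra_lim F (f := fun n => a n z) (B := Lam)
          (Eventually.of_forall fun n => (ha n).1 z hz)
        exact ⟨l, fun _ => hl⟩
      · exact ⟨0, fun h => absurd h hz⟩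
    choose a0 ha0 using this
    exact ⟨a0, ha0⟩
  obtain ⟨A11, hA11⟩ := hcl (fun n => (c n).a11) fun n => (hc n).h11
  obtain ⟨A12, hA12⟩ := hcl (fun n => (c n).a12) fun n => (hc n).h12
  obtain ⟨A22, hA22⟩ := hcl (fun n => (c n).a22) fun n => (hc n).h22
  obtain ⟨B1, hB1⟩ := hcl (fun n => (c n).b1) fun n => (hc n).h1
  obtain ⟨B2, hB2⟩ := hcl (fun n => (c n).b2) fun n => (hc n).h2
  set c0 : Coef := ⟨A11, A12, A22, B1, B2⟩ with hc0
  have hell0 : ∀ x ∈ Dk, ∀ s t : ℝ, lam * (s ^ 2 + t ^ 2) ≤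
      c0.a11 x * s ^ 2 + 2 * c0.a12 x * s * t + c0.a22 x * t ^ 2 := by
    intro x hx s t
    refine ge_of_tendsto ((((hA11 x hx).mul_const (s ^ 2)).add
      ((((hA12 x hx).const_mul 2).mul_const s).mul_const t)).add ((hA22 x hx).mul_const (t ^ 2)))
      (Eventually.of_forall fun n => (hc n).ell x hx s t)
  have hb0 : ∀ x ∈ Dk, |c0.b1 x| ≤ Lam := fun x hx =>
    le_of_tendsto (hB1 x hx).abs (Eventually.of_forall fun n => (hc n).h1.1 x hx)
  have hL0 : ∀ x ∈ Dk, Lop c0 J0 x = 0 := by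
    intro x hx
    obtain ⟨-, l1, l2⟩ := hlim x hx (fun _ => x) (hid x hx).1 (hid x hx).2
    have ap : ∀ v : ℂ, Tendsto (fun n => (J n).p x v) F (𝓝 (J0.p x v)) := fun v =>
      ((ContinuousLinearMap.apply ℝ ℝ v).continuous.tendsto _).comp l1
    have aS : ∀ v v' : ℂ, Tendsto (fun n => (J n).S x v v') F (𝓝 (J0.S x v v')) := fun v v' =>
      ((ContinuousLinearMap.apply ℝ ℝ v').continuous.tendsto _).comp
        (((ContinuousLinearMap.apply ℝ (ℂ →L[ℝ] ℝ) v).continuous.tendsto _).comp l2)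
    have hl : Tendsto (fun n => Lop (c n) (J n) x) F (𝓝 (Lop c0 J0 x)) :=
      (((((hA11 x hx).mul (aS 1 1)).add (((hA12 x hx).const_mul 2).mul (aS 1 Complex.I))).add
        ((hA22 x hx).mul (aS Complex.I Complex.I))).add ((hB1 x hx).mul (ap 1))).add
        ((hB2 x hx).mul (ap Complex.I))
    exact tendsto_nhds_unique hl (squeeze_zero_norm (fun n => (hN n).1 x hx) hinv)
  have hbd0 : ∀ x : ℂ, ‖x‖ = 1 → J0.w x = 0 := by
    intro x hx
    have hxD : x ∈ Dk := mem_Dk.2 hx.le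
    refine tendsto_nhds_unique (hlim x hxD (fun _ => x) (hid x hxD).1 (hid x hxD).2).1 ?_
    simp [h0 _ x hx]
  have hw0 : ∀ z ∈ Dk, J0.w z = 0 := by
    intro z hz
    refine le_antisymm (disc_max hγ0 hlam hJ0 hb0 hell0 (fun x hx => (hL0 x hx).ge)
      (fun x hx => (hbd0 x hx).le) z hz) ?_
    have := disc_max (J := Jet.comb (-1) 0 J0 J0) hγ0 hlam (hJ0.comb hJ0 (-1) 0) hb0 hell0
      (fun x hx => by rw [Lop_comb, hL0 x hx]; simp) (fun x hx => by simp [Jet.comb, hbd0 x hx]) z hz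
    simp only [Jet.comb] at this
    linarith
  have hsmall : ∀ ε > 0, ∀ᶠ n in (F : Filter ℕ), ∀ z ∈ Dk,
      |(J n).w z| ≤ ε ∧ ‖(J n).p z‖ ≤ ε ∧ ‖(J n).S z‖ ≤ ε := fun ε hε =>
    jets_small F hlim
      (fun z hz => ⟨hw0 z hz, jet_zero_of_w hγ0 hJ0 hw0 z hz⟩) hε
  -- points where the Hölder quotient of the Hessian is large
  have hpts : ∀ n, ∃ x ∈ Dk, ∃ y ∈ Dk, 0 < ‖y - x‖ ∧ ((∀ z ∈ Dk,
      |(J n).w z| ≤ 1 / 2 ∧ ‖(J n).p z‖ ≤ 1 / 2 ∧ ‖(J n).S z‖ ≤ 1 / 2) →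
      1 / 2 * ‖y - x‖ ^ γ ≤ ‖(J n).S y - (J n).S x‖) := by
    intro n
    by_cases hs : ∀ z ∈ Dk, |(J n).w z| ≤ 1 / 2 ∧ ‖(J n).p z‖ ≤ 1 / 2 ∧ ‖(J n).S z‖ ≤ 1 / 2
    · by_contra hno
      push Not at hno
      refine hJ2 n ⟨TaylorOn.of_hasFDeriv convex_Dk hγ0 (by norm_num)
        (fun x hx => (hJ1 n).hasFDeriv_w hγ0 hx) (fun x hx => (hJ1 n).hasFDeriv_p hγ0 hx)
        (fun x hx y hy => ?_) (hJ1 n).sym, fun z hz => (hs z hz).1, fun z hz => (hs z hz).2.1,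
        fun z hz => (hs z hz).2.2⟩
      rcases eq_or_ne y x with rfl | hne
      · simp [Real.zero_rpow hγ0.ne']
      · exact (hno x hx y hy (norm_sub_pos_iff.2 hne)).2.le
    · exact ⟨0, by simp [Dk], 1, by simp [Dk], by simp, fun h => absurd h hs⟩
  choose x hx y hy hxy hosc using hpts
  have hosc' : ∀ᶠ n in (F : Filter ℕ), 1 / 2 * ‖y n - x n‖ ^ γ ≤ ‖(J n).S (y n) - (J n).S (x n)‖ := by
    filter_upwards [hsmall (1 / 2) (by norm_num)] with n hn using hosc n hn
  have hrγ : Tendsto (fun n => ‖y n - x n‖ ^ γ) F (𝓝 0) := by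
    refine tendsto_zero_of_eps (g := fun _ => 4) tendsto_const_nhds fun ε hε => ?_
    filter_upwards [hosc', hsmall ε hε] with n h1 h2
    have h3 := norm_sub_le ((J n).S (y n)) ((J n).S (x n))
    have h4 := (h2 _ (hx n)).2.2
    have h5 := (h2 _ (hy n)).2.2
    rw [abs_of_nonneg (by positivity)]
    linarith
  have hr0 : Tendsto (fun n => ‖y n - x n‖) F (𝓝 0) := by
    have := hrγ.rpow_const (p := γ⁻¹) (Or.inr (inv_nonneg.2 hγ0.le))
    rw [Real.zero_rpow (inv_ne_zero hγ0.ne')] at this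
    refine this.congr fun n => ?_
    rw [← Real.rpow_mul (norm_nonneg _), mul_inv_cancel₀ hγ0.ne', Real.rpow_one]
  refine blow_up_small F (Lam := Lam) hγ0 hγ1 hlam (a11 := fun n => (c n).a11)
    (a12 := fun n => (c n).a12) (a22 := fun n => (c n).a22)
    (g := fun n z => Lop (c n) (J n) z - (c n).b1 z * (J n).p z 1 - (c n).b2 z * (J n).p z Complex.I)
    (J := J) (Λ := fun _ => Lam) (fun n z hz => ⟨(hc n).h11.1 z hz, (hc n).h12.1 z hz, (hc n).h22.1 z hz⟩)
    (fun n => (hc n).ell) (fun n => (hc n).h11.2) (fun n => (hc n).h12.2) (fun n => (hc n).h22.2)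
    (fun n z _ => by simp only [Lop, tr3]; ring) ?_ ?_ ?_ h0 (fun n => (hJ1 n).toTaylorOn)
    hx hy hxy hr0 (by simpa using hrγ.const_mul Lam) hosc'
  · intro ε hε
    have hden : 0 < 6 * Lam + 1 := by positivity
    filter_upwards [hsmall (ε / (2 * (6 * Lam + 1))) (by positivity),
      hinv.eventually_lt_const (half_pos hε)] with n h1 h2 z hz z' hz'
    have t0 := (hN n).2 z hz z' hz'
    have t1 := drift_hol hγ0 hγ1 norm_one (hc n).h1 (hJ1 n).toTaylorOn (fun z hz => (h1 z hz).2.2)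
      (fun z hz => (h1 z hz).2.1) hz hz'
    have t2 := drift_hol hγ0 hγ1 Complex.norm_I (hc n).h2 (hJ1 n).toTaylorOn
      (fun z hz => (h1 z hz).2.2) (fun z hz => (h1 z hz).2.1) hz hz'
    have hd : 0 ≤ ‖z' - z‖ ^ γ := by positivity
    have e1 : 6 * Lam * (ε / (2 * (6 * Lam + 1))) ≤ ε / 2 := by
      rw [mul_div_assoc', div_le_div_iff₀ (by positivity) (by norm_num)]
      nlinarith
    have e2 : 1 / ((n : ℝ) + 1) * ‖z' - z‖ ^ γ + 6 * Lam * (ε / (2 * (6 * Lam + 1))) * ‖z' - z‖ ^ γ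
        ≤ ε * ‖z' - z‖ ^ γ := by nlinarith
    rw [abs_le] at *
    constructor <;> linarith
  · intro ε hε
    filter_upwards [hsmall (ε / (Lam + 1)) (by positivity)] with n hn z hz
    have := (hn z hz).2.2
    calc Lam * ‖(J n).S z‖ ≤ (Lam + 1) * (ε / (Lam + 1)) := by gcongr; linarith
      _ = ε := by field_simp
  · intro ε hε
    filter_upwards [hsmall ε hε] with n hn z hz using ⟨(hn z hz).2.2, (hn z hz).2.1⟩

/-! ### The Poisson equation for polynomial data -/

/-- The monomial `z^m (conj z)^n`. -/
def mono (m n : ℕ) (z : ℂ) : ℂ := z ^ m * (conj z) ^ n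

/-- The real derivative of `mono m n`. -/
def dmono (m n : ℕ) (z : ℂ) : ℂ →L[ℝ] ℂ :=
  ((m : ℂ) * mono (m - 1) n z) • (ContinuousLinearMap.id ℝ ℂ) +
    ((n : ℂ) * mono m (n - 1) z) • (Complex.conjCLE : ℂ →L[ℝ] ℂ)

/-- The second real derivative of `mono m n`. -/
def ddmono (m n : ℕ) (z : ℂ) : ℂ →L[ℝ] ℂ →L[ℝ] ℂ :=
  ((m : ℂ) • dmono (m - 1) n z).smulRight (ContinuousLinearMap.id ℝ ℂ) +
    ((n : ℂ) • dmono m (n - 1) z).smulRight (Complex.conjCLE : ℂ →L[ℝ] ℂ)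

lemma contDiff_mono (m n : ℕ) : ContDiff ℝ 1 (mono m n) :=
  (contDiff_id.pow m).mul ((Complex.conjCLE.contDiff).pow n)

lemma hasFDerivAt_mono (m n : ℕ) (z : ℂ) : HasFDerivAt (mono m n) (dmono m n z) z := by
  have h1 : HasFDerivAt (fun z : ℂ => z ^ m) (((m : ℂ) * z ^ (m - 1)) •
      (ContinuousLinearMap.id ℝ ℂ)) z := by
    refine ((hasDerivAt_pow m z).complexToReal_fderiv).congr_fderiv ?_
    ext
    simp
  have h2 : HasFDerivAt (fun z : ℂ => (conj z) ^ n) (((n : ℂ) * (conj z) ^ (n - 1)) •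
      (Complex.conjCLE : ℂ →L[ℝ] ℂ)) z := by
    have := ((hasDerivAt_pow n (conj z)).complexToReal_fderiv).comp z
      (Complex.conjCLE.hasFDerivAt (x := z))
    refine this.congr_fderiv ?_
    ext
    simp
  refine (h1.mul h2).congr_fderiv ?_
  ext
  simp [dmono, mono]
  ring

lemma hasFDerivAt_dmono (m n : ℕ) (z : ℂ) : HasFDerivAt (dmono m n) (ddmono m n z) z :=
  (((hasFDerivAt_mono (m - 1) n z).const_smul (m : ℂ)).smul_const _).add
    (((hasFDerivAt_mono m (n - 1) z).const_smul (n : ℂ)).smul_const _)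

lemma contDiff_ddmono (m n : ℕ) : ContDiff ℝ 1 (ddmono m n) := by
  set I' : ℂ →L[ℝ] ℂ := ContinuousLinearMap.id ℝ ℂ
  set C' : ℂ →L[ℝ] ℂ := (Complex.conjCLE : ℂ →L[ℝ] ℂ)
  have e : ddmono m n = fun z =>
      ((m : ℂ) * (((m - 1 : ℕ) : ℂ) * mono (m - 1 - 1) n z)) • I'.smulRight I' +
      ((m : ℂ) * ((n : ℂ) * mono (m - 1) (n - 1) z)) • C'.smulRight I' +
      ((n : ℂ) * ((m : ℂ) * mono (m - 1) (n - 1) z)) • I'.smulRight C' +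
      ((n : ℂ) * (((n - 1 : ℕ) : ℂ) * mono m (n - 1 - 1) z)) • C'.smulRight C' := by
    funext z
    ext h k
    simp [ddmono, dmono, I', C']
    ring
  have h : ∀ (a b : ℂ) (i j : ℕ) (B : ℂ →L[ℝ] ℂ →L[ℝ] ℂ),
      ContDiff ℝ 1 fun z => (a * (b * mono i j z)) • B := fun a b i j B =>
    (contDiff_const.mul (contDiff_const.mul (contDiff_mono i j))).smul contDiff_const
  rw [e]
  exact (((h _ _ _ _ _).add (h _ _ _ _ _)).add (h _ _ _ _ _)).add (h _ _ _ _ _)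

lemma lap_mono (m n : ℕ) (z : ℂ) : ddmono m n z 1 1 + ddmono m n z Complex.I Complex.I =
    4 * m * n * mono (m - 1) (n - 1) z := by
  have hI : Complex.I * Complex.I = -1 := Complex.I_mul_I
  simp [ddmono, dmono]
  ring_nf
  simp only [Complex.I_sq]
  ring

/-- Right-hand sides for which the Dirichlet problem of the Laplacian on the disc has a smooth
solution. -/
def solvable : Submodule ℂ (ℂ → ℂ) where
  carrier := {g | ∃ (W : ℂ → ℂ) (P : ℂ → ℂ →L[ℝ] ℂ) (T : ℂ → ℂ →L[ℝ] ℂ →L[ℝ] ℂ),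
    (∀ z, HasFDerivAt W (P z) z) ∧ (∀ z, HasFDerivAt P (T z) z) ∧ ContDiff ℝ 1 T ∧
    (∀ z, ‖z‖ = 1 → W z = 0) ∧ ∀ z, T z 1 1 + T z Complex.I Complex.I = g z}
  add_mem' := by
    rintro g g' ⟨W, P, T, h1, h2, h3, h4, h5⟩ ⟨W', P', T', h1', h2', h3', h4', h5'⟩
    refine ⟨W + W', P + P', T + T', fun z => (h1 z).add (h1' z), fun z => (h2 z).add (h2' z),
      h3.add h3', fun z hz => by simp [h4 z hz, h4' z hz], fun z => ?_⟩
    simp only [Pi.add_apply, add_apply, ← h5, ← h5']; ring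
  zero_mem' := ⟨0, 0, 0, fun z => hasFDerivAt_const _ _, fun z => hasFDerivAt_const _ _,
    contDiff_const, fun _ _ => rfl, fun z => by simp⟩
  smul_mem' := by
    rintro c g ⟨W, P, T, h1, h2, h3, h4, h5⟩
    refine ⟨c • W, c • P, c • T, fun z => (h1 z).const_smul c, fun z => (h2 z).const_smul c,
      contDiff_const.smul h3, fun z hz => by simp [h4 z hz], fun z => ?_⟩
    simp only [Pi.smul_apply, smul_apply, smul_eq_mul, ← h5]; ring

/-- A multiple of `z ^ (a + 1) * conj z ^ (b + 1)` has the right Laplacian; on the circle it agrees with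
the harmonic monomial with exponents `a - b`, `b - a` (truncated), which is subtracted. -/
lemma mono_mem_solvable (a b : ℕ) : mono a b ∈ solvable := by
  set c : ℂ := (4 * (a + 1) * (b + 1))⁻¹ with hc
  have hc0 : (4 * ((a : ℂ) + 1) * (b + 1)) ≠ 0 := by
    have h1 : (a : ℂ) + 1 ≠ 0 := by exact_mod_cast a.succ_ne_zero
    have h2 : (b : ℂ) + 1 ≠ 0 := by exact_mod_cast b.succ_ne_zero
    exact mul_ne_zero (mul_ne_zero (by norm_num) h1) h2
  refine ⟨fun z => c • (mono (a + 1) (b + 1) z - mono (a - b) (b - a) z),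
    fun z => c • (dmono (a + 1) (b + 1) z - dmono (a - b) (b - a) z),
    fun z => c • (ddmono (a + 1) (b + 1) z - ddmono (a - b) (b - a) z),
    fun z => ((hasFDerivAt_mono _ _ z).sub (hasFDerivAt_mono _ _ z)).const_smul c,
    fun z => ((hasFDerivAt_dmono _ _ z).sub (hasFDerivAt_dmono _ _ z)).const_smul c,
    ((contDiff_ddmono _ _).sub (contDiff_ddmono _ _)).const_smul c, fun z hz => ?_,
    fun z => ?_⟩
  · have h1 : z * conj z = 1 := by rw [Complex.mul_conj, Complex.normSq_eq_norm_sq, hz]; simp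
    have : mono (a + 1) (b + 1) z = mono (a - b) (b - a) z := by
      unfold mono
      rcases le_total a b with h | h
      · obtain ⟨k, rfl⟩ := Nat.exists_eq_add_of_le h
        have : z ^ (a + 1) * conj z ^ (a + k + 1) = (z * conj z) ^ (a + 1) * conj z ^ k := by ring
        rw [this, h1]; simp
      · obtain ⟨k, rfl⟩ := Nat.exists_eq_add_of_le h
        have : z ^ (b + k + 1) * conj z ^ (b + 1) = (z * conj z) ^ (b + 1) * z ^ k := by ring
        rw [this, h1]; simp
    simp [this]
  · have e := lap_mono (a + 1) (b + 1) z
    have e' := lap_mono (a - b) (b - a) z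
    have h0 : ((a - b : ℕ) : ℂ) * ((b - a : ℕ) : ℂ) = 0 := by
      rcases le_total a b with h | h <;> simp [Nat.sub_eq_zero_of_le h]
    have e'' : ddmono (a - b) (b - a) z 1 1 + ddmono (a - b) (b - a) z Complex.I Complex.I = 0 := by
      rw [e', mul_assoc (4 : ℂ), h0]; simp
    simp only [smul_apply, sub_apply, smul_eq_mul]
    have : c * (ddmono (a + 1) (b + 1) z 1 1 - ddmono (a - b) (b - a) z 1 1) +
        c * (ddmono (a + 1) (b + 1) z Complex.I Complex.I -
          ddmono (a - b) (b - a) z Complex.I Complex.I) = c * (4 * ((a : ℂ) + 1) * (b + 1)) *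
            mono a b z := by
      push_cast at e
      linear_combination c * e - c * e''
    rw [this, hc, inv_mul_cancel₀ hc0, one_mul]

lemma solvable_jet {γ : ℝ} (hγ0 : 0 < γ) (hγ1 : γ < 1) {g : ℂ → ℂ} (hg : g ∈ solvable) :
    ∃ J : Jet, (∃ M, BdOn Dk γ M J) ∧ (∀ z, ‖z‖ = 1 → J.w z = 0) ∧
      ∀ z, J.S z 1 1 + J.S z Complex.I Complex.I = (g z).re := by
  obtain ⟨W, P, T, h1, h2, h3, h4, h5⟩ := hg
  set R : (ℂ →L[ℝ] ℂ) →L[ℝ] (ℂ →L[ℝ] ℝ) := ContinuousLinearMap.compL ℝ ℂ ℂ ℝ Complex.reCLM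
  set R2 : (ℂ →L[ℝ] ℂ →L[ℝ] ℂ) →L[ℝ] (ℂ →L[ℝ] ℂ →L[ℝ] ℝ) :=
    ContinuousLinearMap.compL ℝ ℂ (ℂ →L[ℝ] ℂ) (ℂ →L[ℝ] ℝ) R
  set J : Jet := ⟨fun z => (W z).re, fun z => R (P z), fun z => R2 (T z)⟩ with hJ
  have hw : ∀ z, HasFDerivAt J.w (J.p z) z := fun z => Complex.reCLM.hasFDerivAt.comp z (h1 z)
  have hp : ∀ z, HasFDerivAt J.p (J.S z) z := fun z => R.hasFDerivAt.comp z (h2 z)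
  have hS : ContDiff ℝ 1 J.S := R2.contDiff.comp h3
  obtain ⟨K, hK⟩ := hS.contDiffOn.exists_lipschitzOnWith (s := Dk) one_ne_zero convex_Dk
    isCompact_Dk
  have cw : Continuous J.w := continuous_iff_continuousAt.2 fun z => (hw z).continuousAt
  have cp : Continuous J.p := continuous_iff_continuousAt.2 fun z => (hp z).continuousAt
  obtain ⟨B0, hB0⟩ := isCompact_Dk.exists_bound_of_continuousOn cw.continuousOn
  obtain ⟨B1, hB1⟩ := isCompact_Dk.exists_bound_of_continuousOn cp.continuousOn
  obtain ⟨B2, hB2⟩ := isCompact_Dk.exists_bound_of_continuousOn hS.continuous.continuousOn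
  have hT : TaylorOn Dk γ (2 * K) J := TaylorOn.of_hasFDeriv convex_Dk hγ0 (by positivity)
    (fun z _ => (hw z).hasFDerivWithinAt) (fun z _ => (hp z).hasFDerivWithinAt)
    (fun x hx y hy => by
      have := hK.dist_le_mul y hy x hx
      rw [dist_eq_norm, dist_eq_norm] at this
      refine this.trans ?_
      have := norm_sub_le_rpow hγ0 hγ1 hx hy
      nlinarith [K.2, mul_le_mul_of_nonneg_left this K.2])
    (fun x _ h k => second_derivative_symmetric hw (hp x) h k)
  have m1 := le_max_left (2 * (K : ℝ)) (max B0 (max B1 B2))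
  have m2 : B0 ≤ max (2 * (K : ℝ)) (max B0 (max B1 B2)) := by simp
  have m3 : B1 ≤ max (2 * (K : ℝ)) (max B0 (max B1 B2)) := by simp
  have m4 : B2 ≤ max (2 * (K : ℝ)) (max B0 (max B1 B2)) := by simp
  refine ⟨J, ⟨max (2 * K) (max B0 (max B1 B2)), ⟨hT.mono m1, fun x hx => (hB0 x hx).trans m2,
    fun x hx => (hB1 x hx).trans m3, fun x hx => (hB2 x hx).trans m4⟩⟩, fun z hz => ?_, fun z => ?_⟩
  · simp [hJ, h4 z hz]
  · rw [← h5 z]; simp [hJ, R2, R]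

section
open MeasureTheory

/-! ### Polynomial approximation of Hölder functions -/

/-- Radial retraction onto the closed disc. -/
def retr (z : ℂ) : ℂ := (max 1 ‖z‖)⁻¹ • z

lemma retr_mem (z : ℂ) : retr z ∈ Dk := by
  have h : 0 < max 1 ‖z‖ := lt_max_of_lt_left one_pos
  rw [mem_Dk, retr, norm_smul, norm_inv, Real.norm_of_nonneg h.le, inv_mul_le_iff₀ h, mul_one]
  exact le_max_right _ _

lemma retr_lip (z w : ℂ) : ‖retr z - retr w‖ ≤ 2 * ‖z - w‖ := by
  have ha : 1 ≤ max 1 ‖z‖ := le_max_left _ _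
  have ha0 : 0 < max 1 ‖z‖ := by linarith
  have hb0 : 0 < max 1 ‖w‖ := lt_max_of_lt_left one_pos
  have hr := mem_Dk.1 (retr_mem w)
  have hab : |max 1 ‖w‖ - max 1 ‖z‖| ≤ ‖z - w‖ := by
    refine (abs_max_sub_max_le_max _ _ _ _).trans ?_
    rw [sub_self, abs_zero, max_eq_right (abs_nonneg _), abs_sub_comm]
    exact abs_norm_sub_norm_le z w
  have e : retr z - retr w = (max 1 ‖z‖)⁻¹ • (z - w) +
      ((max 1 ‖z‖)⁻¹ * (max 1 ‖w‖ - max 1 ‖z‖)) • retr w := by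
    simp only [retr, smul_smul, smul_sub]
    have : (max 1 ‖z‖)⁻¹ * (max 1 ‖w‖ - max 1 ‖z‖) * (max 1 ‖w‖)⁻¹ =
      (max 1 ‖z‖)⁻¹ - (max 1 ‖w‖)⁻¹ := by field_simp
    rw [this, sub_smul]; abel
  have hi : (max 1 ‖z‖)⁻¹ ≤ 1 := inv_le_one_of_one_le₀ ha
  have hi0 : 0 ≤ (max 1 ‖z‖)⁻¹ := by positivity
  rw [e]
  calc _ ≤ (max 1 ‖z‖)⁻¹ * ‖z - w‖ + (max 1 ‖z‖)⁻¹ * |max 1 ‖w‖ - max 1 ‖z‖| * ‖retr w‖ := by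
        refine (norm_add_le _ _).trans (le_of_eq ?_)
        rw [norm_smul, norm_smul, norm_mul, Real.norm_of_nonneg hi0, Real.norm_eq_abs]
    _ ≤ 1 * ‖z - w‖ + 1 * ‖z - w‖ * 1 := by gcongr
    _ = _ := by ring

/-- Extension by the radial retraction onto the disc, cut off between the radii `1` and `2`. -/
lemma HolOn.extend {γ N : ℝ} (hγ0 : 0 < γ) (hγ1 : γ < 1) {f : ℂ → ℝ} (hf : HolOn Dk γ N f) :
    ∃ F : ℂ → ℝ, (∀ z ∈ Dk, F z = f z) ∧ (∀ z, |F z| ≤ N) ∧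
      (∀ z w, |F z - F w| ≤ 3 * N * ‖z - w‖ ^ γ) ∧ Continuous F ∧ ∀ z, 2 ≤ ‖z‖ → F z = 0 := by
  set η : ℂ → ℝ := fun z => max 0 (min 1 (2 - ‖z‖)) with hη
  have hη0 : ∀ z, 0 ≤ η z := fun z => le_max_left _ _
  have hη1 : ∀ z, η z ≤ 1 := fun z => max_le zero_le_one (min_le_left _ _)
  have hN : 0 ≤ N := (abs_nonneg _).trans (hf.1 0 (by simp [Dk]))
  have hηd : ∀ z w, |η z - η w| ≤ ‖z - w‖ ^ γ := by
    intro z w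
    rcases le_total ‖z - w‖ 1 with h | h
    · have h1 : |η z - η w| ≤ ‖z - w‖ := by
        simp only [hη]
        refine (abs_max_sub_max_le_max _ _ _ _).trans ?_
        rw [sub_self, abs_zero, max_eq_right (abs_nonneg _)]
        refine (abs_min_sub_min_le_max _ _ _ _).trans ?_
        rw [sub_self, abs_zero, max_eq_right (abs_nonneg _)]
        have : 2 - ‖z‖ - (2 - ‖w‖) = -(‖z‖ - ‖w‖) := by ring
        rw [this, abs_neg]
        exact abs_norm_sub_norm_le z w
      refine h1.trans ?_
      conv_lhs => rw [← Real.rpow_one ‖z - w‖]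
      exact Real.rpow_le_rpow_of_exponent_ge_of_imp (norm_nonneg _) h hγ1.le
        (fun _ h => absurd h one_ne_zero)
    · refine le_trans ?_ (Real.one_le_rpow h hγ0.le)
      rw [abs_le]
      constructor <;> linarith [hη0 z, hη0 w, hη1 z, hη1 w]
  have hd : ∀ z w, |f (retr z) * η z - f (retr w) * η w| ≤ 3 * N * ‖z - w‖ ^ γ := by
    intro z w
    have e : f (retr z) * η z - f (retr w) * η w =
      (f (retr z) - f (retr w)) * η z + f (retr w) * (η z - η w) := by ring
    have h1 : |f (retr z) - f (retr w)| ≤ N * (2 * ‖z - w‖ ^ γ) := by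
      refine (hf.2 _ (retr_mem w) _ (retr_mem z)).trans ?_
      gcongr
      calc ‖retr z - retr w‖ ^ γ ≤ (2 * ‖z - w‖) ^ γ := by gcongr; exact retr_lip z w
        _ = 2 ^ γ * ‖z - w‖ ^ γ := Real.mul_rpow (by norm_num) (norm_nonneg _)
        _ ≤ 2 ^ (1 : ℝ) * ‖z - w‖ ^ γ := by
          gcongr
          · norm_num
        _ = _ := by rw [Real.rpow_one]
    rw [e]
    calc _ ≤ |f (retr z) - f (retr w)| * |η z| + |f (retr w)| * |η z - η w| := by
          rw [← abs_mul, ← abs_mul]; exact abs_add_le _ _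
      _ ≤ N * (2 * ‖z - w‖ ^ γ) * 1 + N * ‖z - w‖ ^ γ := by
          have := hf.1 _ (retr_mem w)
          have h3 : |η z| ≤ 1 := by rw [abs_of_nonneg (hη0 z)]; exact hη1 z
          gcongr
          exact hηd z w
      _ = _ := by ring
  refine ⟨fun z => f (retr z) * η z, ?_, ?_, hd, ?_, ?_⟩
  · intro z hz
    have h1 := mem_Dk.1 hz
    have : retr z = z := by simp [retr, max_eq_left h1]
    simp only [this, hη]
    rw [min_eq_left (by linarith), max_eq_right zero_le_one, mul_one]
  · intro z
    rw [abs_mul, abs_of_nonneg (hη0 z)]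
    have := hf.1 _ (retr_mem z)
    nlinarith [hη0 z, hη1 z, abs_nonneg (f (retr z))]
  · rw [continuous_iff_continuousAt]
    intro z
    rw [ContinuousAt, tendsto_iff_norm_sub_tendsto_zero]
    have h0 : Tendsto (fun w : ℂ => 3 * N * ‖w - z‖ ^ γ) (𝓝 z) (𝓝 (3 * N * ‖z - z‖ ^ γ)) :=
      ((((continuous_id.sub continuous_const).norm).rpow_const
        (fun _ => Or.inr hγ0.le)).const_mul _ |>.tendsto z)
    rw [sub_self, norm_zero, Real.zero_rpow hγ0.ne', mul_zero] at h0
    exact squeeze_zero (fun _ => norm_nonneg _) (fun w => hd w z) h0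
  · intro z hz
    simp only [hη]
    rw [min_eq_right (by linarith), max_eq_left (by linarith), mul_zero]

/-- The Landau kernel integrated against a compactly supported density is a polynomial. -/
lemma landau_mem_solvable {F : ℂ → ℝ} (hF : Continuous F) (hF2 : HasCompactSupport F) (n : ℕ) :
    (fun z : ℂ => ∫ w, (F w : ℂ) * (-((z - w) * conj (z - w)) / 16 + 1) ^ n) ∈ solvable := by
  have hIn : ∀ g : ℂ → ℂ, Continuous g → Integrable fun w => (F w : ℂ) * g w := by
    intro g hg
    refine Continuous.integrable_of_hasCompactSupport
      ((Complex.continuous_ofReal.comp hF).mul hg) ?_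
    exact (hF2.comp_left (g := ((↑) : ℝ → ℂ)) Complex.ofReal_zero).mul_right
  have e : (fun z : ℂ => ∫ w, (F w : ℂ) * (-((z - w) * conj (z - w)) / 16 + 1) ^ n) =
      ∑ m ∈ Finset.range (n + 1), ∑ a ∈ Finset.range (m + 1), ∑ b ∈ Finset.range (m + 1),
        (∫ w, (F w : ℂ) * ((-1 / 16) ^ m * (n.choose m) * ((-w) ^ (m - a) * (m.choose a)) *
          ((-conj w) ^ (m - b) * (m.choose b)))) • mono a b := by
    funext z
    simp only [Finset.sum_apply, Pi.smul_apply, smul_eq_mul, ← integral_mul_const]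
    have hc : ∀ m a b : ℕ, Integrable fun w => (F w : ℂ) * ((-1 / 16) ^ m * (n.choose m) *
        ((-w) ^ (m - a) * (m.choose a)) * ((-conj w) ^ (m - b) * (m.choose b))) * mono a b z := by
      intro m a b
      refine (hIn _ ?_).mul_const _
      have : Continuous fun w : ℂ => conj w := Complex.continuous_conj
      fun_prop
    simp only [← integral_finsetSum _ fun b _ => hc _ _ b]
    simp only [← integral_finsetSum _ fun a _ => integrable_finsetSum _ fun b _ => hc _ a b]
    rw [← integral_finsetSum _ fun m _ => integrable_finsetSum _ fun a _ =>
      integrable_finsetSum _ fun b _ => hc m a b]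
    congr 1
    funext w
    rw [add_pow, Finset.mul_sum]
    refine Finset.sum_congr rfl fun m _ => ?_
    have e1 : (-((z - w) * conj (z - w)) / 16) ^ m =
        (-1 / 16) ^ m * ((z + -w) ^ m * (conj z + -conj w) ^ m) := by
      rw [← mul_pow, ← mul_pow, map_sub]; congr 1; ring
    rw [e1, add_pow z, add_pow (conj z), Finset.sum_mul_sum]
    simp only [Finset.mul_sum, Finset.sum_mul]
    refine Finset.sum_congr rfl fun a _ => Finset.sum_congr rfl fun b _ => ?_
    simp only [mono]
    ring
  rw [e]
  exact Submodule.sum_mem _ fun m _ => Submodule.sum_mem _ fun a _ => Submodule.sum_mem _ fun b _ =>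
    Submodule.smul_mem _ _ (mono_mem_solvable a b)

/-- Convolution with the Landau-type kernels `(1 - ‖ζ‖² / 16) ^ n`, which are polynomials. -/
lemma HolOn.approx {γ N : ℝ} (hγ0 : 0 < γ) (hγ1 : γ < 1) {f : ℂ → ℝ} (hf : HolOn Dk γ N f) :
    ∃ P : ℕ → ℂ → ℂ, (∀ n, P n ∈ solvable) ∧ (∀ n, HolOn Dk γ (3 * N) fun z => (P n z).re) ∧
      ∀ z ∈ Dk, Tendsto (fun n => (P n z).re) atTop (𝓝 (f z)) := by
  obtain ⟨F, hFf, hFN, hFd, hFc, hF0⟩ := hf.extend hγ0 hγ1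
  have hN : 0 ≤ N := (abs_nonneg _).trans (hf.1 0 (by simp [Dk]))
  have hFs : HasCompactSupport F := HasCompactSupport.intro (isCompact_closedBall (0 : ℂ) 2)
    fun z hz => hF0 z (by simp at hz; exact hz.le)
  set B : Set ℂ := Metric.closedBall 0 3 with hB
  set K : ℂ → ℝ := fun ζ => -‖ζ‖ ^ 2 / 16 + 1 with hK
  have hKc : Continuous K := by fun_prop
  have hK0 : ∀ ζ ∈ B, 0 ≤ K ζ := by
    intro ζ hζ
    have : ‖ζ‖ ≤ 3 := by simpa [hB] using hζ
    simp only [hK]; nlinarith [norm_nonneg ζ]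
  set c : ℕ → ℝ := fun n => ∫ ζ in B, K ζ ^ n with hc
  have hc0 : ∀ n, 0 ≤ c n := fun n => setIntegral_nonneg measurableSet_closedBall
    fun ζ hζ => pow_nonneg (hK0 ζ hζ) n
  have key : ∀ z ∈ Dk, ∀ n, (((c n)⁻¹ : ℂ) • ∫ w, (F w : ℂ) *
      (-((z - w) * conj (z - w)) / 16 + 1) ^ n).re = (c n)⁻¹ * ∫ ζ in B, K ζ ^ n • F (z - ζ) := by
    intro z hz n
    have e1 : (fun w => (F w : ℂ) * (-((z - w) * conj (z - w)) / 16 + 1) ^ n) =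
        fun w => ((F w * K (z - w) ^ n : ℝ) : ℂ) := by
      funext w
      have : (z - w) * conj (z - w) = ((‖z - w‖ ^ 2 : ℝ) : ℂ) := by
        rw [Complex.mul_conj, Complex.normSq_eq_norm_sq]
      rw [this]; simp [hK]
    rw [e1, integral_complex_ofReal, ← Complex.ofReal_inv, smul_eq_mul, ← Complex.ofReal_mul,
      Complex.ofReal_re]
    congr 1
    rw [← integral_sub_left_eq_self (fun w => F w * K (z - w) ^ n) _ z, setIntegral_eq_integral_of_forall_compl_eq_zero]
    · congr 1
      funext ζ
      simp [mul_comm]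
    · intro ζ hζ
      have h3 : 3 < ‖ζ‖ := by simpa [hB] using hζ
      have : 2 ≤ ‖z - ζ‖ := by
        have h4 := norm_sub_norm_le ζ z
        rw [norm_sub_rev] at h4
        linarith [mem_Dk.1 hz]
      simp [hF0 _ this]
  have hKi : ∀ n, IntegrableOn (fun ζ => K ζ ^ n) B := fun n =>
    ((hKc.pow n).continuousOn).integrableOn_compact (isCompact_closedBall _ _)
  -- averaging against a probability density preserves bounds
  have avg : ∀ n (g : ℂ → ℝ) (b : ℝ), 0 ≤ b → Continuous g → (∀ ζ ∈ B, |g ζ| ≤ b) →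
      |(c n)⁻¹ * ∫ ζ in B, K ζ ^ n • g ζ| ≤ b := by
    intro n g b hb hg hgb
    have h1 : |∫ ζ in B, K ζ ^ n • g ζ| ≤ ∫ ζ in B, K ζ ^ n * b := by
      rw [← Real.norm_eq_abs]
      refine norm_integral_le_of_norm_le ((hKi n).mul_const b) ?_
      filter_upwards [ae_restrict_mem measurableSet_closedBall] with ζ hζ
      rw [norm_smul, norm_pow, Real.norm_of_nonneg (hK0 ζ hζ)]
      exact mul_le_mul_of_nonneg_left (hgb ζ hζ) (pow_nonneg (hK0 ζ hζ) n)
    rw [integral_mul_const] at h1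
    rw [abs_mul, abs_of_nonneg (inv_nonneg.2 (hc0 n))]
    calc _ ≤ (c n)⁻¹ * (c n * b) := mul_le_mul_of_nonneg_left h1 (inv_nonneg.2 (hc0 n))
      _ = (c n)⁻¹ * c n * b := by ring
      _ ≤ 1 * b := by gcongr; exact inv_mul_le_one
      _ = b := one_mul b
  have hFi : ∀ z n, IntegrableOn (fun ζ => K ζ ^ n • F (z - ζ)) B := fun z n =>
    ((hKc.pow n).smul (hFc.comp (continuous_const.sub continuous_id))).continuousOn.integrableOn_compact
      (isCompact_closedBall _ _)
  refine ⟨fun n z => ((c n)⁻¹ : ℂ) • ∫ w, (F w : ℂ) * (-((z - w) * conj (z - w)) / 16 + 1) ^ n,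
    fun n => Submodule.smul_mem _ _ (landau_mem_solvable hFc hFs n), fun n => ⟨?_, ?_⟩, ?_⟩
  · intro z hz
    simp only [key z hz n]
    refine (avg n (fun ζ => F (z - ζ)) N hN (hFc.comp (continuous_const.sub continuous_id))
      fun ζ _ => hFN _).trans (by linarith)
  · intro z hz z' hz'
    simp only [key z hz n, key z' hz' n]
    rw [← mul_sub, ← integral_sub (hFi z' n) (hFi z n)]
    have := avg n (fun ζ => F (z' - ζ) - F (z - ζ)) (3 * N * ‖z' - z‖ ^ γ) (by positivity)
      ((hFc.comp (continuous_const.sub continuous_id)).sub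
        (hFc.comp (continuous_const.sub continuous_id)))
      fun ζ _ => (hFd _ _).trans (by rw [sub_sub_sub_cancel_right])
    simpa only [smul_sub] using this
  · intro z hz
    simp only [key z hz]
    have := tendsto_setIntegral_pow_smul_of_unique_maximum_of_isCompact_of_continuousOn
      (μ := (volume : Measure ℂ)) (s := B) (x₀ := 0) (isCompact_closedBall _ _) (c := K)
      hKc.continuousOn
      (fun y _ hy => by
        have : 0 < ‖y‖ ^ 2 := by positivity
        simp only [hK, norm_zero]; linarith) hK0 (by simp [hK])
      (by rw [hB, interior_closedBall _ (by norm_num : (3 : ℝ) ≠ 0)]; exact subset_closure (by simp))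
      (g := fun ζ => F (z - ζ)) (hFc.comp (continuous_const.sub continuous_id)).continuousOn
    simp only [sub_zero, hFf z hz] at this
    exact this

end

section

/-! ### Solvability of the Dirichlet problem on the disc -/

/-- Dirichlet condition on the unit circle. -/
def ZeroBd (J : Jet) : Prop := ∀ z : ℂ, ‖z‖ = 1 → J.w z = 0

lemma ZeroBd.comb {J J' : Jet} (h : ZeroBd J) (h' : ZeroBd J') (s t : ℝ) :
    ZeroBd (Jet.comb s t J J') := fun z hz => by simp [Jet.comb, h z hz, h' z hz]

/-- The zero jet. -/
def Jet.zero : Jet := ⟨fun _ => 0, fun _ => 0, fun _ => 0⟩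

lemma Jet.zero_bd (A : Set ℂ) (γ : ℝ) {M : ℝ} (hM : 0 ≤ M) : BdOn A γ M Jet.zero where
  t0 x _ y _ := by simp only [Jet.zero]; simpa using by positivity
  t1 x _ y _ := by simp only [Jet.zero]; simpa using by positivity
  t2 x _ y _ := by simp only [Jet.zero]; simpa using by positivity
  sym x _ h k := rfl
  b0 x _ := by simpa [Jet.zero] using hM
  b1 x _ := by simpa [Jet.zero] using hM
  b2 x _ := by simpa [Jet.zero] using hM

section HolOn
variable {X : Type*} [NormedAddCommGroup X] {A : Set X} {γ M M' : ℝ} {f g : X → ℝ}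

lemma HolOn.congr (hf : HolOn A γ M f) (h : ∀ x ∈ A, g x = f x) : HolOn A γ M g :=
  ⟨fun x hx => by rw [h x hx]; exact hf.1 x hx,
    fun x hx y hy => by rw [h x hx, h y hy]; exact hf.2 x hx y hy⟩

lemma HolOn.mono (hf : HolOn A γ M f) (h : M ≤ M') : HolOn A γ M' f :=
  ⟨fun x hx => (hf.1 x hx).trans h, fun x hx y hy => (hf.2 x hx y hy).trans (by gcongr)⟩

lemma HolOn.add (hf : HolOn A γ M f) (hg : HolOn A γ M' g) :
    HolOn A γ (M + M') fun x => f x + g x :=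
  ⟨fun x hx => (abs_add_le _ _).trans (add_le_add (hf.1 x hx) (hg.1 x hx)), fun x hx y hy => by
    have : f y + g y - (f x + g x) = (f y - f x) + (g y - g x) := by ring
    rw [this, add_mul]
    exact (abs_add_le _ _).trans (add_le_add (hf.2 x hx y hy) (hg.2 x hx y hy))⟩

lemma HolOn.const_mul (hf : HolOn A γ M f) (s : ℝ) : HolOn A γ (|s| * M) fun x => s * f x :=
  ⟨fun x hx => by rw [abs_mul]; exact mul_le_mul_of_nonneg_left (hf.1 x hx) (abs_nonneg s),
    fun x hx y hy => by
      rw [← mul_sub, abs_mul, mul_assoc]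
      exact mul_le_mul_of_nonneg_left (hf.2 x hx y hy) (abs_nonneg s)⟩

lemma HolOn.mul (hf : HolOn A γ M f) (hg : HolOn A γ M' g) (hM : 0 ≤ M) (hM' : 0 ≤ M') :
    HolOn A γ (2 * M * M') fun x => f x * g x :=
  ⟨fun x hx => by
    rw [abs_mul]
    have := mul_le_mul (hf.1 x hx) (hg.1 x hx) (abs_nonneg _) hM
    nlinarith [mul_nonneg hM hM'], fun x hx y hy => by
    have : f y * g y - f x * g x = f y * (g y - g x) + (f y - f x) * g x := by ring
    rw [this]
    refine (abs_add_le _ _).trans ?_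
    rw [abs_mul, abs_mul]
    have h1 := mul_le_mul (hf.1 y hy) (hg.2 x hx y hy) (abs_nonneg _) hM
    have h2 := mul_le_mul (hf.2 x hx y hy) (hg.1 x hx) (abs_nonneg _) (by positivity)
    linarith⟩

lemma HolOn.const {r : ℝ} (A : Set X) (γ : ℝ) : HolOn A γ |r| fun _ => r :=
  ⟨fun _ _ => le_rfl, fun _ _ _ _ => by simpa using by positivity⟩

end HolOn

lemma BdOn.hol_S {γ M : ℝ} {J : Jet} (h : BdOn Dk γ M J) {a b : ℂ} (ha : ‖a‖ ≤ 1) (hb : ‖b‖ ≤ 1) :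
    HolOn Dk γ M fun z => J.S z a b := by
  have key : ∀ (T : ℂ →L[ℝ] ℂ →L[ℝ] ℝ) (r : ℝ), ‖T‖ ≤ r → |T a b| ≤ r := fun T r hT => by
    refine (T.le_opNorm₂ a b).trans ?_
    have h1 : ‖T‖ * ‖a‖ * ‖b‖ ≤ ‖T‖ * 1 * 1 := by gcongr
    linarith
  exact ⟨fun x hx => key _ _ (h.b2 x hx), fun x hx y hy => key (J.S y - J.S x) _ (h.t2 x hx y hy)⟩

lemma BdOn.hol_p {γ M : ℝ} {J : Jet} (hγ0 : 0 < γ) (hγ1 : γ < 1) (h : BdOn Dk γ M J) {a : ℂ}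
    (ha : ‖a‖ ≤ 1) : HolOn Dk γ (2 * M) fun z => J.p z a := by
  have hM := (abs_nonneg _).trans (h.b0 0 (by simp [Dk]))
  have key : ∀ (T : ℂ →L[ℝ] ℝ) (r : ℝ), ‖T‖ ≤ r → |T a| ≤ r := fun T r hT => by
    refine (T.le_opNorm a).trans ?_
    have h1 : ‖T‖ * ‖a‖ ≤ ‖T‖ * 1 := by gcongr
    linarith
  refine ⟨fun x hx => (key _ _ (h.b1 x hx)).trans (by linarith),
    fun x hx y hy => key (J.p y - J.p x) _ ?_⟩
  refine (p_lipschitz hγ0 h.toTaylorOn h.b2 hx hy).trans ?_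
  nlinarith [norm_sub_le_rpow hγ0 hγ1 hx hy]

lemma Lop_hol {γ lam Lam M : ℝ} (hγ0 : 0 < γ) (hγ1 : γ < 1) {c : Coef}
    (hc : CoefOK γ lam Lam c) {J : Jet} (h : BdOn Dk γ M J) : HolOn Dk γ (16 * Lam * M) (Lop c J) := by
  have hM := (abs_nonneg _).trans (h.b0 0 (by simp [Dk]))
  have hL := (abs_nonneg _).trans (hc.h11.1 0 (by simp [Dk]))
  have n1 : ‖(1 : ℂ)‖ ≤ 1 := by simp
  have nI : ‖Complex.I‖ ≤ 1 := by simp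
  have := ((((hc.h11.mul (h.hol_S n1 n1) hL hM).add
    ((hc.h12.mul (h.hol_S n1 nI) hL hM).const_mul 2)).add (hc.h22.mul (h.hol_S nI nI) hL hM)).add
    (hc.h1.mul (h.hol_p hγ0 hγ1 n1) hL (by positivity))).add
    (hc.h2.mul (h.hol_p hγ0 hγ1 nI) hL (by positivity))
  refine (this.congr fun x _ => ?_).mono ?_
  · simp only [Lop]; ring
  · norm_num; nlinarith

/-- A bounded sequence in `C^{2,γ}` has a limit along an ultrafilter, with the same bound. -/
lemma jet_limit_Dk (F : Ultrafilter ℕ) {γ M : ℝ} (hγ : 0 < γ) {K : ℕ → Jet}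
    (hK : ∀ n, BdOn Dk γ M (K n)) :
    ∃ J : Jet, BdOn Dk γ M J ∧ ∀ z ∈ Dk, Tendsto (fun n => (K n).w z) F (𝓝 (J.w z)) ∧
        Tendsto (fun n => (K n).p z) F (𝓝 (J.p z)) ∧ Tendsto (fun n => (K n).S z) F (𝓝 (J.S z)) := by
  obtain ⟨J, hJ, hlim⟩ := jet_limit F (An := fun _ => Dk) (A := Dk) hγ
    (Eventually.of_forall fun n => (hK n).toTaylorOn) (fun _ z => z)
    (fun z hz => ⟨Eventually.of_forall fun _ => hz, tendsto_const_nhds⟩)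
    (fun z hz => ⟨M, Eventually.of_forall fun n => ⟨(hK n).b0 z hz, (hK n).b1 z hz, (hK n).b2 z hz⟩⟩)
  have hlim' := fun z (hz : z ∈ Dk) => hlim z hz (fun _ => z) (Eventually.of_forall fun _ => hz)
    tendsto_const_nhds
  exact ⟨J, ⟨hJ,
    fun z hz => le_of_tendsto (hlim' z hz).1.abs (Eventually.of_forall fun n => (hK n).b0 z hz),
    fun z hz => le_of_tendsto (hlim' z hz).2.1.norm (Eventually.of_forall fun n => (hK n).b1 z hz),
    fun z hz => le_of_tendsto (hlim' z hz).2.2.norm (Eventually.of_forall fun n => (hK n).b2 z hz)⟩,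
    hlim'⟩

lemma tendsto_Lop {F : Filter ℕ} {K : ℕ → Jet} {J : Jet} {z : ℂ} (c : Coef)
    (hp : Tendsto (fun n => (K n).p z) F (𝓝 (J.p z)))
    (hS : Tendsto (fun n => (K n).S z) F (𝓝 (J.S z))) :
    Tendsto (fun n => Lop c (K n) z) F (𝓝 (Lop c J z)) := by
  have hS' : ∀ a b : ℂ, Tendsto (fun n => (K n).S z a b) F (𝓝 (J.S z a b)) := fun a b =>
    (((ContinuousLinearMap.apply ℝ ℝ b).comp
      (ContinuousLinearMap.apply ℝ (ℂ →L[ℝ] ℝ) a)).continuous.tendsto (J.S z)).comp hS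
  have hp' : ∀ a : ℂ, Tendsto (fun n => (K n).p z a) F (𝓝 (J.p z a)) := fun a =>
    ((ContinuousLinearMap.apply ℝ ℝ a).continuous.tendsto (J.p z)).comp hp
  exact (((((hS' 1 1).const_mul _).add ((hS' _ _).const_mul _)).add ((hS' _ _).const_mul _)).add
    ((hp' _).const_mul _)).add ((hp' _).const_mul _)

/-- The Schauder estimate with constant `C` for the operator `c`. -/
def Apriori (γ C : ℝ) (c : Coef) : Prop :=
  ∀ J, (∃ M, BdOn Dk γ M J) → ZeroBd J → ∀ N, HolOn Dk γ N (Lop c J) → BdOn Dk γ (C * N) J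

/-- Unrestricted solvability of the Dirichlet problem for the operator `c`. -/
def Solves (γ : ℝ) (c : Coef) : Prop :=
  ∀ f N, HolOn Dk γ N f → ∃ J, (∃ M, BdOn Dk γ M J) ∧ ZeroBd J ∧ ∀ z ∈ Dk, Lop c J z = f z

/-- Banach's fixed point argument in `C^{2,γ}`: the equation `L J = q(·, DJ, D²J)` is solvable in a
small ball if `q` is a contraction there relative to the Schauder constant. -/
lemma fixed_point {γ C N κ : ℝ} (hγ0 : 0 < γ) (hC : 0 < C) (hN : 0 ≤ N)
    {c : Coef} (hap : Apriori γ C c) (hsol : Solves γ c)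
    (q : ℂ → (ℂ →L[ℝ] ℝ) → (ℂ →L[ℝ] ℂ →L[ℝ] ℝ) → ℝ)
    (hqc : ∀ z ∈ Dk, Continuous fun y : (ℂ →L[ℝ] ℝ) × (ℂ →L[ℝ] ℂ →L[ℝ] ℝ) => q z y.1 y.2)
    (hq0 : HolOn Dk γ N fun z => q z 0 0) (hκ : C * κ ≤ 1 / 2)
    (hq : ∀ J J' δ, BdOn Dk γ (2 * C * N) J → BdOn Dk γ (2 * C * N) J' → 0 ≤ δ →
      BdOn Dk γ δ (Jet.comb 1 (-1) J J') →
      HolOn Dk γ (κ * δ) fun z => q z (J.p z) (J.S z) - q z (J'.p z) (J'.S z)) :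
    ∃ J, BdOn Dk γ (2 * C * N) J ∧ ZeroBd J ∧ ∀ z ∈ Dk, Lop c J z = q z (J.p z) (J.S z) := by
  have hCN : 0 ≤ 2 * C * N := by positivity
  have z0 : BdOn Dk γ (2 * C * N) Jet.zero := Jet.zero_bd _ _ hCN
  -- the comparison with the zero jet bounds the right-hand side
  have hbd : ∀ J, BdOn Dk γ (2 * C * N) J → HolOn Dk γ (2 * N) fun z => q z (J.p z) (J.S z) := by
    intro J hJ
    have h1 := hq J Jet.zero (2 * C * N) hJ z0 hCN (by
      refine (hJ.comb z0 1 (-1) |>.toTaylorOn |> fun h => ⟨⟨?_, ?_, ?_, h.sym⟩, ?_, ?_, ?_⟩) <;>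
        simp only [Jet.comb, Jet.zero, smul_zero, add_zero, mul_zero, one_smul, one_mul]
      · exact hJ.t0
      · exact hJ.t1
      · exact hJ.t2
      · exact hJ.b0
      · exact hJ.b1
      · exact hJ.b2)
    refine ((h1.add hq0).congr fun z _ => ?_).mono ?_
    · simp [Jet.zero]
    · nlinarith
  have step : ∀ J : {J // BdOn Dk γ (2 * C * N) J ∧ ZeroBd J},
      ∃ J' : {J // BdOn Dk γ (2 * C * N) J ∧ ZeroBd J},
        ∀ z ∈ Dk, Lop c J'.1 z = q z (J.1.p z) (J.1.S z) := by
    rintro ⟨J, hJ, hJ0⟩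
    obtain ⟨J', hM, h0, he⟩ := hsol _ _ (hbd J hJ)
    refine ⟨⟨J', ?_, h0⟩, he⟩
    have := hap J' hM h0 _ ((hbd J hJ).congr he)
    exact this.mono (by linarith)
  choose Φ hΦ using step
  set K : ℕ → {J // BdOn Dk γ (2 * C * N) J ∧ ZeroBd J} := fun n =>
    Φ^[n] ⟨Jet.zero, z0, fun _ _ => rfl⟩ with hKdef
  have hKs : ∀ n, K (n + 1) = Φ (K n) := fun n => Function.iterate_succ_apply' _ _ _
  have hdiff : ∀ n, BdOn Dk γ ((1 / 2) ^ n * (4 * C * N)) (Jet.comb 1 (-1) (K (n + 1)).1 (K n).1) := by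
    intro n
    induction n with
    | zero =>
      refine ((K 1).2.1.comb (K 0).2.1 1 (-1)).mono ?_
      norm_num; linarith
    | succ n ih =>
      have h1 := hq _ _ _ (K (n + 1)).2.1 (K n).2.1 (by positivity) ih
      have h2 := hap (Jet.comb 1 (-1) (K (n + 1 + 1)).1 (K (n + 1)).1)
        ⟨_, (K (n + 1 + 1)).2.1.comb (K (n + 1)).2.1 1 (-1)⟩
        ((K (n + 1 + 1)).2.2.comb (K (n + 1)).2.2 1 (-1)) _ (h1.congr fun z hz => by
          rw [Lop_comb, hKs (n + 1), hΦ _ z hz, hKs n, hΦ _ z hz]; ring)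
      refine h2.mono ?_
      have h3 : 0 ≤ (1 / 2 : ℝ) ^ n * (4 * C * N) := by positivity
      rw [pow_succ]
      nlinarith
  have hz : Tendsto (fun n : ℕ => (1 / 2 : ℝ) ^ n * (4 * C * N)) atTop (𝓝 0) := by
    have := (tendsto_pow_atTop_nhds_zero_of_lt_one (r := (1 / 2 : ℝ)) (by norm_num)
      (by norm_num)).mul_const (4 * C * N)
    rwa [zero_mul] at this
  set F : Ultrafilter ℕ := hyperfilter ℕ
  have hFt : (F : Filter ℕ) ≤ atTop := by rw [← Nat.cofinite_eq_atTop]; exact hyperfilter_le_cofinite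
  obtain ⟨J, hJ, hlim⟩ := jet_limit_Dk F hγ0 (K := fun n => (K n).1) fun n => (K n).2.1
  obtain ⟨J1, hJ1, hlim1⟩ := jet_limit_Dk F hγ0 (K := fun n => (K (n + 1)).1) fun n => (K (n + 1)).2.1
  have e : ∀ z ∈ Dk, J1.p z = J.p z ∧ J1.S z = J.S z := by
    intro z hz'
    constructor
    · have h1 : Tendsto (fun n => (K (n + 1)).1.p z - (K n).1.p z) F (𝓝 0) := by
        refine squeeze_zero_norm (fun n => ?_) (hz.mono_left hFt)
        have := (hdiff n).b1 z hz'
        simpa [Jet.comb, sub_eq_add_neg] using this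
      exact sub_eq_zero.1 (tendsto_nhds_unique ((hlim1 z hz').2.1.sub (hlim z hz').2.1) h1)
    · have h1 : Tendsto (fun n => (K (n + 1)).1.S z - (K n).1.S z) F (𝓝 0) := by
        refine squeeze_zero_norm (fun n => ?_) (hz.mono_left hFt)
        have := (hdiff n).b2 z hz'
        simpa [Jet.comb, sub_eq_add_neg] using this
      exact sub_eq_zero.1 (tendsto_nhds_unique ((hlim1 z hz').2.2.sub (hlim z hz').2.2) h1)
  refine ⟨J, hJ, fun z hz1 => ?_, fun z hz' => ?_⟩
  · have h1 := (hlim z (mem_Dk.2 hz1.le)).1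
    simp only [fun n => (K n).2.2 z hz1] at h1
    exact (tendsto_nhds_unique h1 tendsto_const_nhds)
  · have h1 := tendsto_Lop c (hlim1 z hz').2.1 (hlim1 z hz').2.2
    have h2 : Lop c J1 z = Lop c J z := by simp only [Lop, (e z hz').1, (e z hz').2]
    rw [h2] at h1
    have h3 : Tendsto (fun n => q z ((K n).1.p z) ((K n).1.S z)) F (𝓝 (q z (J.p z) (J.S z))) :=
      ((hqc z hz').tendsto (J.p z, J.S z)).comp ((hlim z hz').2.1.prodMk_nhds (hlim z hz').2.2)
    refine tendsto_nhds_unique h1 (h3.congr fun n => ?_)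
    rw [hKs n, hΦ _ z hz']

/-- The Laplacian. -/
def lapC : Coef := ⟨fun _ => 1, fun _ => 0, fun _ => 1, fun _ => 0, fun _ => 0⟩

lemma lapC_ok {γ lam Lam : ℝ} (h1 : lam ≤ 1) (h2 : 1 ≤ Lam) : CoefOK γ lam Lam lapC := by
  have c1 : HolOn Dk γ Lam fun _ => (1 : ℝ) := (HolOn.const Dk γ).mono (by simpa using h2)
  have c0 : HolOn Dk γ Lam fun _ => (0 : ℝ) := (HolOn.const Dk γ).mono (by simp; linarith)
  exact ⟨c1, c0, c1, c0, c0, fun x _ s t => by simp only [lapC]; nlinarith [sq_nonneg s, sq_nonneg t]⟩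

/-- Convex combination of the Laplacian and the operator `c`. -/
def interC (c : Coef) (t : ℝ) : Coef :=
  ⟨fun z => (1 - t) * 1 + t * c.a11 z, fun z => (1 - t) * 0 + t * c.a12 z,
    fun z => (1 - t) * 1 + t * c.a22 z, fun z => (1 - t) * 0 + t * c.b1 z,
    fun z => (1 - t) * 0 + t * c.b2 z⟩

lemma Lop_interC (c : Coef) (t : ℝ) (J : Jet) (z : ℂ) :
    Lop (interC c t) J z = (1 - t) * Lop lapC J z + t * Lop c J z := by
  simp only [Lop, interC, lapC]; ring

lemma interC_ok {γ lam Lam t : ℝ} {c : Coef} (hc : CoefOK γ lam Lam c) (h1 : lam ≤ 1) (h2 : 1 ≤ Lam)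
    (ht0 : 0 ≤ t) (ht1 : t ≤ 1) : CoefOK γ lam Lam (interC c t) := by
  have key : ∀ f g, HolOn Dk γ Lam f → HolOn Dk γ Lam g →
      HolOn Dk γ Lam fun z => (1 - t) * f z + t * g z := fun f g hf hg => by
    refine ((hf.const_mul (1 - t)).add (hg.const_mul t)).mono ?_
    rw [abs_of_nonneg ht0, abs_of_nonneg (by linarith)]; linarith
  have l := lapC_ok (γ := γ) h1 h2
  refine ⟨key _ _ l.h11 hc.h11, key _ _ l.h12 hc.h12, key _ _ l.h22 hc.h22, key _ _ l.h1 hc.h1,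
    key _ _ l.h2 hc.h2, fun x hx s r => ?_⟩
  have e1 := hc.ell x hx s r
  have e2 := l.ell x hx s r
  simp only [interC]; simp only [lapC] at e2
  nlinarith [mul_le_mul_of_nonneg_left e1 ht0,
    mul_le_mul_of_nonneg_left e2 (by linarith : (0 : ℝ) ≤ 1 - t)]

lemma poisson {γ : ℝ} (hγ0 : 0 < γ) (hγ1 : γ < 1) : Solves γ lapC := by
  intro f N hf
  obtain ⟨C, hC, hap⟩ := schauder_apriori (Lam := 1) hγ0 hγ1 one_pos
  obtain ⟨P, hP, hPh, hPl⟩ := hf.approx hγ0 hγ1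
  choose K hKM hK0 hKe using fun n => solvable_jet hγ0 hγ1 (hP n)
  have hKl : ∀ n z, Lop lapC (K n) z = (P n z).re := fun n z => by
    rw [← hKe n z]; simp [Lop, lapC]
  have hKb : ∀ n, BdOn Dk γ (C * (3 * N)) (K n) := fun n =>
    hap lapC (lapC_ok le_rfl le_rfl) (K n) (hKM n) (hK0 n) _ ((hPh n).congr fun z _ => hKl n z)
  set F : Ultrafilter ℕ := hyperfilter ℕ
  have hFt : (F : Filter ℕ) ≤ atTop := by rw [← Nat.cofinite_eq_atTop]; exact hyperfilter_le_cofinite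
  obtain ⟨J, hJ, hlim⟩ := jet_limit_Dk F hγ0 hKb
  refine ⟨J, ⟨_, hJ⟩, fun z hz => ?_, fun z hz => ?_⟩
  · have h1 := (hlim z (mem_Dk.2 hz.le)).1
    simp only [fun n => hK0 n z hz] at h1
    exact (tendsto_nhds_unique h1 tendsto_const_nhds)
  · have h1 := tendsto_Lop lapC (hlim z hz).2.1 (hlim z hz).2.2
    simp only [hKl] at h1
    exact tendsto_nhds_unique h1 ((hPl z hz).mono_left hFt)

/-- Method of continuity. -/
theorem solves_of_coefOK {γ lam Lam : ℝ} (hγ0 : 0 < γ) (hγ1 : γ < 1) (hlam : 0 < lam) {c : Coef}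
    (hc : CoefOK γ lam Lam c) : Solves γ c := by
  wlog hw : lam ≤ 1 ∧ 1 ≤ Lam generalizing lam Lam
  · have hm : CoefOK γ (min lam 1) (max Lam 1) c := by
      have := le_max_left Lam 1
      refine ⟨hc.h11.mono this, hc.h12.mono this, hc.h22.mono this, hc.h1.mono this,
        hc.h2.mono this, fun x hx s t => le_trans ?_ (hc.ell x hx s t)⟩
      have := min_le_left lam 1
      gcongr
    exact this (lt_min hlam one_pos) hm ⟨min_le_right _ _, le_max_right _ _⟩
  obtain ⟨h1, h2⟩ := hw
  obtain ⟨C, hC, hap⟩ := schauder_apriori (Lam := Lam) hγ0 hγ1 hlam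
  have hL : 0 < Lam := by linarith
  obtain ⟨n, hn⟩ := exists_nat_gt (C * (32 * Lam) * 2)
  have hn0 : (0 : ℝ) < n := lt_trans (by positivity) hn
  have main : ∀ k : ℕ, k ≤ n → Solves γ (interC c (k / n)) := by
    intro k
    induction k with
    | zero =>
      intro _ f N hf
      obtain ⟨J, hM, h0, he⟩ := poisson hγ0 hγ1 f N hf
      exact ⟨J, hM, h0, fun z hz => by rw [Lop_interC, he z hz]; simp⟩
    | succ k ih =>
      intro hk f N hf
      have ih := ih (by lia)
      have hN : 0 ≤ N := (abs_nonneg _).trans (hf.1 0 (by simp [Dk]))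
      have hk1 : (k : ℝ) / n ≤ 1 := by
        rw [div_le_one hn0]; exact_mod_cast (by lia : k ≤ n)
      have ok := interC_ok hc h1 h2 (t := (k : ℝ) / n) (by positivity) hk1
      set s : ℝ := 1 / n with hs
      have hs0 : 0 < s := by positivity
      set L' : (ℂ →L[ℝ] ℝ) → (ℂ →L[ℝ] ℂ →L[ℝ] ℝ) → ℂ → ℝ := fun p S z =>
        Lop lapC ⟨fun _ => 0, fun _ => p, fun _ => S⟩ z - Lop c ⟨fun _ => 0, fun _ => p, fun _ => S⟩ z
      obtain ⟨J, hJ, h0, he⟩ := fixed_point (κ := s * (32 * Lam)) hγ0 hC hN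
        (hap _ ok) ih (fun z p S => f z + s * L' p S z)
        (fun z _ => by
          simp only [L', Lop]
          fun_prop)
        (hf.congr fun z _ => by simp [L', Lop])
        (by
          have : C * (s * (32 * Lam)) = C * (32 * Lam) * 2 / n / 2 := by rw [hs]; field_simp
          rw [this]
          have := (div_lt_one hn0).2 hn
          linarith)
        (fun J J' δ hJ hJ' hδ hd => by
          have l1 := Lop_hol hγ0 hγ1 (lapC_ok (γ := γ) h1 h2) hd
          have l2 := Lop_hol hγ0 hγ1 hc hd
          refine (((l1.add (l2.const_mul (-1))).const_mul s).congr fun z _ => ?_).mono ?_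
          · rw [Lop_comb, Lop_comb]
            simp only [L', Lop]; ring
          · rw [abs_of_pos hs0]; norm_num; apply le_of_eq; ring)
      refine ⟨J, ⟨_, hJ⟩, h0, fun z hz => ?_⟩
      have h3 := he z hz
      simp only [L'] at h3
      rw [Lop_interC] at h3 ⊢
      have e1 : Lop lapC ⟨fun _ => 0, fun _ => J.p z, fun _ => J.S z⟩ z = Lop lapC J z := rfl
      have e2 : Lop c ⟨fun _ => 0, fun _ => J.p z, fun _ => J.S z⟩ z = Lop c J z := rfl
      rw [e1, e2] at h3
      have e3 : ((k + 1 : ℕ) : ℝ) / n = k / n + s := by rw [hs]; push_cast; ring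
      rw [e3]
      linear_combination h3
  intro f N hf
  obtain ⟨J, hM, h0, he⟩ := main n le_rfl f N hf
  refine ⟨J, hM, h0, fun z hz => ?_⟩
  rw [← he z hz, Lop_interC, div_self hn0.ne']; ring

end

section

/-! ### Composition with smooth functions in Hölder spaces -/

/-- The vector valued map `f` has `C^{0,γ}` norm at most `M` on `A`. -/
def HolV {X Y : Type*} [NormedAddCommGroup X] [NormedAddCommGroup Y] (A : Set X) (γ M : ℝ)
    (f : X → Y) : Prop :=
  (∀ x ∈ A, ‖f x‖ ≤ M) ∧ ∀ x ∈ A, ∀ y ∈ A, ‖f y - f x‖ ≤ M * ‖y - x‖ ^ γ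

section
variable {X Y Z : Type*} [NormedAddCommGroup X] [NormedAddCommGroup Y] [NormedAddCommGroup Z]
  {A : Set X} {γ M M' : ℝ}

lemma HolV.mono {f : X → Y} (hf : HolV A γ M f) (h : M ≤ M') : HolV A γ M' f :=
  ⟨fun x hx => (hf.1 x hx).trans h, fun x hx y hy => (hf.2 x hx y hy).trans (by gcongr)⟩

lemma HolV.prodMk {f : X → Y} {g : X → Z} (hf : HolV A γ M f) (hg : HolV A γ M g) :
    HolV A γ M fun x => (f x, g x) :=
  ⟨fun x hx => max_le (hf.1 x hx) (hg.1 x hx), fun x hx y hy => max_le (hf.2 x hx y hy) (hg.2 x hx y hy)⟩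

lemma HolV.zero (hM : 0 ≤ M) : HolV A γ M fun _ => (0 : Y) :=
  ⟨fun x hx => by simpa using hM, fun x hx y hy => by simpa using by positivity⟩

variable [NormedSpace ℝ Y] [NormedSpace ℝ Z] [FiniteDimensional ℝ Y]

/-- A `C¹` function is Lipschitz and bounded on balls, so it acts on Hölder spaces. -/
lemma HolV.comp_smooth {f : Y → Z} (hf : ContDiff ℝ 1 f) (R : ℝ) :
    ∃ L, 0 ≤ L ∧ ∀ (γ : ℝ) (A : Set X) (y : X → Y), HolV A γ R y → HolV A γ L fun x => f (y x) := by
  have : ProperSpace Y := FiniteDimensional.proper ℝ Y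
  obtain ⟨K, hK⟩ := hf.contDiffOn.exists_lipschitzOnWith (s := Metric.closedBall 0 R) one_ne_zero
    (convex_closedBall 0 R) (isCompact_closedBall 0 R)
  obtain ⟨B, hB⟩ := (isCompact_closedBall (0 : Y) R).exists_bound_of_continuousOn
    hf.continuous.continuousOn
  refine ⟨max (K * |R|) B, le_max_of_le_left (by positivity), fun γ A y hy => ⟨fun x hx =>
    (hB _ (by simpa using hy.1 x hx)).trans (le_max_right _ _), fun x hx x' hx' => ?_⟩⟩
  have := hK.dist_le_mul (y x') (by simpa using hy.1 x' hx') (y x) (by simpa using hy.1 x hx)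
  rw [dist_eq_norm, dist_eq_norm] at this
  refine this.trans ?_
  calc (K : ℝ) * ‖y x' - y x‖ ≤ K * (|R| * ‖x' - x‖ ^ γ) := by
        gcongr; exact (hy.2 x hx x' hx').trans (by gcongr; exact le_abs_self R)
    _ = K * |R| * ‖x' - x‖ ^ γ := by ring
    _ ≤ _ := by gcongr; exact le_max_left _ _

/-- The remainder of the first order expansion of a smooth superposition operator is a contraction
near the base point. -/
lemma newton_remainder {f : Y → ℝ} (hf : ContDiff ℝ 3 f) (R : ℝ) (hR : 0 ≤ R) :
    ∃ K, 0 ≤ K ∧ ∀ (γ : ℝ) (A : Set X) (y h h' : X → Y) (η δ : ℝ), HolV A γ R y → HolV A γ η h →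
      HolV A γ η h' → η ≤ 1 → HolV A γ δ (fun x => h x - h' x) → 0 ≤ η → 0 ≤ δ →
      HolOn A γ (K * η * δ) fun x =>
        f (y x + h x) - f (y x + h' x) - fderiv ℝ f (y x) (h x - h' x) := by
  have : ProperSpace Y := FiniteDimensional.proper ℝ Y
  set G := fderiv ℝ f with hG
  have hGc : ContDiff ℝ 2 G := hf.fderiv_right (by norm_num)
  set G2 := fderiv ℝ G with hG2
  have hG2c : ContDiff ℝ 1 G2 := hGc.fderiv_right (by norm_num)
  set S : Set Y := Metric.closedBall 0 (R + 1) with hS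
  have hSc : Convex ℝ S := convex_closedBall _ _
  obtain ⟨L1, hL1⟩ := hGc.contDiffOn.exists_lipschitzOnWith (s := S) two_ne_zero
    hSc (isCompact_closedBall _ _)
  obtain ⟨L2, hL2⟩ := hG2c.contDiffOn.exists_lipschitzOnWith (s := S) one_ne_zero
    hSc (isCompact_closedBall _ _)
  have hfd : ∀ y, HasFDerivAt f (G y) y := fun y =>
    (hf.differentiable (by norm_num) y).hasFDerivAt
  have hGd : ∀ y, HasFDerivAt G (G2 y) y := fun y =>
    (hGc.differentiable (by norm_num) y).hasFDerivAt
  have l1 : ∀ a ∈ S, ∀ b ∈ S, ‖G a - G b‖ ≤ L1 * ‖a - b‖ := fun a ha b hb => by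
    have := hL1.dist_le_mul a ha b hb
    rwa [dist_eq_norm, dist_eq_norm] at this
  have l2 : ∀ a ∈ S, ∀ b ∈ S, ‖G2 a - G2 b‖ ≤ L2 * ‖a - b‖ := fun a ha b hb => by
    have := hL2.dist_le_mul a ha b hb
    rwa [dist_eq_norm, dist_eq_norm] at this
  have mem0 : ∀ y, ‖y‖ ≤ R → y ∈ S := fun y hy => by simp [hS]; linarith
  have mem1 : ∀ y k η, ‖y‖ ≤ R → ‖k‖ ≤ η → η ≤ 1 → y + k ∈ S := fun y k η hy hk hη => by
    simp only [hS, mem_closedBall_zero_iff]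
    exact (norm_add_le _ _).trans (by linarith)
  -- the second difference of `G`
  have hB : ∀ y y' k k' η, ‖y‖ ≤ R → ‖y'‖ ≤ R → ‖k‖ ≤ η → ‖k'‖ ≤ η → η ≤ 1 →
      ‖(G (y + k) - G y) - (G (y' + k') - G y')‖ ≤ L2 * η * ‖y - y'‖ + L1 * ‖k - k'‖ := by
    intro y y' k k' η hy hy' hk hk' hη
    have h1 : ‖(G (y + k) - G y) - (G (y' + k) - G y')‖ ≤ L2 * η * ‖y - y'‖ := by
      have hd : ∀ t ∈ Metric.closedBall (0 : Y) R,
          HasFDerivWithinAt (fun t => G (t + k) - G t) (G2 (t + k) - G2 t)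
          (Metric.closedBall (0 : Y) R) t := fun t _ =>
        ((((hGd (t + k)).comp t ((hasFDerivAt_id t).add_const k)).congr_fderiv
          (ContinuousLinearMap.comp_id _)).sub (hGd t)).hasFDerivWithinAt
      refine (convex_closedBall (0 : Y) R).norm_image_sub_le_of_norm_hasFDerivWithin_le hd
        (fun t ht => ?_) (by simpa using hy') (by simpa using hy)
      have ht' : ‖t‖ ≤ R := by simpa using ht
      refine (l2 _ (mem1 t k η ht' hk hη) _ (mem0 t ht')).trans ?_
      rw [add_sub_cancel_left]
      gcongr
    have h2 := l1 _ (mem1 y' k η hy' hk hη) _ (mem1 y' k' η hy' hk' hη)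
    rw [add_sub_add_left_eq_sub] at h2
    calc _ = ‖((G (y + k) - G y) - (G (y' + k) - G y')) + (G (y' + k) - G (y' + k'))‖ := by
          congr 1; abel
      _ ≤ _ := (norm_add_le _ _).trans (add_le_add h1 h2)
  have hB1 : ∀ y k η, ‖y‖ ≤ R → ‖k‖ ≤ η → η ≤ 1 → ‖G (y + k) - G y‖ ≤ L1 * η := by
    intro y k η hy hk hη
    refine (l1 _ (mem1 y k η hy hk hη) _ (mem0 y hy)).trans ?_
    rw [add_sub_cancel_left]
    gcongr
  refine ⟨L2 * R + 2 * L1, by positivity, fun γ A y h h' η δ hy hh hh' hη hd hη0 hδ => ?_⟩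
  -- the path joining the two values
  set φ : X → ℝ → ℝ := fun x t => f (y x + (h' x + t • (h x - h' x))) - t * G (y x) (h x - h' x)
    with hφ
  set φ' : X → ℝ → ℝ := fun x t =>
    (G (y x + (h' x + t • (h x - h' x))) - G (y x)) (h x - h' x) with hφ'
  have hφd : ∀ x t, HasDerivAt (φ x) (φ' x t) t := by
    intro x t
    have h1 : HasDerivAt (fun t : ℝ => y x + (h' x + t • (h x - h' x))) (h x - h' x) t := by
      have := (((hasDerivAt_id t).smul_const (h x - h' x)).const_add (h' x)).const_add (y x)
      simpa using this
    have h2 := (hfd (y x + (h' x + t • (h x - h' x)))).comp_hasDerivAt t h1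
    have h3 := (hasDerivAt_id t).mul_const (G (y x) (h x - h' x))
    refine (h2.sub h3).congr_deriv ?_
    simp [hφ']
  have hpath : ∀ (x : X) (t : ℝ), h' x + t • (h x - h' x) = (1 - t) • h' x + t • h x := fun x t => by
    rw [sub_smul, smul_sub, one_smul]; abel
  have e : ∀ x, f (y x + h x) - f (y x + h' x) - G (y x) (h x - h' x) = φ x 1 - φ x 0 := by
    intro x; simp only [hφ]; simp; ring
  have hpn : ∀ x ∈ A, ∀ t ∈ Icc (0 : ℝ) 1, ‖h' x + t • (h x - h' x)‖ ≤ η := by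
    intro x hx t ht
    rw [hpath]
    have := hh.1 x hx
    have := hh'.1 x hx
    calc _ ≤ (1 - t) * ‖h' x‖ + t * ‖h x‖ := by
          refine (norm_add_le _ _).trans (le_of_eq ?_)
          rw [norm_smul, norm_smul, Real.norm_of_nonneg ht.1,
            Real.norm_of_nonneg (by linarith [ht.2])]
      _ ≤ (1 - t) * η + t * η := by
          have := ht.1; have : 0 ≤ 1 - t := by linarith [ht.2]
          gcongr
      _ = η := by ring
  have m01 : (0 : ℝ) ∈ Icc (0 : ℝ) 1 := by simp
  have m11 : (1 : ℝ) ∈ Icc (0 : ℝ) 1 := by simp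
  constructor
  · intro x hx
    simp only [e]
    have h1 := (convex_Icc (0 : ℝ) 1).norm_image_sub_le_of_norm_hasDerivWithin_le
      (f := φ x) (f' := φ' x) (C := L1 * η * δ) (fun t _ => (hφd x t).hasDerivWithinAt)
      (fun t ht => by
        refine ((G _ - G _).le_opNorm _).trans ?_
        have := hB1 (y x) _ η (hy.1 x hx) (hpn x hx t ht) hη
        have := hd.1 x hx
        gcongr) m01 m11
    simp only [Real.norm_eq_abs, sub_zero, abs_one, mul_one] at h1
    refine h1.trans ?_
    have : 0 ≤ (L2 * R + L1) * (η * δ) := by positivity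
    nlinarith
  · intro x hx x' hx'
    simp only [e]
    set r := ‖x' - x‖ ^ γ with hr
    have hr0 : 0 ≤ r := by positivity
    have h1 := (convex_Icc (0 : ℝ) 1).norm_image_sub_le_of_norm_hasDerivWithin_le
      (f := fun t => φ x' t - φ x t) (f' := fun t => φ' x' t - φ' x t)
      (C := (L2 * R + 2 * L1) * η * δ * r)
      (fun t _ => ((hφd x' t).sub (hφd x t)).hasDerivWithinAt)
      (fun t ht => by
        simp only [hφ']
        set k := h' x + t • (h x - h' x) with hk
        set k' := h' x' + t • (h x' - h' x') with hk'
        have b1 := hB (y x') (y x) k' k η (hy.1 x' hx') (hy.1 x hx) (hpn x' hx' t ht) (hpn x hx t ht) hη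
        have b2 := hB1 (y x) k η (hy.1 x hx) (hpn x hx t ht) hη
        have hkk : ‖k' - k‖ ≤ η * r := by
          have : k' - k = (1 - t) • (h' x' - h' x) + t • (h x' - h x) := by
            rw [hk, hk', hpath, hpath, smul_sub, smul_sub]; abel
          rw [this]
          have i1 := hh.2 x hx x' hx'
          have i2 := hh'.2 x hx x' hx'
          calc _ ≤ (1 - t) * ‖h' x' - h' x‖ + t * ‖h x' - h x‖ := by
                refine (norm_add_le _ _).trans (le_of_eq ?_)
                rw [norm_smul, norm_smul, Real.norm_of_nonneg ht.1,
                  Real.norm_of_nonneg (by linarith [ht.2])]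
            _ ≤ (1 - t) * (η * r) + t * (η * r) := by
                have := ht.1; have : 0 ≤ 1 - t := by linarith [ht.2]
                gcongr
            _ = η * r := by ring
        have b3 : ‖(G (y x' + k') - G (y x')) - (G (y x + k) - G (y x))‖ ≤
            (L2 * R + L1) * η * r := by
          refine b1.trans ?_
          have := hy.2 x hx x' hx'
          calc _ ≤ L2 * η * (R * r) + L1 * (η * r) := by gcongr
            _ = _ := by ring
        have e2 : (G (y x' + k') - G (y x')) (h x' - h' x') - (G (y x + k) - G (y x)) (h x - h' x) =
            ((G (y x' + k') - G (y x')) - (G (y x + k) - G (y x))) (h x' - h' x') +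
            (G (y x + k) - G (y x)) ((h x' - h' x') - (h x - h' x)) := by
          simp only [sub_apply, map_sub]; ring
        rw [e2]
        refine (norm_add_le _ _).trans ?_
        calc _ ≤ ‖(G (y x' + k') - G (y x')) - (G (y x + k) - G (y x))‖ * ‖h x' - h' x'‖ +
              ‖G (y x + k) - G (y x)‖ * ‖(h x' - h' x') - (h x - h' x)‖ :=
              add_le_add (ContinuousLinearMap.le_opNorm _ _) (ContinuousLinearMap.le_opNorm _ _)
          _ ≤ (L2 * R + L1) * η * r * δ + L1 * η * (δ * r) := by
              have := hd.1 x' hx'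
              have := hd.2 x hx x' hx'
              gcongr
          _ = _ := by ring) m01 m11
    simp only [Real.norm_eq_abs, sub_zero, abs_one, mul_one] at h1
    have e3 : φ x' 1 - φ x' 0 - (φ x 1 - φ x 0) = φ x' 1 - φ x 1 - (φ x' 0 - φ x 0) := by ring
    rw [e3]
    exact h1

end

end

/-! ### The mean curvature operator in curvilinear coordinates and the Newton step -/

/-- The mean curvature operator as a function of the gradient `q` and the Hessian `R`. -/
def Phi (q : ℂ →L[ℝ] ℝ) (R : ℂ →L[ℝ] ℂ →L[ℝ] ℝ) : ℝ :=
  ((1 + (q Complex.I) ^ 2) * R 1 1 - 2 * (q 1) * (q Complex.I) * R 1 Complex.I +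
    (1 + (q 1) ^ 2) * R Complex.I Complex.I) * ((√(1 + (q 1) ^ 2 + (q Complex.I) ^ 2))⁻¹) ^ 3

/-- First derivatives and second derivatives of a change of variables, gradient and Hessian. -/
abbrev YS : Type := (ℂ →L[ℝ] ℂ) × (ℂ →L[ℝ] ℂ →L[ℝ] ℂ) × (ℂ →L[ℝ] ℝ) × (ℂ →L[ℝ] ℂ →L[ℝ] ℝ)

/-- The gradient of `w ∘ Θ` when `T = DΘ` and `p = Dw`. -/
def pullP (T : ℂ →L[ℝ] ℂ) (p : ℂ →L[ℝ] ℝ) : ℂ →L[ℝ] ℝ := p.comp T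

/-- The Hessian of `w ∘ Θ` when `T = DΘ`, `Z = D²Θ`, `p = Dw` and `S = D²w`. -/
def pullS (T : ℂ →L[ℝ] ℂ) (Z : ℂ →L[ℝ] ℂ →L[ℝ] ℂ) (p : ℂ →L[ℝ] ℝ) (S : ℂ →L[ℝ] ℂ →L[ℝ] ℝ) :
    ℂ →L[ℝ] ℂ →L[ℝ] ℝ :=
  S.bilinearComp T T + (ContinuousLinearMap.compL ℝ ℂ ℂ ℝ p).comp Z

lemma pullS_apply (T Z p S) (a b : ℂ) : pullS T Z p S a b = S (T a) (T b) + p (Z a b) := rfl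

/-- The mean curvature operator in curvilinear coordinates. -/
def Fop (y : YS) : ℝ := Phi (pullP y.1 y.2.2.1) (pullS y.1 y.2.1 y.2.2.1 y.2.2.2)

lemma contDiff_Fop {n : ℕ∞} : ContDiff ℝ n Fop := by
  have hT : ∀ a : ℂ, ContDiff ℝ n fun y : YS => y.1 a := fun a => contDiff_fst.clm_apply contDiff_const
  have hp : ∀ a : ℂ, ContDiff ℝ n fun y : YS => y.2.2.1 (y.1 a) := fun a =>
    contDiff_snd.snd.fst.clm_apply (hT a)
  have hS : ∀ a b : ℂ, ContDiff ℝ n fun y : YS => y.2.2.2 (y.1 a) (y.1 b) + y.2.2.1 (y.2.1 a b) :=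
    fun a b => ((contDiff_snd.snd.snd.clm_apply (hT a)).clm_apply (hT b)).add
      (contDiff_snd.snd.fst.clm_apply ((contDiff_snd.fst.clm_apply contDiff_const).clm_apply
        contDiff_const))
  have hW : ContDiff ℝ n fun y : YS =>
      (√(1 + (y.2.2.1 (y.1 1)) ^ 2 + (y.2.2.1 (y.1 Complex.I)) ^ 2))⁻¹ :=
    (((contDiff_const.add ((hp 1).pow 2)).add ((hp Complex.I).pow 2)).sqrt
      (fun y => by positivity)).inv (fun y => by positivity)
  exact ((((contDiff_const.add ((hp Complex.I).pow 2)).mul (hS 1 1)).sub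
    (((contDiff_const.mul (hp 1)).mul (hp Complex.I)).mul (hS 1 Complex.I))).add
    ((contDiff_const.add ((hp 1).pow 2)).mul (hS Complex.I Complex.I))).mul (hW.pow 3)

/-- The rank one form `h, k ↦ φ h * ψ k`. -/
def tens (φ ψ : ℂ →L[ℝ] ℝ) : ℂ →L[ℝ] ℂ →L[ℝ] ℝ := φ.smulRight ψ

lemma tens_apply (φ ψ : ℂ →L[ℝ] ℝ) (a b : ℂ) : tens φ ψ a b = φ a * ψ b := rfl

/-- Directions in which only the gradient and the Hessian vary. -/
def inj (p : ℂ →L[ℝ] ℝ) (S : ℂ →L[ℝ] ℂ →L[ℝ] ℝ) : YS := (0, 0, p, S)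

/-- The linearisation of the mean curvature operator as an operator with coefficients. -/
def linC (y : ℂ → YS) : Coef where
  a11 z := fderiv ℝ Fop (y z) (inj 0 (tens Complex.reCLM Complex.reCLM))
  a12 z := 1 / 2 * fderiv ℝ Fop (y z)
    (inj 0 (tens Complex.reCLM Complex.imCLM + tens Complex.imCLM Complex.reCLM))
  a22 z := fderiv ℝ Fop (y z) (inj 0 (tens Complex.imCLM Complex.imCLM))
  b1 z := fderiv ℝ Fop (y z) (inj Complex.reCLM 0)
  b2 z := fderiv ℝ Fop (y z) (inj Complex.imCLM 0)

lemma clm_decomp {V : Type*} [NormedAddCommGroup V] [NormedSpace ℝ V] (p : ℂ →L[ℝ] V) (a : ℂ) :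
    p a = a.re • p 1 + a.im • p Complex.I := by
  conv_lhs => rw [← Complex.re_add_im a]
  rw [map_add, ← mul_one (a.re : ℂ), ← Complex.real_smul, ← Complex.real_smul, map_smul, map_smul]

lemma inj_decomp (p : ℂ →L[ℝ] ℝ) (S : ℂ →L[ℝ] ℂ →L[ℝ] ℝ) (hS : ∀ a b, S a b = S b a) :
    inj p S = p 1 • inj Complex.reCLM 0 + p Complex.I • inj Complex.imCLM 0 +
      S 1 1 • inj 0 (tens Complex.reCLM Complex.reCLM) +
      S 1 Complex.I • inj 0 (tens Complex.reCLM Complex.imCLM + tens Complex.imCLM Complex.reCLM) +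
      S Complex.I Complex.I • inj 0 (tens Complex.imCLM Complex.imCLM) := by
  simp only [inj, Prod.smul_mk, Prod.mk_add_mk, smul_zero, add_zero, zero_add]
  have e1 : p = p 1 • Complex.reCLM + p Complex.I • Complex.imCLM := by
    ext a
    rw [clm_decomp p a]
    simp; ring
  have e2 : S = S 1 1 • tens Complex.reCLM Complex.reCLM +
      S 1 Complex.I • (tens Complex.reCLM Complex.imCLM + tens Complex.imCLM Complex.reCLM) +
      S Complex.I Complex.I • tens Complex.imCLM Complex.imCLM := by
    refine ContinuousLinearMap.ext fun a => ContinuousLinearMap.ext fun b => ?_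
    rw [clm_decomp S a]
    simp only [add_apply, smul_apply]
    rw [clm_decomp (S 1) b, clm_decomp (S Complex.I) b, hS Complex.I 1]
    simp [tens_apply]; ring
  exact Prod.ext rfl (Prod.ext rfl (Prod.ext e1 e2))

lemma Lop_linC (y : ℂ → YS) (J : Jet) (z : ℂ) (hS : ∀ a b, J.S z a b = J.S z b a) :
    Lop (linC y) J z = fderiv ℝ Fop (y z) (inj (J.p z) (J.S z)) := by
  rw [inj_decomp _ _ hS]
  simp only [map_add, map_smul, Lop, linC, smul_eq_mul]
  ring

/-- The operator is affine in the Hessian. -/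
lemma fderiv_Fop_S (y : YS) (S : ℂ →L[ℝ] ℂ →L[ℝ] ℝ) :
    fderiv ℝ Fop y (inj 0 S) = Phi (pullP y.1 y.2.2.1) (S.bilinearComp y.1 y.1) := by
  have h1 : HasDerivAt (fun t : ℝ => y + t • inj 0 S) (inj 0 S) 0 := by
    simpa using ((hasDerivAt_id (0 : ℝ)).smul_const (inj 0 S)).const_add y
  have h2 : HasFDerivAt Fop (fderiv ℝ Fop y) (y + (0 : ℝ) • inj 0 S) := by
    simpa using ((contDiff_Fop (n := 1)).differentiable (by norm_num) y).hasFDerivAt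
  have h3 := h2.comp_hasDerivAt (0 : ℝ) h1
  have h4 : (Fop ∘ fun t : ℝ => y + t • inj 0 S) = fun t : ℝ =>
      Fop y + t * Phi (pullP y.1 y.2.2.1) (S.bilinearComp y.1 y.1) := by
    funext t
    simp only [Function.comp, Fop, inj, Phi, pullP, pullS_apply, Prod.smul_mk, smul_zero,
      Prod.fst_add, Prod.snd_add, add_zero, add_apply, smul_apply, smul_eq_mul,
      ContinuousLinearMap.bilinearComp_apply]
    ring
  rw [h4] at h3
  have h5 : HasDerivAt (fun t : ℝ => Fop y + t * Phi (pullP y.1 y.2.2.1) (S.bilinearComp y.1 y.1))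
      (Phi (pullP y.1 y.2.2.1) (S.bilinearComp y.1 y.1)) 0 := by
    simpa using ((hasDerivAt_id (0 : ℝ)).mul_const _).const_add (Fop y)
  exact h3.unique h5

lemma Phi_tens_lower (q φ : ℂ →L[ℝ] ℝ) {L : ℝ} (hL : 1 + (q 1) ^ 2 + (q Complex.I) ^ 2 ≤ L ^ 2)
    (hL0 : 0 < L) :
    (L⁻¹) ^ 3 * ((φ 1) ^ 2 + (φ Complex.I) ^ 2) ≤ Phi q (tens φ φ) := by
  have h0 : 0 < √(1 + (q 1) ^ 2 + (q Complex.I) ^ 2) := by positivity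
  have h1 : √(1 + (q 1) ^ 2 + (q Complex.I) ^ 2) ≤ L := Real.sqrt_le_iff.2 ⟨hL0.le, hL⟩
  have h2 : L⁻¹ ^ 3 ≤ (√(1 + (q 1) ^ 2 + (q Complex.I) ^ 2))⁻¹ ^ 3 := by gcongr
  rw [Phi]
  simp only [tens_apply]
  rw [mul_comm]
  refine mul_le_mul ?_ h2 (by positivity) ?_
  · nlinarith [sq_nonneg (q Complex.I * φ 1 - q 1 * φ Complex.I)]
  · nlinarith [sq_nonneg (q Complex.I * φ 1 - q 1 * φ Complex.I), sq_nonneg (φ 1),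
      sq_nonneg (φ Complex.I)]

/-- Hölder bounds for the derivatives `T`, `Z` of a change of variables and a quantitative form of
the invertibility of `T`. -/
structure Geo (γ μ R : ℝ) (T : ℂ → ℂ →L[ℝ] ℂ) (Z : ℂ → ℂ →L[ℝ] ℂ →L[ℝ] ℂ) : Prop where
  hT : HolV Dk γ R T
  hZ : HolV Dk γ R Z
  ell : ∀ z ∈ Dk, ∀ s t : ℝ, μ * (s ^ 2 + t ^ 2) ≤
    (s * (T z 1).re + t * (T z 1).im) ^ 2 + (s * (T z Complex.I).re + t * (T z Complex.I).im) ^ 2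

/-- The geometric data combined with the derivatives of a jet. -/
def yJ (T : ℂ → ℂ →L[ℝ] ℂ) (Z : ℂ → ℂ →L[ℝ] ℂ →L[ℝ] ℂ) (J : Jet) (z : ℂ) : YS :=
  (T z, Z z, J.p z, J.S z)

lemma HolV.neg {X Y : Type*} [NormedAddCommGroup X] [NormedAddCommGroup Y] {A : Set X} {γ M : ℝ}
    {f : X → Y} (hf : HolV A γ M f) : HolV A γ M fun x => -f x :=
  ⟨fun x hx => by rw [norm_neg]; exact hf.1 x hx, fun x hx y hy => by
    rw [neg_sub_neg, norm_sub_rev]; exact hf.2 x hx y hy⟩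

lemma BdOn.holV {γ M : ℝ} (hγ0 : 0 < γ) (hγ1 : γ < 1) {J : Jet} (h : BdOn Dk γ M J) :
    HolV Dk γ (2 * M) (fun z => (J.p z, J.S z)) := by
  have hM := (abs_nonneg _).trans (h.b0 0 (by simp [Dk]))
  refine HolV.prodMk ⟨fun z hz => (h.b1 z hz).trans (by linarith), ?_⟩
    (HolV.mono (M := M) ⟨h.b2, h.t2⟩ (by linarith))
  exact fun z hz z' hz' => (p_lipschitz hγ0 h.toTaylorOn h.b2 hz hz').trans (by
    have := norm_sub_le_rpow hγ0 hγ1 hz hz'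
    nlinarith)

lemma BdOn.holV_inj {γ M : ℝ} (hγ0 : 0 < γ) (hγ1 : γ < 1) {J : Jet} (h : BdOn Dk γ M J) :
    HolV Dk γ (2 * M) (fun z => inj (J.p z) (J.S z)) := by
  have hM := (abs_nonneg _).trans (h.b0 0 (by simp [Dk]))
  exact (HolV.zero (by linarith)).prodMk ((HolV.zero (by linarith)).prodMk (h.holV hγ0 hγ1))

lemma Geo.holV_yJ {γ μ R : ℝ} {T Z} (hG : Geo γ μ R T Z) (hγ0 : 0 < γ) (hγ1 : γ < 1) {J : Jet}
    {M : ℝ} (hR : R ≤ M) (hJ : BdOn Dk γ M J) : HolV Dk γ (2 * M) (yJ T Z J) := by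
  have hM := (abs_nonneg _).trans (hJ.b0 0 (by simp [Dk]))
  exact (hG.hT.mono (by linarith)).prodMk ((hG.hZ.mono (by linarith)).prodMk (hJ.holV hγ0 hγ1))

/-- The linearised operator is uniformly elliptic with Hölder continuous coefficients. -/
lemma linC_ok {γ μ : ℝ} (hγ0 : 0 < γ) (hγ1 : γ < 1) (hμ : 0 < μ) (M : ℝ) :
    ∃ lam Lam, 0 < lam ∧ ∀ T Z J, Geo γ μ M T Z → BdOn Dk γ M J →
      CoefOK γ lam Lam (linC (yJ T Z J)) := by
  have hc : ∀ v : YS, ∃ L, 0 ≤ L ∧ ∀ (γ : ℝ) (A : Set ℂ) (y : ℂ → YS), HolV A γ (2 * M) y →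
      HolV A γ L fun x => fderiv ℝ Fop (y x) v := fun v =>
    HolV.comp_smooth (f := fun y => fderiv ℝ Fop y v)
      ((contDiff_Fop (n := 2)).fderiv_right (m := 1) (by norm_num) |>.clm_apply contDiff_const) _
  obtain ⟨L1, hL1, c1⟩ := hc (inj 0 (tens Complex.reCLM Complex.reCLM))
  obtain ⟨L2, hL2, c2⟩ := hc
    (inj 0 (tens Complex.reCLM Complex.imCLM + tens Complex.imCLM Complex.reCLM))
  obtain ⟨L3, hL3, c3⟩ := hc (inj 0 (tens Complex.imCLM Complex.imCLM))
  obtain ⟨L4, hL4, c4⟩ := hc (inj Complex.reCLM 0)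
  obtain ⟨L5, hL5, c5⟩ := hc (inj Complex.imCLM 0)
  set L := 1 + M ^ 2 with hL
  have hL0 : 0 < L := by positivity
  refine ⟨L⁻¹ ^ 3 * μ, L1 + L2 + L3 + L4 + L5, by positivity, fun T Z J hG hJ => ?_⟩
  have hy := hG.holV_yJ hγ0 hγ1 le_rfl hJ
  have conv : ∀ {M M' : ℝ} {f : ℂ → ℝ}, HolV Dk γ M f → M ≤ M' → HolOn Dk γ M' f :=
    fun h h' => HolOn.mono ⟨h.1, h.2⟩ h'
  have key : ∀ z, z ∈ Dk → ∀ s t : ℝ, (linC (yJ T Z J)).a11 z * s ^ 2 +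
      2 * (linC (yJ T Z J)).a12 z * s * t + (linC (yJ T Z J)).a22 z * t ^ 2 =
      Phi (pullP (T z) (J.p z)) (tens ((s • Complex.reCLM + t • Complex.imCLM).comp (T z))
        ((s • Complex.reCLM + t • Complex.imCLM).comp (T z))) := by
    intro z hz s t
    have : tens ((s • Complex.reCLM + t • Complex.imCLM).comp (T z))
        ((s • Complex.reCLM + t • Complex.imCLM).comp (T z)) =
        (tens (s • Complex.reCLM + t • Complex.imCLM)
          (s • Complex.reCLM + t • Complex.imCLM)).bilinearComp (T z) (T z) := rfl
    rw [this]
    refine Eq.trans ?_ (fderiv_Fop_S (yJ T Z J z) _)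
    have e : inj 0 (tens (s • Complex.reCLM + t • Complex.imCLM)
          (s • Complex.reCLM + t • Complex.imCLM)) =
        s ^ 2 • inj 0 (tens Complex.reCLM Complex.reCLM) +
        (s * t) • inj 0 (tens Complex.reCLM Complex.imCLM + tens Complex.imCLM Complex.reCLM) +
        t ^ 2 • inj 0 (tens Complex.imCLM Complex.imCLM) := by
      simp only [inj, Prod.smul_mk, Prod.mk_add_mk, smul_zero, add_zero]
      refine Prod.ext rfl (Prod.ext rfl (Prod.ext rfl ?_))
      refine ContinuousLinearMap.ext fun a => ContinuousLinearMap.ext fun b => ?_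
      simp [tens_apply]; ring
    rw [e]
    simp only [map_add, map_smul, linC, smul_eq_mul]
    ring
  refine ⟨conv (c1 γ Dk _ hy) (by linarith), ?_, conv (c3 γ Dk _ hy) (by linarith),
    conv (c4 γ Dk _ hy) (by linarith), conv (c5 γ Dk _ hy) (by linarith), fun z hz s t => ?_⟩
  · refine ((conv (c2 γ Dk _ hy) le_rfl).const_mul (1 / 2)).mono ?_
    rw [abs_of_pos (by norm_num)]; linarith
  · rw [key z hz]
    refine le_trans ?_ (Phi_tens_lower _ _ (L := L) ?_ hL0)
    · rw [mul_assoc]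
      gcongr
      have := hG.ell z hz s t
      simpa using this
    · -- the pulled back gradient is bounded by `M ^ 2`
      have hp := hJ.b1 z hz
      have hT := hG.hT.1 z hz
      have hM : 0 ≤ M := (norm_nonneg _).trans hp
      have b : ‖pullP (T z) (J.p z)‖ ≤ M ^ 2 := by
        refine (ContinuousLinearMap.opNorm_comp_le _ _).trans ?_
        rw [sq]; gcongr
      have key2 : ∀ q : ℂ →L[ℝ] ℝ, (q 1) ^ 2 + (q Complex.I) ^ 2 ≤ ‖q‖ ^ 2 := fun q => by
        set s := (q 1) ^ 2 + (q Complex.I) ^ 2 with hs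
        have h1 : q ⟨q 1, q Complex.I⟩ = s := by
          rw [clm_decomp]; simp [hs]; ring
        have h2 := q.le_opNorm ⟨q 1, q Complex.I⟩
        rw [h1] at h2
        have h3 : ‖(⟨q 1, q Complex.I⟩ : ℂ)‖ ^ 2 = s := by
          rw [← Complex.normSq_eq_norm_sq, Complex.normSq_mk, hs]; ring
        have hs0 : 0 ≤ s := by positivity
        rw [Real.norm_of_nonneg hs0] at h2
        by_contra hc
        push Not at hc
        have hspos : 0 < s := lt_of_le_of_lt (sq_nonneg _) hc
        nlinarith [norm_nonneg q, norm_nonneg (⟨q 1, q Complex.I⟩ : ℂ), mul_self_le_mul_self hs0 h2,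
          sq_nonneg (‖q‖)]
      have := key2 (pullP (T z) (J.p z))
      have : ‖pullP (T z) (J.p z)‖ ^ 2 ≤ (M ^ 2) ^ 2 := by gcongr
      rw [hL]; nlinarith

/-- **Newton step.** Near a solution of `F = 2H` there are solutions of `F = 2(H + h)`, with a first
order expansion in `h`; the range of `h` and all constants depend only on the norms. -/
theorem newton_step {γ μ : ℝ} (hγ0 : 0 < γ) (hγ1 : γ < 1) (hμ : 0 < μ) (M : ℝ) :
    ∃ δ > 0, ∃ B, ∀ T Z J H, Geo γ μ M T Z → BdOn Dk γ M J → ZeroBd J →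
      (∀ z ∈ Dk, Fop (yJ T Z J z) = 2 * H) →
      ∃ W, BdOn Dk γ B W ∧ ZeroBd W ∧
        (∀ z ∈ Dk, fderiv ℝ Fop (yJ T Z J z) (inj (W.p z) (W.S z)) = 2) ∧
        ∀ h, |h| ≤ δ → ∃ J', (∃ M', BdOn Dk γ M' J') ∧ ZeroBd J' ∧
          (∀ z ∈ Dk, Fop (yJ T Z J' z) = 2 * (H + h)) ∧
          ∀ z ∈ Dk, |J'.w z - J.w z - h * W.w z| ≤ B * h ^ 2 := by
  by_cases hM : 0 ≤ M
  swap
  · refine ⟨1, one_pos, 0, fun T Z J H _ hJ => ?_⟩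
    exact absurd ((abs_nonneg _).trans (hJ.b0 0 (by simp [Dk]))) hM
  obtain ⟨lam, Lam, hlam, hok⟩ := linC_ok hγ0 hγ1 hμ M
  obtain ⟨C, hC, hap⟩ := schauder_apriori (Lam := Lam) hγ0 hγ1 hlam
  obtain ⟨K, hK, hrem⟩ := newton_remainder (X := ℂ) (contDiff_Fop (n := 3)) (2 * M) (by linarith)
  set δ := (8 * C + 64 * C ^ 2 * K)⁻¹ with hδ
  have hδ0 : 0 < δ := by positivity
  refine ⟨δ, hδ0, max (C * 2) (C * (K * (8 * C) * (8 * C))), fun T Z J H hG hJ hJ0 hJH => ?_⟩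
  have hc := hok T Z J hG hJ
  set c := linC (yJ T Z J) with hcdef
  have hy := hG.holV_yJ hγ0 hγ1 le_rfl hJ
  have hsol := solves_of_coefOK hγ0 hγ1 hlam hc
  have h2 : HolOn Dk γ 2 fun _ => (2 : ℝ) := (HolOn.const Dk γ).mono (by norm_num)
  obtain ⟨W, hWM, hW0, hWe⟩ := hsol (fun _ => 2) 2 h2
  have hWB : BdOn Dk γ (C * 2) W := hap c hc W hWM hW0 2 (h2.congr hWe)
  refine ⟨W, hWB.mono (le_max_left _ _), hW0, fun z hz => ?_, fun h hh => ?_⟩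
  · rw [← Lop_linC _ _ _ (hWB.sym z hz)]; exact hWe z hz
  set N := 2 * |h| with hN
  have hN0 : 0 ≤ N := by positivity
  have hCh : 8 * C * |h| ≤ 1 ∧ C * (K * (8 * C * |h|) * 2) ≤ 1 / 2 := by
    have h1 : (8 * C + 64 * C ^ 2 * K) * |h| ≤ 1 := by
      calc _ ≤ (8 * C + 64 * C ^ 2 * K) * δ := by gcongr
        _ = 1 := mul_inv_cancel₀ (by positivity)
    have h3 : 0 ≤ 64 * C ^ 2 * K * |h| := by positivity
    have h4 : 0 ≤ 8 * C * |h| := by positivity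
    constructor <;> nlinarith
  -- the remainder of the linearisation at the base solution
  set rem : ℂ → YS → YS → ℝ := fun z k k' =>
    Fop (yJ T Z J z + k) - Fop (yJ T Z J z + k') - fderiv ℝ Fop (yJ T Z J z) (k - k') with hremd
  obtain ⟨Q, hQB, hQ0, hQe⟩ : ∃ Q, BdOn Dk γ (2 * C * N) Q ∧ ZeroBd Q ∧
      ∀ z ∈ Dk, Lop c Q z = 2 * h - rem z (inj (Q.p z) (Q.S z)) 0 := by
    refine fixed_point (κ := K * (8 * C * |h|) * 2) hγ0 hC hN0
      (hap c hc) hsol (fun z p S => 2 * h - rem z (inj p S) 0) ?_ ?_ hCh.2 ?_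
    · intro z hz
      have c1 : Continuous fun y : (ℂ →L[ℝ] ℝ) × (ℂ →L[ℝ] ℂ →L[ℝ] ℝ) => inj y.1 y.2 :=
        continuous_const.prodMk (continuous_const.prodMk (continuous_fst.prodMk continuous_snd))
      have c2 := (contDiff_Fop (n := 1)).continuous
      simp only [hremd]
      exact continuous_const.sub (((c2.comp (continuous_const.add c1)).sub continuous_const).sub
        ((fderiv ℝ Fop (yJ T Z J z)).continuous.comp (c1.sub continuous_const)))
    · have : HolOn Dk γ N fun _ => 2 * h := (HolOn.const Dk γ).mono (by
        rw [abs_mul, abs_of_pos two_pos])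
      refine this.congr fun z hz => ?_
      simp [hremd, inj, ← Prod.zero_eq_mk]
    · intro J1 J2 d h1 h2 hd h12
      have e1 : 2 * (2 * C * N) = 8 * C * |h| := by rw [hN]; ring
      have b1 := h1.holV_inj hγ0 hγ1
      have b2 := h2.holV_inj hγ0 hγ1
      have b12 := h12.holV_inj hγ0 hγ1
      rw [e1] at b1 b2
      have key := hrem γ Dk (yJ T Z J) _ _ (8 * C * |h|) (2 * d) hy b2 b1 hCh.1 (by
        have e : (fun z => inj (J2.p z) (J2.S z) - inj (J1.p z) (J1.S z)) = fun z =>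
            -inj ((Jet.comb 1 (-1) J1 J2).p z) ((Jet.comb 1 (-1) J1 J2).S z) := by
          funext z
          simp [inj, Jet.comb, sub_eq_add_neg]
        rw [e]
        exact b12.neg) (by positivity) (by positivity)
      have e2 : K * (8 * C * |h|) * (2 * d) = K * (8 * C * |h|) * 2 * d := by ring
      rw [e2] at key
      refine key.congr fun z hz => ?_
      simp only [hremd, map_sub]
      ring
  have hQe' : ∀ z ∈ Dk, Fop (yJ T Z J z + inj (Q.p z) (Q.S z)) = 2 * (H + h) := by
    intro z hz
    have h1 := hQe z hz
    rw [hcdef, Lop_linC _ _ _ (hQB.sym z hz)] at h1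
    simp only [hremd, sub_zero, add_zero] at h1
    rw [hJH z hz] at h1
    linarith
  refine ⟨Jet.comb 1 1 J Q, ⟨_, hJ.comb hQB 1 1⟩, hJ0.comb hQ0 1 1, fun z hz => ?_, fun z hz => ?_⟩
  · rw [← hQe' z hz]
    simp [yJ, inj, Jet.comb]
  · have hD : HolOn Dk γ (K * (8 * C * |h|) * (8 * C * |h|)) (Lop c (Jet.comb 1 (-h) Q W)) := by
      have b1 := hQB.holV_inj hγ0 hγ1
      have e1 : 2 * (2 * C * N) = 8 * C * |h| := by rw [hN]; ring
      rw [e1] at b1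
      have key := hrem γ Dk (yJ T Z J) (fun _ => 0) _ (8 * C * |h|) (8 * C * |h|) hy
        (HolV.zero (by positivity)) b1 hCh.1 (by
        simp only [zero_sub]
        exact b1.neg) (by positivity) (by positivity)
      refine key.congr fun z hz => ?_
      rw [Lop_comb, hQe z hz, hWe z hz]
      simp only [hremd, sub_zero, map_sub, map_zero]
      ring
    have hB := (hap c hc _ ⟨_, hQB.comb hWB 1 (-h)⟩ (hQ0.comb hW0 _ _) _ hD).b0 z hz
    have e : (Jet.comb 1 1 J Q).w z - J.w z - h * W.w z = (Jet.comb 1 (-h) Q W).w z := by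
      simp [Jet.comb]; ring
    rw [e]
    refine hB.trans ?_
    have : C * (K * (8 * C * |h|) * (8 * C * |h|)) = C * (K * (8 * C) * (8 * C)) * h ^ 2 := by
      rw [← sq_abs h]; ring
    rw [this]
    gcongr
    exact le_max_right _ _

section
open MeasureTheory

/-! ### A Liouville theorem for the minimal surface equation -/

lemma hasFDerivAt_indicator {A : Set ℂ} (hA : IsClosed A) {g : ℂ → ℝ} {g' : ℂ → ℂ →L[ℝ] ℝ}
    (h : ∀ x ∈ A, HasFDerivWithinAt g (g' x) A x) (h0 : ∀ x ∈ frontier A, g x = 0 ∧ g' x = 0)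
    (x : ℂ) : HasFDerivAt (A.indicator g) (A.indicator g' x) x := by
  have hin : ∀ x ∈ A, HasFDerivWithinAt (A.indicator g) (g' x) A x := fun x hx =>
    (h x hx).congr (fun y hy => indicator_of_mem hy g) (indicator_of_mem hx g)
  by_cases hx : x ∈ A
  · rw [indicator_of_mem hx]
    by_cases hi : x ∈ interior A
    · exact (hin x hx).hasFDerivAt (mem_interior_iff_mem_nhds.1 hi)
    · have hf := h0 x ⟨subset_closure hx, hi⟩
      have h1 := hin x hx
      have h2 : HasFDerivWithinAt (A.indicator g) (g' x) Aᶜ x := by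
        rw [hf.2]
        refine (hasFDerivWithinAt_const (0 : ℝ) x Aᶜ).congr
          (fun y hy => indicator_of_notMem hy g) ?_
        rw [indicator_of_mem hx, hf.1]
      have := h1.union h2
      rwa [union_compl_self, hasFDerivWithinAt_univ] at this
  · rw [indicator_of_notMem hx]
    refine (hasFDerivAt_const (0 : ℝ) x).congr_of_eventuallyEq ?_
    filter_upwards [hA.isOpen_compl.mem_nhds hx] with y hy
    exact indicator_of_notMem hy g

lemma ibp {A : Set ℂ} (hA : IsClosed A) {g : ℂ → ℝ} {g' : ℂ → ℂ →L[ℝ] ℝ}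
    (h : ∀ x ∈ A, HasFDerivWithinAt g (g' x) A x) (h0 : ∀ x ∈ frontier A, g x = 0 ∧ g' x = 0)
    (hc : ContinuousOn g' A) {η : ℂ → ℝ} {η' : ℂ → ℂ →L[ℝ] ℝ} (hη : ∀ x, HasFDerivAt η (η' x) x)
    (hη' : Continuous η') (hs : HasCompactSupport η) (hs' : HasCompactSupport η') (t : ℂ) :
    (∫ x, η x * A.indicator g' x t = -∫ x, η' x t * A.indicator g x) ∧
      (Integrable fun x => η x * A.indicator g' x t) ∧
      Integrable fun x => η' x t * A.indicator g x := by
  have cg : Continuous (A.indicator g) := continuous_iff_continuousAt.2 fun x =>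
    (hasFDerivAt_indicator hA h h0 x).continuousAt
  have cg' : Continuous (A.indicator g') := by
    refine continuous_indicator (fun x hx => (h0 x hx).2) ?_
    rwa [hA.closure_eq]
  have cη : Continuous η := continuous_iff_continuousAt.2 fun x => (hη x).continuousAt
  have s1 : HasCompactSupport fun x => η' x t :=
    hs'.comp_left (g := fun L : ℂ →L[ℝ] ℝ => L t) rfl
  have i1 : Integrable fun x => η' x t * A.indicator g x :=
    ((hη'.clm_apply continuous_const).mul cg).integrable_of_hasCompactSupport s1.mul_right
  have i2 : Integrable fun x => η x * A.indicator g' x t :=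
    (cη.mul (cg'.clm_apply continuous_const)).integrable_of_hasCompactSupport hs.mul_right
  exact ⟨integral_bilinear_hasFDerivAt_right_eq_neg_left_of_integrable (μ := volume)
    (B := ContinuousLinearMap.mul ℝ ℝ) (f := η) (f' := η') (g := A.indicator g)
    (g' := A.indicator g') (v := t) i1 i2
    ((cη.mul cg).integrable_of_hasCompactSupport hs.mul_right)
    (fun x _ => hη x) (fun x _ => hasFDerivAt_indicator hA h h0 x), i2, i1⟩

lemma hasDerivAt_mul_abs (x : ℝ) : HasDerivAt (fun y : ℝ => y * |y|) (2 * |x|) x := by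
  rcases lt_trichotomy x 0 with hx | rfl | hx
  · have h1 : HasDerivAt (fun y : ℝ => -(y * y)) (-(1 * x + x * 1)) x :=
      ((hasDerivAt_id x).mul (hasDerivAt_id x)).neg
    rw [abs_of_neg hx]
    refine (h1.congr_of_eventuallyEq ?_).congr_deriv (by ring)
    filter_upwards [gt_mem_nhds hx] with y hy
    rw [abs_of_neg hy]; ring
  · rw [hasDerivAt_iff_isLittleO]
    simp only [abs_zero, mul_zero, sub_zero, smul_zero]
    have : (fun y : ℝ => |y|) =o[𝓝 0] fun _ => (1 : ℝ) := by
      rw [Asymptotics.isLittleO_one_iff]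
      simpa using (continuous_abs.tendsto (0 : ℝ))
    simpa using (Asymptotics.isBigO_refl (fun y : ℝ => y) (𝓝 0)).mul_isLittleO this
  · have h1 : HasDerivAt (fun y : ℝ => y * y) (1 * x + x * 1) x :=
      (hasDerivAt_id x).mul (hasDerivAt_id x)
    rw [abs_of_pos hx]
    refine (h1.congr_of_eventuallyEq ?_).congr_deriv (by ring)
    filter_upwards [lt_mem_nhds hx] with y hy
    rw [abs_of_pos hy]

/-- Cut-off functions at all scales, with gradients of order `1 / R` supported in the annulus
`R ≤ ‖x‖ ≤ 2 * R`. -/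
lemma exists_cutoffs : ∃ (C : ℝ) (φ : ℝ → ℂ → ℝ) (φ' : ℝ → ℂ → ℂ →L[ℝ] ℝ), 0 ≤ C ∧ ∀ R, 0 < R →
    (∀ x, HasFDerivAt (φ R) (φ' R x) x) ∧ Continuous (φ' R) ∧ HasCompactSupport (φ R) ∧
    HasCompactSupport (φ' R) ∧ (∀ x, 0 ≤ φ R x ∧ φ R x ≤ 1) ∧ (∀ x, ‖x‖ ≤ R → φ R x = 1) ∧
    (∀ x, 2 * R ≤ ‖x‖ → φ R x = 0) ∧ (∀ x, ‖x‖ < R → φ' R x = 0) ∧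
    (∀ x, 2 * R < ‖x‖ → φ' R x = 0) ∧ ∀ x, ‖φ' R x‖ ≤ C / R := by
  let ρ : ContDiffBump (0 : ℂ) := ⟨1, 2, one_pos, one_lt_two⟩
  have hρ : ContDiff ℝ 1 ρ := ρ.contDiff (n := 1)
  have hcs : HasCompactSupport (fderiv ℝ ρ) := ρ.hasCompactSupport.fderiv ℝ
  have hcd : Continuous (fderiv ℝ ρ) := hρ.continuous_fderiv (by norm_num)
  obtain ⟨C, hC⟩ := hcs.exists_bound_of_continuous hcd
  have hC0 : 0 ≤ C := (norm_nonneg _).trans (hC 0)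
  have hd : ∀ R : ℝ, 0 < R → ∀ x, HasFDerivAt (fun x : ℂ => ρ (R⁻¹ • x))
      (R⁻¹ • fderiv ℝ ρ (R⁻¹ • x)) x := by
    intro R hR x
    have h1 : HasFDerivAt (fun x : ℂ => R⁻¹ • x) (R⁻¹ • ContinuousLinearMap.id ℝ ℂ) x :=
      (hasFDerivAt_id x).const_smul R⁻¹
    have h2 := ((hρ.differentiable (by norm_num) (R⁻¹ • x)).hasFDerivAt).comp x h1
    refine h2.congr_fderiv ?_
    ext a; simp
  refine ⟨C, fun R x => ρ (R⁻¹ • x), fun R x => R⁻¹ • fderiv ℝ ρ (R⁻¹ • x), hC0, fun R hR => ?_⟩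
  have hn : ∀ x : ℂ, ‖R⁻¹ • x‖ = ‖x‖ / R := fun x => by
    rw [norm_smul, norm_inv, Real.norm_of_nonneg hR.le]; ring
  have one : ∀ x, ‖x‖ ≤ R → ρ (R⁻¹ • x) = 1 := fun x hx => by
    refine ρ.one_of_mem_closedBall ?_
    rw [mem_closedBall_zero_iff, hn]
    exact (div_le_one hR).2 hx
  have zero : ∀ x, 2 * R ≤ ‖x‖ → ρ (R⁻¹ • x) = 0 := fun x hx => by
    refine ρ.zero_of_le_dist ?_
    rw [dist_zero_right, hn]
    exact (le_div_iff₀ hR).2 hx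
  have z1 : ∀ x, ‖x‖ < R → R⁻¹ • fderiv ℝ ρ (R⁻¹ • x) = 0 := fun x hx => by
    refine (hd R hR x).unique ((hasFDerivAt_const (1 : ℝ) x).congr_of_eventuallyEq ?_)
    filter_upwards [continuous_norm.continuousAt.preimage_mem_nhds (gt_mem_nhds hx)] with y hy
    exact one y (le_of_lt hy)
  have z2 : ∀ x, 2 * R < ‖x‖ → R⁻¹ • fderiv ℝ ρ (R⁻¹ • x) = 0 := fun x hx => by
    refine (hd R hR x).unique ((hasFDerivAt_const (0 : ℝ) x).congr_of_eventuallyEq ?_)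
    filter_upwards [continuous_norm.continuousAt.preimage_mem_nhds (lt_mem_nhds hx)] with y hy
    exact zero y (le_of_lt hy)
  refine ⟨hd R hR, ?_, ?_, ?_, fun x => ⟨ρ.nonneg, ρ.le_one⟩, one, zero, z1, z2, fun x => ?_⟩
  · exact (hcd.comp (continuous_const_smul R⁻¹)).const_smul R⁻¹
  · refine HasCompactSupport.intro (isCompact_closedBall (0 : ℂ) (2 * R)) fun x hx => ?_
    rw [mem_closedBall_zero_iff, not_le] at hx
    exact zero x hx.le
  · refine HasCompactSupport.intro (isCompact_closedBall (0 : ℂ) (2 * R)) fun x hx => ?_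
    rw [mem_closedBall_zero_iff, not_le] at hx
    exact z2 x hx
  · rw [norm_smul, norm_inv, Real.norm_of_nonneg hR.le, div_eq_inv_mul]
    gcongr
    exact hC _

set_option maxHeartbeats 400000 in
/-- A bounded solution `v` of a monotone divergence form equation that vanishes on the frontier is
locally constant where it does not vanish: Caccioppoli's inequality with logarithmic capacity of the
plane at infinity. -/
lemma caccioppoli {A : Set ℂ} (hA : IsClosed A) {v f1 f2 : ℂ → ℝ} {v' f1' f2' : ℂ → ℂ →L[ℝ] ℝ}
    {t1 t2 : ℂ} {V : ℝ} (hv : ∀ x ∈ A, HasFDerivWithinAt v (v' x) A x)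
    (hf1 : ∀ x ∈ A, HasFDerivWithinAt f1 (f1' x) A x)
    (hf2 : ∀ x ∈ A, HasFDerivWithinAt f2 (f2' x) A x)
    (cv : ContinuousOn v' A) (c1 : ContinuousOn f1' A) (c2 : ContinuousOn f2' A)
    (h0 : ∀ x ∈ frontier A, v x = 0) (hV : ∀ x ∈ A, |v x| ≤ V)
    (hm : ∀ x ∈ A, f1 x ^ 2 + f2 x ^ 2 ≤ v' x t1 * f1 x + v' x t2 * f2 x)
    (heq : ∀ x ∈ A, f1' x t1 + f2' x t2 = 0) :
    ∀ x ∈ A, |v x| * (v' x t1 * f1 x + v' x t2 * f2 x) = 0 := by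
  classical
  obtain ⟨C, φ, φ', hC, hφ⟩ := exists_cutoffs
  by_cases hne : A.Nonempty
  swap
  · intro x hx; exact absurd ⟨x, hx⟩ hne
  have hV0 : 0 ≤ V := (abs_nonneg _).trans (hV _ hne.some_mem)
  set m : ℂ → ℝ := fun x => v' x t1 * f1 x + v' x t2 * f2 x with hmd
  have hm0 : ∀ x ∈ A, 0 ≤ m x := fun x hx => le_trans (by positivity) (hm x hx)
  set e : ℂ → ℝ := A.indicator fun x => |v x| * m x with hed
  have cV : ContinuousOn v A := fun x hx => (hv x hx).continuousWithinAt
  have cF1 : ContinuousOn f1 A := fun x hx => (hf1 x hx).continuousWithinAt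
  have cF2 : ContinuousOn f2 A := fun x hx => (hf2 x hx).continuousWithinAt
  have ce : Continuous e := by
    refine continuous_indicator (fun x hx => by simp [h0 x hx]) ?_
    rw [hA.closure_eq]
    exact cV.abs.mul (((cv.clm_apply continuousOn_const).mul cF1).add
      ((cv.clm_apply continuousOn_const).mul cF2))
  have he0 : ∀ x, 0 ≤ e x := fun x => indicator_nonneg
    (fun x hx => mul_nonneg (abs_nonneg _) (hm0 x hx)) x
  -- the fields `v |v| f_i`
  have hg : ∀ (f : ℂ → ℝ) (f' : ℂ → ℂ →L[ℝ] ℝ), (∀ x ∈ A, HasFDerivWithinAt f (f' x) A x) →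
      ∀ x ∈ A, HasFDerivWithinAt (fun x => (v x * |v x|) * f x)
        ((v x * |v x|) • f' x + f x • ((2 * |v x|) • v' x)) A x := fun f f' hf x hx =>
    ((hasDerivAt_mul_abs (v x)).comp_hasFDerivWithinAt x (hv x hx)).mul (hf x hx)
  have hg0 : ∀ (f : ℂ → ℝ) (f' : ℂ → ℂ →L[ℝ] ℝ), ∀ x ∈ frontier A, (v x * |v x|) * f x = 0 ∧
      (v x * |v x|) • f' x + f x • ((2 * |v x|) • v' x) = 0 := fun f f' x hx => by
    simp [h0 x hx]
  have hgc : ∀ (f : ℂ → ℝ) (f' : ℂ → ℂ →L[ℝ] ℝ), ContinuousOn f A → ContinuousOn f' A →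
      ContinuousOn (fun x => (v x * |v x|) • f' x + f x • ((2 * |v x|) • v' x)) A :=
    fun f f' h h' => ((cV.mul cV.abs).smul h').add
      (h.smul ((continuousOn_const.mul cV.abs).smul cv))
  set C0 : ℝ := V ^ 3 * (C ^ 2 * (‖t1‖ ^ 2 + ‖t2‖ ^ 2)) * (4 * Real.pi) with hC0
  have hC00 : 0 ≤ C0 := by positivity
  set P : ℝ → ℝ := fun R => ∫ x, φ R x ^ 2 * e x with hP
  have cφ : ∀ R, 0 < R → Continuous (φ R) := fun R hR => continuous_iff_continuousAt.2 fun x =>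
    ((hφ R hR).1 x).continuousAt
  have cs2 : ∀ R, 0 < R → HasCompactSupport fun x => φ R x ^ 2 := fun R hR => by
    refine HasCompactSupport.intro (isCompact_closedBall (0 : ℂ) (2 * R)) fun x hx => ?_
    rw [mem_closedBall_zero_iff, not_le] at hx
    rw [(hφ R hR).2.2.2.2.2.2.1 x hx.le]
    norm_num
  have iP : ∀ R, 0 < R → Integrable fun x => φ R x ^ 2 * e x := fun R hR => by
    have hc : Continuous fun x => φ R x ^ 2 * e x := ((cφ R hR).pow 2).mul ce
    exact hc.integrable_of_hasCompactSupport (cs2 R hR).mul_right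
  -- the basic identity
  set K : ℝ → ℂ → ℝ := fun R x =>
    -((2 * φ R x * φ' R x t1) * A.indicator (fun x => (v x * |v x|) * f1 x) x +
      (2 * φ R x * φ' R x t2) * A.indicator (fun x => (v x * |v x|) * f2 x) x) with hK
  have basic : ∀ R, 0 < R → 2 * P R = ∫ x, K R x ∧ Integrable (K R) := by
    intro R hR
    obtain ⟨d, cd, s1, s2, -⟩ := hφ R hR
    have hη : ∀ x, HasFDerivAt (fun x => φ R x ^ 2) ((2 * φ R x) • φ' R x) x := fun x => by
      simpa using (d x).pow 2
    have cη : Continuous fun x => (2 * φ R x) • φ' R x :=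
      (continuous_const.mul (cφ R hR)).smul cd
    have k1 : HasCompactSupport fun x => φ R x ^ 2 := cs2 R hR
    have k2 : HasCompactSupport fun x => (2 * φ R x) • φ' R x := by
      have hz : ∀ x ∉ Metric.closedBall (0 : ℂ) (2 * R), (2 * φ R x) • φ' R x = 0 := fun x hx => by
        rw [mem_closedBall_zero_iff, not_le] at hx
        rw [(hφ R hR).2.2.2.2.2.2.2.2.1 x hx, smul_zero]
      exact HasCompactSupport.intro (isCompact_closedBall (0 : ℂ) (2 * R)) hz
    obtain ⟨a1, i1, j1⟩ := ibp hA (hg f1 f1' hf1) (hg0 f1 f1') (hgc f1 f1' cF1 c1) hη cη k1 k2 t1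
    obtain ⟨a2, i2, j2⟩ := ibp hA (hg f2 f2' hf2) (hg0 f2 f2') (hgc f2 f2' cF2 c2) hη cη k1 k2 t2
    have eK : K R = fun x => -(((2 * φ R x) • φ' R x) t1 *
        A.indicator (fun x => (v x * |v x|) * f1 x) x + ((2 * φ R x) • φ' R x) t2 *
        A.indicator (fun x => (v x * |v x|) * f2 x) x) := rfl
    have iKK : Integrable (K R) := by
      rw [eK]
      have j12 := j1.add j2
      exact j12.neg
    refine ⟨?_, iKK⟩
    rw [eK, integral_neg, integral_add j1 j2, neg_add, ← a1, ← a2, ← integral_add i1 i2, hP]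
    simp only []
    rw [← integral_const_mul]
    refine integral_congr_ae (Eventually.of_forall fun x => ?_)
    simp only [hed]
    by_cases hx : x ∈ A
    · simp only [indicator_of_mem hx, add_apply, smul_apply, smul_eq_mul, hmd]
      have := heq x hx
      linear_combination (-(φ R x ^ 2) * (v x * |v x|)) * this
    · simp only [indicator_of_notMem hx, mul_zero, zero_apply, add_zero]
  -- the error term
  set Er : ℝ → ℂ → ℝ := fun R => (Metric.closedBall (0 : ℂ) (2 * R)).indicator fun _ =>
    V ^ 3 * ((C / R) ^ 2 * (‖t1‖ ^ 2 + ‖t2‖ ^ 2)) with hEr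
  have vol : ∀ R : ℝ, 0 < R → volume (Metric.closedBall (0 : ℂ) (2 * R)) ≠ ⊤ := fun R _ =>
    measure_closedBall_lt_top.ne
  have iEr : ∀ R, 0 < R → Integrable (Er R) := fun R hR =>
    (integrable_indicator_iff Metric.isClosed_closedBall.measurableSet).2
      (integrableOn_const (vol R hR))
  have eEr : ∀ R, 0 < R → ∫ x, Er R x = C0 := fun R hR => by
    rw [hEr, integral_indicator Metric.isClosed_closedBall.measurableSet, setIntegral_const,
      Measure.real, Complex.volume_closedBall, smul_eq_mul, ENNReal.toReal_mul,
      ENNReal.toReal_pow, ENNReal.toReal_ofReal (by positivity), hC0]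
    simp only [ENNReal.coe_toReal, NNReal.coe_real_pi]
    field_simp
    ring
  have hd2 : ∀ R, 0 < R → ∀ x, φ' R x t1 ^ 2 + φ' R x t2 ^ 2 ≤
      (C / R) ^ 2 * (‖t1‖ ^ 2 + ‖t2‖ ^ 2) := by
    intro R hR x
    have hb := (hφ R hR).2.2.2.2.2.2.2.2.2 x
    have hCR : 0 ≤ C / R := by positivity
    have k : ∀ t : ℂ, φ' R x t ^ 2 ≤ (C / R) ^ 2 * ‖t‖ ^ 2 := fun t => by
      have := (φ' R x).le_opNorm t
      rw [← sq_abs, ← mul_pow, ← Real.norm_eq_abs]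
      gcongr
      exact this.trans (by gcongr)
    linarith [k t1, k t2]
  -- the pointwise estimate
  have pt : ∀ R, 0 < R → ∀ s, 0 < s → ∀ x, K R x ≤ s * (φ R x ^ 2 * e x) + s⁻¹ * Er R x ∧
      (‖x‖ < R ∨ 2 * R < ‖x‖ → K R x = 0) := by
    intro R hR s hs x
    obtain ⟨-, -, -, -, h01, -, -, z1, z2, -⟩ := hφ R hR
    have hEr0 : 0 ≤ Er R x := indicator_nonneg (fun _ _ => by positivity) x
    have hz : ‖x‖ < R ∨ 2 * R < ‖x‖ → K R x = 0 := by
      rintro (h | h)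
      · simp [hK, z1 x h]
      · simp [hK, z2 x h]
    refine ⟨?_, hz⟩
    have rhs0 : 0 ≤ s * (φ R x ^ 2 * e x) + s⁻¹ * Er R x := by
      have := he0 x
      positivity
    by_cases hxR : ‖x‖ < R ∨ 2 * R < ‖x‖
    · rw [hz hxR]; exact rhs0
    push Not at hxR
    by_cases hx : x ∈ A
    swap
    · simp only [hK, indicator_of_notMem hx]
      simpa using rhs0
    have hxb : x ∈ Metric.closedBall (0 : ℂ) (2 * R) := by
      rw [mem_closedBall_zero_iff]; exact hxR.2
    simp only [hK, hEr, hed, indicator_of_mem hx, indicator_of_mem hxb]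
    have hd := hd2 R hR x
    have hmx : f1 x ^ 2 + f2 x ^ 2 ≤ m x := hm x hx
    have hVx := hV x hx
    set a := |v x| with ha
    set d1 := φ' R x t1
    set d2 := φ' R x t2
    have ha0 : 0 ≤ a := abs_nonneg _
    have hφ0 := (h01 x).1
    -- `|∑ dᵢ fᵢ| ≤ (1/2) (θ ∑ fᵢ² + θ⁻¹ ∑ dᵢ²)` with a suitable weight
    have key : -((2 * φ R x * d1) * ((v x * a) * f1 x) + (2 * φ R x * d2) * ((v x * a) * f2 x)) ≤
        s * (φ R x ^ 2 * (a * (f1 x ^ 2 + f2 x ^ 2))) + s⁻¹ * (a ^ 3 * (d1 ^ 2 + d2 ^ 2)) := by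
      have hva : v x ^ 2 = a ^ 2 := by rw [ha, sq_abs]
      have h1 : 0 ≤ a * s⁻¹ * ((s * φ R x * f1 x + v x * d1) ^ 2 +
          (s * φ R x * f2 x + v x * d2) ^ 2) := by positivity
      have h2 : a * s⁻¹ * ((s * φ R x * f1 x + v x * d1) ^ 2 +
          (s * φ R x * f2 x + v x * d2) ^ 2) =
        s * (φ R x ^ 2 * (a * (f1 x ^ 2 + f2 x ^ 2))) + s⁻¹ * (a * v x ^ 2 * (d1 ^ 2 + d2 ^ 2)) +
        ((2 * φ R x * d1) * ((v x * a) * f1 x) + (2 * φ R x * d2) * ((v x * a) * f2 x)) := by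
        field_simp; ring
      rw [hva] at h2
      have : a * a ^ 2 = a ^ 3 := by ring
      rw [this] at h2
      linarith
    refine key.trans ?_
    gcongr
  have pt2 : ∀ R, 0 < R → ∀ s, 0 < s → ∀ x, K R x ≤
      s * (φ (2 * R) x ^ 2 * e x - φ (R / 2) x ^ 2 * e x) + s⁻¹ * Er R x := by
    intro R hR s hs x
    obtain ⟨-, -, -, -, h01, -, zz, -, -, -⟩ := hφ R hR
    obtain ⟨-, -, -, -, g01, g1, -, -, -, -⟩ := hφ (2 * R) (by positivity)
    obtain ⟨-, -, -, -, k01, -, k0, -, -, -⟩ := hφ (R / 2) (by positivity)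
    have hEr0 : 0 ≤ Er R x := indicator_nonneg (fun _ _ => by positivity) x
    have hex := he0 x
    rcases lt_or_ge (‖x‖) R with h | h
    · rw [(pt R hR s hs x).2 (Or.inl h), g1 x (by linarith)]
      have := pow_le_one₀ (n := 2) (k01 x).1 (k01 x).2
      have h2 : 0 ≤ 1 ^ 2 * e x - φ (R / 2) x ^ 2 * e x := by nlinarith
      positivity
    · rw [k0 x (by linarith)]
      rcases lt_or_ge (2 * R) ‖x‖ with h' | h'
      · rw [(pt R hR s hs x).2 (Or.inr h')]
        have : 0 ≤ φ (2 * R) x ^ 2 * e x - 0 ^ 2 * e x := by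
          have : 0 ≤ φ (2 * R) x ^ 2 * e x := by positivity
          linarith
        positivity
      · refine (pt R hR s hs x).1.trans ?_
        rw [g1 x h']
        have := pow_le_one₀ (n := 2) (h01 x).1 (h01 x).2
        have : φ R x ^ 2 * e x ≤ 1 ^ 2 * e x - 0 ^ 2 * e x := by nlinarith
        gcongr
  have iK : ∀ R, 0 < R → Integrable (K R) := fun R hR => (basic R hR).2
  have est1 : ∀ R, 0 < R → P R ≤ C0 := by
    intro R hR
    have h1 : ∫ x, K R x ≤ ∫ x, ((1 : ℝ) * (φ R x ^ 2 * e x) + 1⁻¹ * Er R x) :=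
      integral_mono (iK R hR) (((iP R hR).const_mul 1).add ((iEr R hR).const_mul _))
        fun x => (pt R hR 1 one_pos x).1
    rw [integral_add ((iP R hR).const_mul 1) ((iEr R hR).const_mul _), integral_const_mul,
      integral_const_mul, eEr R hR, ← (basic R hR).1] at h1
    have : 2 * P R ≤ 1 * P R + 1⁻¹ * C0 := h1
    linarith
  have est2 : ∀ R, 0 < R → ∀ s, 0 < s → 2 * P R ≤ s * (P (2 * R) - P (R / 2)) + s⁻¹ * C0 := by
    intro R hR s hs
    have j1 := iP (2 * R) (by positivity)
    have j2 := iP (R / 2) (by positivity)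
    have j12 : Integrable fun x => φ (2 * R) x ^ 2 * e x - φ (R / 2) x ^ 2 * e x := j1.sub j2
    have h1 : ∫ x, K R x ≤ ∫ x, (s * (φ (2 * R) x ^ 2 * e x - φ (R / 2) x ^ 2 * e x) +
        s⁻¹ * Er R x) :=
      integral_mono (iK R hR) ((j12.const_mul s).add ((iEr R hR).const_mul _))
        fun x => pt2 R hR s hs x
    rw [integral_add (j12.const_mul s) ((iEr R hR).const_mul _), integral_const_mul,
      integral_const_mul, eEr R hR, ← (basic R hR).1, integral_sub j1 j2] at h1
    exact h1
  have mono : ∀ R, 0 < R → P R ≤ P (2 * R) := by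
    intro R hR
    refine integral_mono (iP R hR) (iP (2 * R) (by positivity)) fun x => ?_
    obtain ⟨-, -, -, -, h01, -, zz, -, -, -⟩ := hφ R hR
    obtain ⟨-, -, -, -, g01, g1, -, -, -, -⟩ := hφ (2 * R) (by positivity)
    have hex := he0 x
    simp only []
    rcases le_or_gt (‖x‖) (2 * R) with h | h
    · rw [g1 x h]
      have := pow_le_one₀ (n := 2) (h01 x).1 (h01 x).2
      nlinarith
    · rw [zz x h.le]
      have := (g01 x).1
      have : 0 ≤ φ (2 * R) x ^ 2 * e x := by positivity
      linarith
  have P0 : ∀ R, 0 ≤ P R := fun R => integral_nonneg fun x => mul_nonneg (sq_nonneg _) (he0 x)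
  set a : ℕ → ℝ := fun k => P (2 ^ k) with had
  have amono : Monotone a := monotone_nat_of_le_succ fun k => by
    have := mono (2 ^ k) (by positivity)
    rwa [← pow_succ'] at this
  have abdd : BddAbove (range a) := ⟨C0, by rintro _ ⟨k, rfl⟩; exact est1 _ (by positivity)⟩
  have alim := tendsto_atTop_ciSup amono abdd
  set ℓ := ⨆ i, a i with hℓ
  have hℓs : ∀ s, 0 < s → 2 * ℓ ≤ s⁻¹ * C0 := by
    intro s hs
    have e1 : ∀ k, 2 * a (k + 1) ≤ s * (a (k + 2) - a k) + s⁻¹ * C0 := fun k => by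
      have := est2 (2 ^ (k + 1)) (by positivity) s hs
      have e1 : (2 : ℝ) * 2 ^ (k + 1) = 2 ^ (k + 2) := by ring
      have e2 : (2 : ℝ) ^ (k + 1) / 2 = 2 ^ k := by rw [pow_succ]; ring
      rwa [e1, e2] at this
    have l1 : Tendsto (fun k => a (k + 1)) atTop (𝓝 ℓ) := (tendsto_add_atTop_iff_nat 1).2 alim
    have l2 : Tendsto (fun k => a (k + 2)) atTop (𝓝 ℓ) := (tendsto_add_atTop_iff_nat 2).2 alim
    have := le_of_tendsto_of_tendsto (l1.const_mul 2)
      (((l2.sub alim).const_mul s).add_const (s⁻¹ * C0)) (Eventually.of_forall e1)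
    simpa using this
  have hℓ0 : ℓ ≤ 0 := by
    by_contra hc
    push Not at hc
    have := hℓs ((C0 + 1) / ℓ) (by positivity)
    rw [inv_div, div_mul_eq_mul_div, le_div_iff₀ (by positivity)] at this
    nlinarith
  intro x hx
  obtain ⟨k, hk⟩ := pow_unbounded_of_one_lt ‖x‖ (one_lt_two (α := ℝ))
  have hak : a k = 0 := le_antisymm ((le_ciSup abdd k).trans hℓ0) (P0 _)
  by_contra hne'
  have hpos : (0 : ℝ) < 2 ^ k := by positivity
  set F : ℂ → ℝ := fun x => φ (2 ^ k) x ^ 2 * e x with hF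
  have hFc : Continuous F := ((cφ _ hpos).pow 2).mul ce
  have hFs : HasCompactSupport F := (cs2 _ hpos).mul_right
  have hF0 : 0 ≤ F := fun x => mul_nonneg (sq_nonneg _) (he0 x)
  have hFx : F x ≠ 0 := by
    rw [hF]
    simp only []
    rw [(hφ _ hpos).2.2.2.2.2.1 x hk.le, hed, indicator_of_mem hx, one_pow, one_mul]
    exact hne'
  have hpos' := hFc.integral_pos_of_hasCompactSupport_nonneg_nonzero (μ := volume) hFs hF0 hFx
  exact absurd hak hpos'.ne'

end

section
open MeasureTheory

/-! ### Bernstein's theorem for bounded gradients -/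

/-- Strict monotonicity of the map `q ↦ q / √(1 + |q|²)`. -/
lemma monotone_alg (a b a' b' : ℝ) :
    ((a' * (√(1 + a' ^ 2 + b' ^ 2))⁻¹ - a * (√(1 + a ^ 2 + b ^ 2))⁻¹) ^ 2 +
      (b' * (√(1 + a' ^ 2 + b' ^ 2))⁻¹ - b * (√(1 + a ^ 2 + b ^ 2))⁻¹) ^ 2 ≤
    (a' - a) * (a' * (√(1 + a' ^ 2 + b' ^ 2))⁻¹ - a * (√(1 + a ^ 2 + b ^ 2))⁻¹) +
      (b' - b) * (b' * (√(1 + a' ^ 2 + b' ^ 2))⁻¹ - b * (√(1 + a ^ 2 + b ^ 2))⁻¹)) ∧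
    ((a' - a) * (a' * (√(1 + a' ^ 2 + b' ^ 2))⁻¹ - a * (√(1 + a ^ 2 + b ^ 2))⁻¹) +
      (b' - b) * (b' * (√(1 + a' ^ 2 + b' ^ 2))⁻¹ - b * (√(1 + a ^ 2 + b ^ 2))⁻¹) = 0 →
      a = a' ∧ b = b') := by
  set W := √(1 + a ^ 2 + b ^ 2) with hW
  set W' := √(1 + a' ^ 2 + b' ^ 2) with hW'
  have h1 : W ^ 2 = 1 + a ^ 2 + b ^ 2 := Real.sq_sqrt (by positivity)
  have h1' : W' ^ 2 = 1 + a' ^ 2 + b' ^ 2 := Real.sq_sqrt (by positivity)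
  have g : 1 ≤ W := Real.one_le_sqrt.2 (by nlinarith [sq_nonneg a, sq_nonneg b])
  have g' : 1 ≤ W' := Real.one_le_sqrt.2 (by nlinarith [sq_nonneg a', sq_nonneg b'])
  have hWp : 0 < W := by linarith
  have hWp' : 0 < W' := by linarith
  set n := W⁻¹ with hn
  set n' := W'⁻¹ with hn'
  have e : W * n = 1 := mul_inv_cancel₀ hWp.ne'
  have e' : W' * n' = 1 := mul_inv_cancel₀ hWp'.ne'
  have u : (a * n) ^ 2 + (b * n) ^ 2 + n ^ 2 = 1 := by
    have : (a * n) ^ 2 + (b * n) ^ 2 + n ^ 2 = (W * n) ^ 2 := by rw [mul_pow W n, h1]; ring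
    rw [this, e]; norm_num
  have u' : (a' * n') ^ 2 + (b' * n') ^ 2 + n' ^ 2 = 1 := by
    have : (a' * n') ^ 2 + (b' * n') ^ 2 + n' ^ 2 = (W' * n') ^ 2 := by rw [mul_pow W' n', h1']; ring
    rw [this, e']; norm_num
  have hm : (a' - a) * (a' * n' - a * n) + (b' - b) * (b' * n' - b * n) = (W + W') / 2 *
      ((a' * n' - a * n) ^ 2 + (b' * n' - b * n) ^ 2 + (n' - n) ^ 2) := by
    have ea : a = W * (a * n) := by linear_combination (-a) * e
    have eb : b = W * (b * n) := by linear_combination (-b) * e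
    have ea' : a' = W' * (a' * n') := by linear_combination (-a') * e'
    have eb' : b' = W' * (b' * n') := by linear_combination (-b') * e'
    set A := a * n
    set B := b * n
    set A' := a' * n'
    set B' := b' * n'
    rw [ea, eb, ea', eb']
    linear_combination (n' - n) * e - (n' - n) * e' + (W + W') / 2 * (u - u) +
      (W - W') / 2 * (u - u')
  rw [hm]
  constructor
  · nlinarith [sq_nonneg (n' - n), sq_nonneg (a' * n' - a * n), sq_nonneg (b' * n' - b * n)]
  · intro h0
    have h2 : (a' * n' - a * n) ^ 2 + (b' * n' - b * n) ^ 2 + (n' - n) ^ 2 = 0 := by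
      rcases mul_eq_zero.1 h0 with h | h
      · linarith
      · exact h
    have k1 := sq_nonneg (n' - n)
    have k2 := sq_nonneg (a' * n' - a * n)
    have k3 := sq_nonneg (b' * n' - b * n)
    have z1 : a' * n' - a * n = 0 := (pow_eq_zero_iff two_ne_zero).1 (by linarith)
    have z2 : b' * n' - b * n = 0 := (pow_eq_zero_iff two_ne_zero).1 (by linarith)
    have z3 : n' - n = 0 := (pow_eq_zero_iff two_ne_zero).1 (by linarith)
    have hnp : n ≠ 0 := by positivity
    have z4 : n' = n := by linarith
    rw [z4] at z1 z2
    constructor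
    · refine mul_right_cancel₀ hnp ?_; linarith
    · refine mul_right_cancel₀ hnp ?_; linarith

lemma hasDerivAt_inv_sqrt {s : ℝ} (hs : 0 < s) :
    HasDerivAt (fun s : ℝ => (√s)⁻¹) (-(1 / 2) * (√s)⁻¹ ^ 3) s := by
  have h := (Real.hasDerivAt_sqrt hs.ne').inv (Real.sqrt_pos.2 hs).ne'
  refine h.congr_deriv ?_
  have := (Real.sqrt_pos.2 hs).ne'
  field_simp

/-- Derivative of a component of `q / √(1 + |q|²)`. -/
lemma hasFDeriv_comp {A : Set ℂ} {q1 q2 : ℂ → ℝ} {d1 d2 : ℂ →L[ℝ] ℝ} {x : ℂ}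
    (h1 : HasFDerivWithinAt q1 d1 A x) (h2 : HasFDerivWithinAt q2 d2 A x) :
    HasFDerivWithinAt (fun x => q1 x * (√(1 + q1 x ^ 2 + q2 x ^ 2))⁻¹)
      (q1 x • ((-(1 / 2) * (√(1 + q1 x ^ 2 + q2 x ^ 2))⁻¹ ^ 3) •
        ((2 * q1 x) • d1 + (2 * q2 x) • d2)) + (√(1 + q1 x ^ 2 + q2 x ^ 2))⁻¹ • d1) A x := by
  have s1 : HasFDerivWithinAt (fun x => 1 + q1 x ^ 2 + q2 x ^ 2)
      ((2 * q1 x) • d1 + (2 * q2 x) • d2) A x := by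
    have := ((h1.pow 2).const_add 1).add (h2.pow 2)
    refine this.congr_fderiv ?_
    simp
  have s2 := (hasDerivAt_inv_sqrt (s := 1 + q1 x ^ 2 + q2 x ^ 2)
    (by positivity)).comp_hasFDerivWithinAt x s1
  exact h1.mul s2

/-- The divergence of `q / √(1 + |q|²)` is the mean curvature operator. -/
lemma div_identity (q1 q2 s11 s12 s22 : ℝ) :
    (q1 * ((-(1 / 2) * (√(1 + q1 ^ 2 + q2 ^ 2))⁻¹ ^ 3) * (2 * q1 * s11 + 2 * q2 * s12)) +
      (√(1 + q1 ^ 2 + q2 ^ 2))⁻¹ * s11) +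
    (q2 * ((-(1 / 2) * (√(1 + q1 ^ 2 + q2 ^ 2))⁻¹ ^ 3) * (2 * q1 * s12 + 2 * q2 * s22)) +
      (√(1 + q1 ^ 2 + q2 ^ 2))⁻¹ * s22) =
    ((1 + q2 ^ 2) * s11 - 2 * q1 * q2 * s12 + (1 + q1 ^ 2) * s22) *
      (√(1 + q1 ^ 2 + q2 ^ 2))⁻¹ ^ 3 := by
  have h : (√(1 + q1 ^ 2 + q2 ^ 2))⁻¹ = (1 + q1 ^ 2 + q2 ^ 2) * (√(1 + q1 ^ 2 + q2 ^ 2))⁻¹ ^ 3 := by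
    have h1 : √(1 + q1 ^ 2 + q2 ^ 2) ≠ 0 := by positivity
    have h2 : √(1 + q1 ^ 2 + q2 ^ 2) ^ 2 = 1 + q1 ^ 2 + q2 ^ 2 := Real.sq_sqrt (by positivity)
    field_simp
    exact h2
  linear_combination (s11 + s22) * h

/-- **Bernstein's theorem** for solutions with bounded gradient, in the whole plane or in a half plane
with zero boundary values, up to a linear change of variables. -/
theorem bernstein {A : Set ℂ} {γ M L μ : ℝ} {c0 : ℂ} {T0 : ℂ →L[ℝ] ℂ} {J : Jet} (hγ : 0 < γ)
    (hA : IsClosed A) (hconv : Convex ℝ A) (hIn : (interior A).Nonempty) (hc0 : ‖c0‖ = 1)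
    (hsh : ∀ s : ℝ, ∀ x ∈ A, x + s • (Complex.I * c0) ∈ A)
    (hshf : ∀ s : ℝ, ∀ x ∈ frontier A, x + s • (Complex.I * c0) ∈ frontier A)
    (hJ : TaylorOn A γ M J) (hp : ∀ x ∈ A, ‖J.p x‖ ≤ L) (hw : ∀ x ∈ frontier A, J.w x = 0)
    (hμ : 0 < μ) (hell : ∀ s t : ℝ, μ * (s ^ 2 + t ^ 2) ≤
      (s * (T0 1).re + t * (T0 1).im) ^ 2 + (s * (T0 Complex.I).re + t * (T0 Complex.I).im) ^ 2)
    (heq : ∀ x ∈ A, Phi (pullP T0 (J.p x)) ((J.S x).bilinearComp T0 T0) = 0) :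
    ∀ x ∈ A, J.S x = 0 := by
  set t1 := T0 1 with ht1
  set t2 := T0 Complex.I with ht2
  -- a functional vanishing on the range of `T0` is zero
  have hsurj : ∀ q : ℂ →L[ℝ] ℝ, q t1 = 0 → q t2 = 0 → q = 0 := by
    intro q h1 h2
    have h := hell (q 1) (q Complex.I)
    rw [clm_decomp q t1] at h1
    rw [clm_decomp q t2] at h2
    simp only [smul_eq_mul] at h1 h2
    have e1 : q 1 * t1.re + q Complex.I * t1.im = 0 := by linarith
    have e2 : q 1 * t2.re + q Complex.I * t2.im = 0 := by linarith
    rw [e1, e2] at h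
    have k1 := sq_nonneg (q 1)
    have k2 := sq_nonneg (q Complex.I)
    have h3 : (q 1) ^ 2 + (q Complex.I) ^ 2 ≤ 0 := by
      by_contra hc
      push Not at hc
      have := mul_pos hμ hc
      linarith
    have z1 : q 1 = 0 := (pow_eq_zero_iff two_ne_zero).1 (by linarith)
    have z2 : q Complex.I = 0 := (pow_eq_zero_iff two_ne_zero).1 (by linarith)
    ext a
    rw [clm_decomp q a, z1, z2]
    simp
  have cS : ContinuousOn J.S A := by
    intro x hx
    rw [ContinuousWithinAt, tendsto_iff_norm_sub_tendsto_zero]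
    have h1 : Tendsto (fun y : ℂ => M * ‖y - x‖ ^ γ) (𝓝[A] x) (𝓝 0) := by
      have : Tendsto (fun y : ℂ => M * ‖y - x‖ ^ γ) (𝓝 x) (𝓝 (M * ‖x - x‖ ^ γ)) :=
        (continuous_const.mul (((continuous_id.sub continuous_const).norm).rpow_const
          (fun _ => Or.inr hγ.le))).tendsto x
      rw [sub_self, norm_zero, Real.zero_rpow hγ.ne', mul_zero] at this
      exact this.mono_left nhdsWithin_le_nhds
    refine squeeze_zero' (Eventually.of_forall fun y => norm_nonneg _) ?_ h1
    filter_upwards [self_mem_nhdsWithin] with y hy using hJ.t2 x hx y hy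
  have cp : ContinuousOn J.p A := fun x hx => (hJ.hasFDeriv_p hγ hx).continuousWithinAt
  -- the gradient is invariant under translations along the boundary
  have key : ∀ s : ℝ, ∀ x ∈ A, J.p (x + s • (Complex.I * c0)) = J.p x := by
    intro s
    set τ := s • (Complex.I * c0) with hτ
    have shd : ∀ x : ℂ, HasFDerivWithinAt (fun y : ℂ => y + τ) (ContinuousLinearMap.id ℝ ℂ) A x :=
      fun x => (hasFDerivWithinAt_id x A).add_const τ
    have csh : ContinuousOn (fun y : ℂ => y + τ) A := (continuous_id.add continuous_const).continuousOn
    have msh : MapsTo (fun y : ℂ => y + τ) A A := fun x hx => hsh s x hx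
    set v : ℂ → ℝ := fun x => J.w (x + τ) - J.w x with hvd
    have hv : ∀ x ∈ A, HasFDerivWithinAt v (J.p (x + τ) - J.p x) A x := fun x hx => by
      have := (hJ.hasFDeriv_w hγ (hsh s x hx)).comp x (shd x) msh
      exact this.sub (hJ.hasFDeriv_w hγ hx)
    have hq : ∀ (t : ℂ), ∀ x ∈ A, HasFDerivWithinAt (fun x => J.p x t) ((J.S x).flip t) A x :=
      fun t x hx => by
        have := (hJ.hasFDeriv_p hγ hx).clm_apply (hasFDerivWithinAt_const t x A)
        refine this.congr_fderiv ?_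
        ext a
        simp
    -- derivatives of the components of the normalised gradient
    set dα : ℂ → ℂ → ℂ → ℂ →L[ℝ] ℝ := fun t t' x =>
      (J.p x t) • ((-(1 / 2) * (√(1 + J.p x t ^ 2 + J.p x t' ^ 2))⁻¹ ^ 3) •
        ((2 * J.p x t) • (J.S x).flip t + (2 * J.p x t') • (J.S x).flip t')) +
        (√(1 + J.p x t ^ 2 + J.p x t' ^ 2))⁻¹ • (J.S x).flip t with hdα
    set α : ℂ → ℂ → ℂ → ℝ := fun t t' x => J.p x t * (√(1 + J.p x t ^ 2 + J.p x t' ^ 2))⁻¹ with hα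
    have hαd : ∀ t t', ∀ x ∈ A, HasFDerivWithinAt (α t t') (dα t t' x) A x := fun t t' x hx =>
      hasFDeriv_comp (hq t x hx) (hq t' x hx)
    have cq : ∀ t, ContinuousOn (fun x => J.p x t) A := fun t => cp.clm_apply continuousOn_const
    have cSf : ∀ t, ContinuousOn (fun x => (J.S x).flip t) A := fun t =>
      (((ContinuousLinearMap.flipₗᵢ ℝ ℂ ℂ ℝ).continuous.comp_continuousOn cS).clm_apply
        continuousOn_const)
    have cdα : ∀ t t', ContinuousOn (dα t t') A := fun t t' => by
      have cW0 : ContinuousOn (fun x => √(1 + J.p x t ^ 2 + J.p x t' ^ 2)) A :=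
        ((continuousOn_const.add ((cq t).pow 2)).add ((cq t').pow 2)).sqrt
      have hW0 : ∀ x ∈ A, √(1 + J.p x t ^ 2 + J.p x t' ^ 2) ≠ 0 := fun x _ =>
        (Real.sqrt_pos.2 (by positivity)).ne'
      have cW := cW0.inv₀ hW0
      exact ((cq t).smul ((continuousOn_const.mul (cW.pow 3)).smul
        (((continuousOn_const.mul (cq t)).smul (cSf t)).add
          ((continuousOn_const.mul (cq t')).smul (cSf t'))))).add (cW.smul (cSf t))
    have hf : ∀ t t', ∀ x ∈ A, HasFDerivWithinAt (fun x => α t t' (x + τ) - α t t' x)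
        (dα t t' (x + τ) - dα t t' x) A x := fun t t' x hx => by
      have := (hαd t t' (x + τ) (hsh s x hx)).comp x (shd x) msh
      exact this.sub (hαd t t' x hx)
    have cf : ∀ t t', ContinuousOn (fun x => dα t t' (x + τ) - dα t t' x) A := fun t t' =>
      ((cdα t t').comp csh msh).sub (cdα t t')
    have hdiv : ∀ x ∈ A, dα t1 t2 x t1 + dα t2 t1 x t2 = 0 := by
      intro x hx
      have h1 := heq x hx
      simp only [Phi, pullP, ContinuousLinearMap.comp_apply,
        ContinuousLinearMap.bilinearComp_apply] at h1
      rw [← ht1, ← ht2] at h1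
      rw [← div_identity] at h1
      simp only [hdα, add_apply, smul_apply, smul_eq_mul, ContinuousLinearMap.flip_apply]
      rw [hJ.sym x hx t2 t1, add_right_comm 1 (J.p x t2 ^ 2)]
      rw [← h1, hJ.sym x hx t1 t2]
      ring
    have hvb : ∀ x ∈ A, |v x| ≤ L * ‖τ‖ := by
      intro x hx
      have := hconv.norm_image_sub_le_of_norm_hasFDerivWithin_le
        (fun y hy => hJ.hasFDeriv_w hγ hy) hp hx (hsh s x hx)
      rw [Real.norm_eq_abs, add_sub_cancel_left] at this
      exact this
    have cac := caccioppoli (t1 := t1) (t2 := t2) hA hv (hf t1 t2) (hf t2 t1)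
      ((cp.comp csh msh).sub cp) (cf t1 t2) (cf t2 t1)
      (fun x hx => by
        show J.w (x + τ) - J.w x = 0
        rw [hw x hx, hw _ (hshf s x hx), sub_self]) hvb (by
        intro x hx
        have := (monotone_alg (J.p x t1) (J.p x t2) (J.p (x + τ) t1) (J.p (x + τ) t2)).1
        simp only [hα, sub_apply]
        rw [add_right_comm 1 (J.p x t2 ^ 2), add_right_comm 1 (J.p (x + τ) t2 ^ 2)]
        exact this) (by
        intro x hx
        simp only [sub_apply]
        have h1 := hdiv x hx
        have h2 := hdiv (x + τ) (hsh s x hx)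
        linarith)
    have hDv : ∀ x ∈ A, v x = 0 ∨ J.p (x + τ) - J.p x = 0 := by
      intro x hx
      rcases mul_eq_zero.1 (cac x hx) with h | h
      · exact Or.inl (abs_eq_zero.1 h)
      · right
        have := (monotone_alg (J.p x t1) (J.p x t2) (J.p (x + τ) t1) (J.p (x + τ) t2)).2
        simp only [hα, sub_apply] at h
        rw [add_right_comm 1 (J.p x t2 ^ 2), add_right_comm 1 (J.p (x + τ) t2 ^ 2)] at h
        obtain ⟨e1, e2⟩ := this h
        refine hsurj _ ?_ ?_
        · rw [sub_apply, e1, sub_self]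
        · rw [sub_apply, e2, sub_self]
    have hconst : ∀ x ∈ A, ∀ y ∈ A, v x * |v x| = v y * |v y| := by
      intro x hx y hy
      have := hconv.norm_image_sub_le_of_norm_hasFDerivWithin_le (C := 0)
        (f := fun x => v x * |v x|) (f' := fun x => (2 * |v x|) • (J.p (x + τ) - J.p x))
        (fun z hz => (hasDerivAt_mul_abs (v z)).comp_hasFDerivWithinAt z (hv z hz))
        (fun z hz => by rcases hDv z hz with h | h <;> simp [h]) hx hy
      rw [zero_mul] at this
      have := norm_le_zero_iff.1 this
      linarith
    have hdich : (∀ x ∈ A, v x = 0) ∨ ∀ x ∈ A, v x ≠ 0 := by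
      by_cases h : ∃ x ∈ A, v x = 0
      · obtain ⟨x, hx, hx0⟩ := h
        left
        intro y hy
        have := hconst x hx y hy
        rw [hx0, zero_mul] at this
        rcases mul_eq_zero.1 this.symm with h | h
        · exact h
        · exact abs_eq_zero.1 h
      · push Not at h
        exact Or.inr h
    intro x hx
    rcases hdich with h | h
    · have h1 : HasFDerivWithinAt v (0 : ℂ →L[ℝ] ℝ) A x :=
        (hasFDerivWithinAt_const (0 : ℝ) x A).congr h (h x hx)
      exact sub_eq_zero.1 ((uniqueDiffOn_convex hconv hIn x hx).eq (hv x hx) h1)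
    · exact sub_eq_zero.1 ((hDv x hx).resolve_left (h x hx))
  intro x hx
  -- the Hessian annihilates the tangential direction
  have hS : J.S x (Complex.I * c0) = 0 := by
    have hx0 : x + (0 : ℝ) • (Complex.I * c0) = x := by rw [zero_smul, add_zero]
    have h1 : HasDerivAt (fun s : ℝ => x + s • (Complex.I * c0)) (Complex.I * c0) 0 := by
      have := ((hasDerivAt_id (0 : ℝ)).smul_const (Complex.I * c0)).const_add x
      rwa [one_smul] at this
    have h2 : HasFDerivWithinAt J.p (J.S x) A (x + (0 : ℝ) • (Complex.I * c0)) := by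
      rw [hx0]; exact hJ.hasFDeriv_p hγ hx
    have h3 := h2.comp_hasDerivWithinAt (0 : ℝ) (h1.hasDerivWithinAt (s := univ))
      (fun s _ => hsh s x hx)
    have h4 : HasDerivWithinAt (J.p ∘ fun s : ℝ => x + s • (Complex.I * c0)) 0 univ 0 :=
      (hasDerivWithinAt_const (0 : ℝ) univ (J.p x)).congr (fun s _ => key s x hx) (key 0 x hx)
    exact (hasDerivWithinAt_univ.1 h3).unique (hasDerivWithinAt_univ.1 h4)
  have hc : c0.re ^ 2 + c0.im ^ 2 = 1 := by
    have := Complex.sq_norm c0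
    rw [hc0, Complex.normSq_apply] at this
    linarith
  have hdec : ∀ a : ℂ, a = dt c0 a • c0 + dt (Complex.I * c0) a • (Complex.I * c0) := by
    intro a
    apply Complex.ext
    · simp [dt]; linear_combination (-a.re) * hc
    · simp [dt]; linear_combination (-a.im) * hc
  set φ0 : ℂ →L[ℝ] ℝ := c0.re • Complex.reCLM + c0.im • Complex.imCLM with hφ0
  have hφ : ∀ a, φ0 a = dt c0 a := fun a => by simp [hφ0, dt]
  set k := J.S x c0 c0 with hk
  have hSx : ∀ a b, J.S x a b = k * (φ0 a * φ0 b) := by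
    intro a b
    have hS' : ∀ d, J.S x d (Complex.I * c0) = 0 := fun d => by
      rw [hJ.sym x hx d, hS, zero_apply]
    rw [hφ, hφ]
    conv_lhs => rw [hdec a, hdec b]
    simp only [map_add, map_smul, add_apply, smul_apply, hS, hS', zero_apply, smul_eq_mul]
    rw [← hk]
    ring
  have hPhi := heq x hx
  set q := pullP T0 (J.p x) with hq
  have e1 : Phi q ((J.S x).bilinearComp T0 T0) = k * Phi q (tens (φ0.comp T0) (φ0.comp T0)) := by
    simp only [Phi, ContinuousLinearMap.bilinearComp_apply, hSx, tens_apply,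
      ContinuousLinearMap.comp_apply]
    ring
  rw [e1] at hPhi
  have hlow := Phi_tens_lower q (φ0.comp T0) (L := 1 + (q 1) ^ 2 + (q Complex.I) ^ 2)
    (by nlinarith [sq_nonneg (q 1), sq_nonneg (q Complex.I)]) (by positivity)
  have h5 := hell c0.re c0.im
  rw [hc, mul_one] at h5
  have h6 : 0 < Phi q (tens (φ0.comp T0) (φ0.comp T0)) := by
    refine lt_of_lt_of_le ?_ hlow
    have h7 : 0 < (φ0.comp T0) 1 ^ 2 + (φ0.comp T0) Complex.I ^ 2 := by
      simp only [ContinuousLinearMap.comp_apply, hφ, dt]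
      exact lt_of_lt_of_le hμ h5
    positivity
  have hk0 : k = 0 := (mul_eq_zero.1 hPhi).resolve_right h6.ne'
  ext a b
  rw [hSx, hk0]
  simp

end

section
open MeasureTheory

/-! ### Blow-up of Hessians at fixed gradient -/

/-- The rescaling of a jet field which preserves gradients. -/
def blow1 (J : Jet) (c : ℂ) (r : ℝ) : Jet where
  w ζ := r⁻¹ * (J.w (c + r • ζ) - J.w c)
  p ζ := J.p (c + r • ζ)
  S ζ := r • J.S (c + r • ζ)

/-- At the scale `r = M ^ (-1 / (1 + γ))` the Taylor constant becomes `1`. -/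
lemma blow1_taylor {A : Set ℂ} {γ M : ℝ} {J : Jet} (hJ : TaylorOn A γ M J) {c : ℂ}
    {r : ℝ} (hr : 0 < r) (hM : M * r ^ (1 + γ) = 1) :
    TaylorOn {ζ | c + r • ζ ∈ A} γ 1 (blow1 J c r) := by
  have hn := norm_scale_rpow (c := c) hr
  have hd := scale_sub (c := c) (r := r)
  have r1 : r ^ (1 + γ) = r * r ^ γ := by rw [Real.rpow_add hr, Real.rpow_one]
  have r2 : r ^ (2 + γ) = r * (r * r ^ γ) := by rw [Real.rpow_add hr, Real.rpow_two]; ring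
  rw [r1] at hM
  refine ⟨fun ζ hζ η hη => ?_, fun ζ hζ η hη => ?_, fun ζ hζ η hη => ?_, fun ζ hζ h k => ?_⟩
  · have h := hJ.t0 _ hζ _ hη
    rw [hn, r2, hd] at h
    simp only [map_smul, smul_apply, smul_eq_mul] at h
    simp only [blow1, smul_apply, smul_eq_mul]
    have e : r⁻¹ * (J.w (c + r • η) - J.w c) - r⁻¹ * (J.w (c + r • ζ) - J.w c) -
        J.p (c + r • ζ) (η - ζ) - 1 / 2 * (r * J.S (c + r • ζ) (η - ζ) (η - ζ)) =
        r⁻¹ * (J.w (c + r • η) - J.w (c + r • ζ) - r * J.p (c + r • ζ) (η - ζ) -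
          1 / 2 * (r * (r * J.S (c + r • ζ) (η - ζ) (η - ζ)))) := by
      field_simp; ring
    rw [e, abs_mul, abs_of_pos (inv_pos.2 hr), inv_mul_le_iff₀ hr]
    refine h.trans (le_of_eq ?_)
    linear_combination (r * ‖η - ζ‖ ^ (2 + γ)) * hM
  · have h := hJ.t1 _ hζ _ hη
    rw [hn, r1, hd, map_smul] at h
    refine h.trans (le_of_eq ?_)
    linear_combination (‖η - ζ‖ ^ (1 + γ)) * hM
  · have h := hJ.t2 _ hζ _ hη
    rw [hn] at h
    simp only [blow1]
    rw [← smul_sub, norm_smul, Real.norm_of_nonneg hr.le]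
    calc r * ‖J.S (c + r • η) - J.S (c + r • ζ)‖ ≤ r * (M * (r ^ γ * ‖η - ζ‖ ^ γ)) := by gcongr
      _ = 1 * ‖η - ζ‖ ^ γ := by linear_combination (‖η - ζ‖ ^ γ) * hM
  · simp only [blow1, smul_apply]
    rw [hJ.sym _ hζ]

lemma dt_add_smul_I (c0 x : ℂ) (s : ℝ) : dt c0 (x + s • (Complex.I * c0)) = dt c0 x := by
  simp [dt]; ring

lemma continuous_dt_right (c0 : ℂ) : Continuous (dt c0) := by
  unfold dt
  fun_prop

lemma Fop_scale (T Z p S) (r : ℝ) : Fop (T, r • Z, p, r • S) = r * Fop (T, Z, p, S) := by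
  simp only [Fop, Phi, pullS_apply, smul_apply, map_smul, smul_eq_mul]
  ring

/-- Solutions with bounded gradient have Hessian much smaller than the scale-invariant bound:
otherwise a blow-up would be a non-flat entire solution. -/
theorem hess_small (F : Ultrafilter ℕ) {γ μ R L : ℝ} (hγ : 0 < γ) (hμ : 0 < μ)
    {T : ℕ → ℂ → ℂ →L[ℝ] ℂ} {Z : ℕ → ℂ → ℂ →L[ℝ] ℂ →L[ℝ] ℂ} {J : ℕ → Jet} {H M : ℕ → ℝ}
    (hG : ∀ n, Geo γ μ R (T n) (Z n)) (hM0 : ∀ n, 0 < M n) (hM : Tendsto M F atTop)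
    (hJ : ∀ n, TaylorOn Dk γ (M n ^ (1 + γ)) (J n)) (h0 : ∀ n, ZeroBd (J n))
    (hS : ∀ n, ∀ z ∈ Dk, ‖(J n).S z‖ ≤ M n) (hp : ∀ n, ∀ z ∈ Dk, ‖(J n).p z‖ ≤ L)
    (hH : ∀ n, |H n| ≤ L) (heq : ∀ n, ∀ z ∈ Dk, Fop (yJ (T n) (Z n) (J n) z) = 2 * H n)
    {ε : ℝ} (hε : 0 < ε) : ∀ᶠ n in (F : Filter ℕ), ∀ z ∈ Dk, ‖(J n).S z‖ ≤ ε * M n := by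
  by_contra hcon
  rw [← Ultrafilter.eventually_not] at hcon
  have hex : ∀ n, ∃ x ∈ Dk, (¬ ∀ z ∈ Dk, ‖(J n).S z‖ ≤ ε * M n) → ε * M n < ‖(J n).S x‖ := by
    intro n
    by_cases h : ∀ z ∈ Dk, ‖(J n).S z‖ ≤ ε * M n
    · exact ⟨0, by simp [mem_Dk], fun h' => absurd h h'⟩
    · have h' := h
      push Not at h'
      obtain ⟨x, hx, hx'⟩ := h'
      exact ⟨x, hx, fun _ => hx'⟩
  choose x hx hxS using hex
  set r : ℕ → ℝ := fun n => (M n)⁻¹ with hr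
  have hrp : ∀ n, 0 < r n := fun n => inv_pos.2 (hM0 n)
  have hr0 : Tendsto r F (𝓝 0) := tendsto_inv_atTop_zero.comp hM
  obtain ⟨c, A, B, dom, hB⟩ := scale_dichotomy F hx hrp hr0
  set K : ℕ → Jet := fun n => blow1 (J n) (c n) (r n) with hK
  have hMr : ∀ n, M n ^ (1 + γ) * r n ^ (1 + γ) = 1 := fun n => by
    rw [← Real.mul_rpow (hM0 n).le (hrp n).le, mul_inv_cancel₀ (hM0 n).ne', Real.one_rpow]
  have hKT : ∀ n, TaylorOn {ζ | c n + r n • ζ ∈ Dk} γ 1 (K n) := fun n =>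
    blow1_taylor (hJ n) (hrp n) (hMr n)
  have hKS : ∀ n ζ, c n + r n • ζ ∈ Dk → ‖(K n).S ζ‖ ≤ 1 := fun n ζ hζ => by
    show ‖r n • (J n).S (c n + r n • ζ)‖ ≤ 1
    rw [norm_smul, Real.norm_of_nonneg (hrp n).le]
    calc r n * ‖(J n).S (c n + r n • ζ)‖ ≤ r n * M n :=
          mul_le_mul_of_nonneg_left (hS n _ hζ) (hrp n).le
      _ = 1 := inv_mul_cancel₀ (hM0 n).ne'
  have hKw : ∀ n ζ, c n + r n • ζ ∈ Dk → |(K n).w ζ| ≤ L * ‖ζ‖ := fun n ζ hζ => by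
    have h1 := convex_Dk.norm_image_sub_le_of_norm_hasFDerivWithin_le
      (fun y hy => (hJ n).hasFDeriv_w hγ hy) (hp n) (dom.cD n) hζ
    rw [add_sub_cancel_left, norm_smul, Real.norm_of_nonneg (hrp n).le, Real.norm_eq_abs] at h1
    show |(r n)⁻¹ * ((J n).w (c n + r n • ζ) - (J n).w (c n))| ≤ L * ‖ζ‖
    rw [abs_mul, abs_of_pos (inv_pos.2 (hrp n)), inv_mul_le_iff₀ (hrp n)]
    exact h1.trans (le_of_eq (by ring))
  choose! π hπ1 hπ2 using dom.app
  obtain ⟨K0, hK0, hlim⟩ := jet_limit F (An := fun n => {ζ | c n + r n • ζ ∈ Dk}) (K := K) (A := A)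
    hγ (Eventually.of_forall hKT) (fun n z => π z n) (fun z hz => ⟨hπ1 z hz, hπ2 z hz⟩) (by
      intro z hz
      refine ⟨L * (‖z‖ + 1) + L + 1, ?_⟩
      have h1 : ∀ᶠ n in (F : Filter ℕ), ‖π z n‖ < ‖z‖ + 1 :=
        (hπ2 z hz).norm.eventually_lt_const (by linarith)
      filter_upwards [hπ1 z hz, h1] with n h2 h3
      have hL : 0 ≤ L := (norm_nonneg _).trans (hp n _ h2)
      have k1 := hKw n _ h2
      have k2 : L * ‖π z n‖ ≤ L * (‖z‖ + 1) := by gcongr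
      have k3 : 0 ≤ L * (‖z‖ + 1) := by positivity
      have k4 : ‖(K n).p (π z n)‖ ≤ L := hp n _ h2
      have k5 := hKS n _ h2
      exact ⟨by linarith, by linarith, by linarith⟩)
  have : ProperSpace (ℂ →L[ℝ] ℂ) := FiniteDimensional.proper ℝ _
  obtain ⟨T0, hT0⟩ := ultra_lim F (f := fun n => T n (c n)) (B := R)
    (Eventually.of_forall fun n => (hG n).hT.1 _ (dom.cD n))
  have hTlim : ∀ (ζ : ℕ → ℂ) (z : ℂ), (∀ᶠ n in (F : Filter ℕ), c n + r n • ζ n ∈ Dk) →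
      Tendsto ζ F (𝓝 z) → Tendsto (fun n => T n (c n + r n • ζ n)) F (𝓝 T0) := by
    intro ζ z hζ hz
    have h1 : Tendsto (fun n => T n (c n + r n • ζ n) - T n (c n)) F (𝓝 0) := by
      have h3 : Tendsto (fun n => (r n * ‖ζ n‖) ^ γ) F (𝓝 ((0 * ‖z‖) ^ γ)) :=
        (hr0.mul hz.norm).rpow_const (Or.inr hγ.le)
      have h2 := h3.const_mul R
      rw [zero_mul, Real.zero_rpow hγ.ne', mul_zero] at h2
      refine squeeze_zero_norm' ?_ h2
      filter_upwards [hζ] with n hn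
      have := (hG n).hT.2 _ (dom.cD n) _ hn
      rwa [add_sub_cancel_left, norm_smul, Real.norm_of_nonneg (hrp n).le] at this
    have := h1.add hT0
    simpa using this
  have hell : ∀ s t : ℝ, μ * (s ^ 2 + t ^ 2) ≤
      (s * (T0 1).re + t * (T0 1).im) ^ 2 +
        (s * (T0 Complex.I).re + t * (T0 Complex.I).im) ^ 2 := by
    intro s t
    have happ : ∀ a : ℂ, Tendsto (fun n => T n (c n) a) F (𝓝 (T0 a)) := fun a =>
      ((ContinuousLinearMap.apply ℝ ℂ a).continuous.tendsto T0).comp hT0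
    have hre : ∀ a : ℂ, Tendsto (fun n => (T n (c n) a).re) F (𝓝 (T0 a).re) := fun a =>
      (Complex.continuous_re.tendsto _).comp (happ a)
    have him : ∀ a : ℂ, Tendsto (fun n => (T n (c n) a).im) F (𝓝 (T0 a).im) := fun a =>
      (Complex.continuous_im.tendsto _).comp (happ a)
    refine ge_of_tendsto (((((hre 1).const_mul s).add ((him 1).const_mul t)).pow 2).add
      ((((hre Complex.I).const_mul s).add ((him Complex.I).const_mul t)).pow 2)) ?_
    exact Eventually.of_forall fun n => (hG n).ell _ (dom.cD n) s t
  have hF : ∀ z ∈ A, Phi (pullP T0 (K0.p z)) ((K0.S z).bilinearComp T0 T0) = 0 := by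
    intro z hz
    obtain ⟨-, l1, l2⟩ := hlim z hz (π z) (hπ1 z hz) (hπ2 z hz)
    have l3 : Tendsto (fun n => r n • Z n (c n + r n • π z n)) F (𝓝 0) := by
      have h1 := hr0.mul_const R
      rw [zero_mul] at h1
      refine squeeze_zero_norm' ?_ h1
      filter_upwards [hπ1 z hz] with n hn
      rw [norm_smul, Real.norm_of_nonneg (hrp n).le]
      exact mul_le_mul_of_nonneg_left ((hG n).hZ.1 _ hn) (hrp n).le
    have l4 := (hTlim _ z (hπ1 z hz) (hπ2 z hz)).prodMk_nhds (l3.prodMk_nhds (l1.prodMk_nhds l2))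
    have l5 := ((contDiff_Fop (n := 0)).continuous.tendsto _).comp l4
    have l6 : Fop (T0, 0, K0.p z, K0.S z) = 0 := by
      refine tendsto_nhds_unique l5 ?_
      have h1 := hr0.mul_const (2 * L)
      rw [zero_mul] at h1
      refine squeeze_zero_norm' ?_ h1
      filter_upwards [hπ1 z hz] with n hn
      have e1 := heq n _ hn
      have e2 : Fop (T n (c n + r n • π z n), r n • Z n (c n + r n • π z n), (K n).p (π z n),
          (K n).S (π z n)) = r n * (2 * H n) := by
        rw [← e1]
        exact Fop_scale _ _ _ _ _
      show ‖Fop (T n (c n + r n • π z n), r n • Z n (c n + r n • π z n), (K n).p (π z n),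
          (K n).S (π z n))‖ ≤ _
      rw [e2, Real.norm_eq_abs, abs_mul, abs_mul, abs_of_pos (hrp n), abs_two]
      have := hrp n
      have := hH n
      gcongr
    rw [← l6]
    simp [Fop, Phi, pullS_apply]
  have hzero : ∀ z ∈ A, K0.S z = 0 := by
    have hpK : ∀ z ∈ A, ‖K0.p z‖ ≤ L := fun z hz =>
      le_of_tendsto (hlim z hz (π z) (hπ1 z hz) (hπ2 z hz)).2.1.norm (by
        filter_upwards [hπ1 z hz] with n hn using hp n _ hn)
    rcases dom.bd with hA | ⟨c0, hc0, hA, hcn, hbd0⟩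
    · refine bernstein (c0 := 1) (T0 := T0) hγ (by rw [hA]; exact isClosed_univ)
        (by rw [hA]; exact convex_univ) (by rw [hA, interior_univ]; exact univ_nonempty) norm_one
        (fun s x _ => by rw [hA]; exact mem_univ _)
        (fun s x hx => by rw [hA, frontier_univ] at hx; exact hx.elim) hK0 hpK
        (fun x hx => by rw [hA, frontier_univ] at hx; exact hx.elim) hμ hell hF
    · have hfr : ∀ z, z ∈ frontier A ↔ dt c0 z = 0 := by
        intro z
        constructor
        · intro hz
          have := frontier_le_subset_eq (continuous_dt_right c0) continuous_const (hA ▸ hz)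
          exact this
        · intro hz
          rw [frontier_eq_closure_inter_closure]
          refine ⟨subset_closure (by rw [hA]; exact hz.le), ?_⟩
          rw [Metric.mem_closure_iff]
          intro e he
          refine ⟨z + (e / 2) • c0, ?_, ?_⟩
          · rw [hA]
            have h1 : dt c0 (z + (e / 2) • c0) = dt c0 z + e / 2 * (c0.re ^ 2 + c0.im ^ 2) := by
              simp [dt]; ring
            have h2 : c0.re ^ 2 + c0.im ^ 2 = 1 := by
              have := Complex.sq_norm c0
              rw [hc0, Complex.normSq_apply] at this
              linarith
            intro h3
            have h4 : dt c0 (z + (e / 2) • c0) ≤ 0 := h3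
            rw [h1, h2, hz] at h4
            linarith
          · rw [dist_eq_norm, sub_add_cancel_left, norm_neg, norm_smul, hc0,
              Real.norm_of_nonneg (by linarith)]
            linarith
      refine bernstein (c0 := c0) (T0 := T0) hγ
        (by rw [hA]; exact isClosed_le (continuous_dt_right c0) continuous_const) ?_ ?_ hc0
        (fun s x hx => ?_) (fun s x hx => ?_) hK0 hpK (fun x hx => ?_) hμ hell hF
      · rw [hA]
        intro u hu v hv a b ha hb hab
        have e : dt c0 (a • u + b • v) = a * dt c0 u + b * dt c0 v := by simp [dt]; ring
        show dt c0 (a • u + b • v) ≤ 0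
        rw [e]
        have h1 : dt c0 u ≤ 0 := hu
        have h2 : dt c0 v ≤ 0 := hv
        nlinarith
      · refine ⟨-c0, mem_interior_iff_mem_nhds.2 ?_⟩
        rw [hA]
        refine mem_of_superset ((isOpen_lt (continuous_dt_right c0) continuous_const).mem_nhds ?_)
          (fun z (hz : dt c0 z < 0) => hz.le)
        have := Complex.sq_norm c0
        rw [hc0, Complex.normSq_apply] at this
        show dt c0 (-c0) < 0
        simp only [dt, Complex.neg_re, Complex.neg_im]
        linarith
      · rw [hA] at hx ⊢
        show dt c0 (x + s • (Complex.I * c0)) ≤ 0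
        rw [dt_add_smul_I]
        exact hx
      · rw [hfr] at hx ⊢
        rw [dt_add_smul_I, hx]
      · have hx' := (hfr x).1 hx
        obtain ⟨ζ, hζ, hζ1⟩ := hbd0 x hx'
        have hxA : x ∈ A := by rw [hA]; exact hx'.le
        have hζD : ∀ᶠ n in (F : Filter ℕ), c n + r n • ζ n ∈ Dk := by
          filter_upwards [hζ1] with n hn using mem_Dk.2 hn.le
        refine tendsto_nhds_unique (hlim x hxA ζ hζD hζ).1 (tendsto_const_nhds.congr' ?_)
        filter_upwards [hζ1] with n hn
        show 0 = (r n)⁻¹ * ((J n).w (c n + r n • ζ n) - (J n).w (c n))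
        rw [h0 n _ hn, h0 n _ (hcn n), sub_zero, mul_zero]
  have hsm : ∀ n (u : ℂ), c n + r n • ((r n)⁻¹ • (u - c n)) = u := by
    intro n u
    rw [smul_smul, mul_inv_cancel₀ (hrp n).ne', one_smul]; abel
  obtain ⟨z, hz⟩ := ultra_lim F (f := fun n => (r n)⁻¹ • (x n - c n)) (B := B) (by
    filter_upwards [hB] with n hn
    rw [norm_smul, norm_inv, Real.norm_of_nonneg (hrp n).le, inv_mul_le_iff₀ (hrp n)]
    linarith)
  have hD : ∀ᶠ n in (F : Filter ℕ), c n + r n • ((r n)⁻¹ • (x n - c n)) ∈ Dk :=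
    Eventually.of_forall fun n => by rw [hsm]; exact hx n
  have hzA := dom.cl _ z hD hz
  have h1 := (hlim z hzA _ hD hz).2.2.norm
  rw [hzero z hzA, norm_zero] at h1
  have h4 : ε ≤ 0 := by
    refine ge_of_tendsto h1 ?_
    filter_upwards [hcon] with n hn
    have h5 := hxS n hn
    show ε ≤ ‖r n • (J n).S (c n + r n • ((r n)⁻¹ • (x n - c n)))‖
    rw [hsm, norm_smul, Real.norm_of_nonneg (hrp n).le]
    have h6 : r n * (ε * M n) = ε := by
      rw [mul_left_comm, inv_mul_cancel₀ (hM0 n).ne', mul_one]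
    have h7 := mul_le_mul_of_nonneg_left h5.le (hrp n).le
    rw [h6] at h7
    exact h7
  linarith

end

/-! ### From gradient bounds to second order bounds -/

/-- First and second derivatives of a change of variables, together with a gradient. -/
abbrev XS : Type := (ℂ →L[ℝ] ℂ) × (ℂ →L[ℝ] ℂ →L[ℝ] ℂ) × (ℂ →L[ℝ] ℝ)

/-- The part of the operator which is linear in the Hessian. -/
def prin (S : ℂ →L[ℝ] ℂ →L[ℝ] ℝ) (X : XS) : ℝ := Fop (X.1, 0, X.2.2, S)

/-- The part of the operator which does not depend on the Hessian. -/
def lower (X : XS) : ℝ := Fop (X.1, X.2.1, X.2.2, 0)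

lemma contDiff_prin (S) : ContDiff ℝ 1 (prin S) :=
  (contDiff_Fop (n := 1)).comp (contDiff_fst.prodMk (contDiff_const.prodMk
    ((contDiff_snd.snd).prodMk contDiff_const)))

lemma contDiff_lower : ContDiff ℝ 1 lower :=
  (contDiff_Fop (n := 1)).comp (contDiff_fst.prodMk ((contDiff_fst.comp contDiff_snd).prodMk
    ((contDiff_snd.snd).prodMk contDiff_const)))

lemma prin_lower (T Z p S) : Fop (T, Z, p, S) = prin S (T, Z, p) + lower (T, Z, p) := by
  simp only [prin, lower, Fop, Phi, pullS_apply, zero_apply, map_zero]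
  ring

/-- The matrix entries of the principal part. -/
def e11 : ℂ →L[ℝ] ℂ →L[ℝ] ℝ := tens Complex.reCLM Complex.reCLM
/-- The matrix entries of the principal part. -/
def e12 : ℂ →L[ℝ] ℂ →L[ℝ] ℝ :=
  (1 / 2 : ℝ) • (tens Complex.reCLM Complex.imCLM + tens Complex.imCLM Complex.reCLM)
/-- The matrix entries of the principal part. -/
def e22 : ℂ →L[ℝ] ℂ →L[ℝ] ℝ := tens Complex.imCLM Complex.imCLM

lemma prin_comb (a b c : ℝ) (X : XS) :
    prin (a • e11 + b • e12 + c • e22) X = a * prin e11 X + b * prin e12 X + c * prin e22 X := by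
  simp only [prin, Fop, Phi, pullS_apply, zero_apply, map_zero, add_apply, smul_apply, smul_eq_mul]
  ring

lemma prin_tr3 (S : ℂ →L[ℝ] ℂ →L[ℝ] ℝ) (hS : ∀ a b, S a b = S b a) (X : XS) :
    tr3 (prin e11 X) (prin e12 X) (prin e22 X) S = prin S X := by
  have e2 : S = S 1 1 • e11 + (2 * S 1 Complex.I) • e12 + S Complex.I Complex.I • e22 := by
    refine ContinuousLinearMap.ext fun a => ContinuousLinearMap.ext fun b => ?_
    rw [clm_decomp S a]
    simp only [add_apply, smul_apply]
    rw [clm_decomp (S 1) b, clm_decomp (S Complex.I) b, hS Complex.I 1]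
    simp [tens_apply, e11, e12, e22]; ring
  conv_rhs => rw [e2, prin_comb]
  rw [tr3]; ring

lemma prin_ell {μ R L : ℝ} {X : XS} (hT : ‖X.1‖ ≤ R) (hp : ‖X.2.2‖ ≤ L)
    (hell : ∀ s t : ℝ, μ * (s ^ 2 + t ^ 2) ≤ (s * (X.1 1).re + t * (X.1 1).im) ^ 2 +
      (s * (X.1 Complex.I).re + t * (X.1 Complex.I).im) ^ 2) (s t : ℝ) :
    ((1 + 2 * (L * R))⁻¹ ^ 3 * μ) * (s ^ 2 + t ^ 2) ≤
      prin e11 X * s ^ 2 + 2 * prin e12 X * s * t + prin e22 X * t ^ 2 := by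
  set φ : ℂ →L[ℝ] ℝ := s • Complex.reCLM + t • Complex.imCLM with hφ
  have hL : 0 ≤ L := (norm_nonneg _).trans hp
  have hR : 0 ≤ R := (norm_nonneg _).trans hT
  have e1 : prin e11 X * s ^ 2 + 2 * prin e12 X * s * t + prin e22 X * t ^ 2 =
      Phi (pullP X.1 X.2.2) (tens (φ.comp X.1) (φ.comp X.1)) := by
    have e2 : Phi (pullP X.1 X.2.2) (tens (φ.comp X.1) (φ.comp X.1)) = prin (tens φ φ) X := by
      simp only [prin, Fop, Phi, pullS_apply, zero_apply, map_zero, tens_apply,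
        ContinuousLinearMap.comp_apply, add_zero]
    have e3 : tens φ φ = (s ^ 2) • e11 + (2 * s * t) • e12 + (t ^ 2) • e22 := by
      refine ContinuousLinearMap.ext fun a => ContinuousLinearMap.ext fun b => ?_
      simp [tens_apply, e11, e12, e22, hφ]; ring
    rw [e2, e3, prin_comb]; ring
  have hq : ‖pullP X.1 X.2.2‖ ≤ L * R :=
    (ContinuousLinearMap.opNorm_comp_le _ _).trans (by gcongr)
  have q1 := (abs_apply_le (pullP X.1 X.2.2) (v := 1) (by simp)).trans hq
  have q2 := (abs_apply_le (pullP X.1 X.2.2) (v := Complex.I) (by simp)).trans hq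
  have hLR : 0 ≤ L * R := by positivity
  have s1 := sq_le_sq' (abs_le.1 q1).1 (abs_le.1 q1).2
  have s2 := sq_le_sq' (abs_le.1 q2).1 (abs_le.1 q2).2
  rw [e1, mul_assoc]
  refine le_trans ?_ (Phi_tens_lower _ _ (L := 1 + 2 * (L * R)) (by nlinarith) (by positivity))
  have h1 := hell s t
  gcongr
  simpa [hφ] using h1

/-- Interpolation: a bounded Lipschitz function is Hölder continuous. -/
lemma interp {γ a b t : ℝ} (hγ0 : 0 < γ) (hγ1 : γ < 1) (ht : 0 ≤ t) (ha : t ≤ a) (hb : t ≤ b) :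
    t ≤ (a + 1) * b ^ γ := by
  have hb0 : 0 ≤ b := ht.trans hb
  have ha0 : 0 ≤ a := ht.trans ha
  rcases ht.eq_or_lt with h | h
  · rw [← h]; positivity
  · calc t = t ^ (1 - γ) * t ^ γ := by rw [← Real.rpow_add h]; simp
      _ ≤ (a + 1) * b ^ γ := by
        gcongr
        calc t ^ (1 - γ) ≤ (a + 1) ^ (1 - γ) :=
              Real.rpow_le_rpow ht (by linarith) (by linarith)
          _ ≤ (a + 1) ^ (1 : ℝ) := Real.rpow_le_rpow_of_exponent_le (by linarith) (by linarith)
          _ = a + 1 := Real.rpow_one _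

lemma smooth_ball {f : XS → ℝ} (hf : ContDiff ℝ 1 f) (ρ : ℝ) : ∃ C, 0 ≤ C ∧ ∀ X, ‖X‖ ≤ ρ →
    |f X| ≤ C ∧ ∀ Y, ‖Y‖ ≤ ρ → |f Y - f X| ≤ C * ‖Y - X‖ := by
  have : ProperSpace XS := FiniteDimensional.proper ℝ XS
  obtain ⟨K, hK⟩ := hf.contDiffOn.exists_lipschitzOnWith (s := Metric.closedBall 0 ρ) one_ne_zero
    (convex_closedBall 0 ρ) (isCompact_closedBall 0 ρ)
  obtain ⟨B, hB⟩ := (isCompact_closedBall (0 : XS) ρ).exists_bound_of_continuousOn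
    hf.continuous.continuousOn
  refine ⟨max K B, le_max_of_le_left K.2, fun X hX => ⟨?_, fun Y hY => ?_⟩⟩
  · exact (hB X (by simpa using hX)).trans (le_max_right _ _)
  · have := hK.dist_le_mul Y (by simpa using hY) X (by simpa using hX)
    rw [Real.dist_eq, dist_eq_norm] at this
    refine this.trans ?_
    gcongr
    exact le_max_left _ _

set_option maxHeartbeats 1000000 in
/-- Gradient bounds imply bounds in `C^{2,γ}`. -/
theorem grad_to_c2 {γ μ R L : ℝ} (hγ0 : 0 < γ) (hγ1 : γ < 1) (hμ : 0 < μ) :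
    ∃ M, ∀ T Z J H, Geo γ μ R T Z → (∃ M', BdOn Dk γ M' J) → ZeroBd J →
      (∀ z ∈ Dk, |J.w z| ≤ L) → (∀ z ∈ Dk, ‖J.p z‖ ≤ L) → |H| ≤ L →
      (∀ z ∈ Dk, Fop (yJ T Z J z) = 2 * H) → BdOn Dk γ M J := by
  by_contra hcon
  push Not at hcon
  choose T Z J H hG hex h0 hw hp hH heq hbad using fun n : ℕ =>
    hcon (((n : ℝ) + 1) ^ (1 + γ) + ((n : ℝ) + 1) + L)
  have hD0 : (0 : ℂ) ∈ Dk := by simp [mem_Dk]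
  have hL : 0 ≤ L := (abs_nonneg _).trans (hH 0)
  have hR : 0 ≤ R := (norm_nonneg _).trans ((hG 0).hT.1 0 hD0)
  have h1γ : 0 < 1 + γ := by linarith
  set κ : ℝ := (1 / 2 : ℝ) ^ (1 / (1 + γ)) with hκ
  have hκ0 : 0 < κ := by positivity
  have hκp : κ ^ (1 + γ) = 1 / 2 := by
    rw [hκ, ← Real.rpow_mul (by norm_num), one_div_mul_cancel h1γ.ne', Real.rpow_one]
  have hκ1 : κ < 1 := Real.rpow_lt_one (by norm_num) (by norm_num) (by positivity)
  have hκ2 : 1 / 2 ≤ κ := by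
    calc (1 / 2 : ℝ) = (1 / 2 : ℝ) ^ (1 : ℝ) := (Real.rpow_one _).symm
      _ ≤ κ := Real.rpow_le_rpow_of_exponent_ge (by norm_num) (by norm_num)
        (by rw [div_le_one h1γ]; linarith)
  set Good : ℕ → ℝ → Prop := fun n m =>
    TaylorOn Dk γ (m ^ (1 + γ)) (J n) ∧ ∀ z ∈ Dk, ‖(J n).S z‖ ≤ m with hGood
  have hstart : ∀ n : ℕ, ¬ Good n ((n : ℝ) + 1) := by
    rintro n ⟨g1, g2⟩
    have k1 : 0 ≤ ((n : ℝ) + 1) ^ (1 + γ) := by positivity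
    have k2 : 0 ≤ (n : ℝ) + 1 := by positivity
    refine hbad n ⟨g1.mono (by linarith), fun z hz => ?_, fun z hz => ?_, fun z hz => ?_⟩
    · linarith [hw n z hz]
    · linarith [hp n z hz]
    · linarith [g2 z hz]
  have hlarge : ∀ n : ℕ, ∃ k : ℕ, Good n (((n : ℝ) + 1) * (κ⁻¹) ^ k) := by
    intro n
    obtain ⟨M', hM'⟩ := hex n
    obtain ⟨k, hk⟩ := pow_unbounded_of_one_lt M' ((one_lt_inv₀ hκ0).2 hκ1)
    refine ⟨k, ?_⟩
    have hk1 : 1 ≤ (κ⁻¹) ^ k := one_le_pow₀ ((one_lt_inv₀ hκ0).2 hκ1).le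
    have hm : M' ≤ ((n : ℝ) + 1) * (κ⁻¹) ^ k := by nlinarith [(Nat.cast_nonneg n : (0 : ℝ) ≤ n)]
    have hm1 : 1 ≤ ((n : ℝ) + 1) * (κ⁻¹) ^ k := by nlinarith [(Nat.cast_nonneg n : (0 : ℝ) ≤ n)]
    refine ⟨hM'.toTaylorOn.mono (hm.trans ?_), fun z hz => (hM'.b2 z hz).trans hm⟩
    conv_lhs => rw [← Real.rpow_one (((n : ℝ) + 1) * (κ⁻¹) ^ k)]
    exact Real.rpow_le_rpow_of_exponent_le hm1 (by linarith)
  have hchoose : ∀ n : ℕ, ∃ m : ℝ, (n : ℝ) + 1 ≤ m ∧ Good n m ∧ ¬ Good n (κ * m) := by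
    intro n
    classical
    have hk := Nat.find_spec (hlarge n)
    have hmin := fun {k : ℕ} => Nat.find_min (hlarge n) (m := k)
    set k := Nat.find (hlarge n) with hkd
    rcases Nat.eq_zero_or_pos k with h | h
    · rw [h, pow_zero, mul_one] at hk
      exact absurd hk (hstart n)
    · refine ⟨_, ?_, hk, ?_⟩
      · have hk1 : 1 ≤ (κ⁻¹) ^ k := one_le_pow₀ ((one_lt_inv₀ hκ0).2 hκ1).le
        nlinarith [(Nat.cast_nonneg n : (0 : ℝ) ≤ n)]
      · have := hmin (k := k - 1) (by omega)
        obtain ⟨j, hj⟩ : ∃ j, k = j + 1 := ⟨k - 1, by omega⟩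
        rw [hj] at this ⊢
        rw [Nat.add_sub_cancel] at this
        have e : κ * (((n : ℝ) + 1) * κ⁻¹ ^ (j + 1)) = ((n : ℝ) + 1) * κ⁻¹ ^ j := by
          rw [pow_succ]; field_simp
        rw [e]
        exact this
  choose M hMn hMg hMb using hchoose
  have hM1 : ∀ n, 1 ≤ M n := fun n => by
    have := hMn n
    have : (0 : ℝ) ≤ n := Nat.cast_nonneg n
    linarith
  have hM0 : ∀ n, 0 < M n := fun n => lt_of_lt_of_le one_pos (hM1 n)
  set F : Ultrafilter ℕ := hyperfilter ℕ with hF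
  have hFle : (F : Filter ℕ) ≤ atTop := by
    rw [← Nat.cofinite_eq_atTop]; exact hyperfilter_le_cofinite
  have hMtop : Tendsto M F atTop := by
    refine Tendsto.mono_left ?_ hFle
    exact tendsto_atTop_mono (fun n => by linarith [hMn n]) tendsto_natCast_atTop_atTop
  have hsmall : ∀ ε > 0, ∀ᶠ n in (F : Filter ℕ), ∀ z ∈ Dk, ‖(J n).S z‖ ≤ ε * M n := fun ε hε =>
    hess_small F hγ0 hμ hG hM0 hMtop (fun n => (hMg n).1) h0 (fun n => (hMg n).2) hp hH heq hε
  set N : ℕ → ℝ := fun n => M n ^ (1 + γ) with hN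
  have hN0 : ∀ n, 0 < N n := fun n => Real.rpow_pos_of_pos (hM0 n) _
  have hNM : ∀ n, N n = M n * M n ^ γ := fun n => by
    rw [hN]; simp only; rw [Real.rpow_add (hM0 n), Real.rpow_one]
  have hMγ : ∀ n, 0 < M n ^ γ := fun n => Real.rpow_pos_of_pos (hM0 n) _
  have hMγ1 : ∀ n, 1 ≤ M n ^ γ := fun n => Real.one_le_rpow (hM1 n) hγ0.le
  have hMγtop : Tendsto (fun n => M n ^ γ) F atTop := (tendsto_rpow_atTop hγ0).comp hMtop
  -- pairs of points where the Hessian oscillates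
  have hpts : ∀ n, ∃ x ∈ Dk, ∃ y ∈ Dk, 0 < ‖y - x‖ ∧ ((∀ z ∈ Dk, ‖(J n).S z‖ ≤ 1 / 2 * M n) →
      1 / 2 * N n * ‖y - x‖ ^ γ ≤ ‖(J n).S y - (J n).S x‖) := by
    intro n
    by_cases hs : ∀ z ∈ Dk, ‖(J n).S z‖ ≤ 1 / 2 * M n
    · by_contra hno
      push Not at hno
      refine hMb n ⟨?_, fun z hz => (hs z hz).trans ?_⟩
      · rw [Real.mul_rpow hκ0.le (hM0 n).le, hκp]
        have hJ := (hMg n).1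
        refine TaylorOn.of_hasFDeriv convex_Dk hγ0 (by have := hN0 n; positivity)
          (fun x hx => hJ.hasFDeriv_w hγ0 hx) (fun x hx => hJ.hasFDeriv_p hγ0 hx)
          (fun x hx y hy => ?_) hJ.sym
        rcases (norm_nonneg (y - x)).eq_or_lt with h | h
        · have : y = x := sub_eq_zero.1 (norm_eq_zero.1 h.symm)
          rw [this, sub_self, norm_zero]
          have := hN0 n
          positivity
        · exact (hno x hx y hy h).2.le
      · have := hM0 n
        gcongr
    · exact ⟨0, hD0, 1, by simp [mem_Dk], by simp, fun h => absurd h hs⟩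
  choose x hx y hy hxy hosc using hpts
  set X : ℕ → ℂ → XS := fun n z => (T n z, Z n z, (J n).p z) with hX
  have hXb : ∀ n, ∀ z ∈ Dk, ‖X n z‖ ≤ R + L := fun n z hz => by
    refine norm_prod_le_iff.2 ⟨?_, norm_prod_le_iff.2 ⟨?_, ?_⟩⟩
    · linarith [(hG n).hT.1 z hz]
    · linarith [(hG n).hZ.1 z hz]
    · linarith [hp n z hz]
  set C0 : ℝ := R + (2 * L + 1) with hC0
  have hXh : ∀ n, ∀ z ∈ Dk, ∀ z' ∈ Dk, ‖X n z' - X n z‖ ≤ C0 * M n ^ γ * ‖z' - z‖ ^ γ := by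
    intro n z hz z' hz'
    have hd : 0 ≤ ‖z' - z‖ ^ γ := by positivity
    have k1 : R * ‖z' - z‖ ^ γ ≤ C0 * M n ^ γ * ‖z' - z‖ ^ γ := by
      gcongr
      calc R ≤ C0 := by rw [hC0]; linarith
        _ ≤ C0 * M n ^ γ := le_mul_of_one_le_right (by rw [hC0]; linarith) (hMγ1 n)
    refine norm_prod_le_iff.2 ⟨?_, norm_prod_le_iff.2 ⟨?_, ?_⟩⟩
    · exact ((hG n).hT.2 z hz z' hz').trans k1
    · exact ((hG n).hZ.2 z hz z' hz').trans k1
    · have k2 : ‖(J n).p z' - (J n).p z‖ ≤ 2 * L := (norm_sub_le _ _).trans (by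
        linarith [hp n z hz, hp n z' hz'])
      have k3 := p_lipschitz hγ0 (hMg n).1 (hMg n).2 hz hz'
      have k4 := interp hγ0 hγ1 (norm_nonneg _) k2 k3
      rw [Real.mul_rpow (hM0 n).le (norm_nonneg _), ← mul_assoc] at k4
      refine k4.trans ?_
      have := hMγ n
      gcongr
      rw [hC0]; linarith
  obtain ⟨B1, hB1, hb1⟩ := smooth_ball (contDiff_prin e11) (R + L)
  obtain ⟨B2, hB2, hb2⟩ := smooth_ball (contDiff_prin e12) (R + L)
  obtain ⟨B3, hB3, hb3⟩ := smooth_ball (contDiff_prin e22) (R + L)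
  obtain ⟨B4, hB4, hb4⟩ := smooth_ball contDiff_lower (R + L)
  set C := B1 + B2 + B3 + B4 with hC
  have hC0' : 0 ≤ C0 := by rw [hC0]; linarith
  set C1 := C * C0 with hC1
  have hC1' : 0 ≤ C1 := by positivity
  have hol : ∀ (f : XS → ℝ) (B : ℝ), 0 ≤ B → B ≤ C → (∀ X, ‖X‖ ≤ R + L →
      |f X| ≤ B ∧ ∀ Y, ‖Y‖ ≤ R + L → |f Y - f X| ≤ B * ‖Y - X‖) →
      ∀ n, ∀ z ∈ Dk, ∀ z' ∈ Dk, |f (X n z') - f (X n z)| ≤ C1 * M n ^ γ * ‖z' - z‖ ^ γ := by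
    intro f B hB hBC hf n z hz z' hz'
    refine ((hf _ (hXb n z hz)).2 _ (hXb n z' hz')).trans ?_
    calc B * ‖X n z' - X n z‖ ≤ C * (C0 * M n ^ γ * ‖z' - z‖ ^ γ) := by
          gcongr; exact hXh n z hz z' hz'
      _ = C1 * M n ^ γ * ‖z' - z‖ ^ γ := by rw [hC1]; ring
  have hNi : ∀ n, 0 < (N n)⁻¹ := fun n => inv_pos.2 (hN0 n)
  -- the second differences are small at the scale of the oscillation
  have hr : ∀ ε > 0, ∀ᶠ n in (F : Filter ℕ), M n ^ γ * ‖y n - x n‖ ^ γ ≤ 4 * ε := by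
    intro ε hε
    filter_upwards [hsmall ε hε, hsmall (1 / 2) (by norm_num)] with n h1 h2
    have h3 := hosc n h2
    have h4 : ‖(J n).S (y n) - (J n).S (x n)‖ ≤ 2 * (ε * M n) := (norm_sub_le _ _).trans (by
      linarith [h1 _ (hx n), h1 _ (hy n)])
    rw [hNM] at h3
    have h5 : M n * (M n ^ γ * ‖y n - x n‖ ^ γ) ≤ M n * (4 * ε) := by linarith
    exact le_of_mul_le_mul_left h5 (hM0 n)
  have hrγ : Tendsto (fun n => M n ^ γ * ‖y n - x n‖ ^ γ) F (𝓝 0) := by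
    refine tendsto_zero_of_eps (g := fun _ => 4) tendsto_const_nhds fun ε hε => ?_
    filter_upwards [hr ε hε] with n hn
    have := hMγ n
    rw [abs_of_nonneg (by positivity)]
    linarith
  have hr0 : Tendsto (fun n => ‖y n - x n‖) F (𝓝 0) := by
    have h1 : Tendsto (fun n => ‖y n - x n‖ ^ γ) F (𝓝 0) := by
      refine squeeze_zero (fun n => by positivity) (fun n => ?_) hrγ
      exact le_mul_of_one_le_left (by positivity) (hMγ1 n)
    have h2 := h1.rpow_const (p := 1 / γ) (Or.inr (by positivity))
    rw [Real.zero_rpow (by positivity)] at h2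
    refine h2.congr fun n => ?_
    rw [← Real.rpow_mul (norm_nonneg _), mul_one_div_cancel hγ0.ne', Real.rpow_one]
  refine blow_up_small F (γ := γ) (lam := (1 + 2 * (L * R))⁻¹ ^ 3 * μ) (Lam := C) hγ0 hγ1
    (by positivity) (a11 := fun n z => prin e11 (X n z)) (a12 := fun n z => prin e12 (X n z))
    (a22 := fun n z => prin e22 (X n z))
    (g := fun n z => (N n)⁻¹ * (2 * H n - lower (X n z)))
    (J := fun n => Jet.comb (N n)⁻¹ 0 (J n) (J n)) (Λ := fun n => C1 * M n ^ γ) (x := x) (y := y)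
    (fun n z hz => ⟨(hb1 _ (hXb n z hz)).1.trans (by rw [hC]; linarith),
      (hb2 _ (hXb n z hz)).1.trans (by rw [hC]; linarith),
      (hb3 _ (hXb n z hz)).1.trans (by rw [hC]; linarith)⟩)
    (fun n z hz => prin_ell ((hG n).hT.1 z hz) (hp n z hz) ((hG n).ell z hz))
    (hol _ B1 hB1 (by rw [hC]; linarith) hb1) (hol _ B2 hB2 (by rw [hC]; linarith) hb2)
    (hol _ B3 hB3 (by rw [hC]; linarith) hb3) (fun n z hz => ?_) (fun ε hε => ?_)
    (fun ε hε => ?_) (fun ε hε => ?_) (fun n z hz => ?_) (fun n => ?_) hx hy hxy hr0 ?_ ?_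
  · have e1 := heq n z hz
    have e2 : Fop (T n z, Z n z, (J n).p z, (J n).S z) = 2 * H n := e1
    rw [prin_lower, ← prin_tr3 _ ((hMg n).1.sym z hz)] at e2
    simp only [Jet.comb, zero_smul, add_zero]
    have e3 : 2 * H n - lower (X n z) = tr3 (prin e11 (X n z)) (prin e12 (X n z))
        (prin e22 (X n z)) ((J n).S z) := by rw [← e2]; ring
    rw [e3]
    simp only [tr3, smul_apply, smul_eq_mul]
    ring
  · have t1 : ∀ᶠ n in (F : Filter ℕ), C1 / ε ≤ M n := hMtop.eventually_ge_atTop _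
    filter_upwards [t1] with n h1 z hz z' hz'
    have h2 := hol _ B4 hB4 (by rw [hC]; linarith) hb4 n z hz z' hz'
    have e : (N n)⁻¹ * (2 * H n - lower (X n z')) - (N n)⁻¹ * (2 * H n - lower (X n z)) =
        -((N n)⁻¹ * (lower (X n z') - lower (X n z))) := by ring
    rw [e, abs_neg, abs_mul, abs_of_pos (hNi n), inv_mul_le_iff₀ (hN0 n)]
    refine h2.trans ?_
    rw [← mul_assoc]
    refine mul_le_mul_of_nonneg_right ?_ (by positivity)
    rw [div_le_iff₀ hε] at h1
    rw [hNM]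
    have := hMγ n
    nlinarith
  · have hε' : 0 < ε / (C1 + 1) := by positivity
    filter_upwards [hsmall _ hε'] with n h1 z hz
    simp only [Jet.comb, zero_smul, add_zero]
    rw [norm_smul, Real.norm_of_nonneg (hNi n).le]
    have h2 := h1 z hz
    have hm := hMγ n
    have hm0 := hM0 n
    calc C1 * M n ^ γ * ((N n)⁻¹ * ‖(J n).S z‖)
        ≤ C1 * M n ^ γ * ((N n)⁻¹ * (ε / (C1 + 1) * M n)) := by
          have := hNi n
          gcongr
      _ = C1 / (C1 + 1) * ε := by rw [hNM]; field_simp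
      _ ≤ 1 * ε := by
          gcongr
          rw [div_le_one (by positivity)]; linarith
      _ = ε := one_mul _
  · have t1 : ∀ᶠ n in (F : Filter ℕ), 1 / ε ≤ M n ^ γ := hMγtop.eventually_ge_atTop _
    have t2 : ∀ᶠ n in (F : Filter ℕ), L / ε ≤ M n := hMtop.eventually_ge_atTop _
    filter_upwards [t1, t2] with n h1 h2 z hz
    simp only [Jet.comb, zero_smul, add_zero]
    rw [norm_smul, norm_smul, Real.norm_of_nonneg (hNi n).le, inv_mul_le_iff₀ (hN0 n),
      inv_mul_le_iff₀ (hN0 n), hNM]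
    rw [div_le_iff₀ hε] at h1 h2
    have k1 := (hMg n).2 z hz
    have k2 := hp n z hz
    have k3 := hMγ1 n
    have k4 := hM0 n
    have k5 := hM1 n
    constructor
    · nlinarith
    · have : 0 < M n * ε := by positivity
      nlinarith
  · simp only [Jet.comb, zero_mul, add_zero]
    rw [h0 n z hz, mul_zero]
  · have := ((hMg n).1.comb (hMg n).1 (N n)⁻¹ 0)
    rw [abs_zero, zero_mul, add_zero, abs_of_pos (hNi n)] at this
    have e : (N n)⁻¹ * M n ^ (1 + γ) = 1 := inv_mul_cancel₀ (hN0 n).ne'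
    rw [e] at this
    exact this
  · have := hrγ.const_mul C1
    rw [mul_zero] at this
    refine this.congr fun n => by ring
  · filter_upwards [hsmall (1 / 2) (by norm_num)] with n hn
    simp only [Jet.comb, zero_smul, add_zero]
    rw [← smul_sub, norm_smul, Real.norm_of_nonneg (hNi n).le, le_inv_mul_iff₀ (hN0 n)]
    have := hosc n hn
    linarith

/-! ### A chart flattening a convex domain onto the disc -/

lemma le_mul_rpow {γ D t : ℝ} (hγ0 : 0 < γ) (hγ1 : γ ≤ 1) (ht : 0 ≤ t) (htD : t ≤ D) :
    t ≤ (1 + D) * t ^ γ := by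
  rcases le_or_gt t 1 with h | h
  · rcases ht.eq_or_lt with rfl | h0
    · rw [Real.zero_rpow hγ0.ne']; simp
    have h1 : t ≤ t ^ γ := by simpa using Real.rpow_le_rpow_of_exponent_ge h0 h hγ1
    nlinarith
  · have h1 : 1 ≤ t ^ γ := Real.one_le_rpow h.le hγ0.le
    nlinarith

lemma holV_of_contDiff {Y : Type*} [NormedAddCommGroup Y] [NormedSpace ℝ Y] {g : ℂ → Y}
    (hg : ContDiff ℝ 1 g) {A : Set ℂ} (hA : IsCompact A) (hAc : Convex ℝ A) {γ : ℝ} (hγ0 : 0 < γ)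
    (hγ1 : γ ≤ 1) : ∃ R, HolV A γ R g := by
  obtain ⟨K, hK⟩ := hg.contDiffOn.exists_lipschitzOnWith (s := A) one_ne_zero hAc hA
  obtain ⟨B, hB⟩ := hA.exists_bound_of_continuousOn hg.continuous.continuousOn
  obtain ⟨D, hD⟩ := hA.isBounded.exists_norm_le
  have h2 : ∀ x ∈ A, ∀ y ∈ A, ‖g y - g x‖ ≤ K * (1 + 2 * D) * ‖y - x‖ ^ γ := by
    intro x hx y hy
    have h := hK.dist_le_mul y hy x hx
    rw [dist_eq_norm, dist_eq_norm] at h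
    have h3 : ‖y - x‖ ≤ 2 * D := (norm_sub_le _ _).trans (by linarith [hD x hx, hD y hy])
    rw [mul_assoc]
    exact h.trans (mul_le_mul_of_nonneg_left (le_mul_rpow hγ0 hγ1 (norm_nonneg _) h3) K.2)
  exact ⟨max B (K * (1 + 2 * D)), fun x hx => (hB x hx).trans (le_max_left _ _), fun x hx y hy =>
    (h2 x hx y hy).trans (by gcongr; exact le_max_right _ _)⟩

/-- Hölder continuity of the second derivative is preserved by smooth post-composition. -/
lemma hol_second {f : ℂ → ℝ} {B : ℂ × ℝ → ℂ} (hf : ContDiff ℝ 2 f) (hB : ContDiff ℝ 3 B) {A : Set ℂ}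
    (hA : IsCompact A) (hAc : Convex ℝ A) {γ C : ℝ} (hγ0 : 0 < γ) (hγ1 : γ ≤ 1)
    (hS : ∀ x ∈ A, ∀ y ∈ A,
      ‖fderiv ℝ (fderiv ℝ f) y - fderiv ℝ (fderiv ℝ f) x‖ ≤ C * ‖y - x‖ ^ γ) :
    ∃ R, HolV A γ R (fderiv ℝ fun x => B (x, f x)) ∧
      HolV A γ R (fderiv ℝ (fderiv ℝ fun x => B (x, f x))) := by
  have hf1 : ContDiff ℝ 1 (fderiv ℝ f) := hf.fderiv_right (by norm_num)
  have hB1 : ContDiff ℝ 2 (fderiv ℝ B) := hB.fderiv_right (by norm_num)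
  have hB2 : ContDiff ℝ 1 (fderiv ℝ (fderiv ℝ B)) := hB1.fderiv_right (by norm_num)
  have hΘ : ContDiff ℝ 2 fun x => B (x, f x) :=
    (hB.of_le (by norm_num)).comp (contDiff_id.prodMk hf)
  obtain ⟨R1, hR1⟩ := holV_of_contDiff (hΘ.fderiv_right (m := 1) (by norm_num)) hA hAc hγ0 hγ1
  obtain ⟨R2, hR2⟩ := holV_of_contDiff (contDiff_id.prodMk (hf.of_le (m := 1) (by norm_num)))
    hA hAc hγ0 hγ1
  obtain ⟨R3, hR3⟩ := holV_of_contDiff hf1 hA hAc hγ0 hγ1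
  obtain ⟨R4, hR4⟩ := hA.exists_bound_of_continuousOn
    (hf1.continuous_fderiv (by norm_num)).continuousOn
  have h4 : HolV A γ (max R4 C) (fderiv ℝ (fderiv ℝ f)) :=
    ⟨fun x hx => (hR4 x hx).trans (le_max_left _ _), fun x hx y hy =>
      (hS x hx y hy).trans (by gcongr; exact le_max_right _ _)⟩
  let il := ContinuousLinearMap.inl ℝ ℂ ℝ
  let ir := ContinuousLinearMap.inr ℝ ℂ ℝ
  have hj : ∀ x, HasFDerivAt (fun x => (x, f x)) (il + ir.comp (fderiv ℝ f x)) x := by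
    intro x
    have := (hasFDerivAt_id x).prodMk ((hf.differentiable (by norm_num)) x).hasFDerivAt
    refine this.congr_fderiv ?_
    ext <;> simp [il, ir]
  have hd1 : fderiv ℝ (fun x => B (x, f x)) = fun x =>
      (fderiv ℝ B (x, f x)).comp (il + ir.comp (fderiv ℝ f x)) := by
    funext x
    exact (((hB.differentiable (by norm_num)) _).hasFDerivAt.comp x (hj x)).fderiv
  let Q : (ℂ × ℝ) × (ℂ →L[ℝ] ℝ) × (ℂ →L[ℝ] ℂ →L[ℝ] ℝ) → ℂ →L[ℝ] ℂ →L[ℝ] ℂ := fun y =>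
    (ContinuousLinearMap.compL ℝ ℂ (ℂ × ℝ) ℂ (fderiv ℝ B y.1)).comp
      ((ContinuousLinearMap.compL ℝ ℂ ℝ (ℂ × ℝ) ir).comp y.2.2) +
    ((ContinuousLinearMap.compL ℝ ℂ (ℂ × ℝ) ℂ).flip (il + ir.comp y.2.1)).comp
      ((fderiv ℝ (fderiv ℝ B) y.1).comp (il + ir.comp y.2.1))
  have hQ : ContDiff ℝ 1 Q := by
    have e1 : ContDiff ℝ 1 fun y : (ℂ × ℝ) × (ℂ →L[ℝ] ℝ) × (ℂ →L[ℝ] ℂ →L[ℝ] ℝ) =>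
        il + ir.comp y.2.1 := contDiff_const.add (contDiff_const.clm_comp contDiff_snd.fst)
    refine ((((ContinuousLinearMap.compL ℝ ℂ (ℂ × ℝ) ℂ).contDiff.comp
      ((hB1.of_le (by norm_num)).comp contDiff_fst))).clm_comp
      (contDiff_const.clm_comp contDiff_snd.snd)).add
      (((ContinuousLinearMap.compL ℝ ℂ (ℂ × ℝ) ℂ).flip.contDiff.comp e1).clm_comp
        ((hB2.comp contDiff_fst).clm_comp e1))
  have hd2 : fderiv ℝ (fderiv ℝ fun x => B (x, f x)) = fun x =>
      Q ((x, f x), fderiv ℝ f x, fderiv ℝ (fderiv ℝ f) x) := by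
    rw [hd1]
    funext x
    have a1 := ((hB1.differentiable (by norm_num)) (x, f x)).hasFDerivAt.comp x (hj x)
    have a2 : HasFDerivAt (fun x => il + ir.comp (fderiv ℝ f x))
        ((ContinuousLinearMap.compL ℝ ℂ ℝ (ℂ × ℝ) ir).comp (fderiv ℝ (fderiv ℝ f) x)) x :=
      ((ContinuousLinearMap.compL ℝ ℂ ℝ (ℂ × ℝ) ir).hasFDerivAt.comp x
        ((hf1.differentiable (by norm_num)) x).hasFDerivAt).const_add il
    exact (a1.clm_comp a2).fderiv
  obtain ⟨L, hL0, hL⟩ := HolV.comp_smooth (X := ℂ) hQ (max R2 (max R3 (max R4 C)))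
  have := hL γ A _ ((hR2.mono (le_max_left _ _)).prodMk
    ((hR3.mono ((le_max_left _ _).trans (le_max_right _ _))).prodMk
      (h4.mono ((le_max_right _ _).trans (le_max_right _ _)))))
  refine ⟨max R1 L, hR1.mono (le_max_left _ _), ?_⟩
  rw [hd2]
  exact this.mono (le_max_right _ _)

/-- A smooth function on the line equal to `s ↦ s ^ (-1/2)` on `[c, ∞)`. -/
def bsq (c s : ℝ) : ℝ := Real.smoothTransition (2 * s / c - 1) * (√s)⁻¹

lemma bsq_eq {c s : ℝ} (hc : 0 < c) (hs : c ≤ s) : bsq c s = (√s)⁻¹ := by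
  rw [bsq, Real.smoothTransition.one_of_one_le, one_mul]
  rw [le_sub_iff_add_le, le_div_iff₀ hc]; linarith

lemma contDiff_bsq {c : ℝ} (hc : 0 < c) {n : ℕ∞} : ContDiff ℝ n (bsq c) := by
  rw [contDiff_iff_contDiffAt]
  intro s
  rcases lt_or_ge s (c / 2) with h | h
  · refine (contDiffAt_const (c := (0 : ℝ))).congr_of_eventuallyEq ?_
    filter_upwards [Iio_mem_nhds h] with t ht
    rw [bsq, Real.smoothTransition.zero_of_nonpos, zero_mul]
    rw [sub_nonpos, div_le_one hc]; linarith [mem_Iio.1 ht]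
  · have hs : 0 < s := by linarith
    refine ContDiffAt.mul ?_ ?_
    · exact Real.smoothTransition.contDiff.contDiffAt.comp s (by fun_prop)
    · exact (contDiffAt_id.sqrt hs.ne').inv (Real.sqrt_pos.2 hs).ne'

/-! ### Existence of charts -/

/-- `Θ` is a `C²` map sending the closure of `K` bijectively onto the closed disc, with inverse `Ξ`,
and its derivatives, read on the disc, satisfy `Geo`. -/
structure Chart (γ μ R : ℝ) (K : Set ℂ) (Θ Ξ : ℂ → ℂ) : Prop where
  smooth : ContDiff ℝ 2 Θ
  maps : ∀ x ∈ closure K, Θ x ∈ Dk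
  maps' : ∀ z ∈ Dk, Ξ z ∈ closure K
  left : ∀ x ∈ closure K, Ξ (Θ x) = x
  right : ∀ z ∈ Dk, Θ (Ξ z) = z
  int : ∀ x ∈ K, ‖Θ x‖ < 1
  bdry : ∀ x ∈ frontier K, ‖Θ x‖ = 1
  geo : Geo γ μ R (fun z => fderiv ℝ Θ (Ξ z)) fun z => fderiv ℝ (fderiv ℝ Θ) (Ξ z)

/-- The elementary inequality behind the Lipschitz bound for the inverse chart: `ρ`, `σ` are the radial
scales at two points with images `z`, `w`, and `h` is the convexity inequality between them. -/
lemma inv_lip {ρ σ P C m : ℝ} {z w : ℂ} (hρ : 0 < ρ) (hρσ : ρ ≤ σ) (hσ : σ ≤ P) (hz : ‖z‖ ≤ 1)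
    (hw : ‖w‖ ≤ 1) (hm : 0 < m) (hC : 0 ≤ C)
    (h : σ ^ 2 * (1 - ‖w‖ ^ 2) ≤ ρ ^ 2 * (1 - ‖z‖ ^ 2) + σ * C * ‖w - z‖ +
      (σ - ρ) / ρ * (ρ ^ 2 * (1 - ‖z‖ ^ 2) - m)) :
    ‖ρ • z - σ • w‖ ≤ (P * (P * C + 2 * P ^ 2) / m + P) * ‖w - z‖ := by
  have hs : 0 < σ := by linarith
  have hP : 0 < P := by linarith
  set d := ‖w - z‖ with hd
  have hd0 : 0 ≤ d := norm_nonneg _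
  have h1 : ‖w‖ ≤ ‖z‖ + d := by
    have := norm_add_le z (w - z); rwa [add_sub_cancel] at this
  have h2 : ‖w‖ ^ 2 - ‖z‖ ^ 2 ≤ 2 * d := by
    nlinarith [norm_nonneg z, norm_nonneg w]
  have h3 : (σ - ρ) / ρ * (ρ ^ 2 * (1 - ‖z‖ ^ 2) - m) =
      (σ - ρ) * ρ * (1 - ‖z‖ ^ 2) - (σ - ρ) * m / ρ := by field_simp
  have hz2 : 0 ≤ 1 - ‖z‖ ^ 2 := by nlinarith [norm_nonneg z]
  have h4 : (σ - ρ) * m / ρ ≤ (σ * C + 2 * σ ^ 2) * d := by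
    have e1 : ρ * (1 - ‖z‖ ^ 2) ≤ σ * (1 - ‖z‖ ^ 2) := by gcongr
    have e2 : σ * (ρ * (1 - ‖z‖ ^ 2)) ≤ σ * (σ * (1 - ‖z‖ ^ 2)) := by gcongr
    have e3 : σ ^ 2 * (‖w‖ ^ 2 - ‖z‖ ^ 2) ≤ σ ^ 2 * (2 * d) := by gcongr
    rw [h3] at h
    nlinarith
  have h5 : σ - ρ ≤ P * (P * C + 2 * P ^ 2) / m * d := by
    rw [div_le_iff₀ hρ] at h4
    rw [div_mul_eq_mul_div, le_div_iff₀ hm]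
    calc (σ - ρ) * m ≤ (σ * C + 2 * σ ^ 2) * d * ρ := h4
      _ ≤ (P * C + 2 * P ^ 2) * d * P := by gcongr; linarith
      _ = _ := by ring
  have h6 : ρ • z - σ • w = -((σ - ρ) • z + σ • (w - z)) := by module
  rw [h6, norm_neg]
  refine (norm_add_le _ _).trans ?_
  rw [norm_smul, norm_smul, Real.norm_of_nonneg (by linarith), Real.norm_of_nonneg hs.le]
  have h7 : (σ - ρ) * ‖z‖ ≤ σ - ρ := by nlinarith
  have h8 : σ * ‖w - z‖ ≤ P * ‖w - z‖ := by gcongr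
  rw [add_mul]
  linarith

/-- A quantitatively injective linear map of the plane satisfies the ellipticity bound of `Geo`. -/
lemma ell_of_lower {T : ℂ →L[ℝ] ℂ} {C : ℝ} (hC : 0 < C) (hT : ∀ h, ‖h‖ ≤ C * ‖T h‖) (s t : ℝ) :
    (C ^ 2)⁻¹ * (s ^ 2 + t ^ 2) ≤
    (s * (T 1).re + t * (T 1).im) ^ 2 + (s * (T Complex.I).re + t * (T Complex.I).im) ^ 2 := by
  have hinj : Function.Injective T.toLinearMap := by
    rw [injective_iff_map_eq_zero]
    intro h hh
    have := hT h
    rw [show T h = 0 from hh, norm_zero, mul_zero] at this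
    exact norm_le_zero_iff.1 this
  obtain ⟨h, hh⟩ := LinearMap.surjective_of_injective hinj (⟨s, t⟩ : ℂ)
  have hh' : T h = ⟨s, t⟩ := hh
  have e := hT h
  rw [clm_decomp T h] at hh'
  have e1 := congrArg Complex.re hh'
  have e2 := congrArg Complex.im hh'
  simp only [Complex.add_re, Complex.add_im, Complex.real_smul, Complex.re_ofReal_mul,
    Complex.im_ofReal_mul] at e1 e2
  have e3 : ‖h‖ ^ 2 ≤ C ^ 2 * (s ^ 2 + t ^ 2) := by
    have : ‖T h‖ ^ 2 = s ^ 2 + t ^ 2 := by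
      rw [show T h = ⟨s, t⟩ from hh, ← Complex.normSq_eq_norm_sq, Complex.normSq_mk]; ring
    rw [← this, ← mul_pow]
    gcongr
  rw [← Complex.normSq_eq_norm_sq, Complex.normSq_apply] at e3
  set A := s * (T 1).re + t * (T 1).im
  set B := s * (T Complex.I).re + t * (T Complex.I).im
  have e4 : s ^ 2 + t ^ 2 = h.re * A + h.im * B := by
    simp only [A, B]; linear_combination (-s) * e1 - t * e2
  rw [inv_mul_le_iff₀ (by positivity)]
  have e5 : (s ^ 2 + t ^ 2) ^ 2 ≤ (h.re ^ 2 + h.im ^ 2) * (A ^ 2 + B ^ 2) := by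
    rw [e4]; nlinarith [sq_nonneg (h.re * B - h.im * A)]
  rcases (show 0 ≤ s ^ 2 + t ^ 2 by positivity).eq_or_lt with h0 | h0
  · rw [← h0]; positivity
  · have e6 : (h.re ^ 2 + h.im ^ 2) * (A ^ 2 + B ^ 2) ≤
      (C ^ 2 * (s ^ 2 + t ^ 2)) * (A ^ 2 + B ^ 2) := by gcongr; linarith
    nlinarith

lemma HolV.comp_lip {Y : Type*} [NormedAddCommGroup Y] {A B : Set ℂ} {γ R C : ℝ} {g : ℂ → Y}
    {φ : ℂ → ℂ} (hg : HolV A γ R g) (hγ : 0 ≤ γ) (hC : 1 ≤ C) (hφ : ∀ z ∈ B, φ z ∈ A)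
    (hl : ∀ z ∈ B, ∀ w ∈ B, ‖φ w - φ z‖ ≤ C * ‖w - z‖) (hR : 0 ≤ R) :
    HolV B γ (R * C ^ γ) fun z => g (φ z) := by
  have h1 : 1 ≤ C ^ γ := Real.one_le_rpow hC hγ
  refine ⟨fun z hz => (hg.1 _ (hφ z hz)).trans (by nlinarith), fun z hz w hw =>
    (hg.2 _ (hφ z hz) _ (hφ w hw)).trans ?_⟩
  rw [mul_assoc, ← Real.mul_rpow (by linarith) (norm_nonneg _)]
  have := hl z hz w hw
  gcongr

/-- A lower Lipschitz bound passes to the derivative. -/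
lemma fderiv_lower {Θ : ℂ → ℂ} (hΘ : ContDiff ℝ 2 Θ) {K : Set ℂ} (hK : IsOpen K) {C : ℝ}
    (hl : ∀ x ∈ closure K, ∀ y ∈ closure K, ‖x - y‖ ≤ C * ‖Θ x - Θ y‖) :
    ∀ x ∈ closure K, ∀ h, ‖h‖ ≤ C * ‖fderiv ℝ Θ x h‖ := by
  intro x hx h
  refine le_on_closure (f := fun _ : ℂ => ‖h‖) (g := fun x => C * ‖fderiv ℝ Θ x h‖)
    (s := K) ?_ continuousOn_const ?_ hx
  · intro x hx
    have h1 : HasDerivAt (fun t : ℝ => Θ (x + t • h)) (fderiv ℝ Θ x h) 0 := by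
      have a : HasDerivAt (fun t : ℝ => x + t • h) h 0 := by
        simpa using ((hasDerivAt_id (0 : ℝ)).smul_const h).const_add x
      have b : HasFDerivAt Θ (fderiv ℝ Θ x) (x + (0 : ℝ) • h) := by
        simpa using (hΘ.differentiable (by norm_num) x).hasFDerivAt
      exact b.comp_hasDerivAt (0 : ℝ) a
    have h2 := h1.tendsto_slope_zero
    have h3 : ∀ᶠ t : ℝ in 𝓝[≠] 0, x + t • h ∈ K := by
      have : ContinuousAt (fun t : ℝ => x + t • h) 0 := by fun_prop
      exact (this.eventually (by simpa using hK.mem_nhds hx)).filter_mono nhdsWithin_le_nhds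
    refine ge_of_tendsto (h2.norm.const_mul C) ?_
    filter_upwards [h3, self_mem_nhdsWithin] with t ht ht0
    have h4 := hl _ (subset_closure ht) x (subset_closure hx)
    rw [add_sub_cancel_left, norm_smul] at h4
    have h5 : 0 < ‖t‖ := norm_pos_iff.2 ht0
    simp only [zero_add, zero_smul, add_zero]
    rw [norm_smul, norm_inv, ← mul_assoc, mul_comm C, mul_assoc, le_inv_mul_iff₀ h5]
    exact h4
  · have : Continuous (fderiv ℝ Θ) := hΘ.continuous_fderiv (by norm_num)
    exact (continuous_const.mul (this.clm_apply continuous_const).norm).continuousOn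

/-- A local diffeomorphism of `K` that is proper over the open disc is onto. -/
lemma chart_surj {Θ : ℂ → ℂ} (hΘ : ContDiff ℝ 2 Θ) {K : Set ℂ} (hK : IsOpen K)
    (hKb : Bornology.IsBounded K) (hne : K.Nonempty) {C : ℝ}
    (hl : ∀ x ∈ closure K, ∀ h, ‖h‖ ≤ C * ‖fderiv ℝ Θ x h‖) (hIn : ∀ x ∈ K, ‖Θ x‖ < 1)
    (hbd : ∀ x ∈ frontier K, ‖Θ x‖ = 1) : ∀ z ∈ Dk, ∃ x ∈ closure K, Θ x = z := by
  have hopen : IsOpen (Θ '' K) := by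
    rw [isOpen_iff_mem_nhds]
    rintro _ ⟨x, hx, rfl⟩
    have h1 : HasStrictFDerivAt Θ (fderiv ℝ Θ x) x :=
      hΘ.contDiffAt.hasStrictFDerivAt (by norm_num)
    have hinj : Function.Injective (fderiv ℝ Θ x).toLinearMap := by
      rw [injective_iff_map_eq_zero]
      intro h hh
      have := hl x (subset_closure hx) h
      rw [show fderiv ℝ Θ x h = 0 from hh, norm_zero, mul_zero] at this
      exact norm_le_zero_iff.1 this
    have h2 := h1.map_nhds_eq_of_surj
      (LinearMap.range_eq_top.2 (LinearMap.surjective_of_injective hinj))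
    rw [← h2]
    exact image_mem_map (hK.mem_nhds hx)
  have hcl : IsClosed (Θ '' closure K) :=
    (hKb.isCompact_closure.image hΘ.continuous).isClosed
  have hsub : closure (Θ '' K) ⊆ Θ '' closure K :=
    closure_minimal (image_mono subset_closure) hcl
  have hball : Metric.ball (0 : ℂ) 1 ⊆ Θ '' K := by
    refine (convex_ball (0 : ℂ) 1).isPreconnected.subset_of_closure_inter_subset hopen ?_ ?_
    · obtain ⟨x, hx⟩ := hne
      exact ⟨Θ x, by simpa using hIn x hx, x, hx, rfl⟩
    · rintro z ⟨hz, hz1⟩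
      obtain ⟨x, hx, rfl⟩ := hsub hz
      by_cases hxK : x ∈ K
      · exact ⟨x, hxK, rfl⟩
      · have := hbd x ⟨hx, by rwa [hK.interior_eq]⟩
        simp [this] at hz1
  intro z hz
  have : z ∈ closure (Metric.ball (0 : ℂ) 1) := by rwa [closure_ball _ one_ne_zero]
  exact hsub (closure_mono hball this)

set_option maxHeartbeats 1000000 in
/-- On `closure K` the chart is `Θ x = (x - a) / √(‖x - a‖² - q (f x))`. It maps the frontier to the unit circle, and
convexity of `q ∘ f` makes it injective with Lipschitz inverse. -/
theorem chart_exists {K : Set ℂ} (hK : IsOpen K) (hKb : Bornology.IsBounded K) (hKc : Convex ℝ K)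
    {a : ℂ} (ha : a ∈ K) {f : ℂ → ℝ} (hf : ContDiff ℝ 2 f) {q : ℝ → ℝ} (hq : ContDiff ℝ 3 q)
    {γ C : ℝ} (hγ0 : 0 < γ) (hγ1 : γ ≤ 1)
    (hS : ∀ x ∈ closure K, ∀ y ∈ closure K,
      ‖fderiv ℝ (fderiv ℝ f) y - fderiv ℝ (fderiv ℝ f) x‖ ≤ C * ‖y - x‖ ^ γ)
    (hneg : ∀ x ∈ K, q (f x) < 0) (hbd : ∀ x ∈ frontier K, q (f x) = 0)
    (hconv : ∀ x ∈ closure K, ∀ y ∈ closure K,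
      q (f x) + fderiv ℝ (fun x => q (f x)) x (y - x) ≤ q (f y)) :
    ∃ μ > 0, ∃ R Θ Ξ, Chart γ μ R K Θ Ξ := by
  have hcomp : IsCompact (closure K) := hKb.isCompact_closure
  have hacl : a ∈ closure K := subset_closure ha
  have hg2 : ContDiff ℝ 2 fun x => q (f x) := (hq.of_le (by norm_num)).comp hf
  have hle : ∀ x ∈ closure K, q (f x) ≤ 0 := by
    intro x hx
    by_cases h : x ∈ K
    · exact (hneg x h).le
    · exact (hbd x ⟨hx, by rwa [hK.interior_eq]⟩).le
  set N : ℂ → ℝ := fun x => ‖x - a‖ ^ 2 - q (f x) with hN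
  have hNc : Continuous N := by
    have := hg2.continuous
    fun_prop
  have hNpos : ∀ x ∈ closure K, 0 < N x := by
    intro x hx
    rcases eq_or_ne x a with rfl | h
    · have := hneg x ha; simp only [hN]; nlinarith [sq_nonneg ‖x - x‖]
    · have h1 : 0 < ‖x - a‖ := norm_pos_iff.2 (sub_ne_zero.2 h)
      have := hle x hx; simp only [hN]; nlinarith [sq_pos_of_pos h1]
  obtain ⟨x0, hx0, hmin⟩ := hcomp.exists_isMinOn ⟨a, hacl⟩ hNc.continuousOn
  set c0 := N x0
  have hc0 : 0 < c0 := hNpos x0 hx0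
  set B : ℂ × ℝ → ℂ := fun y => bsq c0 (‖y.1 - a‖ ^ 2 - q y.2) • (y.1 - a) with hB
  have hBs : ContDiff ℝ 3 B := by
    have e1 : ContDiff ℝ 3 fun y : ℂ × ℝ => y.1 - a := contDiff_fst.sub contDiff_const
    exact ((contDiff_bsq (n := 3) hc0).comp ((e1.norm_sq ℝ).sub (hq.comp contDiff_snd))).smul e1
  set Θ : ℂ → ℂ := fun x => B (x, f x) with hΘd
  have hΘ : ContDiff ℝ 2 Θ := (hBs.of_le (by norm_num)).comp (contDiff_id.prodMk hf)
  obtain ⟨R0, hR1, hR2⟩ := hol_second hf hBs hcomp hKc.closure hγ0 hγ1 hS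
  have hsq : ∀ x ∈ closure K, 0 < √(N x) := fun x hx => Real.sqrt_pos.2 (hNpos x hx)
  have hΘe : ∀ x ∈ closure K, x - a = √(N x) • Θ x := by
    intro x hx
    have : Θ x = (√(N x))⁻¹ • (x - a) := by
      rw [← bsq_eq hc0 (hmin hx)]
    rw [this, smul_inv_smul₀ (hsq x hx).ne']
  have hψ : ∀ x ∈ closure K, -q (f x) = √(N x) ^ 2 * (1 - ‖Θ x‖ ^ 2) := by
    intro x hx
    have h1 : ‖x - a‖ = √(N x) * ‖Θ x‖ := by
      rw [hΘe x hx, norm_smul, Real.norm_of_nonneg (hsq x hx).le]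
    have h2 : √(N x) ^ 2 = ‖x - a‖ ^ 2 - q (f x) := Real.sq_sqrt (hNpos x hx).le
    rw [mul_sub, ← mul_pow, ← h1, h2]; ring
  have hsq2 : ∀ x ∈ closure K, 0 < √(N x) ^ 2 := fun x hx => pow_pos (hsq x hx) 2
  have hnorm : ∀ x ∈ closure K, ‖Θ x‖ ≤ 1 := by
    intro x hx
    have h1 := hψ x hx
    have h2 := hle x hx
    have h3 := hsq2 x hx
    by_contra hc
    push Not at hc
    have h4 : 1 - ‖Θ x‖ ^ 2 < 0 := by nlinarith
    have := mul_neg_of_pos_of_neg h3 h4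
    linarith
  have hIn : ∀ x ∈ K, ‖Θ x‖ < 1 := by
    intro x hx
    have h1 := hψ x (subset_closure hx)
    have h2 := hneg x hx
    have h3 := hsq2 x (subset_closure hx)
    by_contra hc
    push Not at hc
    have h4 : 1 - ‖Θ x‖ ^ 2 ≤ 0 := by nlinarith
    have := mul_nonpos_of_nonneg_of_nonpos h3.le h4
    linarith
  have hbdr : ∀ x ∈ frontier K, ‖Θ x‖ = 1 := by
    intro x hx
    have h1 := hψ x hx.1
    rw [hbd x hx, neg_zero, eq_comm, mul_eq_zero] at h1
    rcases h1 with h1 | h1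
    · exact absurd h1 (hsq2 x hx.1).ne'
    · have : ‖Θ x‖ ^ 2 = 1 := by linarith
      nlinarith [norm_nonneg (Θ x)]
  obtain ⟨P, hP⟩ := hcomp.exists_bound_of_continuousOn (f := fun x => √(N x))
    (Real.continuous_sqrt.comp hNc).continuousOn
  obtain ⟨D, hD⟩ := hcomp.exists_bound_of_continuousOn
    (f := fderiv ℝ fun x => q (f x)) (hg2.continuous_fderiv (by norm_num)).continuousOn
  have hD0 : 0 ≤ D := (norm_nonneg _).trans (hD a hacl)
  have hPle : ∀ x ∈ closure K, √(N x) ≤ P := fun x hx => (le_abs_self _).trans (hP x hx)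
  have hP0 : 0 < P := (hsq a hacl).trans_le (hPle a hacl)
  set m := -q (f a) with hm
  have hm0 : 0 < m := by have := hneg a ha; linarith
  set C1 := P * (P * D + 2 * P ^ 2) / m + P + 1 with hC1
  have hC1p : 1 ≤ C1 := by
    have : 0 ≤ P * (P * D + 2 * P ^ 2) / m := by positivity
    linarith
  have hlip0 : ∀ x ∈ closure K, ∀ y ∈ closure K, √(N x) ≤ √(N y) →
      ‖x - y‖ ≤ C1 * ‖Θ x - Θ y‖ := by
    intro x hx y hy hxy
    set Dx := fderiv ℝ (fun x => q (f x)) x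
    have h1 := hconv x hx y hy
    have h2 := hconv x hx a hacl
    have e1 : y - x = √(N y) • (Θ y - Θ x) + ((√(N y) - √(N x)) / √(N x)) • (x - a) := by
      have e2 : y - x = (y - a) - (x - a) := by ring
      have e5 : ((√(N y) - √(N x)) / √(N x)) • (x - a) = (√(N y) - √(N x)) • Θ x := by
        conv_lhs => rw [hΘe x hx]
        exact (smul_smul _ _ _).trans (by rw [div_mul_cancel₀ _ (hsq x hx).ne'])
      rw [e5, e2, hΘe y hy, hΘe x hx, sub_smul, smul_sub]
      abel
    have e3 : a - x = -(x - a) := by ring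
    rw [e1, map_add, map_smul, map_smul, smul_eq_mul, smul_eq_mul] at h1
    rw [e3, map_neg] at h2
    have h3 : |Dx (Θ y - Θ x)| ≤ D * ‖Θ y - Θ x‖ :=
      (Dx.le_opNorm _).trans (by gcongr; exact hD x hx)
    have h4 : 0 ≤ (√(N y) - √(N x)) / √(N x) := div_nonneg (by linarith) (hsq x hx).le
    have key := inv_lip (z := Θ x) (w := Θ y) (C := D) (m := m) (hsq x hx) hxy (hPle y hy)
      (hnorm x hx) (hnorm y hy) hm0 hD0 (by
        rw [← hψ y hy, ← hψ x hx]
        have h5 : √(N y) * -Dx (Θ y - Θ x) ≤ √(N y) * (D * ‖Θ y - Θ x‖) := by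
          gcongr; exact (neg_le_abs _).trans h3
        have h6 : (√(N y) - √(N x)) / √(N x) * -Dx (x - a) ≤
            (√(N y) - √(N x)) / √(N x) * (-q (f x) - m) := by
          gcongr; simp only [hm]; linarith
        nlinarith)
    have e4 : x - y = √(N x) • Θ x - √(N y) • Θ y := by
      rw [← hΘe x hx, ← hΘe y hy]; ring
    rw [e4, norm_sub_rev (Θ x)]
    refine key.trans ?_
    gcongr
    linarith
  have hlip : ∀ x ∈ closure K, ∀ y ∈ closure K, ‖x - y‖ ≤ C1 * ‖Θ x - Θ y‖ := by
    intro x hx y hy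
    rcases le_total (√(N x)) (√(N y)) with h | h
    · exact hlip0 x hx y hy h
    · rw [norm_sub_rev x, norm_sub_rev (Θ x)]; exact hlip0 y hy x hx h
  have hlow := fderiv_lower hΘ hK hlip
  have hsurj := chart_surj hΘ hK hKb ⟨a, ha⟩ hlow hIn hbdr
  choose! Ξ hΞ using hsurj
  have hR0 : 0 ≤ R0 := (norm_nonneg _).trans (hR1.1 a hacl)
  have hleft : ∀ x ∈ closure K, Ξ (Θ x) = x := by
    intro x hx
    have h1 := hΞ (Θ x) (mem_Dk.2 (hnorm x hx))
    have h2 := hlip _ h1.1 x hx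
    rw [h1.2, sub_self, norm_zero, mul_zero] at h2
    exact sub_eq_zero.1 (norm_le_zero_iff.1 h2)
  have hΞl : ∀ z ∈ Dk, ∀ w ∈ Dk, ‖Ξ w - Ξ z‖ ≤ C1 * ‖w - z‖ := by
    intro z hz w hw
    have := hlip _ (hΞ w hw).1 _ (hΞ z hz).1
    rwa [(hΞ w hw).2, (hΞ z hz).2] at this
  refine ⟨(C1 ^ 2)⁻¹, by positivity, R0 * C1 ^ γ, Θ, Ξ, hΘ, fun x hx => mem_Dk.2 (hnorm x hx),
    fun z hz => (hΞ z hz).1, hleft, fun z hz => (hΞ z hz).2, hIn, hbdr, ?_, ?_, ?_⟩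
  · exact hR1.comp_lip hγ0.le hC1p (fun z hz => (hΞ z hz).1) hΞl hR0
  · exact hR2.comp_lip hγ0.le hC1p (fun z hz => (hΞ z hz).1) hΞl hR0
  · exact fun z hz s t => ell_of_lower (by linarith) (hlow _ (hΞ z hz).1) s t

/-! ### Components of strictly convex domains -/

/-- `f` is a `C²` defining function of the bounded open set `Ω` whose tangential Hessian is positive
on the boundary. -/
structure Dom (Ω : Set ℂ) (f : ℂ → ℝ) : Prop where
  smooth : ContDiff ℝ 2 f
  eq : Ω = {x | f x < 0}
  fr : frontier Ω = {x | f x = 0}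
  bdd : Bornology.IsBounded Ω
  curv : ∀ x, f x = 0 → ∀ h : ℂ, h ≠ 0 → fderiv ℝ f x h = 0 → 0 < fderiv ℝ (fderiv ℝ f) x h h

/-- Near the boundary the Hessian is nonnegative up to a multiple of the squared differential. -/
lemma Dom.hess {Ω : Set ℂ} {f : ℂ → ℝ} (h : Dom Ω f) (R : ℝ) : ∃ k ε : ℝ, 0 ≤ k ∧ 0 < ε ∧
    ∀ x : ℂ, ‖x‖ ≤ R → |f x| ≤ ε → ∀ v : ℂ,
      0 ≤ fderiv ℝ (fderiv ℝ f) x v v + k * (fderiv ℝ f x v) ^ 2 := by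
  have hc1 : Continuous (fderiv ℝ f) := h.smooth.continuous_fderiv (by norm_num)
  have hc2 : Continuous (fderiv ℝ (fderiv ℝ f)) :=
    (h.smooth.fderiv_right (m := 1) (by norm_num)).continuous_fderiv (by norm_num)
  by_contra hcon
  push Not at hcon
  have hn : ∀ n : ℕ, ∃ y : ℂ × ℂ, ‖y.1‖ ≤ R ∧ ‖y.2‖ = 1 ∧ |f y.1| ≤ 1 / ((n : ℝ) + 1) ∧
      fderiv ℝ (fderiv ℝ f) y.1 y.2 y.2 + n * (fderiv ℝ f y.1 y.2) ^ 2 < 0 := by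
    intro n
    obtain ⟨x, hx, hfx, v, hv⟩ := hcon n (1 / ((n : ℝ) + 1)) (by positivity) (by positivity)
    have hv0 : v ≠ 0 := by rintro rfl; simp at hv
    have hvn : 0 < ‖v‖ := norm_pos_iff.2 hv0
    refine ⟨(x, ‖v‖⁻¹ • v), hx, ?_, hfx, ?_⟩
    · rw [norm_smul, norm_inv, norm_norm, inv_mul_cancel₀ hvn.ne']
    · simp only [map_smul, smul_apply, smul_eq_mul]
      have : 0 < ‖v‖⁻¹ ^ 2 := by positivity
      nlinarith
  choose y hy1 hy2 hy3 hy4 using hn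
  obtain ⟨⟨x, v⟩, hxv, φ, hφ, hlim⟩ := ((isCompact_closedBall (0 : ℂ) R).prod
    (isCompact_sphere (0 : ℂ) 1)).tendsto_subseq (x := y)
    fun n => ⟨by simpa using hy1 n, by simpa using hy2 n⟩
  have l1 : Tendsto (fun n => (y (φ n)).1) atTop (𝓝 x) := (continuous_fst.tendsto _).comp hlim
  have l2 : Tendsto (fun n => (y (φ n)).2) atTop (𝓝 v) := (continuous_snd.tendsto _).comp hlim
  have lD : Tendsto (fun n => fderiv ℝ f (y (φ n)).1 (y (φ n)).2) atTop (𝓝 (fderiv ℝ f x v)) :=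
    (((hc1.comp continuous_fst).clm_apply continuous_snd).tendsto (x, v)).comp hlim
  have lS : Tendsto (fun n => fderiv ℝ (fderiv ℝ f) (y (φ n)).1 (y (φ n)).2 (y (φ n)).2) atTop
      (𝓝 (fderiv ℝ (fderiv ℝ f) x v v)) :=
    ((((hc2.comp continuous_fst).clm_apply continuous_snd).clm_apply
      continuous_snd).tendsto (x, v)).comp hlim
  have hφt : Tendsto (fun n => ((φ n : ℕ) : ℝ)) atTop atTop :=
    tendsto_natCast_atTop_atTop.comp hφ.tendsto_atTop
  have hfx : f x = 0 := by
    have a : Tendsto (fun n => |f (y (φ n)).1|) atTop (𝓝 |f x|) :=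
      ((h.smooth.continuous.tendsto x).comp l1).abs
    have b : Tendsto (fun n => 1 / (((φ n : ℕ) : ℝ) + 1)) atTop (𝓝 0) :=
      tendsto_one_div_add_atTop_nhds_zero_nat.comp hφ.tendsto_atTop
    exact abs_eq_zero.1 (le_antisymm (le_of_tendsto_of_tendsto' a b fun n => hy3 _) (abs_nonneg _))
  have hSle : fderiv ℝ (fderiv ℝ f) x v v ≤ 0 :=
    le_of_tendsto' lS fun n => by
      have := hy4 (φ n)
      have h2 : 0 ≤ ((φ n : ℕ) : ℝ) * (fderiv ℝ f (y (φ n)).1 (y (φ n)).2) ^ 2 := by positivity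
      linarith
  have hv1 : ‖v‖ = 1 := by simpa using hxv.2
  have hDv : fderiv ℝ f x v = 0 := by
    by_contra hne
    have hpos : 0 < (fderiv ℝ f x v) ^ 2 := by positivity
    have t1 := hφt.atTop_mul_pos hpos (lD.pow 2)
    have t2 := (t1.atTop_add lS).eventually_gt_atTop 0
    obtain ⟨n, hn⟩ := t2.exists
    have := hy4 (φ n)
    linarith
  have := h.curv x hfx v (by rintro rfl; simp at hv1) hDv
  linarith

/-- A convexity criterion for `q ∘ f`, in tangent form. -/
lemma tangent_ineq {f : ℂ → ℝ} (hf : ContDiff ℝ 2 f) {q q1 q2 : ℝ → ℝ}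
    (hq1 : ∀ t, HasDerivAt q (q1 t) t) (hq2 : ∀ t, HasDerivAt q1 (q2 t) t) {S : Set ℂ}
    (hS : Convex ℝ S) (hpsd : ∀ x ∈ S, ∀ v, 0 ≤ q2 (f x) * (fderiv ℝ f x v) ^ 2 +
      q1 (f x) * fderiv ℝ (fderiv ℝ f) x v v) :
    ∀ x ∈ S, ∀ y ∈ S, q (f x) + fderiv ℝ (fun x => q (f x)) x (y - x) ≤ q (f y) := by
  intro x hx y hy
  set v := y - x with hv
  have hfd : ∀ z, HasFDerivAt f (fderiv ℝ f z) z := fun z =>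
    (hf.differentiable (by norm_num) z).hasFDerivAt
  have hfd2 : ∀ z, HasFDerivAt (fderiv ℝ f) (fderiv ℝ (fderiv ℝ f) z) z := fun z =>
    ((hf.fderiv_right (m := 1) (by norm_num)).differentiable (by norm_num) z).hasFDerivAt
  have hl : ∀ t : ℝ, HasDerivAt (fun t : ℝ => x + t • v) v t := fun t => by
    simpa using ((hasDerivAt_id t).smul_const v).const_add x
  have h1 : ∀ t : ℝ, HasDerivAt (fun t : ℝ => f (x + t • v)) (fderiv ℝ f (x + t • v) v) t :=
    fun t => (hfd _).comp_hasDerivAt t (hl t)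
  have h2 : ∀ t : ℝ, HasDerivAt (fun t : ℝ => fderiv ℝ f (x + t • v) v)
      (fderiv ℝ (fderiv ℝ f) (x + t • v) v v) t := fun t => by
    have := ((hfd2 _).comp_hasDerivAt t (hl t)).clm_apply (hasDerivAt_const t v)
    simpa using this
  have g1 : ∀ t : ℝ, HasDerivAt (fun t : ℝ => q (f (x + t • v)))
      (q1 (f (x + t • v)) * fderiv ℝ f (x + t • v) v) t := fun t => (hq1 _).comp t (h1 t)
  have g2 : ∀ t : ℝ, HasDerivAt (fun t : ℝ => q1 (f (x + t • v)) * fderiv ℝ f (x + t • v) v)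
      (q2 (f (x + t • v)) * fderiv ℝ f (x + t • v) v * fderiv ℝ f (x + t • v) v +
        q1 (f (x + t • v)) * fderiv ℝ (fderiv ℝ f) (x + t • v) v v) t := fun t =>
    ((hq2 _).comp t (h1 t)).mul (h2 t)
  have hmem : ∀ t ∈ Icc (0 : ℝ) 1, x + t • v ∈ S := fun t ht =>
    hS.segment_subset hx hy (by
      rw [segment_eq_image']
      exact ⟨t, ht, rfl⟩)
  obtain ⟨c, hc, hce⟩ := exists_hasDerivAt_eq_slope (fun t : ℝ => q (f (x + t • v))) _ zero_lt_one
    (fun t _ => (g1 t).continuousAt.continuousWithinAt) fun t _ => g1 t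
  have hmono : MonotoneOn (fun t : ℝ => q1 (f (x + t • v)) * fderiv ℝ f (x + t • v) v) (Icc 0 1) :=
    monotoneOn_of_deriv_nonneg (convex_Icc 0 1)
      (fun t _ => (g2 t).continuousAt.continuousWithinAt)
      (fun t _ => (g2 t).differentiableAt.differentiableWithinAt) fun t ht => by
        rw [(g2 t).deriv]
        have := hpsd _ (hmem t (interior_subset ht)) v
        nlinarith
  have hle := hmono (left_mem_Icc.2 zero_le_one) (Ioo_subset_Icc_self hc) hc.1.le
  simp only [zero_smul, add_zero, one_smul, sub_zero, div_one] at hle hce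
  have e1 : fderiv ℝ (fun x => q (f x)) x v = q1 (f x) * fderiv ℝ f x v := by
    have a : HasFDerivAt (fun x => q (f x)) (q1 (f x) • fderiv ℝ f x) x :=
      (hq1 (f x)).comp_hasFDerivAt x (hfd x)
    rw [a.fderiv, smul_apply, smul_eq_mul]
  have e2 : x + v = y := by rw [hv]; ring
  rw [e2] at hce
  rw [e1]
  linarith

/-- A tangent inequality at every point gives convexity. -/
lemma convexOn_of_tangent {g : ℂ → ℝ} {S : Set ℂ} (hS : Convex ℝ S)
    {p : ℂ → ℂ →L[ℝ] ℝ} (h : ∀ x ∈ S, ∀ y ∈ S, g x + p x (y - x) ≤ g y) : ConvexOn ℝ S g := by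
  refine ⟨hS, fun x hx y hy a b ha hb hab => ?_⟩
  have hz := hS hx hy ha hb hab
  set z := a • x + b • y with hzd
  have h1 := mul_le_mul_of_nonneg_left (h z hz x hx) ha
  have h2 := mul_le_mul_of_nonneg_left (h z hz y hy) hb
  have h3 : a • (x - z) + b • (y - z) = 0 := by
    have : a • (x - z) + b • (y - z) = a • x + b • y - (a + b) • z := by module
    rw [this, hab, one_smul, ← hzd, sub_self]
  have h4 := congrArg (p z) h3
  rw [map_add, map_smul, map_smul, map_zero, smul_eq_mul, smul_eq_mul] at h4
  have h5 : (a + b) * g z = g z := by rw [hab, one_mul]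
  simp only [smul_eq_mul]
  linarith

open Polynomial in
lemma glue_deriv (t : ℝ) : HasDerivAt expNegInvGlue (t⁻¹ ^ 2 * expNegInvGlue t) t ∧
    HasDerivAt (fun t => t⁻¹ ^ 2 * expNegInvGlue t)
      ((t⁻¹ ^ 4 - 2 * t⁻¹ ^ 3) * expNegInvGlue t) t := by
  constructor
  · simpa using expNegInvGlue.hasDerivAt_polynomial_eval_inv_mul 1 t
  · have := expNegInvGlue.hasDerivAt_polynomial_eval_inv_mul (X ^ 2) t
    simp only [eval_pow, eval_X, derivative_X_pow, eval_mul, eval_sub, eval_C, Nat.cast_ofNat] at this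
    refine this.congr_deriv ?_
    norm_num [eval_ofNat]
    left
    ring

/-- A convex reparametrisation of the defining function. -/
lemma Dom.exists_q {Ω : Set ℂ} {f : ℂ → ℝ} (h : Dom Ω f) (R : ℝ) : ∃ ε > 0, ∃ q : ℝ → ℝ,
    ContDiff ℝ 3 q ∧ (∀ s, q s < 0 ↔ s < 0) ∧ q 0 = 0 ∧ ∀ S : Set ℂ, Convex ℝ S →
      (∀ x ∈ S, ‖x‖ ≤ R ∧ f x ≤ ε) →
      ∀ x ∈ S, ∀ y ∈ S, q (f x) + fderiv ℝ (fun x => q (f x)) x (y - x) ≤ q (f y) := by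
  obtain ⟨k, ε0, hk, hε0, hess⟩ := h.hess R
  set ε := min ε0 (1 / (2 * (k + 2))) with hε
  have hεp : 0 < ε := lt_min hε0 (by positivity)
  have hε1 : 2 * ε * (k + 2) ≤ 1 := by
    have := min_le_right ε0 (1 / (2 * (k + 2)))
    rw [← hε, le_div_iff₀ (by positivity)] at this
    linarith
  refine ⟨ε, hεp, fun s => expNegInvGlue (s + ε) - expNegInvGlue ε, ?_, ?_, by simp, ?_⟩
  · exact ((expNegInvGlue.contDiff (n := 3)).comp (contDiff_id.add contDiff_const)).sub
      contDiff_const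
  · intro s
    rw [sub_neg]
    constructor
    · intro hs
      by_contra hc
      exact absurd (expNegInvGlue.monotone (show ε ≤ s + ε by linarith)) (not_le.2 hs)
    · intro hs
      rcases le_or_gt (s + ε) 0 with h0 | h0
      · rw [expNegInvGlue.zero_of_nonpos h0]; exact expNegInvGlue.pos_of_pos hεp
      · rw [expNegInvGlue, expNegInvGlue, if_neg (by linarith), if_neg (by linarith),
          Real.exp_lt_exp, neg_lt_neg_iff]
        exact inv_strictAnti₀ h0 (by linarith)
  · intro S hS hSV
    have hsh : ∀ t : ℝ, HasDerivAt (fun s : ℝ => s + ε) 1 t := fun t =>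
      (hasDerivAt_id t).add_const ε
    refine tangent_ineq h.smooth (q := fun s => expNegInvGlue (s + ε) - expNegInvGlue ε)
      (q1 := fun s => (s + ε)⁻¹ ^ 2 * expNegInvGlue (s + ε))
      (q2 := fun s => ((s + ε)⁻¹ ^ 4 - 2 * (s + ε)⁻¹ ^ 3) * expNegInvGlue (s + ε))
      (fun t => ?_) (fun t => ?_) hS fun x hx v => ?_
    · have := ((glue_deriv (t + ε)).1.comp t (hsh t)).sub_const (expNegInvGlue ε)
      rw [mul_one] at this
      exact this
    · have := (glue_deriv (t + ε)).2.comp t (hsh t)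
      rw [mul_one] at this
      exact this
    · obtain ⟨hxR, hxε⟩ := hSV x hx
      rcases le_or_gt (f x + ε) 0 with h0 | h0
      · simp [expNegInvGlue.zero_of_nonpos h0]
      · have h1 := hess x hxR (abs_le.2 ⟨by linarith [min_le_left ε0 (1 / (2 * (k + 2)))],
          by linarith [min_le_left ε0 (1 / (2 * (k + 2)))]⟩) v
        set τ := (f x + ε)⁻¹ with hτ
        have hτ0 : k + 2 ≤ τ := by
          rw [hτ, ← one_div, le_div_iff₀ h0]
          nlinarith
        have h2 : k ≤ τ ^ 2 - 2 * τ := by nlinarith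
        have h3 : k * (fderiv ℝ f x v) ^ 2 ≤ (τ ^ 2 - 2 * τ) * (fderiv ℝ f x v) ^ 2 := by gcongr
        have h4 : 0 ≤ τ ^ 2 * expNegInvGlue (f x + ε) :=
          mul_nonneg (by positivity) (expNegInvGlue.nonneg _)
        have h5 : 0 ≤ τ ^ 2 * expNegInvGlue (f x + ε) *
            (fderiv ℝ (fderiv ℝ f) x v v + (τ ^ 2 - 2 * τ) * (fderiv ℝ f x v) ^ 2) :=
          mul_nonneg h4 (by linarith)
        linarith

/-- The components of a strictly convex domain are convex and are charted by the disc, and near each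
point of its closure the domain consists of a single component. -/
theorem Dom.components {Ω : Set ℂ} {f : ℂ → ℝ} (h : Dom Ω f) {γ C : ℝ} (hγ0 : 0 < γ) (hγ1 : γ ≤ 1)
    (hS : ∀ x ∈ closure Ω, ∀ y ∈ closure Ω,
      ‖fderiv ℝ (fderiv ℝ f) y - fderiv ℝ (fderiv ℝ f) x‖ ≤ C * ‖y - x‖ ^ γ) :
    (∀ a ∈ Ω, frontier (connectedComponentIn Ω a) ⊆ frontier Ω ∧
      Convex ℝ (connectedComponentIn Ω a) ∧
      ∃ μ > 0, ∃ R Θ Ξ, Chart γ μ R (connectedComponentIn Ω a) Θ Ξ) ∧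
    ∀ x ∈ closure Ω, ∃ a ∈ Ω, ∃ B ∈ 𝓝 x, closure Ω ∩ B ⊆ closure (connectedComponentIn Ω a) := by
  have hΩ : IsOpen Ω := by rw [h.eq]; exact isOpen_lt h.smooth.continuous continuous_const
  have hcl : ∀ x ∈ closure Ω, f x ≤ 0 := fun x hx => by
    rw [h.eq] at hx
    exact closure_minimal (fun y hy => le_of_lt hy)
      (isClosed_le h.smooth.continuous continuous_const) hx
  obtain ⟨R, hR⟩ := h.bdd.closure.exists_norm_le
  obtain ⟨ε, hε, q, hq, hq0, hq00, hqc⟩ := h.exists_q (R + 1)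
  have hV : ∀ x ∈ closure Ω, ‖x‖ ≤ R + 1 ∧ f x ≤ ε := fun x hx =>
    ⟨by linarith [hR x hx], (hcl x hx).trans hε.le⟩
  have hmem : ∀ x, x ∈ Ω ↔ q (f x) < 0 := fun x => by rw [hq0, h.eq]; rfl
  refine ⟨fun a ha => ?_, fun x hx => ?_⟩
  · set K := connectedComponentIn Ω a with hKd
    have hKo : IsOpen K := hΩ.connectedComponentIn
    have hKs : K ⊆ Ω := connectedComponentIn_subset _ _
    have haK : a ∈ K := mem_connectedComponentIn ha
    have hfr : frontier K ⊆ frontier Ω := by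
      intro x hx
      refine ⟨closure_mono hKs hx.1, ?_⟩
      rw [hΩ.interior_eq]
      intro hxΩ
      have h1 : connectedComponentIn Ω x ∈ 𝓝 x :=
        hΩ.connectedComponentIn.mem_nhds (mem_connectedComponentIn hxΩ)
      obtain ⟨y, hy1, hy2⟩ := mem_closure_iff_nhds.1 hx.1 _ h1
      have h2 := (connectedComponentIn_eq hy1).trans (connectedComponentIn_eq hy2).symm
      refine hx.2 ?_
      rw [hKo.interior_eq, hKd, ← h2]
      exact mem_connectedComponentIn hxΩ
    have hconv : Convex ℝ K := by
      rw [convex_iff_segment_subset]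
      intro x hx y hy
      set Sx : Set ℂ := {y | ∀ t ∈ Icc (0 : ℝ) 1, x + t • (y - x) ∈ Ω} with hSx
      have hopen : IsOpen Sx := by
        rw [isOpen_iff_mem_nhds]
        intro y hy
        refine isCompact_Icc.eventually_forall_of_forall_eventually fun t ht => ?_
        have : ContinuousAt (fun z : ℂ × ℝ => x + z.2 • (z.1 - x)) (y, t) := by fun_prop
        exact this (hΩ.mem_nhds (hy t ht))
      have hKSx : K ⊆ Sx := by
        refine isPreconnected_connectedComponentIn.subset_of_closure_inter_subset hopen
          ⟨x, hx, fun t _ => by simpa using hKs hx⟩ ?_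
        rintro y ⟨hy, hyK⟩
        have hseg : segment ℝ x y ⊆ closure Ω := by
          rw [segment_eq_image']
          rintro _ ⟨t, ht, rfl⟩
          exact map_mem_closure (f := fun y => x + t • (y - x)) (by fun_prop) hy
            fun y' hy' => hy' t ht
        have hcx := convexOn_of_tangent (convex_segment x y)
          (hqc _ (convex_segment x y) fun z hz => hV z (hseg hz))
        intro t ht
        have hz : x + t • (y - x) ∈ segment ℝ x y := by
          rw [segment_eq_image']; exact ⟨t, ht, rfl⟩
        rw [hmem]
        exact (hcx.le_max_of_mem_segment (left_mem_segment ℝ x y) (right_mem_segment ℝ x y)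
          hz).trans_lt (max_lt ((hmem x).1 (hKs hx)) ((hmem y).1 (hKs hyK)))
      have h1 : segment ℝ x y ⊆ Ω := by
        rw [segment_eq_image']
        rintro _ ⟨t, ht, rfl⟩
        exact hKSx hy t ht
      have h2 := (convex_segment x y).isPreconnected.subset_connectedComponentIn
        (left_mem_segment ℝ x y) h1
      rwa [← connectedComponentIn_eq hx] at h2
    have hclK : closure K ⊆ closure Ω := closure_mono hKs
    refine ⟨hfr, hconv, chart_exists hKo (h.bdd.subset hKs) hconv haK h.smooth hq hγ0 hγ1
      (fun x hx y hy => hS x (hclK hx) y (hclK hy)) (fun x hx => (hmem x).1 (hKs hx))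
      (fun x hx => ?_) (hqc _ hconv.closure fun x hx => hV x (hclK hx))⟩
    have := hfr hx
    rw [h.fr] at this
    rw [show f x = 0 from this, hq00]
  · have hlt : ‖x‖ < R + 1 := by linarith [hR x hx]
    have hnhds : {y : ℂ | ‖y‖ < R + 1 ∧ f y < ε} ∈ 𝓝 x :=
      ((isOpen_lt continuous_norm continuous_const).inter
        (isOpen_lt h.smooth.continuous continuous_const)).mem_nhds ⟨hlt, (hcl x hx).trans_lt hε⟩
    obtain ⟨r, hr, hB⟩ := Metric.mem_nhds_iff.1 hnhds
    have hcx := convexOn_of_tangent (convex_ball x r) (hqc _ (convex_ball x r) fun z hz =>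
      ⟨(hB hz).1.le, (hB hz).2.le⟩)
    have hcB := hcx.convex_lt 0
    obtain ⟨a, haB, ha⟩ := mem_closure_iff_nhds.1 hx _ (Metric.ball_mem_nhds x hr)
    refine ⟨a, ha, Metric.ball x r, Metric.ball_mem_nhds x hr, ?_⟩
    have h1 : Ω ∩ Metric.ball x r ⊆ connectedComponentIn Ω a := by
      have h2 := hcB.isPreconnected.subset_connectedComponentIn (x := a) (F := Ω)
        ⟨haB, (hmem a).1 ha⟩ (fun y hy => (hmem y).2 hy.2)
      exact fun y hy => h2 ⟨hy.2, (hmem y).1 hy.1⟩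
    intro y hy
    exact closure_mono h1 (by
      have := Metric.isOpen_ball.inter_closure (s := Metric.ball x r) (t := Ω) ⟨hy.2, hy.1⟩
      rwa [inter_comm] at this)

/-! ### Comparison principles -/

/-- `Phi` as a function of a pair. -/
def Phi2 (y : (ℂ →L[ℝ] ℝ) × (ℂ →L[ℝ] ℂ →L[ℝ] ℝ)) : ℝ := Phi y.1 y.2

/-- The mean curvature operator applied to `u`. -/
def MC (u : ℂ → ℝ) (x : ℂ) : ℝ := Phi (fderiv ℝ u x) (fderiv ℝ (fderiv ℝ u) x)

/-- The linearisation at `u` of the mean curvature operator, applied to `w`. -/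
def LMC (u w : ℂ → ℝ) (x : ℂ) : ℝ :=
  fderiv ℝ Phi2 (fderiv ℝ u x, fderiv ℝ (fderiv ℝ u) x) (fderiv ℝ w x, fderiv ℝ (fderiv ℝ w) x)

lemma contDiff_Phi2 {n : ℕ∞} : ContDiff ℝ n Phi2 := by
  have h : Phi2 = fun y => Fop (ContinuousLinearMap.id ℝ ℂ, 0, y.1, y.2) := by
    funext y
    simp [Phi2, Fop, Phi, pullP, pullS_apply]
  rw [h]
  exact contDiff_Fop.comp (contDiff_const.prodMk (contDiff_const.prodMk contDiff_id))

lemma Phi_add (q R S) : Phi q (R + S) = Phi q R + Phi q S := by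
  simp only [Phi, add_apply]; ring

lemma Phi_smul (q S) (c : ℝ) : Phi q (c • S) = c * Phi q S := by
  simp only [Phi, smul_apply, smul_eq_mul]; ring

lemma hasDerivAt_Phi2 (y v : (ℂ →L[ℝ] ℝ) × (ℂ →L[ℝ] ℂ →L[ℝ] ℝ)) :
    HasDerivAt (fun t : ℝ => Phi2 (y + t • v)) (fderiv ℝ Phi2 y v) 0 := by
  have h1 : HasDerivAt (fun t : ℝ => y + t • v) v 0 := by
    simpa using ((hasDerivAt_id (0 : ℝ)).smul_const v).const_add y
  have h2 : HasFDerivAt Phi2 (fderiv ℝ Phi2 y) (y + (0 : ℝ) • v) := by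
    simpa using ((contDiff_Phi2 (n := 1)).differentiable (by norm_num) y).hasFDerivAt
  exact h2.comp_hasDerivAt (0 : ℝ) h1

lemma fderiv_Phi2_S (q R S) : fderiv ℝ Phi2 (q, R) (0, S) = Phi q S := by
  have h := hasDerivAt_Phi2 (q, R) (0, S)
  have e : (fun t : ℝ => Phi2 ((q, R) + t • ((0 : ℂ →L[ℝ] ℝ), S))) =
      fun t => Phi q R + t * Phi q S := by
    funext t
    simp only [Phi2, Prod.smul_mk, smul_zero, Prod.mk_add_mk, add_zero, Phi_add, Phi_smul]
  rw [e] at h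
  exact h.unique (by simpa using ((hasDerivAt_id (0 : ℝ)).mul_const (Phi q S)).const_add (Phi q R))

/-- The linearised operator in curvilinear coordinates is the pullback of the linearised operator. -/
lemma fderiv_Fop_inj (T Z p S p' S') : fderiv ℝ Fop (T, Z, p, S) (inj p' S') =
    fderiv ℝ Phi2 (pullP T p, pullS T Z p S) (pullP T p', pullS T Z p' S') := by
  have h1 : HasDerivAt (fun t : ℝ => (T, Z, p, S) + t • inj p' S') (inj p' S') 0 := by
    simpa using ((hasDerivAt_id (0 : ℝ)).smul_const (inj p' S')).const_add (T, Z, p, S)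
  have h2 : HasFDerivAt Fop (fderiv ℝ Fop (T, Z, p, S)) ((T, Z, p, S) + (0 : ℝ) • inj p' S') := by
    simpa using ((contDiff_Fop (n := 1)).differentiable (by norm_num) (T, Z, p, S)).hasFDerivAt
  have h3 := h2.comp_hasDerivAt (0 : ℝ) h1
  refine h3.unique ((hasDerivAt_Phi2 _ _).congr_of_eventuallyEq (Eventually.of_forall fun t => ?_))
  simp only [Function.comp, Fop, Phi2, inj, Phi, pullP, pullS_apply, Prod.smul_mk, smul_zero,
    Prod.mk_add_mk, add_zero, add_apply, smul_apply, smul_eq_mul, ContinuousLinearMap.comp_apply]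
  ring_nf

lemma Phi_nonpos (q S) (hs : ∀ a b, S a b = S b a) (hS : ∀ h, S h h ≤ 0) : Phi q S ≤ 0 := by
  have h := trace_nonpos (lam := 1) (a11 := 1 + (q Complex.I) ^ 2) (a12 := -(q 1 * q Complex.I))
    (a22 := 1 + (q 1) ^ 2) (b11 := S 1 1) (b12 := S 1 Complex.I) (b22 := S Complex.I Complex.I)
    one_pos (fun s t => by nlinarith [sq_nonneg (q Complex.I * s - q 1 * t)]) fun s t => by
      have := hS (s • (1 : ℂ) + t • Complex.I)
      simp only [map_add, map_smul, add_apply, smul_apply, smul_eq_mul, hs Complex.I 1] at this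
      nlinarith
  have h2 : 0 ≤ ((√(1 + (q 1) ^ 2 + (q Complex.I) ^ 2))⁻¹) ^ 3 := by positivity
  exact mul_nonpos_of_nonpos_of_nonneg (by linarith) h2

lemma c2_fderiv {u : ℂ → ℝ} {G : Set ℂ} (hG : IsOpen G) (hu : ContDiffOn ℝ 2 u G) {x : ℂ}
    (hx : x ∈ G) : HasFDerivAt u (fderiv ℝ u x) x ∧
      HasFDerivAt (fderiv ℝ u) (fderiv ℝ (fderiv ℝ u) x) x ∧
      ContinuousAt (fderiv ℝ u) x ∧ ContinuousAt (fderiv ℝ (fderiv ℝ u)) x ∧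
      ∀ a b, fderiv ℝ (fderiv ℝ u) x a b = fderiv ℝ (fderiv ℝ u) x b a := by
  have h := hu.contDiffAt (hG.mem_nhds hx)
  have h1 : ContDiffAt ℝ 1 (fderiv ℝ u) x := h.fderiv_right (by norm_num)
  have h2 : ContDiffAt ℝ 0 (fderiv ℝ (fderiv ℝ u)) x := h1.fderiv_right (by norm_num)
  exact ⟨(h.differentiableAt (by norm_num)).hasFDerivAt,
    (h1.differentiableAt (by norm_num)).hasFDerivAt, h1.continuousAt, h2.continuousAt,
    fun a b => (h.isSymmSndFDerivAt (by simp)) a b⟩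

/-- A maximum principle for differential inequalities with an error controlled by the gradient. -/
lemma max_core {G : Set ℂ} (hG : IsOpen G) (hGb : Bornology.IsBounded G) {w : ℂ → ℝ}
    (hc : ContinuousOn w (closure G)) (hw : ContDiffOn ℝ 2 w G) {q : ℂ → ℂ →L[ℝ] ℝ}
    (hq : ContinuousOn q G)
    (hL : ∀ K ⊆ G, IsCompact K → ∃ C, ∀ x ∈ K,
      -(C * ‖fderiv ℝ w x‖) ≤ Phi (q x) (fderiv ℝ (fderiv ℝ w) x))
    (hbd : ∀ x ∈ frontier G, w x ≤ 0) : ∀ x ∈ closure G, w x ≤ 0 := by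
  suffices h : ∀ x ∈ G, w x ≤ 0 by
    intro x hx
    by_cases hxG : x ∈ G
    · exact h x hxG
    · exact hbd x ⟨hx, by rwa [hG.interior_eq]⟩
  intro x1 hx1
  by_contra hpos
  push Not at hpos
  obtain ⟨K, hK, hKc, hT⟩ := touching hG hGb hc (fun x hx => (c2_fderiv hG hw hx).1)
    (fun x hx => (c2_fderiv hG hw hx).2.1) hbd Complex.reCLM hx1 hpos
  obtain ⟨C, hC⟩ := hL K hK hKc
  obtain ⟨B, hB⟩ := hKc.exists_bound_of_continuousOn (hq.mono hK)
  set L := 1 + 2 * |B| with hLd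
  have hL0 : 0 < L := by positivity
  set k := |C| * L ^ 3 + 1 with hk
  have hk0 : 0 < k := by positivity
  obtain ⟨x, hx, δ, hδ, -, hp, hS⟩ := hT k 1 one_pos
  have hqx := (hB x hx).trans (le_abs_self B)
  have b1 : |q x 1| ≤ |B| := by
    have := (q x).le_opNorm 1
    rw [norm_one, mul_one] at this
    exact this.trans hqx
  have b2 : |q x Complex.I| ≤ |B| := by
    have := (q x).le_opNorm Complex.I
    rw [Complex.norm_I, mul_one] at this
    exact this.trans hqx
  have h1 : 1 + (q x 1) ^ 2 + (q x Complex.I) ^ 2 ≤ L ^ 2 := by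
    have a1 := sq_le_sq' (abs_le.1 b1).1 (abs_le.1 b1).2
    have a2 := sq_le_sq' (abs_le.1 b2).1 (abs_le.1 b2).2
    rw [hLd]
    nlinarith [abs_nonneg B]
  have h2 := Phi_tens_lower (q x) Complex.reCLM h1 hL0
  simp only [Complex.reCLM_apply, Complex.one_re, Complex.I_re] at h2
  set S := fderiv ℝ (fderiv ℝ w) x with hSd
  have h3 : Phi (q x) (S + (δ * k ^ 2) • tens Complex.reCLM Complex.reCLM) ≤ 0 := by
    refine Phi_nonpos _ _ (fun a b => ?_) fun h => ?_
    · simp only [add_apply, smul_apply, tens_apply, (c2_fderiv hG hw (hK hx)).2.2.2.2 a b, hSd]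
      rw [mul_comm (Complex.reCLM a)]
    · have := hS h
      simp only [add_apply, smul_apply, tens_apply, smul_eq_mul]
      nlinarith
  rw [Phi_add, Phi_smul] at h3
  have h4 := hC x hx
  have h5 : ‖fderiv ℝ w x‖ = δ * k := by
    rw [hp, norm_smul, norm_neg, Complex.reCLM_norm, mul_one, Real.norm_of_nonneg (by positivity)]
  rw [h5] at h4
  have h6 : C * (δ * k) ≤ |C| * (δ * k) := by gcongr; exact le_abs_self C
  have h7 : δ * k ^ 2 * (L⁻¹ ^ 3 * (1 ^ 2 + 0 ^ 2)) ≤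
    δ * k ^ 2 * Phi (q x) (tens Complex.reCLM Complex.reCLM) := by gcongr
  have h8 : δ * k * (k * L⁻¹ ^ 3) ≤ δ * k * |C| := by nlinarith
  have h9 : k * L⁻¹ ^ 3 ≤ |C| := le_of_mul_le_mul_left h8 (by positivity)
  rw [inv_pow, ← div_eq_mul_inv, div_le_iff₀ (by positivity)] at h9
  linarith

/-- Solutions with larger mean curvature and smaller boundary values lie below. -/
lemma comparison {G : Set ℂ} (hG : IsOpen G) (hGb : Bornology.IsBounded G) {u v : ℂ → ℝ}
    (hcu : ContinuousOn u (closure G)) (hcv : ContinuousOn v (closure G))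
    (hu : ContDiffOn ℝ 2 u G) (hv : ContDiffOn ℝ 2 v G) (hM : ∀ x ∈ G, MC v x ≤ MC u x)
    (hbd : ∀ x ∈ frontier G, u x ≤ v x) : ∀ x ∈ closure G, u x ≤ v x := by
  have e1 : ∀ x ∈ G, fderiv ℝ (fun x => u x - v x) x = fderiv ℝ u x - fderiv ℝ v x := fun x hx =>
    ((c2_fderiv hG hu hx).1.sub (c2_fderiv hG hv hx).1).fderiv
  have e2 : ∀ x ∈ G, fderiv ℝ (fderiv ℝ (fun x => u x - v x)) x =
      fderiv ℝ (fderiv ℝ u) x - fderiv ℝ (fderiv ℝ v) x := fun x hx => by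
    have : fderiv ℝ (fun x => u x - v x) =ᶠ[𝓝 x] fun x => fderiv ℝ u x - fderiv ℝ v x := by
      filter_upwards [hG.mem_nhds hx] with y hy using e1 y hy
    rw [this.fderiv_eq]
    exact ((c2_fderiv hG hu hx).2.1.sub (c2_fderiv hG hv hx).2.1).fderiv
  have cu : ContinuousOn (fderiv ℝ u) G := fun x hx =>
    (c2_fderiv hG hu hx).2.2.1.continuousWithinAt
  have cv : ContinuousOn (fderiv ℝ v) G := fun x hx =>
    (c2_fderiv hG hv hx).2.2.1.continuousWithinAt
  have cS : ContinuousOn (fderiv ℝ (fderiv ℝ v)) G := fun x hx =>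
    (c2_fderiv hG hv hx).2.2.2.1.continuousWithinAt
  have h := max_core hG hGb (hcu.sub hcv) (hu.sub hv) cu (fun K hK hKc => ?_)
    (fun x hx => sub_nonpos.2 (hbd x hx))
  · exact fun x hx => sub_nonpos.1 (h x hx)
  · obtain ⟨B1, hB1⟩ := hKc.exists_bound_of_continuousOn (cu.mono hK)
    obtain ⟨B2, hB2⟩ := hKc.exists_bound_of_continuousOn (cv.mono hK)
    obtain ⟨B3, hB3⟩ := hKc.exists_bound_of_continuousOn (cS.mono hK)
    set B := max B1 (max B2 B3) with hB
    obtain ⟨C, hC⟩ := (contDiff_Phi2 (n := 1)).contDiffOn.exists_lipschitzOnWith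
      (s := Metric.closedBall 0 B) one_ne_zero (convex_closedBall _ _) (isCompact_closedBall _ _)
    refine ⟨C, fun x hx => ?_⟩
    have m : ∀ q : ℂ →L[ℝ] ℝ, ‖q‖ ≤ B →
        (q, fderiv ℝ (fderiv ℝ v) x) ∈ Metric.closedBall
          (0 : (ℂ →L[ℝ] ℝ) × (ℂ →L[ℝ] ℂ →L[ℝ] ℝ)) B := fun q hq => by
      rw [mem_closedBall_zero_iff]
      exact max_le hq ((hB3 x hx).trans ((le_max_right _ _).trans (le_max_right _ _)))
    have h1 := hC.norm_sub_le (m _ ((hB1 x hx).trans (le_max_left _ _)))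
      (m _ ((hB2 x hx).trans ((le_max_left _ _).trans (le_max_right _ _))))
    rw [Prod.mk_sub_mk, sub_self, Prod.norm_mk, norm_zero, max_eq_left (norm_nonneg _)] at h1
    change -(C * ‖fderiv ℝ (fun x => u x - v x) x‖) ≤
      Phi (fderiv ℝ u x) (fderiv ℝ (fderiv ℝ (fun x => u x - v x)) x)
    rw [e1 x (hK hx), e2 x (hK hx)]
    have h2 := hM x (hK hx)
    have h3 : Phi (fderiv ℝ u x) (fderiv ℝ (fderiv ℝ u) x - fderiv ℝ (fderiv ℝ v) x) =
        MC u x - Phi2 (fderiv ℝ u x, fderiv ℝ (fderiv ℝ v) x) := by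
      have := Phi_add (fderiv ℝ u x) (fderiv ℝ (fderiv ℝ u) x - fderiv ℝ (fderiv ℝ v) x)
        (fderiv ℝ (fderiv ℝ v) x)
      rw [sub_add_cancel] at this
      simp only [MC, Phi2]
      linarith
    have h4 : MC v x = Phi2 (fderiv ℝ v x, fderiv ℝ (fderiv ℝ v) x) := rfl
    rw [h3]
    have h5 := (abs_le.1 h1).2
    linarith

/-- The weak maximum principle for the linearised operator. -/
lemma linear_max {G : Set ℂ} (hG : IsOpen G) (hGb : Bornology.IsBounded G) {u w : ℂ → ℝ}
    (hu : ContDiffOn ℝ 2 u G) (hcw : ContinuousOn w (closure G)) (hw : ContDiffOn ℝ 2 w G)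
    (hL : ∀ x ∈ G, 0 ≤ LMC u w x) (hbd : ∀ x ∈ frontier G, w x ≤ 0) :
    ∀ x ∈ closure G, w x ≤ 0 := by
  have cu : ContinuousOn (fderiv ℝ u) G := fun x hx =>
    (c2_fderiv hG hu hx).2.2.1.continuousWithinAt
  have cS : ContinuousOn (fderiv ℝ (fderiv ℝ u)) G := fun x hx =>
    (c2_fderiv hG hu hx).2.2.2.1.continuousWithinAt
  refine max_core hG hGb hcw hw cu (fun K hK hKc => ?_) hbd
  obtain ⟨B, hB⟩ := hKc.exists_bound_of_continuousOn
    (f := fun x => fderiv ℝ Phi2 (fderiv ℝ u x, fderiv ℝ (fderiv ℝ u) x))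
    (((contDiff_Phi2 (n := 1)).continuous_fderiv (by norm_num)).comp_continuousOn
      ((cu.prodMk cS).mono hK))
  refine ⟨B, fun x hx => ?_⟩
  have h1 := hL x (hK hx)
  have h2 : ((fderiv ℝ w x, fderiv ℝ (fderiv ℝ w) x) : (ℂ →L[ℝ] ℝ) × (ℂ →L[ℝ] ℂ →L[ℝ] ℝ)) =
      (fderiv ℝ w x, 0) + (0, fderiv ℝ (fderiv ℝ w) x) := by simp
  rw [LMC, h2, map_add, fderiv_Phi2_S] at h1
  have h3 := (fderiv ℝ Phi2 (fderiv ℝ u x, fderiv ℝ (fderiv ℝ u) x)).le_opNorm (fderiv ℝ w x, 0)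
  rw [Prod.norm_mk, norm_zero, max_eq_left (norm_nonneg _)] at h3
  have h4 : ‖fderiv ℝ Phi2 (fderiv ℝ u x, fderiv ℝ (fderiv ℝ u) x)‖ * ‖fderiv ℝ w x‖ ≤
    B * ‖fderiv ℝ w x‖ := by gcongr; exact hB x hx
  have := (abs_le.1 h3).2
  linarith

/-- A nonpositive strict subsolution of the linearised equation is negative. -/
lemma linear_neg {G : Set ℂ} (hG : IsOpen G) {u w : ℂ → ℝ} (hw : ContDiffOn ℝ 2 w G)
    (hL : ∀ x ∈ G, 0 < LMC u w x) (hle : ∀ x ∈ G, w x ≤ 0) : ∀ x ∈ G, w x < 0 := by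
  intro x hx
  refine lt_of_le_of_ne (hle x hx) fun h0 => ?_
  have hmax : IsLocalMax w x := by
    filter_upwards [hG.mem_nhds hx] with y hy
    rw [h0]; exact hle y hy
  obtain ⟨-, h2, -, -, hs⟩ := c2_fderiv hG hw hx
  have hp : fderiv ℝ w x = 0 := hmax.fderiv_eq_zero
  have hS : ∀ h, fderiv ℝ (fderiv ℝ w) x h h ≤ 0 := by
    intro h
    have hl : ∀ t : ℝ, HasDerivAt (fun t : ℝ => x + t • h) h t := fun t => by
      simpa using ((hasDerivAt_id t).smul_const h).const_add x
    have hl0 : Tendsto (fun t : ℝ => x + t • h) (𝓝 0) (𝓝 x) := by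
      have := (hl 0).continuousAt.tendsto
      simpa using this
    refine second_deriv_nonpos (φ := fun t : ℝ => w (x + t • h))
      (φ' := fun t => fderiv ℝ w (x + t • h) h) ?_ ?_ ?_
    · have := hl0.eventually hmax
      simpa [IsLocalMax, IsMaxFilter] using this
    · filter_upwards [hl0.eventually (hG.mem_nhds hx)] with t ht
      exact (c2_fderiv hG hw ht).1.comp_hasDerivAt t (hl t)
    · have h3 : HasFDerivAt (fderiv ℝ w) (fderiv ℝ (fderiv ℝ w) x) (x + (0 : ℝ) • h) := by
        simpa using h2
      have h4 : HasDerivAt (fun t : ℝ => fderiv ℝ w (x + t • h)) (fderiv ℝ (fderiv ℝ w) x h) 0 :=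
        h3.comp_hasDerivAt (0 : ℝ) (hl 0)
      exact (ContinuousLinearMap.apply ℝ ℝ h).hasFDerivAt.comp_hasDerivAt (0 : ℝ) h4
  have h1 := hL x hx
  rw [LMC, hp, fderiv_Phi2_S] at h1
  exact absurd (Phi_nonpos (fderiv ℝ u x) _ hs hS) (not_le.2 h1)

section

/-! ### Solvability and differentiability in the parameter on one component -/

lemma hol_continuousOn {F : Type*} [NormedAddCommGroup F] {A : Set ℂ} {γ M : ℝ} (hγ : 0 < γ)
    {f : ℂ → F} (h : ∀ x ∈ A, ∀ y ∈ A, ‖f y - f x‖ ≤ M * ‖y - x‖ ^ γ) : ContinuousOn f A := by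
  intro x hx
  rw [ContinuousWithinAt, tendsto_iff_norm_sub_tendsto_zero]
  have h1 : Tendsto (fun y : ℂ => M * ‖y - x‖ ^ γ) (𝓝[A] x) (𝓝 0) := by
    have : ContinuousAt (fun y : ℂ => M * ‖y - x‖ ^ γ) x :=
      continuousAt_const.mul ((by fun_prop : ContinuousAt (fun y : ℂ => ‖y - x‖) x).rpow_const
        (Or.inr hγ.le))
    have h2 := this.tendsto
    simp only [sub_self, norm_zero, Real.zero_rpow hγ.ne', mul_zero] at h2
    exact h2.mono_left nhdsWithin_le_nhds
  exact tendsto_of_tendsto_of_tendsto_of_le_of_le' tendsto_const_nhds h1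
    (Eventually.of_forall fun _ => norm_nonneg _)
    (by filter_upwards [self_mem_nhdsWithin] with y hy using h x hx y hy)

lemma BdOn.contDiffOn {γ M : ℝ} {J : Jet} (hγ : 0 < γ) (hJ : BdOn Dk γ M J) :
    ContDiffOn ℝ 2 J.w Dk := by
  have h0 : ContDiffOn ℝ 0 J.S Dk := contDiffOn_zero.2 (hol_continuousOn hγ hJ.t2)
  have h1 : ContDiffOn ℝ (0 + 1) J.p Dk :=
    (contDiffOn_succ_iff_hasFDerivWithinAt_of_uniqueDiffOn uniqueDiffOn_Dk).2
      ⟨by simp, J.S, h0, fun x hx => hJ.hasFDeriv_p hγ hx⟩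
  have h2 : ContDiffOn ℝ (0 + 1 + 1) J.w Dk :=
    (contDiffOn_succ_iff_hasFDerivWithinAt_of_uniqueDiffOn uniqueDiffOn_Dk).2
      ⟨by simp, J.p, h1, fun x hx => hJ.hasFDeriv_w hγ hx⟩
  have e : (0 + 1 + 1 : WithTop ℕ∞) = 2 := by norm_num
  rwa [e] at h2

section chart
variable {γ μ R : ℝ} {K : Set ℂ} {Θ Ξ : ℂ → ℂ}

/-- Transplanting a jet from the disc. -/
lemma Chart.pull (hc : Chart γ μ R K Θ Ξ) (hK : IsOpen K) (hγ : 0 < γ) {M : ℝ} {J : Jet}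
    (hJ : BdOn Dk γ M J) : ContDiffOn ℝ 2 (fun x => J.w (Θ x)) (closure K) ∧ ∀ x ∈ K,
      fderiv ℝ (fun x => J.w (Θ x)) x = pullP (fderiv ℝ Θ x) (J.p (Θ x)) ∧
      fderiv ℝ (fderiv ℝ (fun x => J.w (Θ x))) x =
        pullS (fderiv ℝ Θ x) (fderiv ℝ (fderiv ℝ Θ) x) (J.p (Θ x)) (J.S (Θ x)) := by
  refine ⟨(hJ.contDiffOn hγ).comp hc.smooth.contDiffOn hc.maps, ?_⟩
  have hIn : ∀ x ∈ K, Θ x ∈ interior Dk := fun x hx => by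
    rw [Dk, interior_closedBall _ one_ne_zero]
    simpa using hc.int x hx
  have hΘ : ∀ x, HasFDerivAt Θ (fderiv ℝ Θ x) x := fun x =>
    (hc.smooth.differentiable (by norm_num) x).hasFDerivAt
  have hΘ2 : ∀ x, HasFDerivAt (fderiv ℝ Θ) (fderiv ℝ (fderiv ℝ Θ) x) x := fun x =>
    ((hc.smooth.fderiv_right (m := 1) (by norm_num)).differentiable (by norm_num) x).hasFDerivAt
  have h1 : ∀ x ∈ K, fderiv ℝ (fun x => J.w (Θ x)) x = pullP (fderiv ℝ Θ x) (J.p (Θ x)) :=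
    fun x hx => ((hasFDerivAt_of_interior hJ.toTaylorOn hγ (hIn x hx)).1.comp x (hΘ x)).fderiv
  refine fun x hx => ⟨h1 x hx, ?_⟩
  have h2 : fderiv ℝ (fun x => J.w (Θ x)) =ᶠ[𝓝 x] fun x => (J.p (Θ x)).comp (fderiv ℝ Θ x) := by
    filter_upwards [hK.mem_nhds hx] with y hy using h1 y hy
  have h3 : HasFDerivAt (fun x => J.p (Θ x)) ((J.S (Θ x)).comp (fderiv ℝ Θ x)) x :=
    (hasFDerivAt_of_interior hJ.toTaylorOn hγ (hIn x hx)).2.comp x (hΘ x)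
  rw [h2.fderiv_eq, (h3.clm_comp (hΘ2 x)).fderiv]
  refine ContinuousLinearMap.ext fun a => ContinuousLinearMap.ext fun b => ?_
  simp only [pullS_apply, add_apply, ContinuousLinearMap.comp_apply,
    ContinuousLinearMap.compL_apply, ContinuousLinearMap.flip_apply]
  ring

lemma Chart.MC_eq (hc : Chart γ μ R K Θ Ξ) (hK : IsOpen K) (hγ : 0 < γ) {M : ℝ} {J : Jet}
    (hJ : BdOn Dk γ M J) {x : ℂ} (hx : x ∈ K) : MC (fun x => J.w (Θ x)) x =
      Fop (yJ (fun z => fderiv ℝ Θ (Ξ z)) (fun z => fderiv ℝ (fderiv ℝ Θ) (Ξ z)) J (Θ x)) := by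
  obtain ⟨h1, h2⟩ := (hc.pull hK hγ hJ).2 x hx
  rw [MC, h1, h2]
  simp only [Fop, yJ, hc.left x (subset_closure hx)]

lemma Chart.LMC_eq (hc : Chart γ μ R K Θ Ξ) (hK : IsOpen K) (hγ : 0 < γ) {M M' : ℝ} {J W : Jet}
    (hJ : BdOn Dk γ M J) (hW : BdOn Dk γ M' W) {x : ℂ} (hx : x ∈ K) :
    LMC (fun x => J.w (Θ x)) (fun x => W.w (Θ x)) x =
      fderiv ℝ Fop (yJ (fun z => fderiv ℝ Θ (Ξ z)) (fun z => fderiv ℝ (fderiv ℝ Θ) (Ξ z)) J (Θ x))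
        (inj (W.p (Θ x)) (W.S (Θ x))) := by
  obtain ⟨h1, h2⟩ := (hc.pull hK hγ hJ).2 x hx
  obtain ⟨h3, h4⟩ := (hc.pull hK hγ hW).2 x hx
  rw [LMC, h1, h2, h3, h4, yJ, fderiv_Fop_inj, hc.left x (subset_closure hx)]

lemma MC_neg (u : ℂ → ℝ) (x : ℂ) : MC (fun x => -u x) x = -MC u x := by
  have h : fderiv ℝ (fun x => -u x) = fun x => -fderiv ℝ u x := funext fun y => fderiv_fun_neg
  rw [MC, h, fderiv_fun_neg, MC]
  simp only [Phi, neg_apply]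
  ring_nf

/-- Comparison with `±u0` and with translates bounds a solution and its gradient. -/
lemma grad_bound (hK : IsOpen K) (hKb : Bornology.IsBounded K) {u0 v : ℂ → ℝ} {H0 h : ℝ}
    (hu0c : ContinuousOn u0 (closure K)) (hu0 : ContDiffOn ℝ 2 u0 K) {C : NNReal}
    (hlip : LipschitzOnWith C u0 (closure K)) (hM0 : ∀ x ∈ K, MC u0 x = 2 * H0)
    (hb0 : ∀ x ∈ frontier K, u0 x = 0) (hvc : ContinuousOn v (closure K))
    (hv : ContDiffOn ℝ 2 v K) (hM : ∀ x ∈ K, MC v x = 2 * h) (hb : ∀ x ∈ frontier K, v x = 0)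
    (hh : |h| ≤ H0) :
    (∀ x ∈ closure K, |v x| ≤ |u0 x|) ∧ ∀ x ∈ K, ‖fderiv ℝ v x‖ ≤ C := by
  have hh' := abs_le.1 hh
  have hlo : ∀ x ∈ closure K, u0 x ≤ v x := comparison hK hKb hu0c hvc hu0 hv
    (fun x hx => by rw [hM0 x hx, hM x hx]; linarith) fun x hx => by rw [hb0 x hx, hb x hx]
  have hup : ∀ x ∈ closure K, v x ≤ -u0 x := comparison hK hKb hvc hu0c.neg hv hu0.neg
    (fun x hx => by rw [MC_neg, hM0 x hx, hM x hx]; linarith)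
    fun x hx => by simp [hb0 x hx, hb x hx]
  have hL : ∀ x ∈ closure K, ∀ y ∈ closure K, u0 x - u0 y ≤ C * ‖x - y‖ := fun x hx y hy =>
    (le_abs_self _).trans (hlip.norm_sub_le hx hy)
  have key : ∀ τ : ℂ, ∀ x ∈ K, x + τ ∈ K → v (x + τ) ≤ v x + C * ‖τ‖ := by
    intro τ x hx hxτ
    set G : Set ℂ := K ∩ (fun x => x + τ) ⁻¹' K with hG
    have hct : Continuous fun x : ℂ => x + τ := by fun_prop
    have hGo : IsOpen G := hK.inter (hK.preimage hct)
    have m1 : closure G ⊆ closure K := closure_mono inter_subset_left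
    have m2 : MapsTo (fun x : ℂ => x + τ) (closure G) (closure K) :=
      fun y hy => map_mem_closure (f := fun x => x + τ) hct hy fun z hz => hz.2
    refine comparison (u := fun x => v (x + τ)) (v := fun x => v x + C * ‖τ‖) hGo
      (hKb.subset inter_subset_left) (hvc.comp hct.continuousOn m2)
      ((hvc.mono m1).add continuousOn_const)
      (hv.comp (contDiff_id.add contDiff_const).contDiffOn fun y hy => hy.2)
      ((hv.mono inter_subset_left).add contDiffOn_const) (fun y hy => ?_) (fun y hy => ?_)
      x (subset_closure ⟨hx, hxτ⟩)
    · have e1 : fderiv ℝ (fun x => v (x + τ)) = fun x => fderiv ℝ v (x + τ) :=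
        funext fun z => fderiv_comp_add_right τ
      have e2 : fderiv ℝ (fun x => v x + C * ‖τ‖) = fderiv ℝ v :=
        funext fun z => fderiv_add_const _
      have a1 := hM y hy.1
      have a2 := hM (y + τ) hy.2
      rw [MC] at a1 a2
      rw [MC, MC, e1, e2, fderiv_comp_add_right τ, a1, a2]
    · have hy1 := m1 hy.1
      have hy2 := m2 hy.1
      have hnG : y ∉ G := by have := hy.2; rwa [hGo.interior_eq] at this
      by_cases hyK : y ∈ K
      · have hfr : y + τ ∈ frontier K := ⟨hy2, by
          rw [hK.interior_eq]; exact fun h' => hnG ⟨hyK, h'⟩⟩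
        have a1 := hL _ hy2 y hy1
        have a2 := hlo y hy1
        rw [add_sub_cancel_left, hb0 _ hfr] at a1
        change v (y + τ) ≤ v y + C * ‖τ‖
        rw [hb _ hfr]
        linarith
      · have hfr : y ∈ frontier K := ⟨hy1, by rwa [hK.interior_eq]⟩
        have a1 := hL y hy1 _ hy2
        have a2 := hup _ hy2
        rw [sub_add_cancel_left, norm_neg, hb0 _ hfr] at a1
        change v (y + τ) ≤ v y + C * ‖τ‖
        rw [hb _ hfr]
        linarith
  refine ⟨fun x hx => abs_le.2 ⟨?_, ?_⟩, fun x hx => ?_⟩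
  · exact (neg_abs_le _).trans (hlo x hx)
  · exact (hup x hx).trans (neg_le_abs _)
  · refine norm_fderiv_le_of_lipschitzOn ℝ (hK.mem_nhds hx) (LipschitzOnWith.of_dist_le_mul
      fun y hy z hz => ?_)
    rw [Real.dist_eq, dist_eq_norm]
    have a1 := key (y - z) z hz (by simpa using hy)
    have a2 := key (z - y) y hy (by simpa using hz)
    rw [add_sub_cancel] at a1 a2
    rw [norm_sub_rev] at a2
    exact abs_le.2 ⟨by linarith, by linarith⟩

lemma hasDerivAt_of_sq {f : ℝ → ℝ} {a w B δ : ℝ} (hδ : 0 < δ)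
    (h : ∀ k, |k| ≤ δ → |f (a + k) - f a - k * w| ≤ B * k ^ 2) : HasDerivAt f w a := by
  rw [hasDerivAt_iff_isLittleO_nhds_zero]
  have h1 : (fun k : ℝ => f (a + k) - f a - k • w) =O[𝓝 0] fun k : ℝ => k ^ 2 := by
    refine Asymptotics.IsBigO.of_bound B ?_
    filter_upwards [Metric.closedBall_mem_nhds (0 : ℝ) hδ] with k hk
    have := h k (by simpa using hk)
    simpa using this
  refine h1.trans_isLittleO ?_
  simpa using Asymptotics.isLittleO_pow_id (𝕜 := ℝ) one_lt_two

/-- On a charted component every Dirichlet problem with `|h| ≤ H0` is solvable and the solution is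
differentiable in `h`, provided the problem with mean curvature `H0` has a `C²` solution. -/
theorem component_main (hc : Chart γ μ R K Θ Ξ) (hγ0 : 0 < γ) (hγ1 : γ < 1) (hμ : 0 < μ)
    (hK : IsOpen K) (hKb : Bornology.IsBounded K) (hKc : Convex ℝ K) {u0 : ℂ → ℝ} {H0 H : ℝ}
    (hu0 : ContDiffOn ℝ 2 u0 (closure K)) (hM0 : ∀ x ∈ K, MC u0 x = 2 * H0)
    (hb0 : ∀ x ∈ frontier K, u0 x = 0) (hH : |H| < H0) {U : ℂ → ℝ → ℝ}
    (hU : ∀ᶠ h in 𝓝 H, ContDiffOn ℝ 2 (fun x => U x h) K ∧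
      ContinuousOn (fun x => U x h) (closure K) ∧ (∀ x ∈ K, MC (fun x => U x h) x = 2 * h) ∧
      ∀ x ∈ frontier K, U x h = 0) :
    ∃ w : ℂ → ℝ, ContDiffOn ℝ 2 w (closure K) ∧
      (∀ x ∈ closure K, HasDerivAt (fun h => U x h) (w x) H) ∧
      (∀ x ∈ K, LMC (fun x => U x H) w x = 2) := by
  set T := fun z => fderiv ℝ Θ (Ξ z) with hT
  set Z := fun z => fderiv ℝ (fderiv ℝ Θ) (Ξ z) with hZ
  set P : ℝ → Jet → Prop := fun h J => (∃ M', BdOn Dk γ M' J) ∧ ZeroBd J ∧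
    ∀ z ∈ Dk, Fop (yJ T Z J z) = 2 * h with hP
  have hcl : IsCompact (closure K) := hKb.isCompact_closure
  obtain ⟨C, hlip⟩ := hu0.exists_lipschitzOnWith two_ne_zero hKc.closure hcl
  obtain ⟨B0, hB0⟩ := hcl.exists_bound_of_continuousOn hu0.continuousOn
  have hu0K := hu0.mono subset_closure
  have hfrK : ∀ z ∈ Dk, ‖z‖ < 1 → Ξ z ∈ K := fun z hz hz1 => by
    by_contra hn
    have := hc.bdry (Ξ z) ⟨hc.maps' z hz, by rwa [hK.interior_eq]⟩
    rw [hc.right z hz] at this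
    linarith
  have hsol : ∀ h J, P h J → ContDiffOn ℝ 2 (fun x => J.w (Θ x)) (closure K) ∧
      (∀ x ∈ K, MC (fun x => J.w (Θ x)) x = 2 * h) ∧
      ∀ x ∈ frontier K, J.w (Θ x) = 0 := by
    rintro h J ⟨⟨M', hJ⟩, hJ0, hJF⟩
    refine ⟨(hc.pull hK hγ0 hJ).1, fun x hx => ?_, fun x hx => hJ0 _ (hc.bdry x hx)⟩
    rw [hc.MC_eq hK hγ0 hJ hx]
    exact hJF _ (hc.maps x (subset_closure hx))
  -- a priori bounds for the solutions with `|h| ≤ H0`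
  set L0 := √(2 * (C : ℝ) ^ 2 / μ) with hL0
  set L := max (max B0 (2 * L0)) H0 with hL
  obtain ⟨M, hMb⟩ := grad_to_c2 (R := R) (L := L) hγ0 hγ1 hμ
  have hbdd : ∀ h J, |h| ≤ H0 → P h J → BdOn Dk γ M J := by
    intro h J hh hPJ
    obtain ⟨s1, s2, s3⟩ := hsol h J hPJ
    obtain ⟨⟨M', hJ⟩, hJ0, hJF⟩ := hPJ
    obtain ⟨g1, g2⟩ := grad_bound hK hKb hu0.continuousOn hu0K hlip hM0 hb0 s1.continuousOn
      (s1.mono subset_closure) s2 s3 hh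
    refine hMb T Z J h hc.geo ⟨M', hJ⟩ hJ0 (fun z hz => ?_) ?_
      (hh.trans (le_max_right _ _)) hJF
    · have := (g1 _ (hc.maps' z hz)).trans (hB0 _ (hc.maps' z hz))
      rw [hc.right z hz] at this
      exact this.trans ((le_max_left _ _).trans (le_max_left _ _))
    · have hball : ∀ z ∈ Metric.ball (0 : ℂ) 1, ‖J.p z‖ ≤ L := by
        intro z hz
        have hz1 : ‖z‖ < 1 := by simpa using hz
        have hzD : z ∈ Dk := mem_Dk.2 hz1.le
        have hxK := hfrK z hzD hz1
        have hd := ((hc.pull hK hγ0 hJ).2 _ hxK).1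
        rw [hc.right z hzD] at hd
        have hn := g2 _ hxK
        rw [hd] at hn
        have hell := hc.geo.ell z hzD (J.p z 1) (J.p z Complex.I)
        have hq : ∀ a : ℂ, ‖a‖ = 1 → (J.p z 1 * (fderiv ℝ Θ (Ξ z) a).re +
            J.p z Complex.I * (fderiv ℝ Θ (Ξ z) a).im) ^ 2 ≤ (C : ℝ) ^ 2 := fun a ha => by
          have e : J.p z 1 * (fderiv ℝ Θ (Ξ z) a).re + J.p z Complex.I * (fderiv ℝ Θ (Ξ z) a).im =
              pullP (fderiv ℝ Θ (Ξ z)) (J.p z) a := by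
            rw [pullP, ContinuousLinearMap.comp_apply, clm_decomp (J.p z) (fderiv ℝ Θ (Ξ z) a),
              smul_eq_mul, smul_eq_mul]
            ring
          rw [e]
          have := ((pullP (fderiv ℝ Θ (Ξ z)) (J.p z)).le_opNorm a).trans
            (mul_le_mul_of_nonneg_right hn (norm_nonneg a))
          rw [ha, mul_one] at this
          exact sq_le_sq' (abs_le.1 this).1 (abs_le.1 this).2
        have h1 := hq 1 norm_one
        have h2 := hq Complex.I Complex.norm_I
        have hs : (J.p z 1) ^ 2 + (J.p z Complex.I) ^ 2 ≤ 2 * (C : ℝ) ^ 2 / μ := by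
          rw [le_div_iff₀ hμ]
          linarith
        have b1 : |J.p z 1| ≤ L0 := Real.abs_le_sqrt (by linarith [sq_nonneg (J.p z Complex.I)])
        have b2 : |J.p z Complex.I| ≤ L0 := Real.abs_le_sqrt (by linarith [sq_nonneg (J.p z 1)])
        refine le_trans ?_ ((le_max_right B0 (2 * L0)).trans (le_max_left _ H0))
        refine ContinuousLinearMap.opNorm_le_bound _ (by positivity) fun a => ?_
        rw [clm_decomp (J.p z) a]
        have c1 := mul_le_mul (Complex.abs_re_le_norm a) b1 (abs_nonneg _) (norm_nonneg a)
        have c2 := mul_le_mul (Complex.abs_im_le_norm a) b2 (abs_nonneg _) (norm_nonneg a)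
        calc _ ≤ ‖a.re • J.p z 1‖ + ‖a.im • J.p z Complex.I‖ := norm_add_le _ _
          _ = |a.re| * |J.p z 1| + |a.im| * |J.p z Complex.I| := by
            simp only [norm_smul, Real.norm_eq_abs]
          _ ≤ 2 * L0 * ‖a‖ := by linarith
      have hcb : closure (Metric.ball (0 : ℂ) 1) = Dk := closure_ball _ one_ne_zero
      have hpc : ContinuousOn J.p Dk := fun z hz => (hJ.hasFDeriv_p hγ0 hz).continuousWithinAt
      intro z hz
      rw [← hcb] at hz hpc
      exact le_on_closure (g := fun _ => L) hball hpc.norm continuousOn_const hz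
  -- continuation from the zero solution
  obtain ⟨δ, hδ, B, hstep⟩ := newton_step hγ0 hγ1 hμ (max M R)
  have hgeo : Geo γ μ (max M R) T Z :=
    ⟨hc.geo.hT.mono (le_max_right _ _), hc.geo.hZ.mono (le_max_right _ _), hc.geo.ell⟩
  have hnext : ∀ h J, |h| ≤ H0 → P h J → ∀ k, |k| ≤ δ → ∃ J', P (h + k) J' := by
    intro h J hh hPJ k hk
    obtain ⟨W, -, -, -, hW⟩ := hstep T Z J h hgeo ((hbdd h J hh hPJ).mono (le_max_left _ _))
      hPJ.2.1 hPJ.2.2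
    obtain ⟨J', a, b, c, -⟩ := hW k hk
    exact ⟨J', a, b, c⟩
  have hex : ∃ J, P H J := by
    obtain ⟨N, hN⟩ := exists_nat_gt (|H| / δ)
    have hN0 : (0 : ℝ) < N := lt_of_le_of_lt (by positivity) hN
    have hk : |H / N| ≤ δ := by
      rw [abs_div, abs_of_pos hN0, div_le_iff₀ hN0]
      rw [div_lt_iff₀ hδ] at hN
      linarith
    have hind : ∀ n : ℕ, n ≤ N → ∃ J, P (n * (H / N)) J := by
      intro n
      induction n with
      | zero =>
        refine fun _ => ⟨Jet.zero, ⟨0, Jet.zero_bd _ _ le_rfl⟩, fun _ _ => rfl, fun z _ => ?_⟩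
        simp [Fop, yJ, Jet.zero, Phi, pullS_apply]
      | succ n ih =>
        intro hn
        obtain ⟨J, hJ⟩ := ih (by omega)
        have hle : |(n : ℝ) * (H / N)| ≤ H0 := by
          rw [abs_mul, abs_div, abs_of_pos hN0, Nat.abs_cast, mul_div_assoc', div_le_iff₀ hN0]
          have : (n : ℝ) ≤ N := by exact_mod_cast (by omega : n ≤ N)
          nlinarith [abs_nonneg H]
        obtain ⟨J', hJ'⟩ := hnext _ J hle hJ _ hk
        exact ⟨J', by rwa [Nat.cast_succ, add_mul, one_mul]⟩
    obtain ⟨J, hJ⟩ := hind N le_rfl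
    rw [mul_div_cancel₀ _ hN0.ne'] at hJ
    exact ⟨J, hJ⟩
  obtain ⟨J, hJ⟩ := hex
  have hJb := hbdd H J hH.le hJ
  obtain ⟨W, hW, hW0, hWL, hWh⟩ := hstep T Z J H hgeo (hJb.mono (le_max_left _ _)) hJ.2.1 hJ.2.2
  -- identification of the given solutions with the constructed ones
  have hid : ∀ h J', P h J' → (ContDiffOn ℝ 2 (fun x => U x h) K ∧
      ContinuousOn (fun x => U x h) (closure K) ∧ (∀ x ∈ K, MC (fun x => U x h) x = 2 * h) ∧
      ∀ x ∈ frontier K, U x h = 0) → ∀ x ∈ closure K, U x h = J'.w (Θ x) := by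
    rintro h J' hPJ ⟨a1, a2, a3, a4⟩ x hx
    obtain ⟨s1, s2, s3⟩ := hsol h J' hPJ
    refine le_antisymm ?_ ?_
    · exact comparison hK hKb a2 s1.continuousOn a1 (s1.mono subset_closure)
        (fun y hy => by rw [a3 y hy, s2 y hy]) (fun y hy => by rw [a4 y hy, s3 y hy]) x hx
    · exact comparison hK hKb s1.continuousOn a2 (s1.mono subset_closure) a1
        (fun y hy => by rw [a3 y hy, s2 y hy]) (fun y hy => by rw [a4 y hy, s3 y hy]) x hx
  obtain ⟨r, hr, hUr⟩ := Metric.eventually_nhds_iff_ball.1 hU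
  have hUH := hid H J hJ (hUr H (Metric.mem_ball_self hr))
  refine ⟨fun x => W.w (Θ x), (hc.pull hK hγ0 hW).1, fun x hx => ?_, fun x hx => ?_⟩
  · refine hasDerivAt_of_sq (B := B) (lt_min hδ (half_pos hr)) fun k hk => ?_
    obtain ⟨J', a, b, c, d⟩ := hWh k (hk.trans (min_le_left _ _))
    have hk2 : H + k ∈ Metric.ball H r := by
      rw [Metric.mem_ball, Real.dist_eq, add_sub_cancel_left]
      exact (hk.trans (min_le_right _ _)).trans_lt (half_lt_self hr)
    rw [hid (H + k) J' ⟨a, b, c⟩ (hUr _ hk2) x hx, hUH x hx]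
    exact d _ (hc.maps x hx)
  · have e : (fun x => U x H) =ᶠ[𝓝 x] fun x => J.w (Θ x) := by
      filter_upwards [hK.mem_nhds hx] with y hy using hUH y (subset_closure hy)
    have h1 := hc.LMC_eq hK hγ0 hJb hW hx
    rw [hWL _ (hc.maps x (subset_closure hx))] at h1
    rw [← h1, LMC, LMC, e.fderiv_eq, e.fderiv.fderiv_eq]

end chart

end

/-! ### The velocity on a strictly convex domain -/

lemma LMC_sub {G : Set ℂ} (hG : IsOpen G) (u : ℂ → ℝ) {w v : ℂ → ℝ} (hw : ContDiffOn ℝ 2 w G)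
    (hv : ContDiffOn ℝ 2 v G) {x : ℂ} (hx : x ∈ G) :
    LMC u (fun x => w x - v x) x = LMC u w x - LMC u v x := by
  have e1 : ∀ x ∈ G, fderiv ℝ (fun x => w x - v x) x = fderiv ℝ w x - fderiv ℝ v x := fun x hx =>
    ((c2_fderiv hG hw hx).1.sub (c2_fderiv hG hv hx).1).fderiv
  have e2 : fderiv ℝ (fun x => w x - v x) =ᶠ[𝓝 x] fun x => fderiv ℝ w x - fderiv ℝ v x := by
    filter_upwards [hG.mem_nhds hx] with y hy using e1 y hy
  have e3 : fderiv ℝ (fun x => fderiv ℝ w x - fderiv ℝ v x) x = _ :=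
    ((c2_fderiv hG hw hx).2.1.sub (c2_fderiv hG hv hx).2.1).fderiv
  rw [LMC, e2.fderiv_eq, e1 x hx, e3, LMC, LMC, ← map_sub, Prod.mk_sub_mk]

/-- The velocity theorem in complex coordinates. -/
theorem velocity_complex {Ω : Set ℂ} {f : ℂ → ℝ} (hD : Dom Ω f) {γ C : ℝ} (hγ0 : 0 < γ)
    (hγ1 : γ < 1) (hS : ∀ x ∈ closure Ω, ∀ y ∈ closure Ω,
      ‖fderiv ℝ (fderiv ℝ f) y - fderiv ℝ (fderiv ℝ f) x‖ ≤ C * ‖y - x‖ ^ γ)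
    {u0 : ℂ → ℝ} {H0 H : ℝ} (hu0 : ContDiffOn ℝ 2 u0 (closure Ω))
    (hM0 : ∀ x ∈ Ω, MC u0 x = 2 * H0) (hb0 : ∀ x ∈ frontier Ω, u0 x = 0) (hH : |H| < H0)
    {U : ℂ → ℝ → ℝ} (hU : ∀ᶠ h in 𝓝 H, ContDiffOn ℝ 2 (fun x => U x h) Ω ∧
      ContinuousOn (fun x => U x h) (closure Ω) ∧ (∀ x ∈ Ω, MC (fun x => U x h) x = 2 * h) ∧
      ∀ x ∈ frontier Ω, U x h = 0) {v : ℂ → ℝ} (hv : ∀ x, v x = deriv (fun h => U x h) H) :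
    (∀ x ∈ closure Ω, HasDerivAt (fun h => U x h) (v x) H) ∧ ContDiffOn ℝ 2 v (closure Ω) ∧
    (∀ x ∈ Ω, LMC (fun x => U x H) v x = 2) ∧ (∀ x ∈ frontier Ω, v x = 0) ∧
    (∀ w : ℂ → ℝ, ContDiffOn ℝ 2 w Ω → ContinuousOn w (closure Ω) →
      (∀ x ∈ Ω, LMC (fun x => U x H) w x = 2) → (∀ x ∈ frontier Ω, w x = 0) →
      EqOn w v (closure Ω)) ∧ ∀ x ∈ Ω, v x < 0 := by
  have hΩ : IsOpen Ω := by rw [hD.eq]; exact isOpen_lt hD.smooth.continuous continuous_const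
  obtain ⟨hcomp, hloc⟩ := hD.components hγ0 hγ1.le hS
  have hmain : ∀ a ∈ Ω, (∀ x ∈ closure (connectedComponentIn Ω a),
      HasDerivAt (fun h => U x h) (v x) H) ∧
      ContDiffOn ℝ 2 v (closure (connectedComponentIn Ω a)) ∧
      ∀ x ∈ connectedComponentIn Ω a, LMC (fun x => U x H) v x = 2 := by
    intro a ha
    obtain ⟨hfr, hconv, μ, hμ, R, Θ, Ξ, hc⟩ := hcomp a ha
    have hKs : connectedComponentIn Ω a ⊆ Ω := connectedComponentIn_subset _ _
    have hcl := closure_mono hKs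
    have hKo : IsOpen (connectedComponentIn Ω a) := hΩ.connectedComponentIn
    obtain ⟨w, w1, w2, w3⟩ := component_main hc hγ0 hγ1 hμ hKo
      (hD.bdd.subset hKs) hconv (hu0.mono hcl) (fun x hx => hM0 x (hKs hx))
      (fun x hx => hb0 x (hfr hx)) hH (U := U) (by
        filter_upwards [hU] with h ⟨a1, a2, a3, a4⟩
        exact ⟨a1.mono hKs, a2.mono hcl, fun x hx => a3 x (hKs hx), fun x hx => a4 x (hfr hx)⟩)
    have e : ∀ x ∈ closure (connectedComponentIn Ω a), v x = w x := fun x hx => by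
      rw [hv, (w2 x hx).deriv]
    refine ⟨fun x hx => by rw [e x hx]; exact w2 x hx, w1.congr e, fun x hx => ?_⟩
    have e' : v =ᶠ[𝓝 x] w := by
      filter_upwards [hKo.mem_nhds hx] with y hy using e y (subset_closure hy)
    rw [← w3 x hx, LMC, LMC, e'.fderiv_eq, e'.fderiv.fderiv_eq]
  have hder : ∀ x ∈ closure Ω, HasDerivAt (fun h => U x h) (v x) H := fun x hx => by
    obtain ⟨a, ha, B, hB, hsub⟩ := hloc x hx
    exact (hmain a ha).1 x (hsub ⟨hx, mem_of_mem_nhds hB⟩)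
  have hC2 : ContDiffOn ℝ 2 v (closure Ω) := fun x hx => by
    obtain ⟨a, ha, B, hB, hsub⟩ := hloc x hx
    exact (((hmain a ha).2.1 x (hsub ⟨hx, mem_of_mem_nhds hB⟩)).mono hsub).mono_of_mem_nhdsWithin
      (inter_mem self_mem_nhdsWithin (mem_nhdsWithin_of_mem_nhds hB))
  have hL : ∀ x ∈ Ω, LMC (fun x => U x H) v x = 2 := fun x hx =>
    (hmain x hx).2.2 x (mem_connectedComponentIn hx)
  have hb : ∀ x ∈ frontier Ω, v x = 0 := fun x hx => by
    have e : (fun h => U x h) =ᶠ[𝓝 H] fun _ => 0 := by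
      filter_upwards [hU] with h h' using h'.2.2.2 x hx
    rw [hv, e.deriv_eq, deriv_const]
  have hUH := hU.self_of_nhds.1
  have hvΩ := hC2.mono subset_closure
  refine ⟨hder, hC2, hL, hb, fun w w1 w2 w3 w4 x hx => ?_, ?_⟩
  · refine le_antisymm (sub_nonpos.1 ?_) (sub_nonpos.1 ?_)
    · exact linear_max hΩ hD.bdd hUH (w := fun x => w x - v x) (w2.sub hC2.continuousOn)
        (w1.sub hvΩ) (fun y hy => by rw [LMC_sub hΩ _ w1 hvΩ hy, w3 y hy, hL y hy, sub_self])
        (fun y hy => by simp only [w4 y hy, hb y hy, sub_self, le_refl]) x hx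
    · exact linear_max hΩ hD.bdd hUH (w := fun x => v x - w x) (hC2.continuousOn.sub w2)
        (hvΩ.sub w1) (fun y hy => by rw [LMC_sub hΩ _ hvΩ w1 hy, w3 y hy, hL y hy, sub_self])
        (fun y hy => by simp only [w4 y hy, hb y hy, sub_self, le_refl]) x hx
  · exact linear_neg hΩ hvΩ (fun x hx => by rw [hL x hx]; norm_num) fun x hx =>
      linear_max hΩ hD.bdd hUH hC2.continuousOn hvΩ (fun y hy => by rw [hL y hy]; norm_num)
        (fun y hy => (hb y hy).le) x (subset_closure hx)

/-! ### From complex to Euclidean coordinates -/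

lemma g_sq (a b : ℝ) : (√(1 + a ^ 2 + b ^ 2))⁻¹ ^ 2 * (1 + a ^ 2 + b ^ 2) = 1 := by
  have h : 0 < 1 + a ^ 2 + b ^ 2 := by positivity
  rw [inv_pow, Real.sq_sqrt h.le, inv_mul_cancel₀ h.ne']

lemma hasFDerivAt_g {E : Type*} [NormedAddCommGroup E] [NormedSpace ℝ E] {a b : E → ℝ}
    {A B : E →L[ℝ] ℝ} {x : E} (ha : HasFDerivAt a A x) (hb : HasFDerivAt b B x) :
    HasFDerivAt (fun y => (√(1 + a y ^ 2 + b y ^ 2))⁻¹)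
      (-((√(1 + a x ^ 2 + b x ^ 2))⁻¹ ^ 3) • (a x • A + b x • B)) x := by
  have h : 0 < 1 + a x ^ 2 + b x ^ 2 := by positivity
  have h1 : HasFDerivAt (fun y => 1 + a y ^ 2 + b y ^ 2) ((2 * a x) • A + (2 * b x) • B) x := by
    refine (((ha.pow 2).const_add 1).add (hb.pow 2)).congr_fderiv ?_
    simp
  have h2 := (Real.hasDerivAt_sqrt h.ne').comp_hasFDerivAt x h1
  have h3 := (hasDerivAt_inv (Real.sqrt_pos.2 h).ne').comp_hasFDerivAt x h2
  refine h3.congr_fderiv ?_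
  ext w
  simp only [smul_apply, add_apply, smul_eq_mul]
  have : √(1 + a x ^ 2 + b x ^ 2) ≠ 0 := (Real.sqrt_pos.2 h).ne'
  field_simp

/-- The isometry between `ℂ` and `E2` sending `1, I` to the standard basis. -/
def toE : ℂ ≃ₗᵢ[ℝ] E2 := Complex.orthonormalBasisOneI.repr

lemma toE_one : toE 1 = e2 0 := by
  ext i; fin_cases i <;> simp [toE, e2, Complex.orthonormalBasisOneI_repr_apply]

lemma toE_I : toE Complex.I = e2 1 := by
  ext i; fin_cases i <;> simp [toE, e2, Complex.orthonormalBasisOneI_repr_apply]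

lemma grad_apply (u : E2 → ℝ) (y : E2) (i : Fin 2) : gradient u y i = fderiv ℝ u y (e2 i) := by
  rw [← inner_gradient_left, e2, EuclideanSpace.inner_single_right]; simp

lemma norm_sq_E2 (q : E2) : 1 + ‖q‖ ^ 2 = 1 + q 0 ^ 2 + q 1 ^ 2 := by
  rw [EuclideanSpace.norm_sq_eq]; simp [Fin.sum_univ_two]; ring

lemma fderiv_comp_toE (u : E2 → ℝ) (z : ℂ) :
    fderiv ℝ (fun z => u (toE z)) z =
      (fderiv ℝ u (toE z)).comp (toE.toContinuousLinearEquiv : ℂ →L[ℝ] E2) :=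
  toE.toContinuousLinearEquiv.comp_right_fderiv (f := u)

lemma fderiv_comp_toE_apply (u : E2 → ℝ) (z a : ℂ) :
    fderiv ℝ (fun z => u (toE z)) z a = fderiv ℝ u (toE z) (toE a) := by
  rw [fderiv_comp_toE]; rfl

lemma fderiv2_comp_toE {u : E2 → ℝ} {z : ℂ} (hu : DifferentiableAt ℝ (fderiv ℝ u) (toE z))
    (a b : ℂ) : fderiv ℝ (fderiv ℝ (fun z => u (toE z))) z a b =
      fderiv ℝ (fderiv ℝ u) (toE z) (toE a) (toE b) := by
  have e : fderiv ℝ (fun z => u (toE z)) = fun z =>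
      (fderiv ℝ u (toE z)).comp (toE.toContinuousLinearEquiv : ℂ →L[ℝ] E2) :=
    funext (fderiv_comp_toE u)
  have h1 : HasFDerivAt (fun z => fderiv ℝ u (toE z)) _ z :=
    hu.hasFDerivAt.comp z toE.toContinuousLinearEquiv.hasFDerivAt
  have h2 := (((ContinuousLinearMap.compL ℝ ℂ E2 ℝ).flip
    (toE.toContinuousLinearEquiv : ℂ →L[ℝ] E2)).hasFDerivAt.comp z h1).fderiv
  rw [e]
  erw [h2]
  rfl

/-- Differentiability facts for a `C²` function on an open subset of the plane. -/
lemma c2_E2 {u : E2 → ℝ} {G : Set E2} (hG : IsOpen G) (hu : ContDiffOn ℝ 2 u G) {x : E2}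
    (hx : x ∈ G) : DifferentiableAt ℝ (fderiv ℝ u) x ∧
      (∀ a b, fderiv ℝ (fderiv ℝ u) x a b = fderiv ℝ (fderiv ℝ u) x b a) ∧
      ∀ i, HasFDerivAt (fun y => fderiv ℝ u y (e2 i))
        ((fderiv ℝ (fderiv ℝ u) x).flip (e2 i)) x := by
  have h := hu.contDiffAt (hG.mem_nhds hx)
  have h1 : DifferentiableAt ℝ (fderiv ℝ u) x :=
    (h.fderiv_right (m := 1) (by norm_num)).differentiableAt (by norm_num)
  refine ⟨h1, fun a b => h.isSymmSndFDerivAt (by simp) a b, fun i => ?_⟩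
  exact ((ContinuousLinearMap.apply ℝ ℝ (e2 i)).hasFDerivAt.comp x h1.hasFDerivAt)

lemma fderiv_euclid {F : E2 → E2} {F' : Fin 2 → E2 →L[ℝ] ℝ} {x : E2}
    (h : ∀ i, HasFDerivAt (fun y => F y i) (F' i) x) (i : Fin 2) (w : E2) :
    fderiv ℝ F x w i = F' i w := by
  have hd : DifferentiableAt ℝ F x := differentiableAt_euclidean.2 fun i => (h i).differentiableAt
  exact congrArg (fun L : E2 →L[ℝ] ℝ => L w)
    (((EuclideanSpace.proj (𝕜 := ℝ) i).hasFDerivAt.comp x hd.hasFDerivAt).unique (h i))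

lemma mcDiv_eq {u : E2 → ℝ} {G : Set E2} (hG : IsOpen G) (hu : ContDiffOn ℝ 2 u G) {z : ℂ}
    (hz : toE z ∈ G) : mcDiv u (toE z) = MC (fun z => u (toE z)) z := by
  obtain ⟨h1, hs, h2⟩ := c2_E2 hG hu hz
  have hF : (fun y => (√(1 + ‖gradient u y‖ ^ 2))⁻¹ • gradient u y) = fun y =>
      (√(1 + fderiv ℝ u y (e2 0) ^ 2 + fderiv ℝ u y (e2 1) ^ 2))⁻¹ • gradient u y := by
    funext y; rw [norm_sq_E2, grad_apply, grad_apply]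
  have hi : ∀ i, HasFDerivAt (fun y => ((√(1 + fderiv ℝ u y (e2 0) ^ 2 +
      fderiv ℝ u y (e2 1) ^ 2))⁻¹ • gradient u y) i) _ (toE z) := fun i =>
    ((hasFDerivAt_g (h2 0) (h2 1)).mul (h2 i)).congr_of_eventuallyEq
      (Eventually.of_forall fun y => by simp [grad_apply])
  rw [mcDiv, hF, Fin.sum_univ_two, fderiv_euclid hi, fderiv_euclid hi, MC, Phi,
    fderiv2_comp_toE h1, fderiv2_comp_toE h1, fderiv2_comp_toE h1, fderiv_comp_toE_apply,
    fderiv_comp_toE_apply, toE_one, toE_I]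
  have h3 := hs (e2 1) (e2 0)
  have hg := g_sq (fderiv ℝ u (toE z) (e2 0)) (fderiv ℝ u (toE z) (e2 1))
  simp only [add_apply, smul_apply, smul_eq_mul, ContinuousLinearMap.flip_apply, h3]
  set a := fderiv ℝ u (toE z) (e2 0)
  set b := fderiv ℝ u (toE z) (e2 1)
  set g := (√(1 + a ^ 2 + b ^ 2))⁻¹
  linear_combination -(g * (fderiv ℝ (fderiv ℝ u) (toE z) (e2 0) (e2 0) +
    fderiv ℝ (fderiv ℝ u) (toE z) (e2 1) (e2 1))) * hg

lemma Aij_eq (p : E2) (i j : Fin 2) : Aij p i j =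
    (√(1 + p 0 ^ 2 + p 1 ^ 2))⁻¹ * (if i = j then 1 else 0) -
      p i * p j * (√(1 + p 0 ^ 2 + p 1 ^ 2))⁻¹ ^ 3 := by
  have h2 : ∀ i : Fin 2, HasFDerivAt (fun q : E2 => q i) (EuclideanSpace.proj (𝕜 := ℝ) i) p :=
    fun i => (EuclideanSpace.proj (𝕜 := ℝ) i).hasFDerivAt
  have hF : (fun q : E2 => (√(1 + ‖q‖ ^ 2))⁻¹ • q) = fun q =>
      (√(1 + q 0 ^ 2 + q 1 ^ 2))⁻¹ • q := by
    funext y; rw [norm_sq_E2]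
  have hi : ∀ i, HasFDerivAt (fun q : E2 => ((√(1 + q 0 ^ 2 + q 1 ^ 2))⁻¹ • q) i) _ p := fun i =>
    ((hasFDerivAt_g (h2 0) (h2 1)).mul (h2 i)).congr_of_eventuallyEq
      (Eventually.of_forall fun y => by simp)
  rw [Aij, hF, fderiv_euclid hi]
  simp only [add_apply, smul_apply, smul_eq_mul, PiLp.proj_apply, e2]
  fin_cases i <;> fin_cases j <;> simp <;> ring

lemma fderiv_Phi2_eq (q c : ℂ →L[ℝ] ℝ) (R S : ℂ →L[ℝ] ℂ →L[ℝ] ℝ) {a b c0 c1 g : ℝ}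
    (ha : q 1 = a) (hb : q Complex.I = b) (hc0 : c 1 = c0) (hc1 : c Complex.I = c1)
    (hg : g = (√(1 + a ^ 2 + b ^ 2))⁻¹) :
    fderiv ℝ Phi2 (q, R) (c, S) = ((1 + b ^ 2) * S 1 1 + 2 * b * c1 * R 1 1 -
      2 * (a * c1 + b * c0) * R 1 Complex.I - 2 * a * b * S 1 Complex.I +
      (1 + a ^ 2) * S Complex.I Complex.I + 2 * a * c0 * R Complex.I Complex.I) * g ^ 3 -
      3 * ((1 + b ^ 2) * R 1 1 - 2 * a * b * R 1 Complex.I +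
        (1 + a ^ 2) * R Complex.I Complex.I) * g ^ 5 * (a * c0 + b * c1) := by
  have hl : ∀ a c : ℝ, HasDerivAt (fun t : ℝ => a + t * c) c 0 := fun a c => by
    simpa using ((hasDerivAt_id (0 : ℝ)).mul_const c).const_add a
  have hG := (hasFDerivAt_g (hl a c0).hasFDerivAt (hl b c1).hasFDerivAt).hasDerivAt
  have hN := ((((((hl b c1).pow 2).const_add 1).mul (hl (R 1 1) (S 1 1))).sub
    (((((hl a c0).const_mul 2).mul (hl b c1))).mul
      (hl (R 1 Complex.I) (S 1 Complex.I)))).add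
    ((((hl a c0).pow 2).const_add 1).mul
      (hl (R Complex.I Complex.I) (S Complex.I Complex.I)))).mul (hG.pow 3)
  refine ((hasDerivAt_Phi2 (q, R) (c, S)).unique (hN.congr_of_eventuallyEq
    (Eventually.of_forall fun t => ?_))).trans ?_
  · simp [Phi2, Phi, ha, hb, hc0, hc1]
  · simp [← hg]; ring

/-- The linearised operator in divergence form is the derivative `LMC` of the operator `MC`. -/
lemma Ldiv_eq {u w : E2 → ℝ} {G : Set E2} (hG : IsOpen G) (hu : ContDiffOn ℝ 2 u G)
    (hw : ContDiffOn ℝ 2 w G) {z : ℂ} (hz : toE z ∈ G) :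
    Ldiv u w (toE z) = LMC (fun z => u (toE z)) (fun z => w (toE z)) z := by
  obtain ⟨h1, hs, h2⟩ := c2_E2 hG hu hz
  obtain ⟨k1, ks, k2⟩ := c2_E2 hG hw hz
  have hg := g_sq (fderiv ℝ u (toE z) (e2 0)) (fderiv ℝ u (toE z) (e2 1))
  rw [LMC, fderiv_Phi2_eq _ _ _ _ rfl rfl rfl rfl rfl, fderiv_comp_toE_apply,
    fderiv_comp_toE_apply, fderiv_comp_toE_apply, fderiv_comp_toE_apply, fderiv2_comp_toE h1, fderiv2_comp_toE h1, fderiv2_comp_toE h1, fderiv2_comp_toE k1,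
    fderiv2_comp_toE k1, fderiv2_comp_toE k1, toE_one, toE_I, Ldiv, Fin.sum_univ_two]
  have hG := hasFDerivAt_g (h2 0) (h2 1)
  have e0 := (((hG.sub (((h2 0).mul (h2 0)).mul (hG.pow 3))).mul (k2 0)).sub
    ((((h2 0).mul (h2 1)).mul (hG.pow 3)).mul (k2 1)))
  have e1 := (((hG.sub (((h2 1).mul (h2 1)).mul (hG.pow 3))).mul (k2 1)).sub
    ((((h2 0).mul (h2 1)).mul (hG.pow 3)).mul (k2 0)))
  have f0 := e0.congr_of_eventuallyEq (f₁ := fun y => ∑ j : Fin 2, Aij (gradient u y) 0 j *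
    fderiv ℝ w y (e2 j)) (Eventually.of_forall fun y => by
      simp [Fin.sum_univ_two, Aij_eq, grad_apply]; ring)
  have f1 := e1.congr_of_eventuallyEq (f₁ := fun y => ∑ j : Fin 2, Aij (gradient u y) 1 j *
    fderiv ℝ w y (e2 j)) (Eventually.of_forall fun y => by
      simp [Fin.sum_univ_two, Aij_eq, grad_apply]; ring)
  rw [f0.fderiv, f1.fderiv]
  simp only [add_apply, sub_apply, smul_apply, smul_eq_mul, ContinuousLinearMap.flip_apply,
    hs (e2 1) (e2 0), ks (e2 1) (e2 0), Pi.mul_apply, Pi.sub_apply, nsmul_eq_mul]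
  set a := fderiv ℝ u (toE z) (e2 0)
  set b := fderiv ℝ u (toE z) (e2 1)
  set g := (√(1 + a ^ 2 + b ^ 2))⁻¹
  set c0 := fderiv ℝ w (toE z) (e2 0)
  set c1 := fderiv ℝ w (toE z) (e2 1)
  generalize fderiv ℝ (fderiv ℝ u) (toE z) (e2 0) (e2 0) = A
  generalize fderiv ℝ (fderiv ℝ u) (toE z) (e2 0) (e2 1) = B
  generalize fderiv ℝ (fderiv ℝ u) (toE z) (e2 1) (e2 1) = D
  generalize fderiv ℝ (fderiv ℝ w) (toE z) (e2 0) (e2 0) = P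
  generalize fderiv ℝ (fderiv ℝ w) (toE z) (e2 0) (e2 1) = Q
  generalize fderiv ℝ (fderiv ℝ w) (toE z) (e2 1) (e2 1) = S
  push_cast
  linear_combination (-(g * (P + S)) + 3 * g ^ 3 * (a * c0 + b * c1) * (A + D)) * hg

/-- On a bounded set the Hölder exponent can be lowered below `1`. -/
lemma holder_toE {f : E2 → ℝ} (hf : ContDiff ℝ 2 f) {α C : ℝ} (hα : 0 < α)
    (hC : ∀ x y : E2, ‖iteratedFDeriv ℝ 2 f x - iteratedFDeriv ℝ 2 f y‖ ≤ C * ‖x - y‖ ^ α)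
    {K : Set ℂ} (hK : Bornology.IsBounded K) : ∃ γ C' : ℝ, 0 < γ ∧ γ < 1 ∧ ∀ x ∈ K, ∀ y ∈ K,
      ‖fderiv ℝ (fderiv ℝ (fun z => f (toE z))) y - fderiv ℝ (fderiv ℝ (fun z => f (toE z))) x‖ ≤
        C' * ‖y - x‖ ^ γ := by
  obtain ⟨D, hD⟩ := Metric.isBounded_iff.1 hK
  have hγ : min α (1 / 2) ≤ α := min_le_left _ _
  have hγ0 : 0 < min α (1 / 2) := by positivity
  refine ⟨min α (1 / 2), |C| * (1 + |D|) ^ (α - min α (1 / 2)), hγ0,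
    (min_le_right _ _).trans_lt (by norm_num), fun x hx y hy => ?_⟩
  have hd : ∀ z, DifferentiableAt ℝ (fderiv ℝ f) z := fun z =>
    (hf.contDiffAt.fderiv_right (m := 1) (by norm_num)).differentiableAt (by norm_num)
  have ht : ‖y - x‖ ≤ 1 + |D| := by
    rw [← dist_eq_norm]; linarith [hD hy hx, le_abs_self D]
  have h1 : ‖y - x‖ ^ α ≤ (1 + |D|) ^ (α - min α (1 / 2)) * ‖y - x‖ ^ min α (1 / 2) := by
    have e : ‖y - x‖ ^ α = ‖y - x‖ ^ (α - min α (1 / 2)) * ‖y - x‖ ^ min α (1 / 2) := by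
      rw [← Real.rpow_add_of_nonneg (norm_nonneg _) (by linarith) hγ0.le, sub_add_cancel]
    rw [e]
    gcongr
  have h2 : C * ‖y - x‖ ^ α ≤
      |C| * (1 + |D|) ^ (α - min α (1 / 2)) * ‖y - x‖ ^ min α (1 / 2) := by
    rw [mul_assoc]
    exact mul_le_mul (le_abs_self C) h1 (by positivity) (abs_nonneg C)
  refine ContinuousLinearMap.opNorm_le_bound _ (by positivity) fun a =>
    ContinuousLinearMap.opNorm_le_bound _ (by positivity) fun b => ?_
  rw [sub_apply, sub_apply, fderiv2_comp_toE (hd _), fderiv2_comp_toE (hd _)]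
  have h3 := (iteratedFDeriv ℝ 2 f (toE y) - iteratedFDeriv ℝ 2 f (toE x)).le_opNorm
    ![toE a, toE b]
  have h4 := hC (toE y) (toE x)
  rw [← map_sub, toE.norm_map] at h4
  simp only [sub_apply, iteratedFDeriv_two_apply,
    Fin.prod_univ_two, Matrix.cons_val_zero, Matrix.cons_val_one, toE.norm_map] at h3
  refine h3.trans ?_
  rw [← mul_assoc]
  gcongr
  exact h4.trans h2

lemma dom_toE {Ω : Set E2} {f : E2 → ℝ} (hb : Bornology.IsBounded Ω) (hf : ContDiff ℝ 2 f)
    (h1 : Ω = {x | f x < 0}) (h2 : frontier Ω = {x | f x = 0})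
    (h3 : ∀ x ∈ frontier Ω, ∀ w : E2, w ≠ 0 → ⟪w, gradient f x⟫ = (0:ℝ) → 0 < hess2 f x w w) :
    Dom (toE ⁻¹' Ω) (fun z => f (toE z)) where
  smooth := hf.comp toE.contDiff
  eq := by rw [h1]; rfl
  fr := by
    rw [show toE ⁻¹' Ω = toE.toHomeomorph ⁻¹' Ω from rfl, ← toE.toHomeomorph.preimage_frontier, h2]
    rfl
  bdd := by
    rw [show toE ⁻¹' Ω = toE.symm '' Ω from (toE.toEquiv.image_symm_eq_preimage Ω).symm]
    exact toE.symm.lipschitz.isBounded_image hb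
  curv x hx w hw hxw := by
    have hx' : toE x ∈ frontier Ω := by rw [h2]; exact hx
    have hd := c2_E2 isOpen_univ hf.contDiffOn (mem_univ (toE x))
    have h4 := h3 _ hx' (toE w) (by simpa using hw) (by
      rw [real_inner_comm, inner_gradient_left, ← hxw, fderiv_comp_toE_apply])
    rw [fderiv2_comp_toE hd.1]
    have h5 : HasFDerivAt (fun y => fderiv ℝ f y (toE w)) _ (toE x) :=
      (ContinuousLinearMap.apply ℝ ℝ (toE w)).hasFDerivAt.comp (toE x) hd.1.hasFDerivAt
    rw [hess2, h5.fderiv] at h4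
    exact h4

end CMC
end

/-- **The velocity `u̇` of the flow.**  For `|H| < H_max` the derivative
`u̇ = ∂u/∂H` exists, lies in `C²(closure Ω)`, is the unique solution of the linear problem
`Σ D_i(A_ij(Du) D_j u̇) = 2` in `Ω`, `u̇ = 0` on `∂Ω`, and is negative throughout `Ω`. -/
theorem velocity_exists_and_negative (α : ℝ) (hα : 0 < α) (hα1 : α ≤ 1)
    (Ω : Set E2) (hΩ : StrictlyConvexDomain α Ω)
    (U : E2 → ℝ → ℝ)
    (hU : ∀ H' : ℝ, |H'| < Hmax Ω → SolvesStar Ω H' (fun x => U x H'))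
    (H : ℝ) (hH : |H| < Hmax Ω) :
    ∃ udot : E2 → ℝ,
      (∀ x ∈ closure Ω, HasDerivAt (fun h : ℝ => U x h) (udot x) H) ∧
      ContDiffOn ℝ 2 udot (closure Ω) ∧
      (∀ x ∈ Ω, Ldiv (fun y => U y H) udot x = 2) ∧
      (∀ x ∈ frontier Ω, udot x = 0) ∧
      (∀ w : E2 → ℝ, ContDiffOn ℝ 2 w Ω → ContinuousOn w (closure Ω) →
        (∀ x ∈ Ω, Ldiv (fun y => U y H) w x = 2) → (∀ x ∈ frontier Ω, w x = 0) →
        EqOn w udot (closure Ω)) ∧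
      (∀ x ∈ Ω, udot x < 0) := by
  open CMC in
  open Filter Topology in
  obtain ⟨hΩo, hb, -, f, hf, h1, h2, ⟨C, hC⟩, -, h3⟩ := hΩ
  have hD := dom_toE hb hf h1 h2 h3
  obtain ⟨γ, C', hγ0, hγ1, hS⟩ := holder_toE hf hα hC hD.bdd.closure
  have hcl : toE ⁻¹' closure Ω = closure (toE ⁻¹' Ω) := toE.toHomeomorph.preimage_closure Ω
  have hfr : toE ⁻¹' frontier Ω = frontier (toE ⁻¹' Ω) := toE.toHomeomorph.preimage_frontier Ω
  have hne : {H : ℝ | 0 ≤ H ∧ (∃ u, SolvesStarC2 Ω H u) ∧ ∀ u v, SolvesStarC2 Ω H u →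
      SolvesStarC2 Ω H v → EqOn u v (closure Ω)}.Nonempty := by
    by_contra h
    rw [not_nonempty_iff_eq_empty] at h
    rw [Hmax, h, Real.sSup_empty] at hH
    exact absurd hH (abs_nonneg H).not_gt
  obtain ⟨H0, ⟨-, ⟨u0, g1, g2, g3⟩, -⟩, hH0⟩ := exists_lt_of_lt_csSup hne hH
  have hcomp : ∀ {n : WithTop ℕ∞} {w : E2 → ℝ} {s : Set E2}, ContDiffOn ℝ n w s →
      ContDiffOn ℝ n (fun z => w (toE z)) (toE ⁻¹' s) := fun h =>
    h.comp toE.contDiff.contDiffOn (mapsTo_preimage _ _)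
  have hcompc : ∀ {w : E2 → ℝ} {s : Set E2}, ContinuousOn w s →
      ContinuousOn (fun z => w (toE z)) (toE ⁻¹' s) := fun h =>
    h.comp toE.continuous.continuousOn (mapsTo_preimage _ _)
  have hev : ∀ᶠ h in 𝓝 H, |h| < Hmax Ω := continuous_abs.continuousAt.eventually_lt_const hH
  obtain ⟨r1, r2, r3, r4, r5, r6⟩ := velocity_complex hD hγ0 hγ1 hS
    (u0 := fun z => u0 (toE z)) (H0 := H0) (H := H) (U := fun z h => U (toE z) h)
    (v := fun z => deriv (fun h => U (toE z) h) H) (by rw [← hcl]; exact hcomp g1)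
    (fun z hz => by rw [← mcDiv_eq hΩo (g1.mono subset_closure) hz]; exact g2 _ hz)
    (fun z hz => by rw [← hfr] at hz; exact g3 _ hz) hH0
    (by
      filter_upwards [hev] with h hh
      obtain ⟨s1, s2, s3, s4⟩ := hU h hh
      refine ⟨hcomp s1, by rw [← hcl]; exact hcompc s2, fun z hz => ?_, fun z hz => ?_⟩
      · rw [← mcDiv_eq (u := fun x => U x h) hΩo s1 hz]; exact s3 _ hz
      · rw [← hfr] at hz; exact s4 _ hz) (fun _ => rfl)
  rw [← hcl] at r1 r2 r5
  rw [← hfr] at r4 r5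
  have hsurj : ∀ {P : E2 → Prop} {s : Set E2}, (∀ z ∈ toE ⁻¹' s, P (toE z)) → ∀ x ∈ s, P x :=
    fun {P s} h x hx => by
      have := h (toE.symm x) (by simpa using hx)
      rwa [toE.apply_symm_apply] at this
  have hC2 : ContDiffOn ℝ 2 (fun x => deriv (fun h => U x h) H) (closure Ω) := by
    have := r2.comp (s := closure Ω) toE.symm.contDiff.contDiffOn fun x hx => by simpa using hx
    simpa [Function.comp_def] using this
  have hu := (hU H hH).1
  refine ⟨fun x => deriv (fun h => U x h) H, hsurj r1, hC2, hsurj fun z hz => ?_, hsurj r4,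
    fun w w1 w2 w3 w4 => hsurj (r5 (fun z => w (toE z)) (hcomp w1) (hcompc w2) (fun z hz => ?_)
      fun z hz => w4 _ hz), hsurj r6⟩
  · rw [Ldiv_eq hΩo hu (hC2.mono subset_closure) hz]; exact r3 z hz
  · rw [← Ldiv_eq hΩo hu w1 hz]; exact w3 _ hz
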